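/- Assume GRH (the Riemann Hypothesis for the Dedekind zeta function of every field ℚ(ζ_{kt}, g^{1/kt}), k ≥ 1). Then N_{g,t}(x) = A(g,t)·Li(x) + O(x·log log x / log² x), where A(g,t) := Σ_{k=1}^{∞} μ(k)/[ℚ(ζ_{kt}, g^{1/kt}) : ℚ] (the series converges absolutely) and Li(x) = ∫₂^x dt/log t. -/

import Mathlib

/-!
The proof is Hooley's conditional treatment of Artin's conjecture. A prime `p` prime to `2m` and to `g` has
`m ∣ r_g(p)` exactly when it splits completely in `K_m = ℚ(ζ_m, g^{1/m})`, so these primes are counted by the prime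
ideal theorem for `K_m`, and `r_g(p) = t` is detected by sieving the condition `t ∣ r_g(p)` by the conditions
`qt ∣ r_g(p)`, `q` prime.

*Analytic part.* The analytic theory of `ζ_K` is developed by Hecke's method. Poisson summation
for Gaussians gives the functional equation of the theta series of a fractional ideal; integrating over a
fundamental domain of the unit lattice and unfolding (`mellin_Phi`) shows that the completed zeta function is a
Mellin transform of a positive function with a functional equation. Hence `(s - 1) ζ_K(s)` is entire, with a growth
bound that is uniform in `K` (`zeta_F`). Under RH a logarithm of this function exists to the right of the line
`Re s = 1/2`, and the Borel-Carathéodory inequality bounds the logarithmic derivative there (`zeta_log_deriv`). With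
`sz(K) = [K : ℚ] + log |d_K|` and `c_n` the coefficients of `-ζ_K'/ζ_K`, moving the contour in a quadratically smoothed
sum and unsmoothing give
`∑_{n ≤ x} c_n = x + O(x^{9/10} + sz(K) x^{7/10} log² x)`
with absolute constants (`SK_bound`), as well as the bound `O(x + sz(K) √x log² x)`.

*Algebraic part.* With `n = [K_m : ℚ]`, the discriminant of `K_m` satisfies `log |d| ≪ n (1 + log n)`
(`discr_split_le`), and for squarefree `k` one has `[K_{kt} : ℚ] ≫ k² / (1 + log k)` (`coeff_bound`). The latter gives the
absolute convergence of the density series and the estimate of its tail.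

*Sieve.* Let `ξ = (log x)/100`. The primes `p` with `t ∣ r_g(p)` for which `r_g(p)/t` has no prime factor `q ≤ ξ` are
counted by inclusion and exclusion over the divisors of the primorial of `ξ` (`sieved_asymp`); this produces the main
term. The remaining `p` have a prime factor `q > ξ` of `r_g(p)/t`. For `q ≤ √x / log⁵ x` they are bounded by
the prime ideal theorem for `K_{qt}` (`middle_small`); for `√x / log⁵ x < q ≤ √x log x` one has `p ≡ 1 mod q`
and Selberg's sieve applies (`middle_large`); for larger `q` the order of `g` modulo `p` is at most
`√x / log x`, so `p` divides the nonzero integer `∏_{d ≤ √x / log x} (num(g)^d - den(g)^d)`, which has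
`O(x / log² x)` prime factors (`smallOrd_card`).
-/

open Polynomial Filter
open scoped Classical Pointwise

noncomputable section

/-- The reduction of a rational number mod `p`. -/
def ratRed (g : ℚ) (p : ℕ) : ZMod p := (g.num : ZMod p) * ((g.den : ℕ) : ZMod p)⁻¹

/-- `ord_p(g) = 0`: `p` divides neither the numerator nor the denominator of `g`. -/
def OrdZero (g : ℚ) (p : ℕ) : Prop := ¬ (p : ℤ) ∣ g.num ∧ ¬ p ∣ g.den

/-- The residual index `r_g(p) = [(ℤ/pℤ)^* : ⟨g mod p⟩]`. -/
def resIndex (g : ℚ) (p : ℕ) : ℕ := (p - 1) / orderOf (ratRed g p)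

/-- The decomposition `g = ± g₀ ^ h` with `g₀ > 0` not an exact power of a rational,
`h ≥ 1`, for `g ∈ ℚ ∖ {-1,0,1}`. -/
structure Decomp (g g₀ : ℚ) (h : ℕ) : Prop where
  ne_neg_one : g ≠ -1
  ne_zero : g ≠ 0
  ne_one : g ≠ 1
  g₀_pos : 0 < g₀
  not_power : ¬ ∃ (r : ℚ) (k : ℕ), 2 ≤ k ∧ r ^ k = g₀
  h_pos : 1 ≤ h
  eq : g = g₀ ^ h ∨ g = -(g₀ ^ h)

instance (f : ℚ[X]) : NumberField (SplittingField f) where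

/-- The splitting field `ℚ(ζ_m, g^{1/m})` of `X^m - g` over `ℚ`. -/
abbrev splitField (g : ℚ) (m : ℕ) : Type := SplittingField (X ^ m - C g)

/-- The quadratic field `ℚ(√g₀)`, realised as the splitting field of `X² - g₀`. -/
abbrev quadField (g₀ : ℚ) : Type := SplittingField (X ^ 2 - C g₀)

/-- `d(g₀)`, the discriminant of the quadratic field `ℚ(√g₀)`. -/
def discQuad (g₀ : ℚ) : ℤ := NumberField.discr (quadField g₀)

/-- The field `ℚ(ζ_m, √g₀)`. -/
abbrev cycQuadField (g₀ : ℚ) (m : ℕ) : Type :=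
  SplittingField ((X ^ m - 1) * (X ^ 2 - C g₀))

/-- A rational prime `p` splits completely in the number field `K`:
there are `[K:ℚ]` maximal ideals of the ring of integers above `p`. -/
def SplitsCompletely (K : Type*) [Field K] [NumberField K] (p : ℕ) : Prop :=
  Nat.card {P : Ideal (NumberField.RingOfIntegers K) //
      P.IsMaximal ∧ (p : NumberField.RingOfIntegers K) ∈ P} = Module.finrank ℚ K

/-- The number of primes `p ≤ x` satisfying the predicate `P`. -/
def countPrimes (x : ℝ) (P : ℕ → Prop) : ℕ :=
  ((Finset.range (⌊x⌋₊ + 1)).filter fun p => p.Prime ∧ P p).card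

/-- `N_{g,t}(x)`: the number of odd primes `p ≤ x` with `ord_p(g) = 0` and `r_g(p) = t`. -/
def Ngt (g : ℚ) (t : ℕ) (x : ℝ) : ℕ :=
  countPrimes x fun p => Odd p ∧ OrdZero g p ∧ resIndex g p = t

/-- `R_{g,t}(x)`: the number of odd primes `p ≤ x` with `ord_p(g) = 0` and `t ∣ r_g(p)`. -/
def Rgt (g : ℚ) (t : ℕ) (x : ℝ) : ℕ :=
  countPrimes x fun p => Odd p ∧ OrdZero g p ∧ t ∣ resIndex g p

/-- `π(x; m, 1)`: the number of odd primes `p ≤ x` with `ord_p(g) = 0` and `p ≡ 1 (mod m)`. -/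
def piCount (g : ℚ) (m : ℕ) (x : ℝ) : ℕ :=
  countPrimes x fun p => Odd p ∧ OrdZero g p ∧ p ≡ 1 [MOD m]

/-- `P_K(x)` restricted to odd primes `p` with `ord_p(g) = 0`. -/
def PKg (g : ℚ) (K : Type*) [Field K] [NumberField K] (x : ℝ) : ℕ :=
  countPrimes x fun p => Odd p ∧ OrdZero g p ∧ SplitsCompletely K p

/-- The logarithmic integral `Li(x) = ∫₂ˣ dt / log t`. -/
def Li (x : ℝ) : ℝ := ∫ t in (2:ℝ)..x, 1 / Real.log t

/-- `ψ_d(p) = Σ_{ord χ = d} χ(g mod p)`, the sum over the complex multiplicative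
characters of `(ℤ/pℤ)^*` of order exactly `d`. -/
def psiSum (g : ℚ) (p d : ℕ) : ℂ :=
  ∑ᶠ χ ∈ {χ : MulChar (ZMod p) ℂ | orderOf χ = d}, χ (ratRed g p)

/-- The finset of odd primes `p ≤ x` with `ord_p(g) = 0` and `p ≡ 1 (mod t)`. -/
def primesTo (g : ℚ) (t : ℕ) (x : ℝ) : Finset ℕ :=
  (Finset.range (⌊x⌋₊ + 1)).filter fun p => p.Prime ∧ Odd p ∧ OrdZero g p ∧ p ≡ 1 [MOD t]

/-- The `linear' contribution `L_{g,t}(x)`. -/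
def Lgt (g : ℚ) (h t : ℕ) (x : ℝ) : ℂ :=
  (1 / (t : ℂ)) * ∑ p ∈ primesTo g t x, ∑ d ∈ (Nat.gcd h t).divisors, psiSum g p d

/-- The `quadratic' contribution `Q_{g,t}(x)`. -/
def Qgt (g : ℚ) (h t : ℕ) (x : ℝ) : ℂ :=
  (1 / (t : ℂ)) * ∑ p ∈ primesTo g t x,
    ∑ d ∈ (Nat.gcd (2 * h) t).divisors.filter (fun d => ¬ d ∣ h), psiSum g p d

/-- `M_{g,t}(x) = L_{g,t}(x) + Q_{g,t}(x)`. -/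
def Mgt (g : ℚ) (h t : ℕ) (x : ℝ) : ℂ := Lgt g h t x + Qgt g h t x

/-- The weight `w_{g,t}(p)` of Theorem 1 of the paper. -/
def wgt (g g₀ : ℚ) (h t p : ℕ) : ℚ :=
  let e := padicValNat 2 h
  let τ := padicValNat 2 t
  let ht := h / Nat.gcd h t
  let ε₁ : ℚ := if τ < e then 0 else if τ = e then -1 else 1
  if 0 < g ∧ p ≡ 1 [MOD t] ∧ Nat.gcd ((p - 1) / t) ht = 1 then
    1 + ε₁ / 2 * (1 + (-1 : ℚ) ^ ((p - 1) / 2 ^ e)) * (jacobiSym (discQuad g₀) p : ℚ)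
  else if g < 0 ∧ ¬ 2 ∣ ht ∧ p ≡ 1 [MOD Nat.lcm (2 ^ (e + 1)) t] ∧
      Nat.gcd ((p - 1) / t) ht = 1 then
    1 + ε₁ * (-1 : ℚ) ^ ((p - 1) / 2 ^ (e + 1)) * (jacobiSym (discQuad g₀) p : ℚ)
  else if g < 0 ∧ 2 ∣ ht ∧ p ≡ 1 [MOD 2 * t] ∧ Nat.gcd ((p - 1) / (2 * t)) ht = 1 then 2
  else 0

/-- `G^m = {x^m : x ∈ G}`. -/
def powSet (G : Type*) [Monoid G] (m : ℕ) : Set G := Set.range fun x : G => x ^ m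

/-- `ρ`: the density `|a·G^{2h} ∩ G^t| / |G^{2h}|` in a group `G` of order `n`
(and `0` if `t ∤ n`). -/
def rhoDen (G : Type*) [Group G] (n : ℕ) (a : G) (h t : ℕ) : ℚ :=
  if t ∣ n then
    (((a • powSet G (2 * h)) ∩ powSet G t).ncard : ℚ) / ((powSet G (2 * h)).ncard : ℚ)
  else 0

/-- `r_{g,t}(p) = t_h · ρ_{sgn g, (d(g₀)/p), t}`, computed with respect to the
generator `γ` of `(ℤ/pℤ)^*`. -/
def rgt (g g₀ : ℚ) (h t p : ℕ) (γ : (ZMod p)ˣ) : ℚ :=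
  (t / Nat.gcd t h : ℕ) *
    rhoDen (ZMod p)ˣ (p - 1)
      ((if 0 < g then 1 else -1) * (if jacobiSym (discQuad g₀) p = 1 then 1 else γ ^ h)) h t

/-- The coefficients of the Dedekind zeta function of `K`: the number of ideals of
the ring of integers of `K` of absolute norm `n`. -/
def zetaCoeff (K : Type*) [Field K] [NumberField K] (n : ℕ) : ℂ :=
  (Nat.card {I : Ideal (NumberField.RingOfIntegers K) // Ideal.absNorm I = n} : ℂ)

/-- The Riemann Hypothesis for the Dedekind zeta function `ζ_K` of a number field `K`:
any analytic continuation of the Dirichlet series `Σ_I N(I)^{-s}` off `s = 1` has all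
its zeros in the critical strip on the line `Re s = 1/2`. -/
def DedekindRH (K : Type*) [Field K] [NumberField K] : Prop :=
  ∀ Z : ℂ → ℂ, (∀ s : ℂ, s ≠ 1 → AnalyticAt ℂ Z s) →
    (∀ s : ℂ, 1 < s.re → Z s = LSeries (zetaCoeff K) s) →
    ∀ s : ℂ, 0 < s.re → s.re < 1 → Z s = 0 → s.re = 1 / 2

/-- The Ramanujan sum `c_d(m)`. -/
def ramanujanSum (d m : ℕ) : ℂ :=
  ∑ k ∈ (Finset.Icc 1 d).filter (fun k => Nat.gcd k d = 1),
    Complex.exp (2 * Real.pi * Complex.I * k * m / d)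

/-- The sum `Σ_{ord χ = d} χ(γ)` over the complex characters of `G` of order exactly `d`. -/
def charOrdSum {G : Type*} [Group G] (d : ℕ) (γ : G) : ℂ :=
  ∑ᶠ χ ∈ {χ : G →* ℂˣ | orderOf χ = d}, ((χ γ : ℂˣ) : ℂ)

end

/-! ### Poisson summation for Gaussians -/

namespace Hooley

open MeasureTheory Matrix Topology

section Poisson

variable {n : Type*} [Fintype n]

/-- The quadratic form `x ↦ |B x|²` on `ℝⁿ`. -/
noncomputable def qf (B : Matrix n n ℝ) (x : n → ℝ) : ℝ := ∑ i, (B *ᵥ x) i ^ 2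

lemma qf_nonneg (B : Matrix n n ℝ) (x : n → ℝ) : 0 ≤ qf B x :=
  Finset.sum_nonneg fun _ _ => sq_nonneg _

lemma qf_cont (B : Matrix n n ℝ) : Continuous (qf B) := by
  unfold qf
  exact continuous_finsetSum _ fun i _ => ((continuous_apply i).comp
    (Continuous.matrix_mulVec continuous_const continuous_id)).pow 2

/-- The form `|B x|²` dominates a multiple of `|x|²`, because `|x| ≤ ‖B⁻¹‖ |B x|` (Cauchy-Schwarz). -/
lemma qf_coercive (B : Matrix n n ℝ) (hB : B.det ≠ 0) :
    ∃ c : ℝ, 0 < c ∧ ∀ x : n → ℝ, c * ∑ i, x i ^ 2 ≤ qf B x := by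
  set K : ℝ := ∑ i, ∑ j, (B⁻¹ i j) ^ 2 with hK
  have hK0 : 0 ≤ K := Finset.sum_nonneg fun _ _ => Finset.sum_nonneg fun _ _ => sq_nonneg _
  refine ⟨(K + 1)⁻¹, by positivity, fun x => ?_⟩
  have hx : x = B⁻¹ *ᵥ (B *ᵥ x) := by
    rw [Matrix.mulVec_mulVec, Matrix.nonsing_inv_mul _ (isUnit_iff_ne_zero.mpr hB),
      Matrix.one_mulVec]
  have h1 : ∑ i, x i ^ 2 ≤ K * qf B x := by
    rw [hK, Finset.sum_mul]
    refine Finset.sum_le_sum fun i _ => ?_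
    conv_lhs => rw [hx]
    exact Finset.sum_mul_sq_le_sq_mul_sq _ _ _
  have h2 := qf_nonneg B x
  rw [inv_mul_le_iff₀ (by positivity)]
  nlinarith

lemma summable_pi_prod {f : ℤ → ℝ} (hf : Summable f) (h0 : ∀ k, 0 ≤ f k) :
    Summable fun m : n → ℤ => ∏ i, f (m i) := by
  refine summable_of_sum_le (c := (∑' k, f k) ^ Fintype.card n)
    (fun m => Finset.prod_nonneg fun i _ => h0 _) fun T => ?_
  have hsub : T ⊆ Fintype.piFinset (fun i => T.image (fun m => m i)) := by
    intro m hm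
    rw [Fintype.mem_piFinset]
    exact fun i => Finset.mem_image_of_mem _ hm
  calc ∑ m ∈ T, ∏ i, f (m i)
      ≤ ∑ m ∈ Fintype.piFinset (fun i => T.image (fun m => m i)), ∏ i, f (m i) :=
        Finset.sum_le_sum_of_subset_of_nonneg hsub fun _ _ _ =>
          Finset.prod_nonneg fun i _ => h0 _
    _ = ∏ i, ∑ k ∈ T.image (fun m => m i), f k := (Finset.prod_univ_sum _ _).symm
    _ ≤ ∏ _i : n, ∑' k, f k := Finset.prod_le_prod
        (fun i _ => Finset.sum_nonneg fun k _ => h0 _)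
        (fun i _ => hf.sum_le_tsum _ (fun k _ => h0 _))
    _ = _ := by simp

lemma summable_gauss_std {c : ℝ} (hc : 0 < c) :
    Summable fun m : n → ℤ => Real.exp (-c * ∑ i, (m i : ℝ) ^ 2) := by
  have h1 : Summable fun k : ℤ => Real.exp (-c * (k : ℝ) ^ 2) := by
    have h := summable_pow_mul_jacobiTheta₂_term_bound 0 (T := c / Real.pi) (by positivity) 0
    refine h.congr fun k => ?_
    simp only [pow_zero, one_mul]
    congr 1
    field_simp
    simp
  refine (summable_pi_prod (n := n) h1 fun k => (Real.exp_pos _).le).congr fun m => ?_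
  rw [← Real.exp_sum, Finset.mul_sum]

/-- The Gaussian attached to `B`. -/
noncomputable def gs (B : Matrix n n ℝ) (x : n → ℝ) : ℝ := Real.exp (-Real.pi * qf B x)

lemma gs_cont (B : Matrix n n ℝ) : Continuous (gs B) :=
  Real.continuous_exp.comp (continuous_const.mul (qf_cont B))

lemma gs_bound (B : Matrix n n ℝ) (hB : B.det ≠ 0) : ∃ c : ℝ, 0 < c ∧ ∀ (x m : n → ℝ),
    gs B (x + m) ≤ Real.exp (c * ∑ i, x i ^ 2) * Real.exp (-(c / 2) * ∑ i, m i ^ 2) := by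
  obtain ⟨c, hc, h⟩ := qf_coercive B hB
  refine ⟨Real.pi * c, by positivity, fun x m => ?_⟩
  rw [gs, ← Real.exp_add]
  apply Real.exp_le_exp.mpr
  have h1 := h (x + m)
  have h2 : ∑ i, m i ^ 2 ≤ 2 * ∑ i, (x + m) i ^ 2 + 2 * ∑ i, x i ^ 2 := by
    rw [Finset.mul_sum, Finset.mul_sum, ← Finset.sum_add_distrib]
    refine Finset.sum_le_sum fun i _ => ?_
    simp only [Pi.add_apply]
    nlinarith [sq_nonneg (2 * x i + m i)]
  have hp := Real.pi_pos
  have h3 : c * (∑ i, m i ^ 2) / 2 - c * ∑ i, x i ^ 2 ≤ qf B (x + m) := by nlinarith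
  nlinarith [mul_le_mul_of_nonneg_left h3 hp.le]

lemma gs_summable (B : Matrix n n ℝ) (hB : B.det ≠ 0) (x : n → ℝ) :
    Summable fun m : n → ℤ => gs B (x + fun i => (m i : ℝ)) := by
  obtain ⟨c, hc, h⟩ := gs_bound B hB
  exact Summable.of_nonneg_of_le (fun m => (Real.exp_pos _).le) (fun m => h x _)
    ((summable_gauss_std (by positivity)).mul_left _)

/-- The periodisation of the Gaussian. -/
noncomputable def per (B : Matrix n n ℝ) (x : n → ℝ) : ℝ :=
  ∑' m : n → ℤ, gs B (x + fun i => (m i : ℝ))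

lemma per_cont (B : Matrix n n ℝ) (hB : B.det ≠ 0) : Continuous (per B) := by
  obtain ⟨c, hc, h⟩ := gs_bound B hB
  rw [continuous_iff_continuousAt]
  intro x₀
  set M := (∑ i, x₀ i ^ 2) + 1 with hM
  set U : Set (n → ℝ) := {x | ∑ i, x i ^ 2 < M} with hU
  have hUo : IsOpen U := isOpen_lt
    (continuous_finsetSum _ fun i _ => (continuous_apply i).pow 2) continuous_const
  have hx₀ : x₀ ∈ U := by simp [hU, hM]
  have : ContinuousOn (per B) U := by
    refine continuousOn_tsum (u := fun m : n → ℤ => Real.exp (c * M) *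
      Real.exp (-(c / 2) * ∑ i, (m i : ℝ) ^ 2)) (fun m => ?_) ?_ ?_
    · exact ((gs_cont B).comp (continuous_id.add continuous_const)).continuousOn
    · exact (summable_gauss_std (by positivity)).mul_left _
    · intro m x hx
      rw [Real.norm_of_nonneg (show 0 ≤ gs B _ from (Real.exp_pos _).le)]
      refine (h x _).trans ?_
      gcongr
      exact hx.le
  exact this.continuousAt (hUo.mem_nhds hx₀)

lemma per_periodic (B : Matrix n n ℝ) (x : n → ℝ) (k : n → ℤ) :
    per B (x + fun i => (k i : ℝ)) = per B x := by
  unfold per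
  rw [← (Equiv.addLeft k).tsum_eq (fun m : n → ℤ => gs B (x + fun i => (m i : ℝ)))]
  refine tsum_congr fun m => ?_
  congr 1
  ext i
  simp [add_assoc]

/-- The projection `ℝⁿ → (ℝ/ℤ)ⁿ`. -/
noncomputable def torusMk (n : Type*) : C(n → ℝ, UnitAddTorus n) where
  toFun x := fun i => (x i : UnitAddCircle)
  continuous_toFun := continuous_pi fun i =>
    (AddCircle.continuous_mk' 1).comp (continuous_apply i)

lemma torusMk_quot (n : Type*) : IsQuotientMap (torusMk n) :=
  (IsOpenQuotientMap.piMap (f := fun (_ : n) (t : ℝ) => (t : UnitAddCircle))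
    fun _ => QuotientAddGroup.isOpenQuotientMap_mk).isQuotientMap

lemma per_factor (B : Matrix n n ℝ) (hB : B.det ≠ 0) :
    ∃ F : C(UnitAddTorus n, ℂ), ∀ x : n → ℝ, F (fun i => (x i : UnitAddCircle)) = (per B x : ℂ) := by
  let g : C(n → ℝ, ℂ) := ⟨fun x => (per B x : ℂ), Complex.continuous_ofReal.comp (per_cont B hB)⟩
  have hfac : Function.FactorsThrough g (torusMk n) := by
    intro a b hab
    have h : ∀ i, ∃ k : ℤ, a i = b i + k := by
      intro i
      have h1 : ((a i : ℝ) : UnitAddCircle) = (b i : ℝ) := congrFun hab i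
      rw [← sub_eq_zero, ← AddCircle.coe_sub, AddCircle.coe_eq_zero_iff] at h1
      obtain ⟨k, hk⟩ := h1
      exact ⟨k, by simp at hk; linarith⟩
    choose k hk using h
    have : a = b + fun i => (k i : ℝ) := funext hk
    show (per B a : ℂ) = per B b
    rw [this, per_periodic]
  refine ⟨(torusMk_quot n).lift g hfac, fun x => ?_⟩
  exact congrArg (fun f : C(n → ℝ, ℂ) => f x) ((torusMk_quot n).lift_comp g hfac)

lemma gs_integrable (B : Matrix n n ℝ) (hB : B.det ≠ 0) : Integrable (gs B) := by
  obtain ⟨c, hc, h⟩ := qf_coercive B hB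
  have h1 := (GaussianFourier.integrable_cexp_neg_mul_sum_add (ι := n) (b := ((Real.pi * c : ℝ) : ℂ))
    (by rw [Complex.ofReal_re]; positivity) 0).norm
  refine h1.mono' (gs_cont B).aestronglyMeasurable (Eventually.of_forall fun x => ?_)
  rw [Real.norm_of_nonneg (show 0 ≤ gs B _ from (Real.exp_pos _).le), Complex.norm_exp]
  refine Real.exp_le_exp.mpr ?_
  have : (-((Real.pi * c : ℝ) : ℂ) * ∑ i, (x i : ℂ) ^ 2 + ∑ i, (0 : n → ℂ) i * (x i : ℂ)).re
      = -(Real.pi * (c * ∑ i, x i ^ 2)) := by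
    simp only [Pi.zero_apply, zero_mul, Finset.sum_const_zero, add_zero]
    have : (-((Real.pi * c : ℝ) : ℂ) * ∑ i, (x i : ℂ) ^ 2) =
      ((-(Real.pi * (c * ∑ i, x i ^ 2)) : ℝ) : ℂ) := by push_cast; ring
    rw [this, Complex.ofReal_re]
  rw [this, neg_mul]
  exact neg_le_neg (mul_le_mul_of_nonneg_left (h x) Real.pi_pos.le)

/-- The half-open unit cube with corner `a`. -/
def cube (a : n → ℤ) : Set (n → ℝ) := {x | ∀ i, x i ∈ Set.Ioc (a i : ℝ) (a i + 1)}

lemma cube_meas (a : n → ℤ) : MeasurableSet (cube a) := by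
  have : cube a = Set.univ.pi fun i => Set.Ioc (a i : ℝ) (a i + 1) := by
    ext x; simp [cube]
  rw [this]
  exact MeasurableSet.univ_pi fun i => measurableSet_Ioc

lemma cube_disj : Pairwise (Function.onFun Disjoint (cube (n := n))) := by
  intro a b hab
  rw [Function.onFun, Set.disjoint_left]
  intro x hx hy
  apply hab
  ext i
  have h1 := hx i
  have h2 := hy i
  have e1 : (⌈x i⌉ : ℤ) = a i + 1 := by
    rw [Int.ceil_eq_iff]; push_cast; constructor <;> linarith [h1.1, h1.2]
  have e2 : (⌈x i⌉ : ℤ) = b i + 1 := by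
    rw [Int.ceil_eq_iff]; push_cast; constructor <;> linarith [h2.1, h2.2]
  omega

lemma cube_cover : ⋃ a : n → ℤ, cube a = Set.univ := by
  refine Set.eq_univ_of_forall fun x => Set.mem_iUnion.mpr ⟨fun i => ⌈x i⌉ - 1, fun i => ?_⟩
  have h1 := Int.ceil_lt_add_one (x i)
  have h2 := Int.le_ceil (x i)
  constructor <;> push_cast <;> linarith

lemma cube_integral (f : (n → ℝ) → ℂ) (m : n → ℤ) :
    ∫ x in cube m, f x = ∫ x in cube (0 : n → ℤ), f (x + fun i => (m i : ℝ)) := by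
  have hme := (measurePreserving_add_right (volume : Measure (n → ℝ)) (fun i => (m i : ℝ)))
  rw [← hme.setIntegral_preimage_emb (measurableEmbedding_addRight _)]
  congr 2
  ext x
  simp only [cube, Set.mem_preimage, Set.mem_ofPred_eq, Pi.add_apply, Set.mem_Ioc]
  refine forall_congr' fun i => ?_
  simp only [Pi.zero_apply, Int.cast_zero]
  constructor <;> rintro ⟨h1, h2⟩ <;> constructor <;> linarith

/-- Unfolding: an integral over `ℝⁿ` is the integral over the unit cube of the periodisation. -/
lemma unfold_cube (f : (n → ℝ) → ℂ) (hf : Integrable f) :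
    ∫ x, f x = ∫ x in cube (0 : n → ℤ), ∑' m : n → ℤ, f (x + fun i => (m i : ℝ)) := by
  have hs : ∀ g : (n → ℝ) → ℂ, Integrable g → HasSum (fun m : n → ℤ =>
      ∫ x in cube (0 : n → ℤ), g (x + fun i => (m i : ℝ))) (∫ x, g x) := by
    intro g hg
    have := hasSum_integral_iUnion (μ := volume) (f := g) (fun m : n → ℤ => cube_meas m) cube_disj
      hg.integrableOn
    rw [cube_cover, setIntegral_univ] at this
    simpa only [cube_integral g] using this
  have h1 := hs f hf
  have h2 := hs (fun x => ((‖f x‖ : ℝ) : ℂ)) hf.norm.ofReal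
  have h3 : Summable fun m : n → ℤ => ∫ x in cube (0 : n → ℤ), ‖f (x + fun i => (m i : ℝ))‖ := by
    have := h2.summable
    simp only [integral_complex_ofReal] at this
    exact_mod_cast this
  have h4 := hasSum_integral_of_summable_integral_norm (μ := volume.restrict (cube (0 : n → ℤ)))
    (F := fun (m : n → ℤ) x => f (x + fun i => (m i : ℝ)))
    (fun m => (hf.comp_add_right _).integrableOn) h3
  exact h1.unique h4

/-- The Fourier transform of the Gaussian `exp (-π |B x|²)` is `|det B|⁻¹ exp (-π |B⁻ᵀ k|²)`: substitute `u = B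
x` in the standard Gaussian integral. -/
lemma gs_fourier (B : Matrix n n ℝ) (hB : B.det ≠ 0) (k : n → ℤ) :
    ∫ x : n → ℝ, Complex.exp (-(2 * Real.pi * Complex.I * ∑ i, (k i : ℂ) * x i)) * (gs B x : ℂ) =
      ((|B.det|⁻¹ * gs (B⁻¹)ᵀ (fun i => (k i : ℝ)) : ℝ) : ℂ) := by
  have hu : IsUnit B.det := isUnit_iff_ne_zero.mpr hB
  set w : n → ℝ := (B⁻¹)ᵀ *ᵥ (fun i => (k i : ℝ)) with hw
  obtain ⟨G, hG⟩ : ∃ G : (n → ℝ) → ℂ, G = fun u : n → ℝ => Complex.exp (-(Real.pi : ℂ) * ∑ i, (u i : ℂ) ^ 2 +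
        ∑ i, (-(2 * Real.pi * Complex.I * w i)) * u i) := ⟨_, rfl⟩
  have key : ∀ x : n → ℝ, Complex.exp (-(2 * Real.pi * Complex.I * ∑ i, (k i : ℂ) * x i)) * (gs B x : ℂ)
      = G (toLin' B x) := by
    intro x
    have e1 : ∑ i, w i * (B *ᵥ x) i = ∑ i, (k i : ℝ) * x i := by
      have : w ⬝ᵥ (B *ᵥ x) = (fun i => (k i : ℝ)) ⬝ᵥ x := by
        rw [hw, Matrix.mulVec_transpose, ← Matrix.dotProduct_mulVec, Matrix.mulVec_mulVec,
          Matrix.nonsing_inv_mul _ hu, Matrix.one_mulVec]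
      exact this
    simp only [hG, toLin'_apply, gs, qf]
    rw [Complex.ofReal_exp, ← Complex.exp_add]
    congr 1
    have e2 : ∑ i, (w i : ℂ) * ((B *ᵥ x) i : ℝ) = ∑ i, (k i : ℂ) * x i := by exact_mod_cast congrArg (fun r : ℝ => (r : ℂ)) e1
    rw [← e2, Finset.mul_sum]
    push_cast
    rw [add_comm, ← Finset.sum_neg_distrib]
    congr 1
    refine Finset.sum_congr rfl fun i _ => by ring
  simp_rw [key]
  have hmap := Real.map_matrix_volume_pi_eq_smul_volume_pi hB
  have hemb : MeasurableEmbedding (toLin' B) := by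
    have : Function.Injective (toLin' B) := by
      intro a b hab
      have := congrArg (fun v => B⁻¹ *ᵥ v) hab
      simpa [Matrix.mulVec_mulVec, Matrix.nonsing_inv_mul _ hu] using this
    exact (LinearMap.isClosedEmbedding_of_injective (LinearMap.ker_eq_bot.mpr this)).measurableEmbedding
  rw [← hemb.integral_map (μ := volume), hmap, integral_smul_measure, hG,
    GaussianFourier.integral_cexp_neg_mul_sum_add (by simpa using Real.pi_pos)]
  have hpi : (Real.pi : ℂ) ≠ 0 := by exact_mod_cast Real.pi_ne_zero
  rw [div_self hpi, Complex.one_cpow, one_mul, ENNReal.toReal_ofReal (abs_nonneg _), abs_inv,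
    Complex.real_smul, Complex.ofReal_mul]
  congr 1
  rw [gs, qf, Complex.ofReal_exp]
  congr 1
  have : ∀ i, (-(2 * Real.pi * Complex.I * w i)) ^ 2 = (-4 * (Real.pi : ℂ) ^ 2) * (w i : ℂ) ^ 2 := by
    intro i; linear_combination (4 * (Real.pi : ℂ) ^ 2 * (w i : ℂ) ^ 2) * Complex.I_sq
  simp_rw [this, ← Finset.mul_sum]
  push_cast
  field_simp
  rfl

/-- **Poisson summation** for Gaussians on `ℝⁿ`. -/
theorem poisson_gs (B : Matrix n n ℝ) (hB : B.det ≠ 0) :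
    ∑' m : n → ℤ, gs B (fun i => (m i : ℝ)) =
      |B.det|⁻¹ * ∑' m : n → ℤ, gs (B⁻¹)ᵀ (fun i => (m i : ℝ)) := by
  obtain ⟨F, hF⟩ := per_factor B hB
  have hu : IsUnit B.det := isUnit_iff_ne_zero.mpr hB
  have hB' : (B⁻¹)ᵀ.det ≠ 0 := by
    rw [Matrix.det_transpose]
    exact (isUnit_iff_ne_zero.mp ((Matrix.isUnit_nonsing_inv_det_iff).mpr hu))
  have hmf : ∀ (k : n → ℤ) (x : n → ℝ), UnitAddTorus.mFourier (-k) (fun i => (x i : UnitAddCircle)) =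
      Complex.exp (-(2 * Real.pi * Complex.I * ∑ i, (k i : ℂ) * x i)) := by
    intro k x
    simp only [UnitAddTorus.mFourier, ContinuousMap.coe_mk, Pi.neg_apply]
    rw [Finset.mul_sum, ← Finset.sum_neg_distrib, Complex.exp_sum]
    refine Finset.prod_congr rfl fun i _ => ?_
    rw [fourier_coe_apply]
    congr 1
    push_cast
    ring
  have hc : ∀ k : n → ℤ, UnitAddTorus.mFourierCoeff F k =
      ((|B.det|⁻¹ * gs (B⁻¹)ᵀ (fun i => (k i : ℝ)) : ℝ) : ℂ) := by
    intro k
    rw [← gs_fourier B hB k, unfold_cube, UnitAddTorus.mFourierCoeff_eq_integral F k 0]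
    · have : {x : n → ℝ | ∀ i, x i ∈ Set.Ioc ((0 : n → ℝ) i) ((0 : n → ℝ) i + 1)} = cube (0 : n → ℤ) := by
        ext x; simp [cube]
      rw [this]
      congr 1
      ext x
      rw [hmf, hF, smul_eq_mul, per, Complex.ofReal_tsum, ← tsum_mul_left]
      refine tsum_congr fun m => ?_
      congr 1
      rw [Complex.exp_eq_exp_iff_exists_int]
      refine ⟨∑ i, k i * m i, ?_⟩
      simp only [Pi.add_apply]
      push_cast
      simp only [mul_add, Finset.sum_add_distrib]
      ring
    · refine (gs_integrable B hB).ofReal.bdd_mul (c := 1) ?_ (Eventually.of_forall fun x => ?_)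
      · exact (Continuous.aestronglyMeasurable (by fun_prop))
      · rw [Complex.norm_exp]
        apply le_of_eq
        rw [Real.exp_eq_one_iff]
        have : -(2 * Real.pi * Complex.I * ∑ i, (k i : ℂ) * x i) =
          ((-(2 * Real.pi * ∑ i, (k i : ℝ) * x i) : ℝ) : ℂ) * Complex.I := by push_cast; ring
        rw [this, Complex.re_ofReal_mul, Complex.I_re, mul_zero]
  have hsum : Summable (UnitAddTorus.mFourierCoeff F) := by
    rw [funext hc]
    have := (gs_summable _ hB' 0).mul_left (|B.det|⁻¹)
    simp only [zero_add] at this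
    exact_mod_cast this
  have h := UnitAddTorus.hasSum_mFourier_series_apply_of_summable hsum (fun i => ((0 : ℝ) : UnitAddCircle))
  rw [hF (fun _ => 0)] at h
  have h2 := h.tsum_eq
  have h3 : ∀ k : n → ℤ, UnitAddTorus.mFourier k (fun i => ((0 : ℝ) : UnitAddCircle)) = 1 := by
    intro k
    have := hmf (-k) (fun _ => 0)
    simpa using this
  simp only [h3, hc, smul_eq_mul, mul_one] at h2
  rw [← Complex.ofReal_tsum, Complex.ofReal_inj, tsum_mul_left] at h2
  rw [h2, per]
  refine tsum_congr fun m => ?_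
  congr 1
  ext i
  simp

end Poisson
end Hooley

/-! ### Theta functions of fractional ideals -/

namespace Hooley

open Matrix NumberField Module

section ThetaBasis

variable {K : Type*} [Field K] [NumberField K]

/-- The quadratic form `a ↦ ∑_φ e^{2 v_φ} |φ a|²` on a number field `K`, with weights
`v` indexed by the infinite places. -/
noncomputable def QK (v : InfinitePlace K → ℝ) (a : K) : ℝ :=
  ∑ w : InfinitePlace K, w.mult * (Real.exp (2 * v w) * w a ^ 2)

lemma sum_embeddings_eq {A : Type*} [AddCommMonoid A] (f : InfinitePlace K → A) :
    ∑ φ : K →+* ℂ, f (InfinitePlace.mk φ) = ∑ w : InfinitePlace K, w.mult • f w := by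
  rw [← Finset.sum_fiberwise (g := fun φ : K →+* ℂ => InfinitePlace.mk φ)]
  refine Finset.sum_congr rfl fun w _ => ?_
  rw [Finset.sum_congr rfl (g := fun _ => f w), Finset.sum_const, InfinitePlace.card_filter_mk_eq]
  intro φ hφ
  rw [(Finset.mem_filter.mp hφ).2]

lemma QK_eq (v : InfinitePlace K → ℝ) (a : K) :
    QK v a = ∑ φ : K →+* ℂ, Real.exp (2 * v (InfinitePlace.mk φ)) * ‖φ a‖ ^ 2 := by
  have := sum_embeddings_eq (K := K) (fun w => Real.exp (2 * v w) * w a ^ 2)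
  simp only [InfinitePlace.apply, nsmul_eq_mul] at this
  rw [this, QK]

variable {ι : Type*} [Fintype ι] (b : Basis ι ℚ K) (e : ι ≃ (K →+* ℂ))

/-- The matrix `(φ_j(b_i))` of the conjugates of a basis. -/
noncomputable def embMat : Matrix ι ι ℂ := fun i j => e j (b i)

lemma embMat_det : (embMat b e).det ^ 2 = ((Algebra.discr ℚ b : ℚ) : ℂ) := by
  have := Algebra.discr_eq_det_embeddingsMatrixReindex_pow_two ℚ ℂ b (e.trans (RingHom.equivRatAlgHom K ℂ))
  rw [eq_ratCast] at this
  rw [this]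
  rfl

/-- The Gram matrix of `QK v` in the basis `b`. -/
noncomputable def gramR (v : InfinitePlace K → ℝ) : Matrix ι ι ℝ := fun i j =>
  ∑ φ : K →+* ℂ, Real.exp (2 * v (InfinitePlace.mk φ)) * (starRingEnd ℂ (φ (b i)) * φ (b j)).re

lemma gramR_map (v : InfinitePlace K → ℝ) : (gramR b v).map (fun x : ℝ => (x : ℂ)) =
    (embMat b e).map (starRingEnd ℂ) *
      diagonal (fun j => ((Real.exp (2 * v (InfinitePlace.mk (e j))) : ℝ) : ℂ)) * (embMat b e)ᵀ := by
  ext i j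
  rw [Matrix.mul_apply]
  simp only [mul_diagonal, Matrix.map_apply, transpose_apply, embMat, gramR]
  rw [Equiv.sum_comp e (fun φ : K →+* ℂ => starRingEnd ℂ (φ (b i)) *
    ((Real.exp (2 * v (InfinitePlace.mk φ)) : ℝ) : ℂ) * φ (b j))]
  set T : (K →+* ℂ) → ℂ := fun φ : K →+* ℂ => starRingEnd ℂ (φ (b i)) *
    ((Real.exp (2 * v (InfinitePlace.mk φ)) : ℝ) : ℂ) * φ (b j) with hT
  have h1 : starRingEnd ℂ (∑ φ, T φ) = ∑ φ, T φ := by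
    rw [map_sum]
    refine Fintype.sum_equiv (ComplexEmbedding.involutive_conjugate K).toPerm _ _ fun φ => ?_
    simp only [hT, Function.Involutive.coe_toPerm, InfinitePlace.mk_conjugate_eq, map_mul,
      Complex.conj_ofReal, ComplexEmbedding.conjugate_coe_eq]
  rw [Complex.conj_eq_iff_re.mp h1 |>.symm, Complex.re_sum]
  congr 1
  refine Finset.sum_congr rfl fun φ _ => ?_
  rw [hT]
  simp only
  rw [mul_right_comm, mul_comm _ (((Real.exp _ : ℝ)) : ℂ), Complex.re_ofReal_mul]

lemma gramR_quad_real (v : InfinitePlace K → ℝ) (x : ι → ℝ) :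
    x ⬝ᵥ (gramR b v *ᵥ x) = ∑ φ : K →+* ℂ, Real.exp (2 * v (InfinitePlace.mk φ)) *
      ‖∑ i, (x i : ℂ) * φ (b i)‖ ^ 2 := by
  simp only [dotProduct, mulVec, gramR, Finset.sum_mul, Finset.mul_sum]
  rw [Finset.sum_congr rfl fun i _ => Finset.sum_comm, Finset.sum_comm]
  refine Finset.sum_congr rfl fun φ _ => ?_
  have : ‖∑ i, (x i : ℂ) * φ (b i)‖ ^ 2 = ∑ i, ∑ j, (x i : ℝ) * x j * (starRingEnd ℂ (φ (b i)) * φ (b j)).re := by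
    have h : ((‖∑ i, (x i : ℂ) * φ (b i)‖ ^ 2 : ℝ) : ℂ) = ∑ i, ∑ j, (x i : ℂ) * x j * (starRingEnd ℂ (φ (b i)) * φ (b j)) := by
      rw [Complex.ofReal_pow, ← Complex.conj_mul', map_sum, Finset.sum_mul_sum]
      refine Finset.sum_congr rfl fun i _ => Finset.sum_congr rfl fun j _ => ?_
      simp only [map_mul, Complex.conj_ofReal]
      ring
    rw [← Complex.ofReal_re (‖∑ i, (x i : ℂ) * φ (b i)‖ ^ 2), h]
    simp only [Complex.re_sum]
    refine Finset.sum_congr rfl fun i _ => Finset.sum_congr rfl fun j _ => ?_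
    rw [← Complex.re_ofReal_mul]
    congr 1
    push_cast; ring
  rw [this, Finset.mul_sum]
  refine Finset.sum_congr rfl fun i _ => ?_
  rw [Finset.mul_sum]
  refine Finset.sum_congr rfl fun j _ => ?_
  ring

lemma gramR_quad (v : InfinitePlace K → ℝ) (m : ι → ℤ) :
    (fun i => (m i : ℝ)) ⬝ᵥ (gramR b v *ᵥ fun i => (m i : ℝ)) = QK v (∑ i, m i • b i) := by
  rw [gramR_quad_real, QK_eq]
  refine Finset.sum_congr rfl fun φ _ => ?_
  rw [map_sum]
  congr 3
  refine Finset.sum_congr rfl fun i _ => ?_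
  rw [zsmul_eq_mul, map_mul, map_intCast, Complex.ofReal_intCast]

lemma gramR_posSemidef (v : InfinitePlace K → ℝ) : (gramR b v).PosSemidef := by
  refine .of_dotProduct_mulVec_nonneg ?_ fun x => ?_
  · ext i j
    simp only [conjTranspose_apply, gramR, star_trivial]
    refine Finset.sum_congr rfl fun φ _ => ?_
    congr 1
    simp only [Complex.mul_re, Complex.conj_re, Complex.conj_im]
    ring
  · rw [star_trivial, gramR_quad_real]
    positivity

lemma det_map_star (M : Matrix ι ι ℂ) : (M.map (starRingEnd ℂ)).det = starRingEnd ℂ M.det :=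
  (RingHom.map_det (starRingEnd ℂ) M).symm

lemma exp_sum_mult (v : InfinitePlace K → ℝ) :
    ∏ j, Real.exp (2 * v (InfinitePlace.mk (e j))) = Real.exp (2 * ∑ w : InfinitePlace K, w.mult * v w) := by
  rw [← Real.exp_sum, Equiv.sum_comp e (fun φ : K →+* ℂ => 2 * v (InfinitePlace.mk φ)),
    sum_embeddings_eq (fun w => 2 * v w), Finset.mul_sum]
  congr 1
  refine Finset.sum_congr rfl fun w _ => ?_
  rw [nsmul_eq_mul]; ring

lemma gramR_det (v : InfinitePlace K → ℝ) :
    (gramR b v).det = |((Algebra.discr ℚ b : ℚ) : ℝ)| * Real.exp (2 * ∑ w : InfinitePlace K, w.mult * v w) := by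
  have hc : Fintype.card ι = Fintype.card (K →+* ℂ) := by
    rw [← finrank_eq_card_basis b, Embeddings.card]
  let e : ι ≃ (K →+* ℂ) := Fintype.equivOfCardEq hc
  have h : (((gramR b v).det : ℝ) : ℂ) = ((gramR b v).map (fun x : ℝ => (x : ℂ))).det :=
    (RingHom.map_det Complex.ofRealHom (gramR b v))
  have h2 : starRingEnd ℂ (embMat b e).det * (embMat b e).det = ((|((Algebra.discr ℚ b : ℚ) : ℝ)| : ℝ) : ℂ) := by
    rw [Complex.conj_mul', ← Complex.ofReal_pow, ← norm_pow, embMat_det, Complex.norm_ratCast]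
  rw [gramR_map b e, det_mul, det_mul, det_transpose, det_diagonal, det_map_star, mul_right_comm, h2,
    ← Complex.ofReal_prod, exp_sum_mult, ← Complex.ofReal_mul] at h
  exact_mod_cast h

lemma embMat_dual : (embMat b.traceDual e) * (embMat b e)ᵀ = 1 := by
  ext i j
  rw [Matrix.mul_apply, Matrix.one_apply]
  simp only [transpose_apply, embMat]
  rw [Equiv.sum_comp e (fun φ : K →+* ℂ => φ (b.traceDual i) * φ (b j))]
  have h1 := trace_eq_sum_embeddings (K := ℚ) (L := K) ℂ (x := b.traceDual i * b j)
  rw [Basis.trace_traceDual_mul] at h1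
  rw [← Equiv.sum_comp (RingHom.equivRatAlgHom K ℂ)] at h1
  have h3 : ∑ φ : K →+* ℂ, φ (b.traceDual i) * φ (b j) =
      ∑ φ : K →+* ℂ, (RingHom.equivRatAlgHom K ℂ) φ (b.traceDual i * b j) :=
    Finset.sum_congr rfl fun φ _ => (map_mul φ _ _).symm
  rw [h3, ← h1]
  by_cases h : j = i
  · simp [h]
  · simp [h, Ne.symm h]

lemma gramR_inv (v : InfinitePlace K → ℝ) : (gramR b v)⁻¹ = (gramR b.traceDual (-v))ᵀ := by
  have hc : Fintype.card ι = Fintype.card (K →+* ℂ) := by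
    rw [← finrank_eq_card_basis b, Embeddings.card]
  let e : ι ≃ (K →+* ℂ) := Fintype.equivOfCardEq hc
  refine Matrix.inv_eq_right_inv ?_
  have hinj : Function.Injective (fun M : Matrix ι ι ℝ => M.map (fun x : ℝ => (x : ℂ))) := by
    intro M N h
    ext i j
    have := congrFun (congrFun h i) j
    simpa using this
  apply hinj
  set N := embMat b e
  set N' := embMat b.traceDual e
  set D : Matrix ι ι ℂ := diagonal (fun j => ((Real.exp (2 * v (InfinitePlace.mk (e j))) : ℝ) : ℂ))
  set D' : Matrix ι ι ℂ := diagonal (fun j => ((Real.exp (2 * (-v) (InfinitePlace.mk (e j))) : ℝ) : ℂ))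
  have h1 : N' * Nᵀ = 1 := embMat_dual b e
  have h2 : Nᵀ * N' = 1 := mul_eq_one_comm.mp h1
  have h3 : D * D' = 1 := by
    rw [diagonal_mul_diagonal, ← diagonal_one]
    congr 1
    ext j
    rw [← Complex.ofReal_mul, ← Real.exp_add]
    simp
  have h4 : N * N'ᵀ = 1 := by
    have := congrArg transpose h1
    rwa [transpose_mul, transpose_transpose, transpose_one] at this
  calc (gramR b v * (gramR b.traceDual (-v))ᵀ).map (fun x : ℝ => (x : ℂ))
      = (gramR b v).map (fun x : ℝ => (x : ℂ)) * ((gramR b.traceDual (-v)).map (fun x : ℝ => (x : ℂ)))ᵀ := by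
        rw [← transpose_map]
        exact Matrix.map_mul (f := Complex.ofRealHom)
    _ = (N.map (starRingEnd ℂ) * D * Nᵀ) * (N'.map (starRingEnd ℂ) * D' * N'ᵀ)ᵀ := by
        rw [gramR_map b e, gramR_map b.traceDual e]
    _ = N.map (starRingEnd ℂ) * (D * (Nᵀ * N') * D') * (N'.map (starRingEnd ℂ))ᵀ := by
        rw [transpose_mul, transpose_mul, transpose_transpose, diagonal_transpose]
        simp only [Matrix.mul_assoc]
        rfl
    _ = (N * N'ᵀ).map (starRingEnd ℂ) := by
        rw [h2, Matrix.mul_one, h3, Matrix.mul_one, ← transpose_map, Matrix.map_mul]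
    _ = _ := by
        rw [h4]
        ext i j
        simp [Matrix.one_apply, apply_ite]

lemma discr_ne (b : Basis ι ℚ K) : (Algebra.discr ℚ b : ℚ) ≠ 0 := Algebra.discr_not_zero_of_basis ℚ b

open scoped MatrixOrder in
/-- The Gram matrix of `QK v` is `Bᵀ B` for a real invertible `B`. The matrix `B⁻ᵀ` then gives the form `QK
(-v)` on the dual basis, so Poisson summation relates the two theta series. -/
lemma gramR_factor (v : InfinitePlace K → ℝ) : ∃ B : Matrix ι ι ℝ, B.det ≠ 0 ∧
    |B.det| = Real.sqrt |((Algebra.discr ℚ b : ℚ) : ℝ)| * Real.exp (∑ w : InfinitePlace K, w.mult * v w) ∧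
    (∀ m : ι → ℤ, qf B (fun i => (m i : ℝ)) = QK v (∑ i, m i • b i)) ∧
    ∀ m : ι → ℤ, qf (B⁻¹)ᵀ (fun i => (m i : ℝ)) = QK (-v) (∑ i, m i • b.traceDual i) := by
  obtain ⟨B, hB⟩ := CStarAlgebra.nonneg_iff_eq_star_mul_self.mp (gramR_posSemidef b v).nonneg
  have hB : gramR b v = Bᵀ * B := by
    rw [hB, star_eq_conjTranspose, conjTranspose_eq_transpose_of_trivial]
  have hdisc : 0 < |((Algebra.discr ℚ b : ℚ) : ℝ)| := abs_pos.mpr (by exact_mod_cast discr_ne b)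
  have hdet := gramR_det b v
  rw [hB, det_mul, det_transpose] at hdet
  have hne : B.det ≠ 0 := by
    intro h
    rw [h] at hdet
    have := mul_pos hdisc (Real.exp_pos (2 * ∑ w : InfinitePlace K, w.mult * v w))
    linarith
  have hq : ∀ (A : Matrix ι ι ℝ) (x : ι → ℝ), qf A x = x ⬝ᵥ ((Aᵀ * A) *ᵥ x) := by
    intro A x
    rw [← mulVec_mulVec, dotProduct_mulVec, vecMul_transpose]
    simp [qf, dotProduct, sq]
  refine ⟨B, hne, ?_, fun m => ?_, fun m => ?_⟩
  · rw [← Real.sqrt_sq_eq_abs, sq, hdet, Real.sqrt_mul (abs_nonneg _)]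
    congr 1
    rw [two_mul, Real.exp_add, Real.sqrt_mul_self (Real.exp_nonneg _)]
  · rw [hq, ← hB, gramR_quad]
  · rw [hq, ← gramR_quad]
    have : (B⁻¹)ᵀᵀ * (B⁻¹)ᵀ = (gramR b.traceDual (-v))ᵀ := by
      rw [← gramR_inv, hB, Matrix.mul_inv_rev, transpose_transpose, transpose_nonsing_inv]
    rw [this, mulVec_transpose, dotProduct_comm, dotProduct_mulVec]

/-- The theta transformation formula for a `ℚ`-basis of `K` and its trace-dual. -/
theorem theta_basis (v : InfinitePlace K → ℝ) :
    Summable (fun m : ι → ℤ => Real.exp (-Real.pi * QK v (∑ i, m i • b i))) ∧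
    ∑' m : ι → ℤ, Real.exp (-Real.pi * QK v (∑ i, m i • b i)) =
      (Real.sqrt |((Algebra.discr ℚ b : ℚ) : ℝ)| * Real.exp (∑ w : InfinitePlace K, w.mult * v w))⁻¹ *
      ∑' m : ι → ℤ, Real.exp (-Real.pi * QK (-v) (∑ i, m i • b.traceDual i)) := by
  obtain ⟨B, h1, h2, h3, h4⟩ := gramR_factor b v
  have h5 := poisson_gs B h1
  have h6 := gs_summable B h1 0
  rw [h2] at h5
  simp only [gs, h3, h4, zero_add] at h5 h6
  exact ⟨h6, h5⟩

end ThetaBasis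

section ThetaIdeal

open scoped nonZeroDivisors

variable {K : Type*} [Field K] [NumberField K]

/-- The theta series `∑_{a ∈ I} exp(-π ∑_φ e^{2 v_φ} |φ a|²)` of a fractional ideal. -/
noncomputable def thetaI (I : (FractionalIdeal (𝓞 K)⁰ K)ˣ) (v : InfinitePlace K → ℝ) : ℝ :=
  ∑' a : (I : FractionalIdeal (𝓞 K)⁰ K), Real.exp (-Real.pi * QK v a)

/-- The dual of a fractional ideal for the trace form, as a unit. -/
noncomputable def dualI (I : (FractionalIdeal (𝓞 K)⁰ K)ˣ) : (FractionalIdeal (𝓞 K)⁰ K)ˣ :=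
  Units.mk0 (FractionalIdeal.dual ℤ ℚ (I : FractionalIdeal (𝓞 K)⁰ K))
    (FractionalIdeal.dual_ne_zero ℤ ℚ I.ne_zero)

lemma dualI_eq (I : (FractionalIdeal (𝓞 K)⁰ K)ˣ) : dualI I = dualI 1 * I⁻¹ := by
  ext1
  simp only [dualI, Units.val_mk0, Units.val_mul, Units.val_inv_eq_inv_val, Units.val_one]
  exact FractionalIdeal.dual_eq_mul_inv (L := K) (B := 𝓞 K) ℤ ℚ (I := (I : FractionalIdeal (𝓞 K)⁰ K))

/-- The absolute norm of a fractional ideal, as a positive real. -/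
noncomputable def nI (I : (FractionalIdeal (𝓞 K)⁰ K)ˣ) : ℝ :=
  (FractionalIdeal.absNorm (I : FractionalIdeal (𝓞 K)⁰ K) : ℝ)

lemma nI_pos (I : (FractionalIdeal (𝓞 K)⁰ K)ˣ) : 0 < nI I := by
  unfold nI
  have h1 := FractionalIdeal.absNorm_nonneg (I : FractionalIdeal (𝓞 K)⁰ K)
  have h2 : FractionalIdeal.absNorm (I : FractionalIdeal (𝓞 K)⁰ K) ≠ 0 := by
    rw [Ne, FractionalIdeal.absNorm_eq_zero_iff]; exact I.ne_zero
  exact_mod_cast lt_of_le_of_ne h1 (Ne.symm h2)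

lemma nI_mul (I J : (FractionalIdeal (𝓞 K)⁰ K)ˣ) : nI (I * J) = nI I * nI J := by
  simp [nI]

lemma nI_inv (I : (FractionalIdeal (𝓞 K)⁰ K)ˣ) : nI I⁻¹ = (nI I)⁻¹ := by
  simp [nI]

variable (K) in
lemma discr_abs_pos : 0 < |(discr K : ℝ)| := abs_pos.mpr (by exact_mod_cast discr_ne_zero K)

/-- The dual of `I` is the dual of `1` times `I⁻¹`, and the dual of `1` is the inverse different, of norm
`|d_K|⁻¹`. -/
lemma nI_dual (I : (FractionalIdeal (𝓞 K)⁰ K)ˣ) : nI (dualI I) = (|(discr K : ℝ)| * nI I)⁻¹ := by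
  rw [dualI_eq, nI_mul, nI_inv, mul_inv]
  congr 1
  have h : (dualI (1 : (FractionalIdeal (𝓞 K)⁰ K)ˣ) : FractionalIdeal (𝓞 K)⁰ K) =
      ((differentIdeal ℤ (𝓞 K) : Ideal (𝓞 K)) : FractionalIdeal (𝓞 K)⁰ K)⁻¹ := by
    rw [coeIdeal_differentIdeal ℤ ℚ K (𝓞 K), inv_inv]
    rfl
  rw [nI, h, map_inv₀, FractionalIdeal.coeIdeal_absNorm, absNorm_differentIdeal K (𝓞 K)]
  push_cast
  rw [Nat.cast_natAbs, Int.cast_abs]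

lemma discr_basisI (I : (FractionalIdeal (𝓞 K)⁰ K)ˣ) :
    |((Algebra.discr ℚ (basisOfFractionalIdeal K I) : ℚ) : ℝ)| = |(discr K : ℝ)| * nI I ^ 2 := by
  have hc : Fintype.card (Free.ChooseBasisIndex ℤ (𝓞 K)) = Fintype.card (Free.ChooseBasisIndex ℤ I) := by
    rw [← finrank_eq_card_basis (basisOfFractionalIdeal K I), ← finrank_eq_card_basis (integralBasis K)]
  let e := Fintype.equivOfCardEq hc
  have h1 := det_basisOfFractionalIdeal_eq_absNorm K I e
  set b' := (basisOfFractionalIdeal K I).reindex e.symm with hb'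
  have h2 := Algebra.discr_of_matrix_vecMul (integralBasis K) ((integralBasis K).toMatrix b')
  rw [Basis.toMatrix_map_vecMul, ← coe_discr, hb', Basis.coe_reindex, Algebra.discr_reindex, ← Basis.coe_reindex,
    ← hb', ← Basis.det_apply] at h2
  rw [h2]
  unfold nI
  rw [← h1]
  push_cast
  rw [abs_mul, abs_pow]
  ring

lemma tsum_basis {ι : Type*} [Fintype ι] (b : Basis ι ℚ K) (I : (FractionalIdeal (𝓞 K)⁰ K)ˣ)
    (hb : ∀ x : K, x ∈ Submodule.span ℤ (Set.range b) ↔ x ∈ (I : FractionalIdeal (𝓞 K)⁰ K)) (F : K → ℝ) :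
    (Summable (fun m : ι → ℤ => F (∑ i, m i • b i)) ↔
      Summable fun a : (I : FractionalIdeal (𝓞 K)⁰ K) => F a) ∧
    ∑' m : ι → ℤ, F (∑ i, m i • b i) = ∑' a : (I : FractionalIdeal (𝓞 K)⁰ K), F a := by
  have hmem : ∀ m : ι → ℤ, ∑ i, m i • b i ∈ (I : FractionalIdeal (𝓞 K)⁰ K) := fun m =>
    (hb _).mp (Submodule.sum_mem _ fun i _ => Submodule.smul_mem _ _
      (Submodule.subset_span ⟨i, rfl⟩))
  obtain ⟨E, hE⟩ : ∃ E : (ι → ℤ) → (I : FractionalIdeal (𝓞 K)⁰ K), ∀ m, (E m : K) = ∑ i, m i • b i :=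
    ⟨fun m => ⟨_, hmem m⟩, fun m => rfl⟩
  have hli : LinearIndependent ℤ b := b.linearIndependent.restrict_scalars' ℤ
  have hbij : Function.Bijective E := by
    constructor
    · intro m m' h
      have h : ∑ i, m i • b i = ∑ i, m' i • b i := by rw [← hE, ← hE, h]
      have := Fintype.linearIndependent_iff.mp hli (fun i => m i - m' i) (by
        simp only [sub_smul, Finset.sum_sub_distrib, h, sub_self])
      ext i
      exact sub_eq_zero.mp (this i)
    · rintro ⟨x, hx⟩
      obtain ⟨c, hc⟩ := (Submodule.mem_span_range_iff_exists_fun ℤ).mp ((hb x).mpr hx)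
      exact ⟨c, Subtype.ext ((hE c).trans hc)⟩
  have h1 := (Equiv.ofBijective E hbij).summable_iff (f := fun a : (I : FractionalIdeal (𝓞 K)⁰ K) => F a)
  have h2 := (Equiv.ofBijective E hbij).tsum_eq (fun a : (I : FractionalIdeal (𝓞 K)⁰ K) => F a)
  simp only [Function.comp_def, Equiv.ofBijective_apply, hE] at h1 h2
  exact ⟨h1, h2⟩

lemma span_basisI (I : (FractionalIdeal (𝓞 K)⁰ K)ˣ) (x : K) :
    x ∈ Submodule.span ℤ (Set.range (basisOfFractionalIdeal K I)) ↔ x ∈ (I : FractionalIdeal (𝓞 K)⁰ K) :=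
  mem_span_basisOfFractionalIdeal K

lemma span_dual_basisI (I : (FractionalIdeal (𝓞 K)⁰ K)ˣ) (x : K) :
    x ∈ Submodule.span ℤ (Set.range (basisOfFractionalIdeal K I).traceDual) ↔
      x ∈ (dualI I : FractionalIdeal (𝓞 K)⁰ K) := by
  have h := Submodule.traceDual_span_of_basis ℤ (I : Submodule (𝓞 K) K) (basisOfFractionalIdeal K I)
    (by ext y; rw [span_basisI]; rfl)
  rw [← h, ← FractionalIdeal.coe_dual ℤ ℚ I.ne_zero]
  rfl

lemma thetaI_summable (I : (FractionalIdeal (𝓞 K)⁰ K)ˣ) (v : InfinitePlace K → ℝ) :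
    Summable fun a : (I : FractionalIdeal (𝓞 K)⁰ K) => Real.exp (-Real.pi * QK v a) :=
  (tsum_basis _ I (span_basisI I) fun x => Real.exp (-Real.pi * QK v x)).1.mp
    (theta_basis (basisOfFractionalIdeal K I) v).1

/-- The theta transformation formula for fractional ideals. -/
theorem thetaI_fe (I : (FractionalIdeal (𝓞 K)⁰ K)ˣ) (v : InfinitePlace K → ℝ) :
    thetaI I v = (Real.sqrt |(discr K : ℝ)| * nI I * Real.exp (∑ w : InfinitePlace K, w.mult * v w))⁻¹ *
      thetaI (dualI I) (-v) := by
  have h := (theta_basis (basisOfFractionalIdeal K I) v).2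
  rw [(tsum_basis _ I (span_basisI I) fun x => Real.exp (-Real.pi * QK v x)).2,
    (tsum_basis _ (dualI I) (span_dual_basisI I) fun x => Real.exp (-Real.pi * QK (-v) x)).2,
    discr_basisI, Real.sqrt_mul (abs_nonneg _), Real.sqrt_sq (nI_pos I).le] at h
  exact h

end ThetaIdeal

end Hooley

/-! ### Logarithmic coordinates -/

namespace Hooley

open NumberField NumberField.Units NumberField.Units.dirichletUnitTheorem Module MeasureTheory
open scoped nonZeroDivisors ENNReal

section Params

variable {K : Type*} [Field K] [NumberField K]

/-- The trace-zero vector of logarithms at all infinite places, weighted by local degree,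
recovered from its coordinates away from `w₀`. -/
noncomputable def Lz (z : logSpace K) (w : InfinitePlace K) : ℝ :=
  if h : w = w₀ then -(∑ w', z w') / (w₀ : InfinitePlace K).mult else z ⟨w, h⟩ / w.mult

lemma mult_pos' (w : InfinitePlace K) : (0:ℝ) < w.mult := by exact_mod_cast InfinitePlace.mult_pos

lemma sum_mult_Lz (z : logSpace K) : ∑ w : InfinitePlace K, w.mult * Lz z w = 0 := by
  rw [Fintype.sum_eq_add_sum_subtype_ne _ (w₀ : InfinitePlace K)]
  have h1 : ∀ w : {w : InfinitePlace K // w ≠ w₀}, (w.1.mult : ℝ) * Lz z w.1 = z w := by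
    intro w
    have := (mult_pos' w.1).ne'
    rw [Lz, dif_neg w.2]
    field_simp
  rw [Finset.sum_congr rfl fun w _ => h1 w, Lz, dif_pos rfl]
  have := (mult_pos' (w₀ : InfinitePlace K)).ne'
  field_simp
  ring

lemma Lz_add (z z' : logSpace K) : Lz (z + z') = Lz z + Lz z' := by
  ext w
  simp only [Lz, Pi.add_apply, Finset.sum_add_distrib]
  split_ifs <;> ring

lemma Lz_neg (z : logSpace K) : Lz (-z) = - Lz z := by
  ext w
  simp only [Lz, Pi.neg_apply, Finset.sum_neg_distrib]
  split_ifs <;> ring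

lemma Lz_cont (w : InfinitePlace K) : Continuous fun z : logSpace K => Lz z w := by
  unfold Lz
  split_ifs <;> fun_prop

/-- A trace-zero vector is determined by its coordinates away from `w₀`. -/
lemma Lz_of (v : InfinitePlace K → ℝ) (hv : ∑ w : InfinitePlace K, w.mult * v w = 0) :
    Lz (fun w => w.1.mult * v w.1) = v := by
  ext w
  rw [Fintype.sum_eq_add_sum_subtype_ne _ (w₀ : InfinitePlace K)] at hv
  unfold Lz
  split_ifs with h
  · subst h
    have := (mult_pos' (w₀ : InfinitePlace K)).ne'
    field_simp
    linarith
  · have := (mult_pos' w).ne'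
    field_simp

/-- `[K : ℚ]` as a real number. -/
noncomputable abbrev nn (K : Type*) [Field K] [NumberField K] : ℝ := (finrank ℚ K : ℝ)

lemma nn_pos : 0 < nn K := by exact_mod_cast finrank_pos (R := ℚ) (M := K)

lemma sum_mult : ∑ w : InfinitePlace K, (w.mult : ℝ) = nn K := by
  exact_mod_cast InfinitePlace.sum_mult_eq (K := K)

/-- The logarithmic coordinates `(u, z) ↦ u / n + L(z)` on `ℝ^{r₁+r₂}`. -/
noncomputable def VV (u : ℝ) (z : logSpace K) (w : InfinitePlace K) : ℝ := u / nn K + Lz z w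

lemma VV_add (u u' : ℝ) (z z' : logSpace K) : VV (u + u') (z + z') = VV u z + VV u' z' := by
  ext w
  simp only [VV, Lz_add, Pi.add_apply]
  ring

lemma VV_neg (u : ℝ) (z : logSpace K) : VV (-u) (-z) = - VV u z := by
  ext w
  simp only [VV, Lz_neg, Pi.neg_apply]
  ring

lemma sum_mult_VV (u : ℝ) (z : logSpace K) : ∑ w : InfinitePlace K, w.mult * VV u z w = u := by
  simp only [VV, mul_add, Finset.sum_add_distrib, sum_mult_Lz, ← Finset.sum_mul, sum_mult]
  have := (nn_pos (K := K)).ne'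
  field_simp
  ring

/-- The logarithmic vector `(log w(a))_w`. -/
noncomputable def logV (a : K) (w : InfinitePlace K) : ℝ := Real.log (w a)

/-- The coordinates in `logSpace K` of the trace-zero part of `logV a`. -/
noncomputable def ell (a : K) : logSpace K :=
  fun w => w.1.mult * (logV a w.1 - Real.log |(Algebra.norm ℚ a : ℝ)| / nn K)

lemma wpos {a : K} (ha : a ≠ 0) (w : InfinitePlace K) : 0 < w a := by
  exact (AbsoluteValue.pos_iff w.1).mpr ha

lemma sum_logV {a : K} (ha : a ≠ 0) :
    ∑ w : InfinitePlace K, w.mult * logV a w = Real.log |(Algebra.norm ℚ a : ℝ)| := by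
  have h := InfinitePlace.prod_eq_abs_norm a
  rw [← Rat.cast_abs, ← h, Real.log_prod]
  · simp [logV]
  · intro w _
    exact pow_ne_zero _ (ne_of_gt (wpos ha w))

/-- For `a ≠ 0` the vector `(log w(a))_w` has coordinates `(log |N a|, ell a)`. -/
lemma VV_ell {a : K} (ha : a ≠ 0) : VV (Real.log |(Algebra.norm ℚ a : ℝ)|) (ell a) = logV a := by
  ext w
  have h := Lz_of (fun w : InfinitePlace K => logV a w - Real.log |(Algebra.norm ℚ a : ℝ)| / nn K) (by
    simp only [mul_sub, Finset.sum_sub_distrib, sum_logV ha, ← Finset.sum_mul, sum_mult]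
    have := (nn_pos (K := K)).ne'
    field_simp
    ring)
  unfold VV ell
  rw [h]
  ring

/-- Multiplication by `a` translates the parameter of the quadratic form by the logarithmic vector of `a`. -/
lemma QK_mul (v : InfinitePlace K → ℝ) {a : K} (ha : a ≠ 0) (b : K) :
    QK v (a * b) = QK (v + logV a) b := by
  unfold QK
  refine Finset.sum_congr rfl fun w _ => ?_
  simp only [Pi.add_apply, logV, map_mul]
  have : Real.exp (2 * Real.log (w a)) = w a ^ 2 := by
    rw [two_mul, Real.exp_add, Real.exp_log (wpos ha w), sq]
  rw [mul_add, Real.exp_add, this]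
  ring

lemma QK_nonneg (v : InfinitePlace K → ℝ) (a : K) : 0 ≤ QK v a := by
  unfold QK; positivity

lemma QK_mono {v v' : InfinitePlace K → ℝ} (h : v ≤ v') (a : K) : QK v a ≤ QK v' a := by
  unfold QK
  gcongr with w
  exact h w

lemma QK_neg (v : InfinitePlace K → ℝ) (a : K) : QK v (-a) = QK v a := by
  unfold QK
  refine Finset.sum_congr rfl fun w _ => ?_
  rw [show w (-a) = w a from AbsoluteValue.map_neg _ _]

lemma QK_cont (a : K) : Continuous fun v : InfinitePlace K → ℝ => QK v a := by
  unfold QK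
  fun_prop

lemma ell_mul {a b : K} (ha : a ≠ 0) (hb : b ≠ 0) : ell (a * b) = ell a + ell b := by
  ext w
  have h1 : (Algebra.norm ℚ a : ℝ) ≠ 0 := by exact_mod_cast Algebra.norm_ne_zero_iff.mpr ha
  have h2 : (Algebra.norm ℚ b : ℝ) ≠ 0 := by exact_mod_cast Algebra.norm_ne_zero_iff.mpr hb
  simp only [ell, logV, Pi.add_apply, map_mul, Rat.cast_mul, abs_mul]
  rw [Real.log_mul (wpos ha _).ne' (wpos hb _).ne',
    Real.log_mul (abs_ne_zero.mpr h1) (abs_ne_zero.mpr h2)]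
  ring

lemma unit_norm (u : (𝓞 K)ˣ) : |(Algebra.norm ℚ (u : K) : ℝ)| = 1 := by
  have := NumberField.Units.norm (K := K) u
  rw [← Rat.cast_abs]
  exact_mod_cast this

lemma ell_unit (u : (𝓞 K)ˣ) : ell (u : K) = logEmbedding K (Additive.ofMul u) := by
  ext w
  rw [logEmbedding_component, ell, unit_norm]
  simp [logV]

lemma unit_ne (u : (𝓞 K)ˣ) : (u : K) ≠ 0 := by simp

lemma logV_unit (u : (𝓞 K)ˣ) : logV (u : K) = Lz (logEmbedding K (Additive.ofMul u)) := by
  rw [← VV_ell (unit_ne u), unit_norm, ell_unit]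
  ext w
  simp [VV]

/-- The nonconstant part of the theta series of `I`. -/
noncomputable def ThS (I : (FractionalIdeal (𝓞 K)⁰ K)ˣ) (v : InfinitePlace K → ℝ) : ℝ≥0∞ :=
  ∑' a : {a : (I : FractionalIdeal (𝓞 K)⁰ K) // (a : K) ≠ 0},
    ENNReal.ofReal (Real.exp (-Real.pi * QK v (a.1 : K)))

lemma tsum_split {α : Type*} (x₀ : α) (p : α → Prop) (hp : ∀ a, p a ↔ a ≠ x₀) (f : α → ℝ≥0∞) :
    ∑' a, f a = f x₀ + ∑' a : {a // p a}, f a := by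
  have h := ENNReal.summable.tsum_add_tsum_compl (s := {x₀}) (f := f) ENNReal.summable
  rw [← h, tsum_singleton]
  congr 1
  exact (Equiv.subtypeEquivRight fun a => (hp a).symm).tsum_eq fun a : {a // p a} => f a

lemma ThS_eq (I : (FractionalIdeal (𝓞 K)⁰ K)ˣ) (v : InfinitePlace K → ℝ) :
    1 + ThS I v = ENNReal.ofReal (thetaI I v) := by
  unfold thetaI ThS
  rw [ENNReal.ofReal_tsum_of_nonneg (fun a => (Real.exp_pos _).le) (thetaI_summable I v)]
  rw [tsum_split (⟨0, (I : FractionalIdeal (𝓞 K)⁰ K).val.zero_mem⟩ : (I : FractionalIdeal (𝓞 K)⁰ K)) (fun a => (a : K) ≠ 0)]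
  · congr 1
    simp [QK]
  · intro a
    exact not_congr ⟨fun h => Subtype.ext h, fun h => by rw [h]⟩

lemma ThS_lt_top (I : (FractionalIdeal (𝓞 K)⁰ K)ˣ) (v : InfinitePlace K → ℝ) : ThS I v < ⊤ := by
  have h := ThS_eq I v
  refine lt_of_le_of_lt (b := 1 + ThS I v) le_add_self ?_
  rw [h]; exact ENNReal.ofReal_lt_top

lemma ThS_anti (I : (FractionalIdeal (𝓞 K)⁰ K)ˣ) {v v' : InfinitePlace K → ℝ} (h : v ≤ v') :
    ThS I v' ≤ ThS I v := by
  unfold ThS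
  gcongr ∑' a, ENNReal.ofReal (Real.exp ?_) with a
  nlinarith [Real.pi_pos, QK_mono h (a.1 : K)]

lemma countable_I (I : (FractionalIdeal (𝓞 K)⁰ K)ˣ) : Countable (I : FractionalIdeal (𝓞 K)⁰ K) := by
  have : Countable K := by
    exact (Module.finBasis ℚ K).equivFun.toEquiv.injective.countable
  exact Subtype.countable

lemma ThS_meas (I : (FractionalIdeal (𝓞 K)⁰ K)ˣ) : Measurable fun v => ThS I v := by
  unfold ThS
  have : Countable {a : (I : FractionalIdeal (𝓞 K)⁰ K) // (a : K) ≠ 0} :=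
    have := countable_I I
    Subtype.countable
  refine Measurable.tsum fun a => ?_
  have := QK_cont (a.1 : K)
  exact ENNReal.measurable_ofReal.comp (Continuous.measurable (by fun_prop))

/-- The vector of logarithmic coordinates attached to `(t, z)`, normalised by the covolume of
`I`; here `u = log t`. -/
noncomputable def vP (u : ℝ) (z : logSpace K) (I : (FractionalIdeal (𝓞 K)⁰ K)ˣ) :
    InfinitePlace K → ℝ := VV (u - Real.log (nI I * Real.sqrt |(discr K : ℝ)|)) z

lemma log_cov_dual (I : (FractionalIdeal (𝓞 K)⁰ K)ˣ) :
    Real.log (nI (dualI I) * Real.sqrt |(discr K : ℝ)|) =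
      - Real.log (nI I * Real.sqrt |(discr K : ℝ)|) := by
  have h0 := discr_abs_pos K
  have h1 := nI_pos I
  rw [nI_dual, Real.log_mul (by positivity) (by positivity), Real.log_mul (by positivity) (by positivity),
    Real.log_inv, Real.log_mul (by positivity) (by positivity), Real.log_sqrt h0.le]
  ring

lemma vP_dual (u : ℝ) (z : logSpace K) (I : (FractionalIdeal (𝓞 K)⁰ K)ˣ) :
    -vP u z I = vP (-u) (-z) (dualI I) := by
  unfold vP
  rw [log_cov_dual, ← VV_neg]
  congr 1; ring

/-- The theta functional equation in the coordinates `(u, z)`, with the constant term `1` written separately. -/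
lemma ThS_fe (u : ℝ) (z : logSpace K) (I : (FractionalIdeal (𝓞 K)⁰ K)ˣ) :
    1 + ThS I (vP u z I) = ENNReal.ofReal (Real.exp (-u)) * (1 + ThS (dualI I) (vP (-u) (-z) (dualI I))) := by
  rw [ThS_eq, ThS_eq, thetaI_fe, vP_dual, ← ENNReal.ofReal_mul (Real.exp_pos _).le]
  congr 2
  unfold vP
  have h0 := discr_abs_pos K
  have h1 := nI_pos I
  have h2 : 0 < nI I * Real.sqrt |(discr K : ℝ)| := by positivity
  rw [sum_mult_VV, Real.exp_sub, Real.exp_log h2, Real.exp_neg]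
  field_simp

/-- Units permute the nonzero elements of `I`, so the theta series is periodic in `z` modulo the unit lattice.
-/
lemma ThS_unit (u : ℝ) (z : logSpace K) (I : (FractionalIdeal (𝓞 K)⁰ K)ˣ) (ε : (𝓞 K)ˣ) :
    ThS I (vP u (z + logEmbedding K (Additive.ofMul ε)) I) = ThS I (vP u z I) := by
  have h : vP u (z + logEmbedding K (Additive.ofMul ε)) I = vP u z I + logV (ε : K) := by
    ext w
    simp only [vP, VV, Lz_add, logV_unit, Pi.add_apply]
    ring
  rw [h]
  unfold ThS
  have hmem : ∀ (ε : (𝓞 K)ˣ) (a : K), a ∈ (I : FractionalIdeal (𝓞 K)⁰ K) →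
      (ε : K) * a ∈ (I : FractionalIdeal (𝓞 K)⁰ K) := by
    intro ε a ha
    have := (I : FractionalIdeal (𝓞 K)⁰ K).val.smul_mem (ε : 𝓞 K) ha
    rw [Algebra.smul_def] at this
    exact this
  obtain ⟨e, he⟩ : ∃ e : {a : (I : FractionalIdeal (𝓞 K)⁰ K) // (a : K) ≠ 0} ≃
      {a : (I : FractionalIdeal (𝓞 K)⁰ K) // (a : K) ≠ 0}, ∀ a, ((e a).1 : K) = ε * (a.1 : K) :=
    ⟨{ toFun := fun a => ⟨⟨ε * a.1, hmem ε _ a.1.2⟩, mul_ne_zero (unit_ne ε) a.2⟩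
       invFun := fun a => ⟨⟨(ε⁻¹ : (𝓞 K)ˣ) * a.1, hmem ε⁻¹ _ a.1.2⟩, mul_ne_zero (unit_ne ε⁻¹) a.2⟩
       left_inv := fun a => by
        ext; simp [← mul_assoc]
       right_inv := fun a => by
        ext; simp [← mul_assoc] }, fun a => rfl⟩
  conv_rhs => rw [← e.tsum_eq]
  refine tsum_congr fun a => ?_
  rw [he, QK_mul _ (unit_ne ε)]

end Params

end Hooley

/-! ### Integration over a fundamental domain of the units -/

namespace Hooley

open NumberField NumberField.Units NumberField.Units.dirichletUnitTheorem Module MeasureTheory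
open scoped nonZeroDivisors ENNReal

section FundDom

variable (K : Type*) [Field K] [NumberField K]

/-- A fundamental domain for the unit lattice. -/
noncomputable def DD : Set (logSpace K) :=
  ZSpan.fundamentalDomain ((basisUnitLattice K).ofZLatticeBasis ℝ (unitLattice K))

instance : VAddInvariantMeasure (unitLattice K) (logSpace K) (volume : Measure (logSpace K)) :=
  ⟨fun c s _ => measure_preimage_add volume (c : logSpace K) s⟩

lemma DD_fund : IsAddFundamentalDomain (unitLattice K) (DD K) (volume : Measure (logSpace K)) :=
  ZLattice.isAddFundamentalDomain (basisUnitLattice K) volume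

lemma DD_fund_neg : IsAddFundamentalDomain (unitLattice K) ((fun z => -z) ⁻¹' (DD K)) (volume : Measure (logSpace K)) := by
  refine (DD_fund K).preimage_of_equiv (Measure.measurePreserving_neg _).quasiMeasurePreserving
    (e := fun g => -g) (neg_bijective) ?_
  intro g x
  simp only [Submodule.vadd_def, vadd_eq_add]
  push_cast
  abel

lemma DD_meas : MeasurableSet (DD K) := ZSpan.fundamentalDomain_measurableSet _

lemma DD_vol_pos : volume (DD K) ≠ 0 := ZSpan.measure_fundamentalDomain_ne_zero _

lemma DD_bdd : Bornology.IsBounded (DD K) := ZSpan.fundamentalDomain_isBounded _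

lemma DD_vol_lt : volume (DD K) < ⊤ := (DD_bdd K).measure_lt_top

variable {K}

lemma Lz_DD_bdd : ∃ B : ℝ, ∀ z ∈ DD K, ∀ w, |Lz z w| ≤ B := by
  have h : ∀ w : InfinitePlace K, ∃ B : ℝ, ∀ z ∈ DD K, |Lz z w| ≤ B := by
    intro w
    have hc : IsCompact (closure (DD K)) := (DD_bdd K).isCompact_closure
    obtain ⟨B, hB⟩ := hc.exists_bound_of_continuousOn (Lz_cont w).continuousOn
    exact ⟨B, fun z hz => hB z (subset_closure hz)⟩
  choose B hB using h
  refine ⟨∑ w, |B w|, fun z hz w => (hB w z hz).trans ((le_abs_self _).trans ?_)⟩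
  exact Finset.single_le_sum (f := fun w => |B w|) (fun w _ => abs_nonneg _) (Finset.mem_univ w)

lemma vP_mono {u u' : ℝ} (h : u ≤ u') (z : logSpace K) (I : (FractionalIdeal (𝓞 K)⁰ K)ˣ) :
    vP u z I ≤ vP u' z I := by
  intro w
  unfold vP VV
  have := nn_pos (K := K)
  gcongr

lemma QK_lower (I : (FractionalIdeal (𝓞 K)⁰ K)ˣ) (v : InfinitePlace K → ℝ) :
    ∃ m > 0, ∀ a : (I : FractionalIdeal (𝓞 K)⁰ K), (a : K) ≠ 0 → m ≤ QK v a := by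
  have h := (thetaI_summable I v).tendsto_cofinite_zero
  have h1 : ∀ᶠ a : (I : FractionalIdeal (𝓞 K)⁰ K) in cofinite, Real.exp (-Real.pi * QK v a) < Real.exp (-Real.pi) :=
    h.eventually (gt_mem_nhds (Real.exp_pos _))
  rw [eventually_cofinite] at h1
  have hpos : ∀ a : K, a ≠ 0 → 0 < QK v a := by
    intro a ha
    unfold QK
    have : 0 < (Finset.univ : Finset (InfinitePlace K)).card := Finset.card_pos.mpr ⟨w₀, Finset.mem_univ _⟩
    refine Finset.sum_pos (fun w _ => ?_) (Finset.card_pos.mp this)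
    have := wpos ha w
    have := mult_pos' w
    positivity
  obtain ⟨m, hm, hm2⟩ : ∃ m > 0, ∀ a ∈ h1.toFinset, (a : K) ≠ 0 → m ≤ QK v a := by
    generalize h1.toFinset = s
    induction s using Finset.induction_on with
    | empty => exact ⟨1, one_pos, by simp⟩
    | insert a s has ih =>
      obtain ⟨m, hm, h⟩ := ih
      by_cases ha : (a : K) = 0
      · refine ⟨m, hm, fun b hb hb0 => ?_⟩
        rcases Finset.mem_insert.mp hb with rfl | hb
        · exact absurd ha hb0
        · exact h b hb hb0
      · refine ⟨min m (QK v a), lt_min hm (hpos _ ha), fun b hb hb0 => ?_⟩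
        rcases Finset.mem_insert.mp hb with rfl | hb
        · exact min_le_right _ _
        · exact (min_le_left _ _).trans (h b hb hb0)
  refine ⟨min m 1, lt_min hm one_pos, fun a ha => ?_⟩
  by_cases hs : a ∈ h1.toFinset
  · exact (min_le_left _ _).trans (hm2 a hs ha)
  · rw [Set.Finite.mem_toFinset] at hs
    simp only [Set.mem_setOf_eq, not_not, Real.exp_lt_exp] at hs
    refine (min_le_right _ _).trans ?_
    nlinarith [Real.pi_pos]

lemma vP_lower (I : (FractionalIdeal (𝓞 K)⁰ K)ˣ) (u : ℝ) :
    ∃ v' : InfinitePlace K → ℝ, ∀ z ∈ DD K, v' ≤ vP u z I := by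
  obtain ⟨B, hB⟩ := Lz_DD_bdd (K := K)
  refine ⟨fun w => (u - Real.log (nI I * Real.sqrt |(discr K : ℝ)|)) / nn K - B, fun z hz w => ?_⟩
  have := neg_abs_le (Lz z w)
  have := hB z hz w
  unfold vP VV
  linarith

/-- A choice of one fractional ideal in each ideal class. -/
def Reps (I : ClassGroup (𝓞 K) → (FractionalIdeal (𝓞 K)⁰ K)ˣ) : Prop :=
  Function.Bijective fun C => ClassGroup.mk K (I C)

lemma Reps.dual {I : ClassGroup (𝓞 K) → (FractionalIdeal (𝓞 K)⁰ K)ˣ} (h : Reps I) :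
    Reps fun C => dualI (I C) := by
  unfold Reps at *
  simp_rw [fun C => dualI_eq (I C), map_mul, map_inv]
  exact (Equiv.mulLeft (ClassGroup.mk K (dualI (1 : (FractionalIdeal (𝓞 K)⁰ K)ˣ)))).bijective.comp
    ((Equiv.inv (ClassGroup (𝓞 K))).bijective.comp h)

lemma exists_reps : ∃ I : ClassGroup (𝓞 K) → (FractionalIdeal (𝓞 K)⁰ K)ˣ, Reps I := by
  have hs : Function.Surjective (ClassGroup.mk (R := 𝓞 K) K) := by
    intro C
    obtain ⟨J, rfl⟩ := ClassGroup.mk0_surjective C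
    exact ⟨FractionalIdeal.mk0 K J, ClassGroup.mk_mk0 K J⟩
  refine ⟨Function.surjInv hs, ?_⟩
  have : (fun C => ClassGroup.mk K (Function.surjInv hs C)) = id := funext (Function.surjInv_eq hs)
  rw [Reps, this]
  exact Function.bijective_id

/-- The integrated theta series without constant term, summed over ideal classes. -/
noncomputable def Phi (I : ClassGroup (𝓞 K) → (FractionalIdeal (𝓞 K)⁰ K)ˣ) (u : ℝ) : ℝ≥0∞ :=
  ∑ C, ∫⁻ z in DD K, ThS (I C) (vP u z (I C))

lemma ThS_vP_meas (I : (FractionalIdeal (𝓞 K)⁰ K)ˣ) (u : ℝ) : Measurable fun z => ThS I (vP u z I) := by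
  refine (ThS_meas I).comp (measurable_pi_lambda _ fun w => ?_)
  unfold vP VV
  have := (Lz_cont w).measurable
  fun_prop

lemma Phi_lt_top (I : ClassGroup (𝓞 K) → (FractionalIdeal (𝓞 K)⁰ K)ˣ) (u : ℝ) : Phi I u < ⊤ := by
  unfold Phi
  refine ENNReal.sum_lt_top.mpr fun C _ => ?_
  obtain ⟨v', hv'⟩ := vP_lower (I C) u
  refine lt_of_le_of_lt (setLIntegral_mono (g := fun _ => ThS (I C) v') measurable_const
    fun z hz => ThS_anti _ (hv' z hz)) ?_
  rw [setLIntegral_const]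
  exact ENNReal.mul_lt_top (ThS_lt_top _ _) (DD_vol_lt K)

lemma Phi_anti (I : ClassGroup (𝓞 K) → (FractionalIdeal (𝓞 K)⁰ K)ˣ) {u u' : ℝ} (h : u ≤ u') :
    Phi I u' ≤ Phi I u := by
  unfold Phi
  gcongr with C hC z
  exact ThS_anti _ (vP_mono h z _)

/-- The volume term: class number times volume of the fundamental domain. -/
noncomputable def hV (K : Type*) [Field K] [NumberField K] : ℝ≥0∞ :=
  ∑ _C : ClassGroup (𝓞 K), volume (DD K)

lemma hV_lt : hV K < ⊤ := ENNReal.sum_lt_top.mpr fun _ _ => DD_vol_lt K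

lemma hV_pos : hV K ≠ 0 := by
  unfold hV
  rw [Ne, Finset.sum_eq_zero_iff]
  exact fun h => DD_vol_pos K (h 1 (Finset.mem_univ _))

lemma lint_neg (I : (FractionalIdeal (𝓞 K)⁰ K)ˣ) (u : ℝ) :
    ∫⁻ z in DD K, ThS I (vP u (-z) I) = ∫⁻ z in DD K, ThS I (vP u z I) := by
  have h1 := (DD_fund K).setLIntegral_eq (DD_fund_neg K) (fun z => ThS I (vP u (-z) I)) (by
    rintro ⟨g, hg⟩ z
    obtain ⟨x, hx⟩ := (unitLattice K).neg_mem hg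
    have h := ThS_unit u (-z) I x.toMul
    rw [ofMul_toMul] at h
    rw [← h]
    congr 2
    have h2 : (⟨g, hg⟩ : unitLattice K) +ᵥ z = g + z := rfl
    have h3 : logEmbedding K x = -g := hx.2
    rw [h2, h3]
    abel)
  rw [h1]
  exact (Measure.measurePreserving_neg (volume : Measure (logSpace K))).setLIntegral_comp_preimage
    (DD_meas K) (ThS_vP_meas I u)

/-- The functional equation `u ↦ -u` of the integrated theta series. The constant terms integrate to `hV K`; the
sign of `z` is absorbed by the symmetry of the integral over a fundamental domain. -/
lemma Phi_fe (I : ClassGroup (𝓞 K) → (FractionalIdeal (𝓞 K)⁰ K)ˣ) (u : ℝ) :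
    hV K + Phi I u = ENNReal.ofReal (Real.exp (-u)) * (hV K + Phi (fun C => dualI (I C)) (-u)) := by
  unfold hV Phi
  rw [← Finset.sum_add_distrib, ← Finset.sum_add_distrib, Finset.mul_sum]
  refine Finset.sum_congr rfl fun C _ => ?_
  rw [← lint_neg (dualI (I C))]
  have h1 : volume (DD K) = ∫⁻ z in DD K, 1 := by simp
  rw [h1, ← lintegral_add_left measurable_const, ← lintegral_add_left measurable_const,
    ← lintegral_const_mul' _ _ ENNReal.ofReal_ne_top]
  exact lintegral_congr fun z => ThS_fe u z (I C)

lemma QK_add_const (v : InfinitePlace K → ℝ) (c : ℝ) (a : K) :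
    QK (fun w => c + v w) a = Real.exp (2 * c) * QK v a := by
  unfold QK
  rw [Finset.mul_sum]
  refine Finset.sum_congr rfl fun w _ => ?_
  rw [mul_add, Real.exp_add]; ring

lemma ThS_decay (I : (FractionalIdeal (𝓞 K)⁰ K)ˣ) : ∃ m > 0, ∀ u ≥ 0, ∀ z ∈ DD K,
    ThS I (vP u z I) ≤ ENNReal.ofReal (Real.exp (-m * (Real.exp (2 * (u / nn K)) - 1))) * ThS I (vP 0 z I) := by
  obtain ⟨v', hv'⟩ := vP_lower I 0
  obtain ⟨m, hm, hm'⟩ := QK_lower I v'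
  refine ⟨Real.pi * m, by positivity, fun u hu z hz => ?_⟩
  unfold ThS
  rw [← ENNReal.tsum_mul_left]
  refine ENNReal.tsum_le_tsum fun a => ?_
  rw [← ENNReal.ofReal_mul (Real.exp_pos _).le, ← Real.exp_add]
  refine ENNReal.ofReal_le_ofReal (Real.exp_le_exp.mpr ?_)
  have h1 : vP u z I = fun w => u / nn K + vP 0 z I w := by
    ext w; unfold vP VV; ring
  rw [h1, QK_add_const]
  have h2 := (hm' a.1 a.2).trans (QK_mono (hv' z hz) (a.1 : K))
  have h3 : 1 ≤ Real.exp (2 * (u / nn K)) := by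
    rw [← Real.exp_zero]; exact Real.exp_le_exp.mpr (by have := nn_pos (K := K); positivity)
  nlinarith [mul_nonneg (sub_nonneg.mpr h2) (sub_nonneg.mpr h3), Real.pi_pos,
    mul_nonneg Real.pi_pos.le (mul_nonneg (sub_nonneg.mpr h2) (sub_nonneg.mpr h3))]

/-- Double-exponential decay in `u = log t`. It follows from `QK (v + u/n) = e^{2u/n} QK v` and a positive lower
bound for `QK` on the nonzero elements of `I`. -/
lemma Phi_decay (I : ClassGroup (𝓞 K) → (FractionalIdeal (𝓞 K)⁰ K)ˣ) : ∃ m > 0, ∀ u ≥ 0,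
    Phi I u ≤ ENNReal.ofReal (Real.exp (-m * (Real.exp (2 * (u / nn K)) - 1))) * Phi I 0 := by
  choose m hm hm' using fun C => ThS_decay (I C)
  obtain ⟨m0, hm0, hle⟩ : ∃ m0 > 0, ∀ C, m0 ≤ m C := by
    obtain ⟨C, _, hC⟩ := Finset.exists_min_image Finset.univ m ⟨1, Finset.mem_univ _⟩
    exact ⟨m C, hm C, fun C' => hC C' (Finset.mem_univ _)⟩
  refine ⟨m0, hm0, fun u hu => ?_⟩
  unfold Phi
  rw [Finset.mul_sum]
  refine Finset.sum_le_sum fun C _ => ?_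
  rw [← lintegral_const_mul' _ _ ENNReal.ofReal_ne_top]
  refine setLIntegral_mono' (DD_meas K) fun z hz => (hm' C u hu z hz).trans ?_
  have h3 : 1 ≤ Real.exp (2 * (u / nn K)) := by
    rw [← Real.exp_zero]; exact Real.exp_le_exp.mpr (by have := nn_pos (K := K); positivity)
  gcongr
  exact hle C

/-- The real-valued integrated theta function in the variable `t`. -/
noncomputable def fT (I : ClassGroup (𝓞 K) → (FractionalIdeal (𝓞 K)⁰ K)ˣ) (t : ℝ) : ℝ :=
  (hV K).toReal + (Phi I (Real.log t)).toReal

lemma fT_int (I : ClassGroup (𝓞 K) → (FractionalIdeal (𝓞 K)⁰ K)ˣ) :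
    LocallyIntegrableOn (fun t => ((fT I t : ℝ) : ℂ)) (Set.Ioi 0) := by
  intro x hx
  have hx' : 0 < x := hx
  refine ⟨Set.Icc (x/2) (2*x), mem_nhdsWithin_of_mem_nhds (Icc_mem_nhds (by linarith) (by linarith)), ?_⟩
  refine Integrable.ofReal ?_
  refine AntitoneOn.integrableOn_isCompact isCompact_Icc fun a ha b hb hab => ?_
  have ha' : 0 < a := by linarith [ha.1]
  have := ENNReal.toReal_mono (Phi_lt_top I _).ne (Phi_anti I (Real.log_le_log ha' hab))
  show (hV K).toReal + (Phi I (Real.log b)).toReal ≤ (hV K).toReal + (Phi I (Real.log a)).toReal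
  linarith

lemma fT_top (I : ClassGroup (𝓞 K) → (FractionalIdeal (𝓞 K)⁰ K)ˣ) (r : ℝ) :
    (fun t => ((fT I t : ℝ) : ℂ) - ((hV K).toReal : ℂ)) =O[atTop] (fun t : ℝ => t ^ r) := by
  obtain ⟨m, hm, hm'⟩ := Phi_decay I
  have hn := nn_pos (K := K)
  have h1 := (isLittleO_exp_neg_mul_rpow_atTop hm (r * nn K / 2)).comp_tendsto
    (tendsto_rpow_atTop (y := 2 / nn K) (by positivity))
  refine Asymptotics.IsBigO.trans (g := fun t : ℝ => Real.exp (-m * t ^ (2 / nn K))) ?_ ?_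
  · refine Asymptotics.IsBigO.of_bound (Real.exp m * (Phi I 0).toReal) ?_
    filter_upwards [eventually_ge_atTop 1] with t ht
    have ht0 : 0 < t := by linarith
    have h2 := ENNReal.toReal_mono (ENNReal.mul_ne_top ENNReal.ofReal_ne_top (Phi_lt_top I 0).ne)
      (hm' (Real.log t) (Real.log_nonneg ht))
    rw [ENNReal.toReal_mul, ENNReal.toReal_ofReal (Real.exp_pos _).le] at h2
    have h3 : Real.exp (2 * (Real.log t / nn K)) = t ^ (2 / nn K) := by
      rw [Real.rpow_def_of_pos ht0]; congr 1; ring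
    rw [h3] at h2
    unfold fT
    push_cast
    rw [add_sub_cancel_left, Complex.norm_real, Real.norm_of_nonneg ENNReal.toReal_nonneg,
      Real.norm_of_nonneg (Real.exp_pos _).le]
    refine h2.trans (le_of_eq ?_)
    rw [mul_sub, sub_eq_add_neg, Real.exp_add]
    simp
    ring
  · refine Asymptotics.IsBigO.trans (h1.isBigO) ?_
    refine Asymptotics.IsBigO.of_bound 1 ?_
    filter_upwards [eventually_ge_atTop 1] with t ht
    have ht0 : 0 < t := by linarith
    simp only [Function.comp]
    rw [← Real.rpow_mul ht0.le, one_mul]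
    apply le_of_eq
    congr 2
    field_simp

lemma fT_fe (I : ClassGroup (𝓞 K) → (FractionalIdeal (𝓞 K)⁰ K)ˣ) {x : ℝ} (hx : 0 < x) :
    fT I (1 / x) = x * fT (fun C => dualI (I C)) x := by
  have h := congrArg ENNReal.toReal (Phi_fe I (-Real.log x))
  rw [ENNReal.toReal_mul, ENNReal.toReal_ofReal (Real.exp_pos _).le, neg_neg,
    ENNReal.toReal_add hV_lt.ne (Phi_lt_top _ _).ne, ENNReal.toReal_add hV_lt.ne (Phi_lt_top _ _).ne,
    Real.exp_log hx] at h
  unfold fT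
  rw [one_div, Real.log_inv, h]

/-- The functional-equation pair whose Mellin transform is the completed Dedekind zeta function. -/
noncomputable def pairK (I : ClassGroup (𝓞 K) → (FractionalIdeal (𝓞 K)⁰ K)ˣ) : WeakFEPair ℂ where
  f t := (fT I t : ℝ)
  g t := (fT (fun C => dualI (I C)) t : ℝ)
  k := 1
  ε := 1
  f₀ := ((hV K).toReal : ℝ)
  g₀ := ((hV K).toReal : ℝ)
  hf_int := fT_int I
  hg_int := fT_int _
  hk := one_pos
  hε := one_ne_zero
  h_feq x hx := by
    rw [fT_fe I hx]
    simp
  hf_top r := fT_top I r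
  hg_top r := fT_top _ r

end FundDom

end Hooley

/-! ### Unfolding: the Mellin transform of the integrated theta function -/

namespace Hooley

open NumberField NumberField.Units NumberField.Units.dirichletUnitTheorem Module MeasureTheory
open scoped nonZeroDivisors ENNReal

section Unfold

variable {K : Type*} [Field K] [NumberField K]

lemma tsum_units (ψ : logSpace K → ℝ≥0∞) :
    ∑' ε : (𝓞 K)ˣ, ψ (logEmbedding K (Additive.ofMul ε)) =
      torsionOrder K * ∑' l : unitLattice K, ψ l := by
  let f : (𝓞 K)ˣ → unitLattice K := fun ε => ⟨logEmbedding K (Additive.ofMul ε), ⟨Additive.ofMul ε, trivial, rfl⟩⟩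
  have hf : ∀ ε, (f ε : logSpace K) = logEmbedding K (Additive.ofMul ε) := fun ε => rfl
  clear_value f
  rw [← (Equiv.sigmaFiberEquiv f).tsum_eq, ENNReal.tsum_sigma', ← ENNReal.tsum_mul_left]
  refine tsum_congr fun l => ?_
  have h1 : ∀ x : {ε : (𝓞 K)ˣ // f ε = l}, ψ (logEmbedding K (Additive.ofMul (Equiv.sigmaFiberEquiv f ⟨l, x⟩))) = ψ l := by
    intro x
    have : (Equiv.sigmaFiberEquiv f ⟨l, x⟩) = x.1 := rfl
    rw [this, ← hf, x.2]
  rw [tsum_congr h1, ENNReal.tsum_const]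
  congr 1
  obtain ⟨y, hy1, hy⟩ := l.2
  obtain ⟨e⟩ : Nonempty ({ε : (𝓞 K)ˣ // f ε = l} ≃ torsion K) := by
    have key : ∀ ε : (𝓞 K)ˣ, f ε = l ↔ ε * y.toMul⁻¹ ∈ torsion K := by
      intro ε
      rw [← logEmbedding_eq_zero_iff, Subtype.ext_iff, hf, ← hy, ofMul_mul, map_add, ofMul_inv, map_neg,
        ofMul_toMul, ← sub_eq_add_neg, sub_eq_zero]
      rfl
    exact ⟨{
      toFun := fun x => ⟨x.1 * y.toMul⁻¹, (key _).mp x.2⟩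
      invFun := fun x => ⟨x.1 * y.toMul, (key _).mpr (by simp)⟩
      left_inv := fun x => by ext; simp
      right_inv := fun x => by ext; simp }⟩
  rw [torsionOrder, ENat.card_congr e, ENat.card_eq_coe_natCard]
  simp

/-- Summing over the units the integral over a fundamental domain of their logarithmic lattice gives the full
integral, once for each root of unity. -/
lemma unfold_units (φ : logSpace K → ℝ≥0∞) (c : logSpace K) :
    ∑' ε : (𝓞 K)ˣ, ∫⁻ z in DD K, φ (z + (c + logEmbedding K (Additive.ofMul ε))) =
      torsionOrder K * ∫⁻ z, φ z := by
  rw [tsum_units fun l => ∫⁻ z in DD K, φ (z + (c + l)), ← lintegral_add_right_eq_self φ c,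
    (DD_fund K).lintegral_eq_tsum'']
  congr 1
  refine tsum_congr fun l => lintegral_congr fun z => ?_
  congr 1
  rw [Submodule.vadd_def, vadd_eq_add]
  abel

/-- Nonzero elements of a fractional ideal. -/
abbrev nz (I : (FractionalIdeal (𝓞 K)⁰ K)ˣ) : Type _ := {a : (I : FractionalIdeal (𝓞 K)⁰ K) // (a : K) ≠ 0}

lemma base_exists {I : ClassGroup (𝓞 K) → (FractionalIdeal (𝓞 K)⁰ K)ˣ} (hI : Reps I) (J : (Ideal (𝓞 K))⁰) :
    ∃ (C : ClassGroup (𝓞 K)) (a : nz (I C)),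
      FractionalIdeal.spanSingleton (𝓞 K)⁰ (a.1 : K) = (J : Ideal (𝓞 K)) * (I C : FractionalIdeal (𝓞 K)⁰ K) := by
  obtain ⟨C, hC⟩ := hI.2 (ClassGroup.mk K (FractionalIdeal.mk0 K J))⁻¹
  have h1 : ClassGroup.mk K (FractionalIdeal.mk0 K J * I C) = 1 := by
    rw [map_mul]
    simp only at hC
    rw [hC, mul_inv_cancel]
  rw [ClassGroup.mk_eq_one_iff, FractionalIdeal.isPrincipal_iff] at h1
  obtain ⟨x, hx⟩ := h1
  rw [Units.val_mul, FractionalIdeal.coe_mk0] at hx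
  have hx0 : x ≠ 0 := by
    rintro rfl
    rw [FractionalIdeal.spanSingleton_zero] at hx
    have := (FractionalIdeal.mk0 K J * I C).ne_zero
    rw [Units.val_mul, FractionalIdeal.coe_mk0] at this
    exact this hx
  have hxI : x ∈ (I C : FractionalIdeal (𝓞 K)⁰ K) := by
    rw [← FractionalIdeal.spanSingleton_le_iff_mem, ← hx]
    calc _ ≤ 1 * (I C : FractionalIdeal (𝓞 K)⁰ K) := by
          gcongr
          exact FractionalIdeal.coeIdeal_le_one
      _ = _ := one_mul _
  exact ⟨C, ⟨⟨x, hxI⟩, hx0⟩, hx.symm⟩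

/-- Nonzero elements of the chosen ideals, one per class, correspond to pairs of a nonzero integral ideal `J`
and a unit: to `J` belongs an element `b J` generating `J` times the representative `I (c J)` of the appropriate
class. -/
lemma reindex {I : ClassGroup (𝓞 K) → (FractionalIdeal (𝓞 K)⁰ K)ˣ} (hI : Reps I)
    (F : ClassGroup (𝓞 K) → K → ℝ≥0∞) :
    ∃ (c : (Ideal (𝓞 K))⁰ → ClassGroup (𝓞 K)) (b : (Ideal (𝓞 K))⁰ → K), (∀ J, b J ≠ 0) ∧
      (∀ J, |(Algebra.norm ℚ (b J) : ℝ)| = (Ideal.absNorm (J : Ideal (𝓞 K)) : ℝ) * nI (I (c J))) ∧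
      ∑ C, ∑' a : nz (I C), F C (a.1 : K) = ∑' J, ∑' ε : (𝓞 K)ˣ, F (c J) (b J * ε) := by
  choose c a ha using base_exists hI
  have hmem : ∀ J (ε : (𝓞 K)ˣ), (a J).1 * (ε : K) ∈ (I (c J) : FractionalIdeal (𝓞 K)⁰ K) := by
    intro J ε
    have := (I (c J) : FractionalIdeal (𝓞 K)⁰ K).val.smul_mem (ε : 𝓞 K) (a J).1.2
    rw [Algebra.smul_def, mul_comm] at this
    exact this
  obtain ⟨e, he⟩ : ∃ e : (Ideal (𝓞 K))⁰ × (𝓞 K)ˣ → Σ C, nz (I C),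
      ∀ x, e x = ⟨c x.1, ⟨⟨(a x.1).1 * (x.2 : K), hmem _ _⟩, mul_ne_zero (a x.1).2 (unit_ne x.2)⟩⟩ :=
    ⟨_, fun x => rfl⟩
  have hspan : ∀ (x : K) (ε : (𝓞 K)ˣ), FractionalIdeal.spanSingleton (𝓞 K)⁰ (x * (ε : K)) =
      FractionalIdeal.spanSingleton (𝓞 K)⁰ x := by
    intro x ε
    symm
    rw [FractionalIdeal.spanSingleton_eq_spanSingleton]
    exact ⟨ε, by rw [Units.smul_def, Algebra.smul_def, mul_comm]⟩
  have hbij : Function.Bijective e := by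
    constructor
    · rintro ⟨J, ε⟩ ⟨J', ε'⟩ h
      rw [he, he] at h
      have h1 : c J = c J' := congrArg Sigma.fst h
      have h2 : ((a J).1 : K) * (ε : K) = (a J').1 * (ε' : K) :=
        congrArg (fun x : Σ C, nz (I C) => (x.2.1 : K)) h
      have h3 : J = J' := by
        have h4 := congrArg (FractionalIdeal.spanSingleton (𝓞 K)⁰) h2
        rw [hspan, hspan, ha, ha, h1] at h4
        have h5 := mul_right_cancel₀ (I (c J')).ne_zero h4
        exact Subtype.ext (FractionalIdeal.coeIdeal_injective h5)
      subst h3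
      have h4 := mul_left_cancel₀ (a J).2 h2
      congr 1
      exact Units.ext (RingOfIntegers.ext h4)
    · rintro ⟨C, x⟩
      have hle : FractionalIdeal.spanSingleton (𝓞 K)⁰ (x.1 : K) * (I C : FractionalIdeal (𝓞 K)⁰ K)⁻¹ ≤ 1 := by
        calc _ ≤ (I C : FractionalIdeal (𝓞 K)⁰ K) * (I C : FractionalIdeal (𝓞 K)⁰ K)⁻¹ := by
              gcongr
              exact FractionalIdeal.spanSingleton_le_iff_mem.mpr x.1.2
          _ = 1 := mul_inv_cancel₀ (I C).ne_zero
      obtain ⟨J, hJ⟩ := FractionalIdeal.le_one_iff_exists_coeIdeal.mp hle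
      have hJ' : FractionalIdeal.spanSingleton (𝓞 K)⁰ (x.1 : K) = (J : FractionalIdeal (𝓞 K)⁰ K) * I C := by
        rw [hJ, mul_assoc, inv_mul_cancel₀ (I C).ne_zero, mul_one]
      have hJ0 : J ≠ 0 := by
        rintro rfl
        have : FractionalIdeal.spanSingleton (𝓞 K)⁰ (x.1 : K) = 0 := by
          rw [hJ']; simp
        exact x.2 (FractionalIdeal.spanSingleton_eq_zero_iff.mp this)
      let J' : (Ideal (𝓞 K))⁰ := ⟨J, mem_nonZeroDivisors_iff_ne_zero.mpr hJ0⟩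
      have hcl : ∀ (C : ClassGroup (𝓞 K)) (x : nz (I C)), FractionalIdeal.spanSingleton (𝓞 K)⁰ (x.1 : K) =
          ((J' : Ideal (𝓞 K)) : FractionalIdeal (𝓞 K)⁰ K) * I C →
          ClassGroup.mk K (I C) = (ClassGroup.mk K (FractionalIdeal.mk0 K J'))⁻¹ := by
        intro C x h
        rw [eq_inv_iff_mul_eq_one, mul_comm, ← map_mul, ClassGroup.mk_eq_one_iff, FractionalIdeal.isPrincipal_iff]
        exact ⟨x.1, by rw [Units.val_mul, FractionalIdeal.coe_mk0, h]⟩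
      have hC : c J' = C := hI.1 ((hcl _ _ (ha J')).trans (hcl C x hJ').symm)
      have h6 : FractionalIdeal.spanSingleton (𝓞 K)⁰ ((a J').1 : K) = FractionalIdeal.spanSingleton (𝓞 K)⁰ (x.1 : K) := by
        rw [ha J', hJ', hC]
      obtain ⟨ε, hε⟩ := FractionalIdeal.spanSingleton_eq_spanSingleton.mp h6
      refine ⟨⟨J', ε⟩, ?_⟩
      rw [he]
      subst hC
      congr 1
      ext
      simp only
      rw [← hε, Units.smul_def, Algebra.smul_def, mul_comm]
  refine ⟨c, fun J => (a J).1, fun J => (a J).2, fun J => ?_, ?_⟩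
  · have h := congrArg FractionalIdeal.absNorm (ha J)
    rw [FractionalIdeal.absNorm_span_singleton, map_mul, FractionalIdeal.coeIdeal_absNorm] at h
    rw [nI, ← Rat.cast_abs, h]
    push_cast
    rfl
  · rw [← ENNReal.tsum_prod (f := fun J (ε : (𝓞 K)ˣ) => F (c J) ((a J).1 * ε)),
      ← tsum_fintype (L := SummationFilter.unconditional _), ← ENNReal.tsum_sigma (fun C (x : nz (I C)) => F C (x.1 : K)),
      ← (Equiv.ofBijective e hbij).tsum_eq]
    refine tsum_congr fun x => ?_
    rw [Equiv.ofBijective_apply, he]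

/-- The Gaussian attached to the vector of coordinates `(u, z)`. -/
noncomputable def GG (u : ℝ) (z : logSpace K) : ℝ≥0∞ :=
  ENNReal.ofReal (Real.exp (-Real.pi * QK (VV u z) (1 : K)))

lemma GG_meas : Measurable fun p : ℝ × logSpace K => GG p.1 p.2 := by
  unfold GG
  refine ENNReal.measurable_ofReal.comp (Continuous.measurable ?_)
  have h1 : Continuous fun p : ℝ × logSpace K => VV p.1 p.2 := by
    refine continuous_pi fun w => ?_
    unfold VV
    have := (Lz_cont w).comp (continuous_snd (X := ℝ) (Y := logSpace K))
    simp only [Function.comp_def] at this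
    fun_prop
  have := (QK_cont (1 : K)).comp h1
  simp only [Function.comp_def] at this
  fun_prop

lemma GG_meas_shift (τ : ℝ) (y : logSpace K) :
    Measurable fun p : ℝ × logSpace K => GG (p.1 + τ) (p.2 + y) := by
  unfold GG
  refine ENNReal.measurable_ofReal.comp (Continuous.measurable ?_)
  have h1 : Continuous fun p : ℝ × logSpace K => VV (p.1 + τ) (p.2 + y) := by
    refine continuous_pi fun w => ?_
    unfold VV
    simp_rw [Lz_add, Pi.add_apply]
    have := (Lz_cont w).comp (continuous_snd (X := ℝ) (Y := logSpace K))
    simp only [Function.comp_def] at this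
    fun_prop
  have := (QK_cont (1 : K)).comp h1
  simp only [Function.comp_def] at this
  fun_prop

/-- The Mellin transform of the Gaussian in the variable `u`. -/
noncomputable def HH (s : ℝ) (z : logSpace K) : ℝ≥0∞ :=
  ∫⁻ u : ℝ, ENNReal.ofReal (Real.exp (s * u)) * GG u z

lemma HH_shift (s : ℝ) (z : logSpace K) (τ : ℝ) :
    ∫⁻ u : ℝ, ENNReal.ofReal (Real.exp (s * u)) * GG (u + τ) z = ENNReal.ofReal (Real.exp (-s * τ)) * HH s z := by
  rw [HH, ← lintegral_const_mul' _ _ ENNReal.ofReal_ne_top]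
  conv_rhs => rw [← lintegral_add_right_eq_self _ τ]
  refine lintegral_congr fun u => ?_
  rw [← mul_assoc, ← ENNReal.ofReal_mul (Real.exp_pos _).le, ← Real.exp_add]
  congr 4
  ring

/-- The archimedean factor at a real point `s`. -/
noncomputable def gam (K : Type*) [Field K] [NumberField K] (s : ℝ) : ℝ≥0∞ := ∫⁻ z : logSpace K, HH s z

/-- The Mellin transform in `u` of the integrated theta series, term by term; shifting `u` by the logarithm of
the norm makes the integrand depend on `a` through `ell a` only. -/
lemma mellin_term (I : (FractionalIdeal (𝓞 K)⁰ K)ˣ) (s : ℝ) :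
    ∫⁻ u : ℝ, ENNReal.ofReal (Real.exp (s * u)) * ∫⁻ z in DD K, ThS I (vP u z I) =
    ∑' a : nz I, ENNReal.ofReal (Real.exp (-s * (Real.log |(Algebra.norm ℚ (a.1 : K) : ℝ)| -
      Real.log (nI I * Real.sqrt |(discr K : ℝ)|)))) * ∫⁻ z in DD K, HH s (z + ell (a.1 : K)) := by
  have hcount : Countable (nz I) :=
    have := countable_I I
    Subtype.countable
  have hterm : ∀ (a : nz I) (u : ℝ) (z : logSpace K),
      ENNReal.ofReal (Real.exp (-Real.pi * QK (vP u z I) (a.1 : K))) =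
      GG (u + (Real.log |(Algebra.norm ℚ (a.1 : K) : ℝ)| -
      Real.log (nI I * Real.sqrt |(discr K : ℝ)|))) (z + ell (a.1 : K)) := by
    intro a u z
    unfold GG vP
    conv_lhs => rw [← mul_one (a.1 : K)]
    rw [QK_mul _ a.2, ← VV_ell a.2, ← VV_add]
    congr 5
    ring
  have hm : ∀ (a : nz I) (τ : ℝ), Measurable fun p : ℝ × logSpace K =>
      ENNReal.ofReal (Real.exp (s * p.1)) * GG (p.1 + τ) (p.2 + ell (a.1 : K)) := by
    intro a τ
    refine Measurable.mul (f := fun p : ℝ × logSpace K => ENNReal.ofReal (Real.exp (s * p.1))) (by fun_prop) ?_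
    exact GG_meas_shift τ _
  unfold ThS
  simp_rw [hterm]
  have h1 : ∀ u : ℝ, ENNReal.ofReal (Real.exp (s * u)) * ∫⁻ z in DD K, ∑' a : nz I,
      GG (u + (Real.log |(Algebra.norm ℚ (a.1 : K) : ℝ)| -
      Real.log (nI I * Real.sqrt |(discr K : ℝ)|))) (z + ell (a.1 : K)) =
      ∑' a : nz I, ∫⁻ z in DD K, ENNReal.ofReal (Real.exp (s * u)) * GG (u + (Real.log |(Algebra.norm ℚ (a.1 : K) : ℝ)| -
      Real.log (nI I * Real.sqrt |(discr K : ℝ)|))) (z + ell (a.1 : K)) := by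
    intro u
    rw [← lintegral_const_mul' _ _ ENNReal.ofReal_ne_top]
    simp_rw [← ENNReal.tsum_mul_left]
    rw [lintegral_tsum]
    intro a
    exact ((hm a _).comp measurable_prodMk_left).aemeasurable
  simp_rw [h1]
  rw [lintegral_tsum]
  · refine tsum_congr fun a => ?_
    rw [lintegral_lintegral_swap (hm a _).aemeasurable, ← lintegral_const_mul' _ _ ENNReal.ofReal_ne_top]
    refine lintegral_congr fun z => ?_
    rw [HH_shift]
  · intro a
    exact (Measurable.lintegral_prod_right' (hm a _)).aemeasurable

/-- Hecke's unfolding: at a real point `s` the Mellin transform of `Phi` is the completed Dedekind zeta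
function, written as an identity in `[0, ∞]` so that no convergence is needed. -/
theorem mellin_Phi {I : ClassGroup (𝓞 K) → (FractionalIdeal (𝓞 K)⁰ K)ˣ} (hI : Reps I) (s : ℝ) :
    ∫⁻ u : ℝ, ENNReal.ofReal (Real.exp (s * u)) * Phi I u =
    ENNReal.ofReal (|(discr K : ℝ)| ^ (s / 2)) * torsionOrder K * gam K s *
      ∑' J : (Ideal (𝓞 K))⁰, ENNReal.ofReal ((Ideal.absNorm (J : Ideal (𝓞 K)) : ℝ) ^ (-s)) := by
  unfold Phi
  simp_rw [Finset.mul_sum]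
  rw [lintegral_finsetSum']
  · simp_rw [mellin_term]
    obtain ⟨c, b, hb0, hN, hsum⟩ := reindex hI (fun C a => ENNReal.ofReal (Real.exp (-s * (Real.log |(Algebra.norm ℚ a : ℝ)| -
      Real.log (nI (I C) * Real.sqrt |(discr K : ℝ)|)))) * ∫⁻ z in DD K, HH s (z + ell a))
    rw [hsum, ← ENNReal.tsum_mul_left]
    refine tsum_congr fun J => ?_
    have h1 : ∀ ε : (𝓞 K)ˣ, |(Algebra.norm ℚ (b J * ε) : ℝ)| = (Ideal.absNorm (J : Ideal (𝓞 K)) : ℝ) * nI (I (c J)) := by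
      intro ε
      rw [map_mul, Rat.cast_mul, abs_mul, unit_norm, mul_one, hN]
    simp_rw [h1, ENNReal.tsum_mul_left, fun ε : (𝓞 K)ˣ => ell_mul (hb0 J) (unit_ne ε), ell_unit, unfold_units]
    have hJ : (0:ℝ) < (Ideal.absNorm (J : Ideal (𝓞 K)) : ℝ) := by
      have : Ideal.absNorm (J : Ideal (𝓞 K)) ≠ 0 := by
        rw [Ne, Ideal.absNorm_eq_zero_iff]
        exact mem_nonZeroDivisors_iff_ne_zero.mp J.2
      positivity
    have hd := discr_abs_pos K
    have hI0 := nI_pos (I (c J))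
    have h2 : Real.exp (-s * (Real.log ((Ideal.absNorm (J : Ideal (𝓞 K)) : ℝ) * nI (I (c J))) -
        Real.log (nI (I (c J)) * Real.sqrt |(discr K : ℝ)|))) =
        |(discr K : ℝ)| ^ (s / 2) * (Ideal.absNorm (J : Ideal (𝓞 K)) : ℝ) ^ (-s) := by
      rw [Real.log_mul hJ.ne' hI0.ne', Real.log_mul hI0.ne' (by positivity), Real.log_sqrt hd.le,
        Real.rpow_def_of_pos hd, Real.rpow_def_of_pos hJ, ← Real.exp_add]
      congr 1
      ring
    rw [h2, ENNReal.ofReal_mul (by positivity), gam]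
    ring
  · intro C _
    refine AEMeasurable.mul (f := fun u : ℝ => ENNReal.ofReal (Real.exp (s * u))) (by fun_prop) ?_
    refine (Antitone.measurable fun u u' h => ?_).aemeasurable
    gcongr with z
    exact ThS_anti _ (vP_mono h z _)

end Unfold

end Hooley

/-! ### Gamma factors and the completed zeta function at real points -/

namespace Hooley

open NumberField NumberField.Units NumberField.Units.dirichletUnitTheorem Module MeasureTheory
open scoped nonZeroDivisors ENNReal

/-- The substitution `t = e^u` for nonnegative integrals. -/
lemma lintegral_exp_subst (f : ℝ → ℝ≥0∞) :
    ∫⁻ t in Set.Ioi (0:ℝ), f t = ∫⁻ u : ℝ, ENNReal.ofReal (Real.exp u) * f (Real.exp u) := by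
  have h := lintegral_image_eq_lintegral_abs_deriv_mul (s := Set.univ) (f := Real.exp) (f' := Real.exp)
    MeasurableSet.univ (fun x _ => (Real.hasDerivAt_exp x).hasDerivWithinAt) Real.exp_injective.injOn f
  rw [Set.image_univ, Real.range_exp] at h
  rw [h, Measure.restrict_univ]
  simp_rw [abs_of_pos (Real.exp_pos _)]

lemma integral_exp_gauss {s m : ℝ} (hs : 0 < s) (hm : 0 < m) :
    Integrable (fun x : ℝ => Real.exp (s * m * x - Real.pi * m * Real.exp (2 * x))) ∧
    ∫ x : ℝ, Real.exp (s * m * x - Real.pi * m * Real.exp (2 * x)) =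
      (Real.pi * m) ^ (-(s * m / 2)) * (1 / 2) * Real.Gamma (s * m / 2) := by
  have hsm : 0 < s * m := by positivity
  have hpm : 0 < Real.pi * m := by positivity
  have h1 := integral_rpow_mul_exp_neg_mul_rpow (p := 2) (q := s * m - 1) two_pos (by linarith) hpm
  have h2 : IntegrableOn (fun x : ℝ => x ^ (s * m - 1) * Real.exp (-(Real.pi * m) * x ^ (2:ℝ))) (Set.Ioi 0) := by
    by_contra h
    rw [integral_undef h] at h1
    have : 0 < (Real.pi * m) ^ (-(s * m - 1 + 1) / 2) * (1 / 2) * Real.Gamma ((s * m - 1 + 1) / 2) := by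
      have := Real.Gamma_pos_of_pos (s := (s * m - 1 + 1) / 2) (by linarith)
      positivity
    exact absurd h1 this.ne
  have him : Set.Ioi (0:ℝ) = Real.exp '' Set.univ := by rw [Set.image_univ, Real.range_exp]
  have hd : ∀ x ∈ Set.univ, HasDerivWithinAt Real.exp (Real.exp x) Set.univ x :=
    fun x _ => (Real.hasDerivAt_exp x).hasDerivWithinAt
  have hfun : (fun x : ℝ => |Real.exp x| • (Real.exp x ^ (s * m - 1) * Real.exp (-(Real.pi * m) * Real.exp x ^ (2:ℝ)))) =
      fun x : ℝ => Real.exp (s * m * x - Real.pi * m * Real.exp (2 * x)) := by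
    ext x
    rw [abs_of_pos (Real.exp_pos _), smul_eq_mul, ← Real.exp_mul, ← Real.exp_mul, ← Real.exp_add, ← Real.exp_add]
    congr 1
    rw [mul_comm x 2]
    ring
  rw [him] at h1 h2
  rw [integral_image_eq_integral_abs_deriv_smul MeasurableSet.univ hd Real.exp_injective.injOn, hfun,
    Measure.restrict_univ] at h1
  rw [integrableOn_image_iff_integrableOn_abs_deriv_smul MeasurableSet.univ hd Real.exp_injective.injOn, hfun,
    integrableOn_univ] at h2
  refine ⟨h2, h1.trans ?_⟩
  ring_nf

section Gam

variable (K : Type*) [Field K] [NumberField K]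

/-- The product of Gamma factors, up to normalisation. -/
noncomputable def gamR (s : ℝ) : ℝ :=
  ∏ w : InfinitePlace K, (Real.pi * w.mult) ^ (-(s * w.mult / 2)) * (1 / 2) * Real.Gamma (s * w.mult / 2)

variable {K}

lemma gamR_pos {s : ℝ} (hs : 0 < s) : 0 < gamR K s := by
  refine Finset.prod_pos fun w _ => ?_
  have := mult_pos' w
  have := Real.Gamma_pos_of_pos (s := s * w.mult / 2) (by positivity)
  positivity

/-- In the coordinates `v_w` the archimedean integral is a product of one-dimensional Gamma integrals. -/
lemma lint_prod {s : ℝ} (hs : 0 < s) :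
    ∫⁻ v : InfinitePlace K → ℝ, ENNReal.ofReal (∏ w, Real.exp (s * w.mult * v w - Real.pi * w.mult * Real.exp (2 * v w))) =
      ENNReal.ofReal (gamR K s) := by
  rw [← ofReal_integral_eq_lintegral_ofReal]
  · rw [integral_fintype_prod_volume_eq_prod (f := fun (w : InfinitePlace K) (x : ℝ) => Real.exp (s * w.mult * x - Real.pi * w.mult * Real.exp (2 * x)))]
    congr 1
    exact Finset.prod_congr rfl fun w _ => (integral_exp_gauss hs (mult_pos' w)).2
  · exact Integrable.fintype_prod (f := fun (w : InfinitePlace K) (x : ℝ) => Real.exp (s * w.mult * x - Real.pi * w.mult * Real.exp (2 * x)))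
      fun w => (integral_exp_gauss hs (mult_pos' w)).1
  · exact Filter.Eventually.of_forall fun v => Finset.prod_nonneg fun w _ => (Real.exp_pos _).le

/-- Logarithmic coordinates as a linear isomorphism. -/
lemma exists_VVe : ∃ e : (ℝ × logSpace K) ≃L[ℝ] (InfinitePlace K → ℝ), ∀ p, e p = VV p.1 p.2 := by
  let f : (ℝ × logSpace K) →+ (InfinitePlace K → ℝ) :=
    { toFun := fun p => VV p.1 p.2
      map_zero' := by ext w; simp [VV, Lz]
      map_add' := fun p q => VV_add _ _ _ _ }
  have hf : Continuous f := by
    refine continuous_pi fun w => ?_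
    change Continuous fun p : ℝ × logSpace K => p.1 / nn K + Lz p.2 w
    have := (Lz_cont w).comp (continuous_snd (X := ℝ) (Y := logSpace K))
    simp only [Function.comp_def] at this
    fun_prop
  have hinj : Function.Injective f := by
    rw [injective_iff_map_eq_zero]
    rintro ⟨u, z⟩ h
    have h0 : VV u z = 0 := h
    have hu : u = 0 := by rw [← sum_mult_VV u z, h0]; simp
    subst hu
    have hz : z = 0 := by
      ext w
      have := congrFun h0 w.1
      rw [VV, zero_div, zero_add, Lz, dif_neg w.2, Pi.zero_apply, div_eq_zero_iff] at this
      exact this.resolve_right (mult_pos' w.1).ne'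
    rw [hz]; rfl
  have hdim : finrank ℝ (ℝ × logSpace K) = finrank ℝ (InfinitePlace K → ℝ) := by
    rw [finrank_prod, finrank_self, finrank_pi, finrank_pi, Fintype.card_subtype_compl, Fintype.card_subtype_eq]
    have : 0 < Fintype.card (InfinitePlace K) := Fintype.card_pos
    omega
  let g := (f.toRealLinearMap hf)
  have hg : Function.Injective (g : (ℝ × logSpace K) →ₗ[ℝ] (InfinitePlace K → ℝ)) := hinj
  refine ⟨(LinearMap.linearEquivOfInjective _ hg hdim).toContinuousLinearEquiv, fun p => rfl⟩

/-- The archimedean factor is the product of Gamma factors up to a constant, the Jacobian of the linear change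
of variables `(u, z) ↦ VV u z`. -/
lemma gam_eq : ∃ c : ℝ, 0 < c ∧ ∀ s : ℝ, 0 < s → gam K s = ENNReal.ofReal (c * gamR K s) := by
  obtain ⟨e, he⟩ := exists_VVe (K := K)
  have hv : Measure.IsAddHaarMeasure (volume : Measure (ℝ × logSpace K)) :=
    Measure.prod.instIsAddHaarMeasure _ _
  have hH : Measure.IsAddHaarMeasure ((volume : Measure (ℝ × logSpace K)).map e) := e.isAddHaarMeasure_map _
  obtain ⟨c, hc0, hct, hc⟩ : ∃ c : ℝ≥0∞, c ≠ 0 ∧ c ≠ ∞ ∧ (volume : Measure (ℝ × logSpace K)).map e = c • volume :=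
    ⟨_, (Measure.addHaarScalarFactor_pos_of_isAddHaarMeasure _ volume).ne' |> ENNReal.coe_ne_zero.mpr, ENNReal.coe_ne_top,
      Measure.isAddLeftInvariant_eq_smul _ _⟩
  refine ⟨c.toReal, ENNReal.toReal_pos hc0 hct, fun s hs => ?_⟩
  rw [ENNReal.ofReal_mul ENNReal.toReal_nonneg, ENNReal.ofReal_toReal hct, ← lint_prod hs, ← smul_eq_mul,
    ← lintegral_smul_measure, ← hc]
  have hmeas : Measurable fun v : InfinitePlace K → ℝ =>
      ENNReal.ofReal (∏ w, Real.exp (s * w.mult * v w - Real.pi * w.mult * Real.exp (2 * v w))) := by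
    fun_prop
  rw [lintegral_map hmeas e.continuous.measurable]
  have hm2 : AEMeasurable (fun p : ℝ × logSpace K => ENNReal.ofReal (Real.exp (s * p.1)) * GG p.1 p.2)
      ((volume : Measure ℝ).prod volume) := by
    refine (Measurable.mul (f := fun p : ℝ × logSpace K => ENNReal.ofReal (Real.exp (s * p.1))) (by fun_prop) ?_).aemeasurable
    exact GG_meas
  unfold gam HH
  rw [← lintegral_prod_symm _ hm2]
  refine lintegral_congr fun p => ?_
  rw [he, GG, ← ENNReal.ofReal_mul (Real.exp_pos _).le, ← Real.exp_add, ← Real.exp_sum]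
  congr 2
  have hu : s * p.1 = s * ∑ w : InfinitePlace K, w.mult * VV p.1 p.2 w := by rw [sum_mult_VV]
  rw [hu, QK, Finset.mul_sum, Finset.mul_sum, ← Finset.sum_add_distrib]
  refine Finset.sum_congr rfl fun w _ => ?_
  rw [map_one]
  ring

end Gam

section Coeff

variable (K : Type*) [Field K] [NumberField K]

lemma zc_zero_or (n : ℕ) : zetaCoeff K n = ((Nat.card {I : Ideal (𝓞 K) // Ideal.absNorm I = n} : ℝ) : ℂ) := by
  simp [zetaCoeff]

lemma term_real (s : ℝ) (n : ℕ) : LSeries.term (zetaCoeff K) s n = ((‖LSeries.term (zetaCoeff K) s n‖ : ℝ) : ℂ) := by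
  rcases Nat.eq_zero_or_pos n with rfl | hn
  · simp
  rw [LSeries.term_of_ne_zero hn.ne', zc_zero_or]
  have : ((n:ℂ) ^ (s:ℂ)) = (((n:ℝ) ^ s : ℝ) : ℂ) := by
    rw [Complex.ofReal_cpow (by positivity)]; simp
  rw [this, ← Complex.ofReal_div, Complex.norm_real, Real.norm_of_nonneg (by positivity)]

/-- Grouping the ideals by norm turns the sum over ideals into the Dirichlet series, with absolute values. -/
lemma tsum_J (s : ℝ) : ∑' J : (Ideal (𝓞 K))⁰, ENNReal.ofReal ((Ideal.absNorm (J : Ideal (𝓞 K)) : ℝ) ^ (-s)) =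
    ∑' n : ℕ, ENNReal.ofReal ‖LSeries.term (zetaCoeff K) s n‖ := by
  rw [← (Equiv.sigmaFiberEquiv fun J : (Ideal (𝓞 K))⁰ => Ideal.absNorm (J : Ideal (𝓞 K))).tsum_eq, ENNReal.tsum_sigma']
  refine tsum_congr fun n => ?_
  have h1 : ∀ x : {J : (Ideal (𝓞 K))⁰ // Ideal.absNorm (J : Ideal (𝓞 K)) = n},
      ENNReal.ofReal ((Ideal.absNorm (((Equiv.sigmaFiberEquiv fun J : (Ideal (𝓞 K))⁰ => Ideal.absNorm (J : Ideal (𝓞 K)))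
        ⟨n, x⟩ : (Ideal (𝓞 K))⁰) : Ideal (𝓞 K)) : ℝ) ^ (-s)) = ENNReal.ofReal ((n:ℝ) ^ (-s)) := by
    intro x
    rw [Equiv.sigmaFiberEquiv_apply, x.2]
  rw [tsum_congr h1, ENNReal.tsum_const]
  rcases Nat.eq_zero_or_pos n with rfl | hn
  · have : IsEmpty {J : (Ideal (𝓞 K))⁰ // Ideal.absNorm (J : Ideal (𝓞 K)) = 0} := by
      refine ⟨fun J => ?_⟩
      have := J.2
      rw [Ideal.absNorm_eq_zero_iff] at this
      exact mem_nonZeroDivisors_iff_ne_zero.mp J.1.2 this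
    rw [ENat.card_eq_zero_iff_empty _ |>.mpr this]
    simp
  · let e : {J : (Ideal (𝓞 K))⁰ // Ideal.absNorm (J : Ideal (𝓞 K)) = n} ≃ {I : Ideal (𝓞 K) // Ideal.absNorm I = n} :=
      { toFun := fun J => ⟨J.1, J.2⟩
        invFun := fun I => ⟨⟨I.1, mem_nonZeroDivisors_iff_ne_zero.mpr (by
          intro h
          have := I.2
          rw [h] at this
          simp at this
          omega)⟩, I.2⟩
        left_inv := fun J => rfl
        right_inv := fun I => rfl }
    have hfin : Finite {I : Ideal (𝓞 K) // Ideal.absNorm I = n} :=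
      (Ideal.finite_setOf_absNorm_eq n).to_subtype
    rw [ENat.card_congr e, LSeries.term_of_ne_zero hn.ne', norm_div, Complex.norm_natCast_cpow_of_pos hn,
      Complex.ofReal_re, zc_zero_or, Complex.norm_real, Real.norm_of_nonneg (by positivity), div_eq_mul_inv,
      ← Real.rpow_neg (by positivity), ENNReal.ofReal_mul (by positivity), ENNReal.ofReal_natCast]
    congr 1
    rw [ENat.card_eq_coe_natCard]
    simp

variable {K}

lemma lz_of_ne_top {s : ℝ} (h : ∑' n : ℕ, ENNReal.ofReal ‖LSeries.term (zetaCoeff K) s n‖ ≠ ∞) :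
    LSeriesSummable (zetaCoeff K) s ∧
    LSeries (zetaCoeff K) s = ((∑' n : ℕ, ENNReal.ofReal ‖LSeries.term (zetaCoeff K) s n‖).toReal : ℝ) := by
  have h1 : Summable fun n : ℕ => ‖LSeries.term (zetaCoeff K) s n‖ := by
    have := ENNReal.summable_toReal h
    simpa [ENNReal.toReal_ofReal] using this
  refine ⟨h1.of_norm, ?_⟩
  rw [ENNReal.tsum_toReal_eq (fun _ => ENNReal.ofReal_ne_top), LSeries, Complex.ofReal_tsum]
  refine tsum_congr fun n => ?_
  rw [ENNReal.toReal_ofReal (norm_nonneg _)]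
  exact term_real K s n

end Coeff

section Lam

variable {K : Type*} [Field K] [NumberField K]

/-- For real `s > 1` the completed zeta function is the expected product. -/
lemma Lam_real : ∃ c : ℝ, 0 < c ∧ ∀ {I : ClassGroup (𝓞 K) → (FractionalIdeal (𝓞 K)⁰ K)ˣ} (_ : Reps I),
    ∀ s : ℝ, 1 < s → LSeriesSummable (zetaCoeff K) s ∧
      (pairK I).Λ s = ((c * |(discr K : ℝ)| ^ (s / 2) * gamR K s : ℝ) : ℂ) * LSeries (zetaCoeff K) s := by
  obtain ⟨c, hc, hg⟩ := gam_eq (K := K)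
  refine ⟨torsionOrder K * c, by have := torsionOrder_pos K; positivity, fun {I} hI s hs => ?_⟩
  have hd := discr_abs_pos K
  have hs0 : 0 < s := by linarith
  obtain ⟨h1, h2⟩ := (pairK I).hasMellin (s := (s:ℂ)) hs
  have hfun : ∀ t ∈ Set.Ioi (0:ℝ), (t:ℂ) ^ ((s:ℂ) - 1) • ((pairK I).f t - (pairK I).f₀) =
      ((t ^ (s - 1) * (Phi I (Real.log t)).toReal : ℝ) : ℂ) := by
    intro t ht
    have ht : 0 < t := ht
    change (t:ℂ) ^ ((s:ℂ) - 1) • (((fT I t : ℝ) : ℂ) - (((hV K).toReal : ℝ) : ℂ)) = _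
    rw [← Complex.ofReal_sub, fT, add_sub_cancel_left, smul_eq_mul, Complex.ofReal_mul,
      Complex.ofReal_cpow ht.le]
    simp
  rw [MellinConvergent, integrableOn_congr_fun hfun measurableSet_Ioi] at h1
  have h1' : IntegrableOn (fun t : ℝ => t ^ (s - 1) * (Phi I (Real.log t)).toReal) (Set.Ioi 0) := by
    have := h1.re
    simp only [RCLike.re_eq_complex_re, Complex.ofReal_re] at this
    exact this
  rw [mellin, setIntegral_congr_fun measurableSet_Ioi hfun, integral_complex_ofReal] at h2
  have hnn : 0 ≤ᵐ[volume.restrict (Set.Ioi 0)] fun t : ℝ => t ^ (s - 1) * (Phi I (Real.log t)).toReal := by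
    filter_upwards [ae_restrict_mem measurableSet_Ioi] with t ht
    have ht : 0 < t := ht
    have : (0:ℝ) ≤ (Phi I (Real.log t)).toReal := ENNReal.toReal_nonneg
    change 0 ≤ _
    positivity
  have h3 := ofReal_integral_eq_lintegral_ofReal h1' hnn
  rw [lintegral_exp_subst] at h3
  have h4 : ∀ u : ℝ, ENNReal.ofReal (Real.exp u) * ENNReal.ofReal (Real.exp u ^ (s - 1) * (Phi I (Real.log (Real.exp u))).toReal) =
      ENNReal.ofReal (Real.exp (s * u)) * Phi I u := by
    intro u
    rw [Real.log_exp, ENNReal.ofReal_mul (by positivity), ENNReal.ofReal_toReal (Phi_lt_top _ _).ne, ← mul_assoc,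
      ← ENNReal.ofReal_mul (Real.exp_pos _).le, ← Real.exp_mul, ← Real.exp_add]
    congr 3
    ring
  simp_rw [h4] at h3
  rw [mellin_Phi hI, hg s hs0, tsum_J] at h3
  have hgp := gamR_pos (K := K) hs0
  have hne : ENNReal.ofReal (|(discr K : ℝ)| ^ (s / 2)) * torsionOrder K * ENNReal.ofReal (c * gamR K s) ≠ 0 := by
    refine mul_ne_zero (mul_ne_zero ?_ ?_) ?_
    · exact (ENNReal.ofReal_pos.mpr (by positivity)).ne'
    · exact_mod_cast (torsionOrder_pos K).ne'
    · exact (ENNReal.ofReal_pos.mpr (by positivity)).ne'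
  have hfin : ∑' n : ℕ, ENNReal.ofReal ‖LSeries.term (zetaCoeff K) s n‖ ≠ ∞ := by
    intro h
    rw [h, ENNReal.mul_top hne] at h3
    exact ENNReal.ofReal_ne_top h3
  obtain ⟨h5, h6⟩ := lz_of_ne_top hfin
  refine ⟨h5, ?_⟩
  rw [← h2, h6, ← Complex.ofReal_mul]
  congr 1
  have h7 := congrArg ENNReal.toReal h3
  rw [ENNReal.toReal_ofReal (integral_nonneg_of_ae hnn)] at h7
  rw [h7]
  simp only [ENNReal.toReal_mul]
  rw [ENNReal.toReal_ofReal (by positivity), ENNReal.toReal_ofReal (by positivity), ENNReal.toReal_natCast]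
  ring

end Lam

end Hooley

/-! ### Bounds for the completed zeta function and for reciprocal Gamma factors -/

namespace Hooley

open NumberField NumberField.Units NumberField.Units.dirichletUnitTheorem Module MeasureTheory
open scoped nonZeroDivisors ENNReal

section Lam0

variable {K : Type*} [Field K] [NumberField K]

lemma fmod_nonneg (I : ClassGroup (𝓞 K) → (FractionalIdeal (𝓞 K)⁰ K)ˣ) {x : ℝ} (hx : 0 < x) :
    ∃ r : ℝ, 0 ≤ r ∧ (pairK I).f_modif x = (r : ℂ) := by
  unfold WeakFEPair.f_modif
  rcases lt_trichotomy x 1 with h | h | h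
  · refine ⟨x⁻¹ * (Phi (fun C => dualI (I C)) (Real.log (1 / x))).toReal, by positivity, ?_⟩
    rw [Pi.add_apply, Set.indicator_of_notMem (by simp [h.le]), Set.indicator_of_mem (Set.mem_Ioo.mpr ⟨hx, h⟩), zero_add]
    have h1 : fT I x = x⁻¹ * fT (fun C => dualI (I C)) (1 / x) := by
      have := fT_fe I (x := 1 / x) (by positivity)
      rw [one_div_one_div] at this
      rw [this, one_div]
    change ((fT I x : ℝ) : ℂ) - ((1:ℂ) * ((x ^ (-(1:ℝ)) : ℝ) : ℂ)) • (((hV K).toReal : ℝ) : ℂ) = _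
    rw [h1, fT, Real.rpow_neg_one, smul_eq_mul]
    push_cast
    ring
  · exact ⟨0, le_rfl, by simp [h]⟩
  · refine ⟨(Phi I (Real.log x)).toReal, by positivity, ?_⟩
    rw [Pi.add_apply, Set.indicator_of_mem (Set.mem_Ioi.mpr h), Set.indicator_of_notMem (by simp [h.le]), add_zero]
    change ((fT I x : ℝ) : ℂ) - (((hV K).toReal : ℝ) : ℂ) = _
    rw [fT]
    push_cast
    ring

/-- The entire function `Λ₀` is the Mellin transform of a nonnegative function, and `t^{σ-1} ≤ t + t^{-2}` for
`-1 ≤ σ ≤ 2`; so in this strip it is bounded by its values at the two real points. -/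
lemma Lam0_le (I : ClassGroup (𝓞 K) → (FractionalIdeal (𝓞 K)⁰ K)ˣ) {s : ℂ} (h1 : -1 ≤ s.re) (h2 : s.re ≤ 2) :
    ‖(pairK I).Λ₀ s‖ ≤ ((pairK I).Λ₀ 2).re + ((pairK I).Λ₀ (-1)).re := by
  have hc : ∀ s : ℂ, IntegrableOn (fun t : ℝ => (t : ℂ) ^ (s - 1) • (pairK I).f_modif t) (Set.Ioi 0) :=
    fun s => ((pairK I).isStrongFEPair_toStrongFEPair.hasMellin s).1
  unfold WeakFEPair.Λ₀ mellin
  have hre : ∀ s : ℂ, (∫ t : ℝ in Set.Ioi 0, (t : ℂ) ^ (s - 1) • (pairK I).f_modif t).re =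
      ∫ t : ℝ in Set.Ioi 0, ((t : ℂ) ^ (s - 1) • (pairK I).f_modif t).re := by
    intro s
    exact (integral_re (hc s)).symm
  rw [hre, hre, ← integral_add (by exact (hc 2).re) (by exact (hc (-1)).re)]
  refine norm_integral_le_of_norm_le ((hc 2).re.add (hc (-1)).re) ?_
  filter_upwards [ae_restrict_mem measurableSet_Ioi] with t ht
  have ht : 0 < t := ht
  obtain ⟨r, hr, hf⟩ := fmod_nonneg I ht
  rw [hf, norm_smul, Complex.norm_cpow_eq_rpow_re_of_pos ht, Complex.norm_real, Real.norm_of_nonneg hr]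
  have e1 : ((t:ℂ) ^ ((2:ℂ) - 1) • (r:ℂ)).re = t * r := by
    have : (2:ℂ) - 1 = 1 := by norm_num
    rw [this, Complex.cpow_one, smul_eq_mul, ← Complex.ofReal_mul, Complex.ofReal_re]
  have e2 : ((t:ℂ) ^ ((-1:ℂ) - 1) • (r:ℂ)).re = t ^ (-2:ℝ) * r := by
    have : (-1:ℂ) - 1 = ((-2 : ℝ) : ℂ) := by norm_num
    rw [this, ← Complex.ofReal_cpow ht.le, smul_eq_mul, ← Complex.ofReal_mul, Complex.ofReal_re]
  change _ ≤ ((t:ℂ) ^ ((2:ℂ) - 1) • (r:ℂ)).re + ((t:ℂ) ^ ((-1:ℂ) - 1) • (r:ℂ)).re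
  rw [e1, e2, ← add_mul]
  refine mul_le_mul_of_nonneg_right ?_ hr
  simp only [Complex.sub_re, Complex.one_re]
  rcases le_total t 1 with h | h
  · have := Real.rpow_le_rpow_of_exponent_ge ht h (show -2 ≤ s.re - 1 by linarith)
    linarith
  · have := Real.rpow_le_rpow_of_exponent_le h (show s.re - 1 ≤ 1 by linarith)
    rw [Real.rpow_one] at this
    have := Real.rpow_nonneg ht.le (-2)
    linarith

lemma Lam0_neg_one (I : ClassGroup (𝓞 K) → (FractionalIdeal (𝓞 K)⁰ K)ˣ) :
    (pairK I).Λ₀ (-1) = (pairK fun C => dualI (I C)).Λ₀ 2 := by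
  have h := (pairK I).functional_equation₀ 2
  have h1 : (((pairK I).k : ℝ) : ℂ) - 2 = -1 := by
    change ((1:ℝ):ℂ) - 2 = -1
    norm_num
  rw [h1] at h
  rw [h]
  change (1:ℂ) • _ = _
  rw [one_smul]
  unfold WeakFEPair.Λ₀
  congr 1
  ext x
  simp [WeakFEPair.f_modif, WeakFEPair.symm, pairK]

lemma Lam0_two (I : ClassGroup (𝓞 K) → (FractionalIdeal (𝓞 K)⁰ K)ˣ) :
    (pairK I).Λ₀ 2 = (pairK I).Λ 2 - (((hV K).toReal / 2 : ℝ) : ℂ) := by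
  rw [WeakFEPair.Λ₀_eq]
  change (pairK I).Λ 2 + (1 / 2 : ℂ) • (((hV K).toReal : ℝ) : ℂ) + ((1:ℂ) / (((1:ℝ):ℂ) - 2)) • (((hV K).toReal : ℝ) : ℂ) = _
  push_cast
  rw [smul_eq_mul, smul_eq_mul]
  ring_nf

end Lam0

section Gam

/-- Elementary bound for the reciprocal Gamma function. -/
lemma norm_Gamma_le {z : ℂ} (hz : 0 < z.re) : ‖Complex.Gamma z‖ ≤ Real.Gamma z.re := by
  rw [Complex.Gamma_eq_integral hz, Real.Gamma_eq_integral hz, Complex.GammaIntegral]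
  refine norm_integral_le_of_norm_le (Real.GammaIntegral_convergent hz) ?_
  filter_upwards [ae_restrict_mem measurableSet_Ioi] with t ht
  have ht : 0 < t := ht
  rw [norm_mul, Complex.norm_cpow_eq_rpow_re_of_pos ht, Complex.norm_real, Real.norm_of_nonneg (Real.exp_pos _).le]
  simp

lemma norm_sin_le (w : ℂ) : ‖Complex.sin w‖ ≤ ‖w‖ * Real.exp ‖w‖ := by
  have h : ∀ z : ℂ, ‖Complex.exp z - 1‖ ≤ ‖z‖ * Real.exp ‖z‖ := fun z => by
    simpa using Complex.norm_exp_sub_sum_le_norm_mul_exp z 1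
  have h1 := h (-w * Complex.I)
  have h2 := h (w * Complex.I)
  rw [norm_mul, Complex.norm_I, mul_one] at h1 h2
  rw [norm_neg] at h1
  have h3 : Complex.sin w = ((Complex.exp (-w * Complex.I) - 1) - (Complex.exp (w * Complex.I) - 1)) * Complex.I / 2 := by
    rw [Complex.sin]; ring
  rw [h3, norm_div, norm_mul, Complex.norm_I, mul_one]
  have h4 := norm_sub_le (Complex.exp (-w * Complex.I) - 1) (Complex.exp (w * Complex.I) - 1)
  have h5 : ‖(2:ℂ)‖ = 2 := by simp
  rw [h5]
  linarith

/-- An exponential bound for `1/Γ` in the strip: by the reflection formula `1/Γ(z) = Γ(1-z) sin(πz)/π`, suitably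
shifted, one is left with `Γ` at a point of bounded real part and with a sine. -/
lemma inv_Gamma_bound : ∃ M : ℝ, 1 ≤ M ∧ ∀ z : ℂ, 1 / 4 ≤ z.re → z.re ≤ 7 / 4 →
    ‖(Complex.Gamma z)⁻¹‖ ≤ M * Real.exp (Real.pi * ‖1 - z‖) := by
  have hcont : ContinuousOn Real.Gamma (Set.Icc (1/4) (7/4)) := fun x hx =>
    (Real.differentiableAt_Gamma fun m => by have := hx.1; have : (0:ℝ) ≤ m := m.cast_nonneg; intro h; linarith).continuousAt.continuousWithinAt
  obtain ⟨M, hM⟩ := isCompact_Icc.exists_bound_of_continuousOn hcont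
  refine ⟨max M 1, le_max_right _ _, fun z h1 h2 => ?_⟩
  have hexp : 1 ≤ Real.exp (Real.pi * ‖1 - z‖) := Real.one_le_exp (by positivity)
  by_cases hz : z = 1
  · subst hz
    simp
  have hz1 : 1 - z ≠ 0 := sub_ne_zero.mpr (Ne.symm hz)
  have h2z : 0 < (2 - z).re := by simp; linarith
  have e1 : Complex.Gamma (2 - z) = (1 - z) * Complex.Gamma (1 - z) := by
    rw [← Complex.Gamma_add_one _ hz1]
    ring_nf
  have hne : Complex.Gamma z ≠ 0 := Complex.Gamma_ne_zero_of_re_pos (by linarith)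
  have hne2 : Complex.Gamma (2 - z) ≠ 0 := Complex.Gamma_ne_zero_of_re_pos h2z
  have hne3 : Complex.Gamma (1 - z) ≠ 0 := fun h => hne2 (by rw [e1, h, mul_zero])
  have hrefl := Complex.Gamma_mul_Gamma_one_sub z
  have hsin : Complex.sin (Real.pi * z) ≠ 0 := by
    intro h
    rw [h, div_zero] at hrefl
    exact mul_ne_zero hne hne3 hrefl
  have hpi : (Real.pi : ℂ) ≠ 0 := by exact_mod_cast Real.pi_ne_zero
  have e2 : (Complex.Gamma z)⁻¹ = Complex.Gamma (2 - z) / (1 - z) * (Complex.sin (Real.pi * (1 - z)) / Real.pi) := by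
    have : Complex.sin (Real.pi * (1 - z)) = Complex.sin (Real.pi * z) := by
      rw [mul_sub, mul_one, Complex.sin_pi_sub]
    rw [this, e1]
    rw [eq_div_iff hsin] at hrefl
    symm
    apply eq_inv_of_mul_eq_one_left
    rw [mul_div_cancel_left₀ _ hz1, mul_div_assoc', div_mul_eq_mul_div, div_eq_one_iff_eq hpi]
    linear_combination hrefl
  rw [e2, norm_mul, norm_div, norm_div]
  have e3 := norm_sin_le (Real.pi * (1 - z))
  rw [norm_mul (Real.pi : ℂ), Complex.norm_real, Real.norm_of_nonneg Real.pi_pos.le] at e3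
  rw [Complex.norm_real, Real.norm_of_nonneg Real.pi_pos.le]
  have e4 := norm_Gamma_le h2z
  have e5 := hM (2 - z).re ⟨by simp; linarith, by simp; linarith⟩
  rw [Real.norm_of_nonneg (Real.Gamma_pos_of_pos h2z).le] at e5
  have hn : 0 < ‖1 - z‖ := norm_pos_iff.mpr hz1
  have hp := Real.pi_pos
  calc _ ≤ max M 1 / ‖1 - z‖ * (Real.pi * ‖1 - z‖ * Real.exp (Real.pi * ‖1 - z‖) / Real.pi) := by
        gcongr
        exact e4.trans (e5.trans (le_max_left _ _))
    _ = _ := by field_simp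

end Gam

section Wf

lemma natre (z : ℂ) (n : ℕ) : (z * n).re = z.re * n := by simp

lemma natim (z : ℂ) (n : ℕ) : (z * n).im = z.im * n := by simp

variable (K : Type*) [Field K] [NumberField K]

/-- The archimedean factor at one place, inverted. -/
noncomputable def facW (w : InfinitePlace K) (s : ℂ) : ℂ :=
  Complex.exp (s * w.mult / 2 * Real.log (Real.pi * w.mult)) * 2 * (Complex.Gamma (s * w.mult / 2))⁻¹

/-- The reciprocal of the archimedean factor together with the conductor term; it is entire. -/
noncomputable def Wc (s : ℂ) : ℂ :=
  Complex.exp (-(s / 2) * Real.log |(discr K : ℝ)|) * ∏ w : InfinitePlace K, facW K w s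

variable {K}

lemma facW_diff (w : InfinitePlace K) : Differentiable ℂ (facW K w) := by
  unfold facW
  have h := Complex.differentiable_one_div_Gamma.comp (by fun_prop : Differentiable ℂ fun s : ℂ => s * w.mult / 2)
  simp only [Function.comp_def] at h
  fun_prop

lemma Wc_diff : Differentiable ℂ (Wc K) := by
  unfold Wc
  have := fun w : InfinitePlace K => facW_diff w
  fun_prop

lemma Wc_zero : Wc K 0 = 0 := by
  unfold Wc
  rw [Finset.prod_eq_zero (Finset.mem_univ (Classical.arbitrary (InfinitePlace K))), mul_zero]
  simp [facW, Complex.Gamma_zero]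

lemma Wc_real {s : ℝ} (hs : 0 < s) : Wc K s = (((|(discr K : ℝ)| ^ (s / 2) * gamR K s)⁻¹ : ℝ) : ℂ) := by
  have hd := discr_abs_pos K
  rw [mul_inv, gamR, ← Finset.prod_inv_distrib, Wc, Complex.ofReal_mul, Complex.ofReal_prod]
  congr 1
  · rw [← Real.rpow_neg hd.le, Real.rpow_def_of_pos hd]
    push_cast
    congr 1
    ring
  · refine Finset.prod_congr rfl fun w _ => ?_
    have hm := mult_pos' w
    have hpm : 0 < Real.pi * w.mult := by positivity
    rw [facW, Real.rpow_def_of_pos hpm, mul_inv, mul_inv, ← Real.exp_neg]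
    have : (s:ℂ) * w.mult / 2 = ((s * w.mult / 2 : ℝ) : ℂ) := by push_cast; ring
    rw [this, Complex.Gamma_ofReal]
    push_cast
    norm_num
    left
    ring_nf

lemma facW_bound : ∃ A : ℝ, 0 < A ∧ ∀ (K : Type) [Field K] [NumberField K] (w : InfinitePlace K) (s : ℂ),
    1 / 2 ≤ s.re → s.re ≤ 7 / 4 → ‖facW K w s‖ ≤ ‖facW K w 2‖ * Real.exp (A * (1 + |s.im|)) := by
  obtain ⟨M, hM1, hM⟩ := inv_Gamma_bound
  have hp := Real.pi_pos
  have hlog := Real.log_nonneg hM1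
  refine ⟨Real.log M + Real.pi * 3, by positivity, fun K _ _ w s h1 h2 => ?_⟩
  have hm0 : (1:ℝ) ≤ w.mult := by exact_mod_cast InfinitePlace.mult_pos
  have hm2 : (w.mult:ℝ) = 1 ∨ (w.mult:ℝ) = 2 := by
    unfold InfinitePlace.mult
    split_ifs <;> simp
  have hre : (s * w.mult / 2).re = s.re * w.mult / 2 := by
    rw [Complex.div_ofNat_re, natre]
  have him : (s * w.mult / 2).im = s.im * w.mult / 2 := by
    rw [Complex.div_ofNat_im, natim]
  have hpm : 1 ≤ Real.pi * w.mult := by nlinarith [Real.pi_gt_three]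
  have hl := Real.log_nonneg hpm
  have hexp : ∀ z : ℂ, ‖Complex.exp (z * w.mult / 2 * Real.log (Real.pi * w.mult))‖ =
      Real.exp (z.re * w.mult / 2 * Real.log (Real.pi * w.mult)) := by
    intro z
    rw [Complex.norm_exp, Complex.re_mul_ofReal, Complex.div_ofNat_re, natre]
  have hg2 : (Complex.Gamma (2 * w.mult / 2))⁻¹ = 1 := by
    rw [mul_div_cancel_left₀ _ two_ne_zero]
    have : (w.mult : ℂ) = 1 ∨ (w.mult : ℂ) = 2 := by
      rcases hm2 with h | h
      · left; exact_mod_cast h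
      · right; exact_mod_cast h
    rcases this with h | h <;> rw [h]
    · simp
    · rw [Complex.Gamma_ofNat_eq_factorial]; simp
  unfold facW
  rw [hg2, norm_mul, norm_mul, norm_mul, norm_mul, hexp, hexp, norm_one, mul_one]
  have hb := hM (s * w.mult / 2) (by rw [hre]; nlinarith) (by rw [hre]; rcases hm2 with h | h <;> rw [h] <;> linarith)
  have hn : ‖1 - s * w.mult / 2‖ ≤ 3 * (1 + |s.im|) := by
    refine (Complex.norm_le_abs_re_add_abs_im _).trans ?_
    rw [Complex.sub_re, Complex.sub_im, hre, him, Complex.one_re, Complex.one_im, zero_sub, abs_neg]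
    have a1 : |1 - s.re * w.mult / 2| ≤ 1 := by
      rw [abs_le]; rcases hm2 with h | h <;> rw [h] <;> constructor <;> linarith
    have a2 : |s.im * w.mult / 2| ≤ |s.im| := by
      rw [abs_div, abs_mul, abs_two]
      rcases hm2 with h | h <;> rw [h] <;> norm_num
    have := abs_nonneg s.im
    linarith
  have hM' : M ≤ Real.exp (Real.log M * (1 + |s.im|)) := by
    rw [← Real.exp_log (by linarith : 0 < M)]
    rw [Real.log_exp]
    refine Real.exp_le_exp.mpr ?_
    have := abs_nonneg s.im
    nlinarith
  have he : Real.exp (s.re * w.mult / 2 * Real.log (Real.pi * w.mult)) ≤ Real.exp ((2:ℂ).re * w.mult / 2 * Real.log (Real.pi * w.mult)) := by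
    have : (2:ℂ).re = 2 := rfl
    rw [this]
    gcongr
    linarith
  calc _ ≤ Real.exp ((2:ℂ).re * w.mult / 2 * Real.log (Real.pi * w.mult)) * ‖(2:ℂ)‖ *
        (Real.exp (Real.log M * (1 + |s.im|)) * Real.exp (Real.pi * (3 * (1 + |s.im|)))) := by
        refine mul_le_mul (mul_le_mul_of_nonneg_right he (norm_nonneg _)) (hb.trans ?_) (norm_nonneg _) (by positivity)
        gcongr
    _ = _ := by
        rw [← Real.exp_add]
        congr 2
        ring

/-- The bound for the reciprocal archimedean factor with the conductor, with a constant `A` that does not depend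
on the field. -/
lemma Wc_bound : ∃ A : ℝ, 0 < A ∧ ∀ (K : Type) [Field K] [NumberField K] (s : ℂ),
    1 / 2 ≤ s.re → s.re ≤ 7 / 4 → ‖Wc K s‖ ≤ ‖Wc K 2‖ * |(discr K : ℝ)| * Real.exp (A * nn K * (1 + |s.im|)) := by
  obtain ⟨A, hA, h⟩ := facW_bound
  refine ⟨A, hA, fun K _ _ s h1 h2 => ?_⟩
  have hd1 : 1 ≤ |(discr K : ℝ)| := by
    have := Int.one_le_abs (discr_ne_zero K)
    exact_mod_cast this
  have hld := Real.log_nonneg hd1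
  unfold Wc
  rw [norm_mul, norm_mul, norm_prod, norm_prod, Complex.norm_exp, Complex.norm_exp, Complex.re_mul_ofReal, Complex.re_mul_ofReal,
    Complex.neg_re, Complex.neg_re, Complex.div_ofNat_re, Complex.div_ofNat_re]
  have e1 : Real.exp (-(s.re / 2) * Real.log |(discr K : ℝ)|) ≤ Real.exp (-((2:ℂ).re / 2) * Real.log |(discr K : ℝ)|) * |(discr K : ℝ)| := by
    have : (2:ℂ).re = 2 := rfl
    rw [this]
    conv_rhs => rw [← Real.exp_log (by linarith : 0 < |(discr K : ℝ)|), ← Real.exp_add, Real.log_exp]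
    gcongr
    nlinarith
  have e2 : ∏ w : InfinitePlace K, ‖facW K w s‖ ≤ (∏ w : InfinitePlace K, ‖facW K w 2‖) * Real.exp (A * nn K * (1 + |s.im|)) := by
    calc _ ≤ ∏ w : InfinitePlace K, ‖facW K w 2‖ * Real.exp (A * (1 + |s.im|)) :=
          Finset.prod_le_prod (fun _ _ => norm_nonneg _) fun w _ => h K w s h1 h2
      _ ≤ _ := by
          rw [Finset.prod_mul_distrib]
          gcongr
          rw [← Real.exp_sum]
          gcongr
          rw [Finset.sum_const, nsmul_eq_mul, ← mul_assoc]
          have hcard : (Finset.univ.card (α := InfinitePlace K) : ℝ) ≤ nn K := by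
            rw [← sum_mult (K := K), Finset.card_eq_sum_ones, Nat.cast_sum]
            refine Finset.sum_le_sum fun w _ => ?_
            exact_mod_cast InfinitePlace.mult_pos
          have := abs_nonneg s.im
          nlinarith [mul_le_mul_of_nonneg_right hcard (by positivity : 0 ≤ A * (1 + |s.im|))]
  calc _ ≤ (Real.exp (-((2:ℂ).re / 2) * Real.log |(discr K : ℝ)|) * |(discr K : ℝ)|) *
        ((∏ w : InfinitePlace K, ‖facW K w 2‖) * Real.exp (A * nn K * (1 + |s.im|))) := by
        gcongr
    _ = _ := by ring

end Wf

end Hooley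

/-! ### Continuation of the Dedekind zeta function -/

namespace Hooley

open NumberField NumberField.Units NumberField.Units.dirichletUnitTheorem Module MeasureTheory
open scoped nonZeroDivisors ENNReal

section ZetaF

lemma zeta_summable (K : Type*) [Field K] [NumberField K] {s : ℂ} (hs : 1 < s.re) :
    LSeriesSummable (zetaCoeff K) s := by
  obtain ⟨c, hc, h⟩ := Lam_real (K := K)
  obtain ⟨I, hI⟩ := exists_reps (K := K)
  exact (LSeriesSummable_iff_of_re_eq_re (by simp)).mp (h hI s.re hs).1

lemma zeta_analytic (K : Type*) [Field K] [NumberField K] :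
    AnalyticOnNhd ℂ (LSeries (zetaCoeff K)) {s | 1 < s.re} := by
  intro s hs
  have hs : 1 < s.re := hs
  refine LSeries_analyticOnNhd (zetaCoeff K) s ?_
  have : LSeries.abscissaOfAbsConv (zetaCoeff K) ≤ ((1:ℝ) : EReal) :=
    LSeries.abscissaOfAbsConv_le_of_forall_lt_LSeriesSummable fun y hy => zeta_summable K (by simpa using hy)
  exact lt_of_le_of_lt this (by exact_mod_cast hs)

/-- The entire function `F(s) = (s - 1) ζ_K(s)`. The Mellin representation gives it as `(s - 1) Λ(s)` times the
reciprocal archimedean factor, which vanishes at `0` and cancels the pole of `Λ` there. Under RH it has no zeros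
for `1/2 < Re s < 1`, and its growth is bounded uniformly in `K`. -/
theorem zeta_F : ∃ A : ℝ, 0 < A ∧ ∀ (K : Type) [Field K] [NumberField K], DedekindRH K →
    ∃ F : ℂ → ℂ, Differentiable ℂ F ∧ F 1 ≠ 0 ∧
      (∀ s : ℂ, 1 < s.re → F s = (s - 1) * LSeries (zetaCoeff K) s) ∧
      (∀ s : ℂ, 1 / 2 < s.re → s.re < 1 → F s ≠ 0) ∧
      ∀ s : ℂ, 1 / 2 ≤ s.re → s.re ≤ 7 / 4 →
        ‖F s‖ ≤ ‖LSeries (zetaCoeff K) 2‖ * |(discr K : ℝ)| * Real.exp (A * nn K * (1 + |s.im|)) := by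
  obtain ⟨A, hA, hW⟩ := Wc_bound
  refine ⟨A + 8, by linarith, fun K _ _ hRH => ?_⟩
  obtain ⟨c, hc, hL⟩ := Lam_real (K := K)
  obtain ⟨I, hI⟩ := exists_reps (K := K)
  set f0 : ℝ := (hV K).toReal with hf0
  have hf0pos : 0 < f0 := ENNReal.toReal_pos hV_pos hV_lt.ne
  have hc' : (c : ℂ) ≠ 0 := Complex.ofReal_ne_zero.mpr (ne_of_gt hc)
  -- `dslope (Wc K) 0 s` is `Wc K s / s`, continued analytically to `s = 0`
  set F : ℂ → ℂ := fun s => (c : ℂ)⁻¹ * ((s - 1) * ((pairK I).Λ₀ s * Wc K s - f0 * dslope (Wc K) 0 s) + f0 * Wc K s) with hF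
  have hdW : Differentiable ℂ (Wc K) := Wc_diff
  have hdW' : Differentiable ℂ (dslope (Wc K) 0) := by
    rw [← differentiableOn_univ]
    exact (Complex.differentiableOn_dslope (Filter.univ_mem)).mpr hdW.differentiableOn
  have hdL : Differentiable ℂ (pairK I).Λ₀ := (pairK I).differentiable_Λ₀
  have hFd : Differentiable ℂ F := by fun_prop
  have hds : ∀ s : ℂ, s ≠ 0 → dslope (Wc K) 0 s = Wc K s / s := fun s hs => by
    rw [dslope_of_ne _ hs, slope_def_field, Wc_zero, sub_zero, sub_zero]
  have hF' : ∀ s : ℂ, s ≠ 0 → F s = (c : ℂ)⁻¹ * Wc K s * ((s - 1) * (pairK I).Λ₀ s + f0 / s) := by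
    intro s hs
    simp only [hF, hds s hs]
    field_simp
    ring
  have hreal : ∀ x : ℝ, 1 < x → F x = ((x:ℂ) - 1) * LSeries (zetaCoeff K) x := by
    intro x hx
    have hx0 : (x:ℂ) ≠ 0 := by exact_mod_cast (by linarith : x ≠ 0)
    have hx1 : (x:ℂ) - 1 ≠ 0 := by
      rw [sub_ne_zero]; exact_mod_cast hx.ne'
    have hx1' : (1:ℂ) - x ≠ 0 := by
      rw [sub_ne_zero]; exact_mod_cast hx.ne
    rw [hF' _ hx0, WeakFEPair.Λ₀_eq]
    change (c : ℂ)⁻¹ * Wc K x * ((x - 1) * ((pairK I).Λ x + (1 / (x:ℂ)) • (f0 : ℂ) + ((1:ℂ) / (((1:ℝ):ℂ) - x)) • (f0 : ℂ)) + f0 / x) = _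
    rw [(hL hI x hx).2, Wc_real (by linarith : 0 < x)]
    have hg := gamR_pos (K := K) (by linarith : 0 < x)
    have hd := Real.rpow_pos_of_pos (discr_abs_pos K) (x / 2)
    have hne : ((|(discr K : ℝ)| ^ (x / 2) * gamR K x : ℝ) : ℂ) ≠ 0 := by
      rw [Complex.ofReal_ne_zero]; positivity
    rw [mul_assoc c, Complex.ofReal_mul c, Complex.ofReal_inv, Complex.ofReal_one, smul_eq_mul, smul_eq_mul]
    field_simp
    ring
  have hFL : ∀ s : ℂ, 1 < s.re → F s = (s - 1) * LSeries (zetaCoeff K) s := by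
    have h1 : AnalyticOnNhd ℂ F {s | 1 < s.re} := fun s _ => hFd.analyticAt s
    have h2 : AnalyticOnNhd ℂ (fun s => (s - 1) * LSeries (zetaCoeff K) s) {s : ℂ | 1 < s.re} :=
      fun s hs => (analyticAt_id.sub analyticAt_const).mul (zeta_analytic K s hs)
    have hpre : IsPreconnected {s : ℂ | 1 < s.re} := (convex_halfSpace_re_gt 1).isPreconnected
    have hfreq : ∃ᶠ z in nhdsWithin (2:ℂ) {2}ᶜ, F z = (z - 1) * LSeries (zetaCoeff K) z := by
      have ht : Tendsto (fun x : ℝ => (x : ℂ)) (nhdsWithin (2:ℝ) (Set.Ioi 2)) (nhdsWithin (2:ℂ) {2}ᶜ) := by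
        refine tendsto_nhdsWithin_iff.mpr ⟨?_, ?_⟩
        · exact (Complex.continuous_ofReal.tendsto 2).mono_left nhdsWithin_le_nhds
        · filter_upwards [self_mem_nhdsWithin] with x hx
          have hx : 2 < x := hx
          simp only [Set.mem_compl_iff, Set.mem_singleton_iff]
          exact_mod_cast hx.ne'
      refine ht.frequently (Eventually.frequently ?_)
      filter_upwards [self_mem_nhdsWithin] with x hx
      have hx : 2 < x := hx
      exact hreal x (by linarith)
    intro s hs
    exact AnalyticOnNhd.eqOn_of_preconnected_of_frequently_eq h1 h2 hpre (z₀ := 2) (by simp) hfreq hs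
  have hgr : ∀ s : ℂ, 1 / 2 ≤ s.re → s.re ≤ 7 / 4 →
        ‖F s‖ ≤ ‖LSeries (zetaCoeff K) 2‖ * |(discr K : ℝ)| * Real.exp ((A + 8) * nn K * (1 + |s.im|)) := by
    intro s h1 h2
    have hs0 : s ≠ 0 := by rintro rfl; norm_num at h1
    set L : ℂ := LSeries (zetaCoeff K) 2 with hLdef
    set m : ℝ := |(discr K : ℝ)| ^ ((2:ℝ) / 2) * gamR K 2 with hm
    have hmpos : 0 < m := by
      have hg := gamR_pos (K := K) (by norm_num : (0:ℝ) < 2)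
      have hd := Real.rpow_pos_of_pos (discr_abs_pos K) ((2:ℝ) / 2)
      positivity
    have hl2 : ∀ J, Reps J → (pairK (K := K) J).Λ 2 = ((c * m : ℝ) : ℂ) * L := by
      intro J hJ
      have := (hL hJ 2 (by norm_num)).2
      rw [mul_assoc c, Complex.ofReal_ofNat] at this
      exact this
    have hb := Lam0_le I (s := s) (by linarith) (by linarith)
    rw [Lam0_neg_one, Lam0_two, Lam0_two, hl2 _ hI, hl2 _ hI.dual, Complex.sub_re, Complex.ofReal_re, Complex.re_ofReal_mul, ← hf0] at hb
    have hLn : L.re ≤ ‖L‖ := Complex.re_le_norm L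
    have hcm : 0 < c * m := by positivity
    have h3 : c * m * L.re ≤ c * m * ‖L‖ := by gcongr
    have h4 : f0 ≤ 2 * (c * m * ‖L‖) := by
      have := (norm_nonneg _).trans hb
      linarith
    have h5 : ‖(pairK I).Λ₀ s‖ ≤ 2 * (c * m * ‖L‖) := by linarith
    have hsn : 1 / 2 ≤ ‖s‖ := h1.trans (Complex.re_le_norm s)
    have h6 : ‖(s - 1) * (pairK I).Λ₀ s + f0 / s‖ ≤ (c * m * ‖L‖) * (2 * ‖s - 1‖ + 4) := by
      refine (norm_add_le _ _).trans ?_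
      rw [norm_mul, norm_div, Complex.norm_real, Real.norm_of_nonneg hf0pos.le]
      have : f0 / ‖s‖ ≤ 4 * (c * m * ‖L‖) := by
        rw [div_le_iff₀ (by linarith)]
        nlinarith
      have := mul_le_mul_of_nonneg_left h5 (norm_nonneg (s - 1))
      linarith
    have h7 : ‖s - 1‖ ≤ 1 + |s.im| := by
      refine (Complex.norm_le_abs_re_add_abs_im _).trans ?_
      have : |s.re - 1| ≤ 1 := by rw [abs_le]; constructor <;> linarith
      simpa using this
    have hW2 : ‖Wc K 2‖ = m⁻¹ := by
      have := Wc_real (K := K) (by norm_num : (0:ℝ) < 2)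
      rw [← hm] at this
      rw [show (2:ℂ) = ((2:ℝ):ℂ) by norm_num, this, Complex.norm_real, Real.norm_of_nonneg (by positivity)]
    have h8 := hW K s h1 h2
    rw [hW2] at h8
    have him := abs_nonneg s.im
    have hn1 : (1:ℝ) ≤ nn K := by
      have : 1 ≤ finrank ℚ K := finrank_pos
      unfold nn
      exact_mod_cast this
    have h9 : 2 * ‖s - 1‖ + 4 ≤ Real.exp (8 * nn K * (1 + |s.im|)) := by
      have := Real.add_one_le_exp (8 * nn K * (1 + |s.im|))
      nlinarith
    rw [hF' s hs0, norm_mul, norm_mul, norm_inv, Complex.norm_real, Real.norm_of_nonneg hc.le]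
    calc c⁻¹ * ‖Wc K s‖ * ‖(s - 1) * (pairK I).Λ₀ s + f0 / s‖
        ≤ c⁻¹ * (m⁻¹ * |(discr K : ℝ)| * Real.exp (A * nn K * (1 + |s.im|))) * ((c * m * ‖L‖) * Real.exp (8 * nn K * (1 + |s.im|))) := by
          gcongr
          exact h6.trans (by gcongr)
      _ = ‖L‖ * |(discr K : ℝ)| * (Real.exp (A * nn K * (1 + |s.im|)) * Real.exp (8 * nn K * (1 + |s.im|))) := by
          field_simp
      _ = _ := by
          rw [← Real.exp_add]
          ring_nf
  refine ⟨F, hFd, ?_, hFL, ?_, hgr⟩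
  · rw [hF' 1 one_ne_zero, sub_self, zero_mul, zero_add, div_one]
    have h1 := Wc_real (K := K) (by norm_num : (0:ℝ) < 1)
    rw [Complex.ofReal_one] at h1
    rw [h1]
    have hg := gamR_pos (K := K) (by norm_num : (0:ℝ) < 1)
    have hd := Real.rpow_pos_of_pos (discr_abs_pos K) ((1:ℝ) / 2)
    refine mul_ne_zero (mul_ne_zero (inv_ne_zero hc') ?_) (by exact_mod_cast hf0pos.ne')
    rw [Complex.ofReal_ne_zero]
    exact inv_ne_zero (mul_pos hd hg).ne'
  · intro s h1 h2 h0
    have := hRH (fun s => F s / (s - 1)) (fun z hz => (hFd.analyticAt z).div (analyticAt_id.sub analyticAt_const) (sub_ne_zero.mpr hz))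
      (fun z hz => by
        have : z - 1 ≠ 0 := by
          intro h
          rw [sub_eq_zero] at h
          simp [h] at hz
        change F z / (z - 1) = _
        rw [hFL z hz]
        field_simp) s (by linarith) h2 (by simp [h0])
    linarith

end ZetaF

end Hooley

/-! ### The von Mangoldt coefficients of the Dedekind zeta function -/

namespace Hooley

open NumberField NumberField.Units NumberField.Units.dirichletUnitTheorem Module MeasureTheory
open scoped nonZeroDivisors ENNReal

section VonMangoldt

variable (K : Type*) [Field K] [NumberField K]

lemma finite_norm_le (n : ℕ) : {I : Ideal (𝓞 K) | Ideal.absNorm I ≠ 0 ∧ Ideal.absNorm I ≤ n}.Finite := by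
  have : {I : Ideal (𝓞 K) | Ideal.absNorm I ≠ 0 ∧ Ideal.absNorm I ≤ n} ⊆
      ⋃ m ∈ Finset.range (n + 1) \ {0}, {I : Ideal (𝓞 K) | Ideal.absNorm I = m} := by
    intro I hI
    simp only [Set.mem_iUnion]
    exact ⟨Ideal.absNorm I, by simp [hI.1, Nat.lt_succ_of_le hI.2], rfl⟩
  refine Set.Finite.subset (Set.Finite.biUnion (Finset.finite_toSet _) fun m hm => ?_) this
  exact Ideal.finite_setOf_absNorm_eq m

/-- Nonzero ideals of norm at most `n`. -/
noncomputable def idle (n : ℕ) : Finset (Ideal (𝓞 K)) := (finite_norm_le K n).toFinset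

/-- The von Mangoldt coefficients of `ζ_K`: the sum of `log N(P)` over prime ideals `P` and
`k ≥ 1` with `N(P)^k = m`. -/
noncomputable def cK (m : ℕ) : ℝ :=
  ∑ P ∈ (idle K m).filter Prime, ∑ k ∈ Finset.Icc 1 m, if Ideal.absNorm P ^ k = m then Real.log (Ideal.absNorm P) else 0

variable {K}

lemma mem_idle {n : ℕ} {I : Ideal (𝓞 K)} : I ∈ idle K n ↔ I ≠ ⊥ ∧ Ideal.absNorm I ≤ n := by
  simp [idle, Ideal.absNorm_eq_zero_iff]

lemma absNorm_pos {I : Ideal (𝓞 K)} (h : I ≠ ⊥) : 0 < Ideal.absNorm I :=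
  Nat.pos_of_ne_zero (by rwa [Ne, Ideal.absNorm_eq_zero_iff])

lemma two_le_absNorm {P : Ideal (𝓞 K)} (h : Prime P) : 2 ≤ Ideal.absNorm P := by
  have h0 := absNorm_pos h.ne_zero
  have h1 : Ideal.absNorm P ≠ 1 := fun h1 => h.not_unit (by
    rw [Ideal.absNorm_eq_one_iff] at h1
    exact Ideal.isUnit_iff.mpr h1)
  omega

lemma cK_nonneg (m : ℕ) : 0 ≤ cK K m :=
  Finset.sum_nonneg fun P hP => Finset.sum_nonneg fun k _ => by
    split_ifs
    · exact Real.log_natCast_nonneg _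
    · exact le_rfl

lemma cK_eq {m n : ℕ} (hm : m ≠ 0) (h : m ≤ n) : cK K m =
    ∑ P ∈ (idle K n).filter Prime, ∑ k ∈ Finset.Icc 1 n, if Ideal.absNorm P ^ k = m then Real.log (Ideal.absNorm P) else 0 := by
  unfold cK
  have h1 : ∀ P : Ideal (𝓞 K), Prime P → ∑ k ∈ Finset.Icc 1 m, (if Ideal.absNorm P ^ k = m then Real.log (Ideal.absNorm P) else 0) =
      ∑ k ∈ Finset.Icc 1 n, if Ideal.absNorm P ^ k = m then Real.log (Ideal.absNorm P) else 0 := by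
    intro P hP
    refine Finset.sum_subset (Finset.Icc_subset_Icc le_rfl h) fun k hk hk' => if_neg fun he => hk' ?_
    rw [Finset.mem_Icc] at hk ⊢
    refine ⟨hk.1, ?_⟩
    rw [← he]
    exact (Nat.lt_pow_self (two_le_absNorm hP)).le
  rw [Finset.sum_congr rfl fun P hP => h1 P (Finset.mem_filter.mp hP).2]
  refine Finset.sum_subset (Finset.filter_subset_filter _ fun P hP => ?_) fun P hP hP' => ?_
  · rw [mem_idle] at hP ⊢
    exact ⟨hP.1, hP.2.trans h⟩
  · refine Finset.sum_eq_zero fun k hk => if_neg fun he => hP' ?_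
    rw [Finset.mem_filter, mem_idle] at hP ⊢
    refine ⟨⟨hP.1.1, ?_⟩, hP.2⟩
    rw [← he]
    exact Nat.le_self_pow (by have := (Finset.mem_Icc.mp hk).1; omega) _

lemma count_eq {a P : Ideal (𝓞 K)} {n : ℕ} (ha : a ≠ ⊥) (hP : Prime P) (hn : Ideal.absNorm a ≤ n) :
    ((UniqueFactorizationMonoid.normalizedFactors a).count P) = ((Finset.Icc 1 n).filter fun k => P ^ k ∣ a).card := by
  have hdvd : ∀ k, P ^ k ∣ a ↔ k ≤ (UniqueFactorizationMonoid.normalizedFactors a).count P := fun k => by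
    rw [pow_dvd_iff_le_emultiplicity, UniqueFactorizationMonoid.emultiplicity_eq_count_normalizedFactors hP.irreducible ha,
      normalize_eq, Nat.cast_le]
  have hle : (UniqueFactorizationMonoid.normalizedFactors a).count P ≤ n := by
    have h1 := (hdvd _).mpr le_rfl
    have h2 := Nat.le_of_dvd (absNorm_pos ha) (Ideal.absNorm_dvd_absNorm_of_le (Ideal.dvd_iff_le.mp h1))
    rw [map_pow] at h2
    exact ((Nat.lt_pow_self (two_le_absNorm hP)).le.trans h2).trans hn
  have : (Finset.Icc 1 n).filter (fun k => P ^ k ∣ a) = Finset.Icc 1 ((UniqueFactorizationMonoid.normalizedFactors a).count P) := by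
    ext k
    simp only [Finset.mem_filter, Finset.mem_Icc, hdvd]
    omega
  rw [this, Nat.card_Icc]
  omega

/-- Unique factorisation of ideals, after taking logarithms of norms: the analogue of `log n = ∑_{d ∣ n} Λ(d)`.
-/
lemma log_norm_eq {a : Ideal (𝓞 K)} {n : ℕ} (ha : a ≠ ⊥) (hn : Ideal.absNorm a ≤ n) :
    Real.log (Ideal.absNorm a) = ∑ P ∈ (idle K n).filter Prime, ∑ k ∈ Finset.Icc 1 n,
      if P ^ k ∣ a then Real.log (Ideal.absNorm P) else 0 := by
  have h1 : Real.log (Ideal.absNorm a) = ∑ P ∈ (UniqueFactorizationMonoid.normalizedFactors a).toFinset,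
      ((UniqueFactorizationMonoid.normalizedFactors a).count P) * Real.log (Ideal.absNorm P) := by
    conv_lhs => rw [← Ideal.prod_normalizedFactors_eq_self ha]
    rw [Finset.prod_multiset_count, map_prod, Nat.cast_prod, Real.log_prod]
    · refine Finset.sum_congr rfl fun P _ => ?_
      rw [map_pow, Nat.cast_pow, Real.log_pow]
    · intro P hP
      have hP' := UniqueFactorizationMonoid.prime_of_normalized_factor P (Multiset.mem_toFinset.mp hP)
      rw [map_pow]
      have := two_le_absNorm hP'
      positivity
  rw [h1]
  have h2 : ∀ P ∈ (idle K n).filter Prime, ∑ k ∈ Finset.Icc 1 n, (if P ^ k ∣ a then Real.log (Ideal.absNorm P) else 0) =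
      ((UniqueFactorizationMonoid.normalizedFactors a).count P) * Real.log (Ideal.absNorm P) := by
    intro P hP
    rw [count_eq ha (Finset.mem_filter.mp hP).2 hn, ← Finset.sum_filter, Finset.sum_const, nsmul_eq_mul]
  rw [Finset.sum_congr rfl h2]
  refine Finset.sum_subset (fun P hP => ?_) fun P hP hP' => ?_
  · rw [Multiset.mem_toFinset] at hP
    have hp := UniqueFactorizationMonoid.prime_of_normalized_factor P hP
    rw [Finset.mem_filter, mem_idle]
    refine ⟨⟨hp.ne_zero, ?_⟩, hp⟩
    have := Nat.le_of_dvd (absNorm_pos ha) (Ideal.absNorm_dvd_absNorm_of_le (Ideal.dvd_iff_le.mp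
      (UniqueFactorizationMonoid.dvd_of_mem_normalizedFactors hP)))
    exact this.trans hn
  · rw [Multiset.mem_toFinset] at hP'
    rw [Multiset.count_eq_zero_of_notMem hP']
    simp

/-- The ideals of norm exactly `n`, for `n ≠ 0`. -/
noncomputable def ideq (K : Type*) [Field K] [NumberField K] (n : ℕ) : Finset (Ideal (𝓞 K)) :=
  (idle K n).filter fun I => Ideal.absNorm I = n

lemma mem_ideq {n : ℕ} (hn : n ≠ 0) {I : Ideal (𝓞 K)} : I ∈ ideq K n ↔ Ideal.absNorm I = n := by
  rw [ideq, Finset.mem_filter, mem_idle]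
  refine ⟨fun h => h.2, fun h => ⟨⟨?_, h.le⟩, h⟩⟩
  rintro rfl
  rw [Ideal.absNorm_bot] at h
  exact hn h.symm

lemma zetaCoeff_eq {n : ℕ} (hn : n ≠ 0) : zetaCoeff K n = ((ideq K n).card : ℂ) := by
  rw [zetaCoeff]
  congr 1
  rw [← Nat.card_eq_finsetCard]
  exact Nat.card_congr (Equiv.subtypeEquivRight fun I => (mem_ideq hn).symm)

lemma card_dvd {n : ℕ} (hn : n ≠ 0) {b : Ideal (𝓞 K)} (hb : b ≠ ⊥) :
    ((ideq K n).filter fun a => b ∣ a).card = if Ideal.absNorm b ∣ n then (ideq K (n / Ideal.absNorm b)).card else 0 := by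
  split_ifs with h
  · obtain ⟨m, rfl⟩ := h
    have hb0 := absNorm_pos hb
    have hm : m ≠ 0 := by rintro rfl; simp at hn
    rw [Nat.mul_div_cancel_left _ hb0]
    symm
    refine Finset.card_bij (fun J _ => b * J) ?_ ?_ ?_
    · intro J hJ
      rw [mem_ideq hm] at hJ
      rw [Finset.mem_filter, mem_ideq hn, map_mul, hJ]
      exact ⟨rfl, dvd_mul_right _ _⟩
    · intro J _ J' _ h
      exact mul_left_cancel₀ hb h
    · intro a ha
      rw [Finset.mem_filter, mem_ideq hn] at ha
      obtain ⟨J, rfl⟩ := ha.2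
      refine ⟨J, ?_, rfl⟩
      rw [mem_ideq hm]
      have := ha.1
      rw [map_mul] at this
      exact Nat.eq_of_mul_eq_mul_left hb0 this
  · rw [Finset.card_eq_zero, Finset.filter_eq_empty_iff]
    intro a ha hd
    rw [mem_ideq hn] at ha
    exact h (ha ▸ Ideal.absNorm_dvd_absNorm_of_le (Ideal.dvd_iff_le.mp hd))

/-- The convolution identity behind `-ζ_K' = ζ_K · (-ζ_K'/ζ_K)`. -/
lemma log_card {n : ℕ} (hn : n ≠ 0) :
    Real.log n * (ideq K n).card = ∑ p ∈ n.divisorsAntidiagonal, cK K p.1 * (ideq K p.2).card := by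
  have h1 : Real.log n * (ideq K n).card = ∑ a ∈ ideq K n, Real.log (Ideal.absNorm a) := by
    have : ∀ a ∈ ideq K n, Real.log (Ideal.absNorm a) = Real.log n := fun a ha => by rw [(mem_ideq hn).mp ha]
    rw [Finset.sum_congr rfl this, Finset.sum_const, nsmul_eq_mul, mul_comm]
  rw [h1]
  have h2 : ∀ a ∈ ideq K n, Real.log (Ideal.absNorm a) = ∑ P ∈ (idle K n).filter Prime, ∑ k ∈ Finset.Icc 1 n,
      if P ^ k ∣ a then Real.log (Ideal.absNorm P) else 0 := fun a ha => by
    have hm := (Finset.mem_filter.mp ha)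
    exact log_norm_eq (mem_idle.mp hm.1).1 hm.2.le
  rw [Finset.sum_congr rfl h2]
  refine Finset.sum_comm.trans ?_
  have h3 : ∀ p ∈ n.divisorsAntidiagonal, cK K p.1 * (ideq K p.2).card = ∑ P ∈ (idle K n).filter Prime, ∑ k ∈ Finset.Icc 1 n,
      if Ideal.absNorm P ^ k = p.1 then Real.log (Ideal.absNorm P) * (ideq K p.2).card else 0 := by
    intro p hp
    rw [Nat.mem_divisorsAntidiagonal] at hp
    have hp0 : p.1 ≠ 0 := fun h => hp.2 (by rw [← hp.1, h, zero_mul])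
    rw [cK_eq hp0 (Nat.le_of_dvd (Nat.pos_of_ne_zero hn) ⟨p.2, hp.1.symm⟩), Finset.sum_mul]
    refine Finset.sum_congr rfl fun P _ => ?_
    rw [Finset.sum_mul]
    refine Finset.sum_congr rfl fun k _ => ?_
    rw [ite_mul, zero_mul]
  rw [Finset.sum_congr rfl h3]
  refine Eq.trans ?_ Finset.sum_comm
  refine Finset.sum_congr rfl fun P hP => ?_
  refine Finset.sum_comm.trans ?_
  refine Eq.trans ?_ Finset.sum_comm
  refine Finset.sum_congr rfl fun k hk => ?_
  have hPp := (Finset.mem_filter.mp hP).2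
  rw [← Finset.sum_filter, Finset.sum_const, nsmul_eq_mul, card_dvd hn (pow_ne_zero _ hPp.ne_zero), map_pow]
  split_ifs with h
  · obtain ⟨m, rfl⟩ := h
    have hN : 0 < Ideal.absNorm P ^ k := pow_pos (absNorm_pos hPp.ne_zero) k
    rw [Nat.mul_div_cancel_left _ hN, Finset.sum_eq_single (Ideal.absNorm P ^ k, m)]
    · rw [if_pos rfl, mul_comm]
    · rintro ⟨x, y⟩ hxy hne
      rw [Nat.mem_divisorsAntidiagonal] at hxy
      refine if_neg fun he => hne ?_
      simp only at he hxy
      subst he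
      rw [Nat.eq_of_mul_eq_mul_left hN hxy.1]
    · intro hnot
      exact absurd (Nat.mem_divisorsAntidiagonal.mpr ⟨rfl, hn⟩) hnot
  · rw [Nat.cast_zero, zero_mul]
    symm
    refine Finset.sum_eq_zero fun p hp => if_neg fun he => h ?_
    rw [he]
    exact ⟨p.2, (Nat.mem_divisorsAntidiagonal.mp hp).1.symm⟩

lemma norm_dvd {p : ℕ} {P : Ideal (𝓞 K)} (hp : (p : 𝓞 K) ∈ P) : Ideal.absNorm P ∣ p ^ finrank ℚ K := by
  have h1 : Ideal.span {(p : 𝓞 K)} ≤ P := (Ideal.span_singleton_le_iff_mem _).mpr hp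
  have h2 := Ideal.absNorm_dvd_absNorm_of_le h1
  have h3 : Ideal.absNorm (Ideal.span {(p : 𝓞 K)}) = p ^ finrank ℚ K := by
    rw [Ideal.absNorm_span_natCast, RingOfIntegers.rank]
  rwa [h3] at h2

/-- The distinct prime ideals above `p` have norms multiplying to at most `p ^ [K : ℚ]`. -/
lemma sum_log_le {p : ℕ} (hp : p.Prime) (S : Finset (Ideal (𝓞 K))) (hS : ∀ P ∈ S, Prime P ∧ (p : 𝓞 K) ∈ P) :
    ∑ P ∈ S, Real.log (Ideal.absNorm P) ≤ finrank ℚ K * Real.log p := by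
  have hd : ∏ P ∈ S, P ∣ Ideal.span {(p : 𝓞 K)} := by
    refine Finset.prod_primes_dvd _ (fun P hP => (hS P hP).1) fun P hP => ?_
    rw [Ideal.dvd_iff_le, Ideal.span_singleton_le_iff_mem]
    exact (hS P hP).2
  have h1 := Ideal.absNorm_dvd_absNorm_of_le (Ideal.dvd_iff_le.mp hd)
  rw [Ideal.absNorm_span_natCast, RingOfIntegers.rank, map_prod] at h1
  have h2 := Nat.le_of_dvd (pow_pos hp.pos _) h1
  rw [← Real.log_prod (fun P hP => by have := two_le_absNorm (hS P hP).1; positivity), ← Real.log_pow]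
  refine Real.log_le_log ?_ (by exact_mod_cast h2)
  exact Finset.prod_pos fun P hP => by have := two_le_absNorm (hS P hP).1; positivity

lemma isPrime_of_prime {P : Ideal (𝓞 K)} (h : Prime P) : P.IsPrime := Ideal.isPrime_of_prime h

/-- At most `[K : ℚ]` primes lie above `p`, and a prime of norm `p^f` contributes `f log p` with `∑ f ≤ [K :
ℚ]`. -/
lemma cK_le (m : ℕ) : cK K m ≤ finrank ℚ K * ArithmeticFunction.vonMangoldt m := by
  by_cases h : ∃ P : Ideal (𝓞 K), Prime P ∧ ∃ k, 1 ≤ k ∧ Ideal.absNorm P ^ k = m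
  · obtain ⟨P, hP, k, hk, rfl⟩ := h
    have hPp := isPrime_of_prime hP
    have h2 := two_le_absNorm hP
    obtain ⟨p, hp, hpP⟩ : ∃ p : ℕ, p.Prime ∧ (p : 𝓞 K) ∈ P := by
      have h3 : ((Ideal.absNorm P : ℕ) : 𝓞 K) ∈ P := Ideal.absNorm_mem P
      rw [← Nat.prod_primeFactorsList (by omega : Ideal.absNorm P ≠ 0), Nat.cast_list_prod] at h3
      rw [← Multiset.prod_coe, hPp.multiset_prod_mem_iff_exists_mem] at h3
      obtain ⟨x, hx, hxP⟩ := h3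
      simp only [Multiset.mem_coe, List.mem_map] at hx
      obtain ⟨p, hp, rfl⟩ := hx
      exact ⟨p, Nat.prime_of_mem_primeFactorsList hp, hxP⟩
    obtain ⟨i, hi, hPi⟩ := (Nat.dvd_prime_pow hp).mp (norm_dvd hpP)
    have hi0 : i ≠ 0 := by rintro rfl; rw [pow_zero] at hPi; omega
    have hv : ArithmeticFunction.vonMangoldt (Ideal.absNorm P ^ k) = Real.log p := by
      rw [ArithmeticFunction.vonMangoldt_apply_pow (by omega), hPi, ArithmeticFunction.vonMangoldt_apply_pow hi0,
        ArithmeticFunction.vonMangoldt_apply_prime hp]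
    rw [hv]
    set m := Ideal.absNorm P ^ k with hm
    have hpm : m = p ^ (i * k) := by rw [hm, hPi, pow_mul]
    have hone : ∀ Q : Ideal (𝓞 K), Prime Q → ∑ k ∈ Finset.Icc 1 m, (if Ideal.absNorm Q ^ k = m then Real.log (Ideal.absNorm Q) else 0) ≤
        if (p : 𝓞 K) ∈ Q then Real.log (Ideal.absNorm Q) else 0 := by
      intro Q hQ
      have hQ2 := two_le_absNorm hQ
      by_cases hex : ∃ j ∈ Finset.Icc 1 m, Ideal.absNorm Q ^ j = m
      · obtain ⟨j, hj, hjm⟩ := hex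
        have hQp := isPrime_of_prime hQ
        have hpQ : (p : 𝓞 K) ∈ Q := by
          have h3 : ((m : ℕ) : 𝓞 K) ∈ Q := by
            rw [← hjm, Nat.cast_pow]
            exact Ideal.pow_mem_of_mem _ (Ideal.absNorm_mem Q) _ (Finset.mem_Icc.mp hj).1
          rw [hpm, Nat.cast_pow] at h3
          exact hQp.mem_of_pow_mem _ h3
        rw [if_pos hpQ, Finset.sum_eq_single_of_mem j hj, if_pos hjm]
        intro l _ hlj
        refine if_neg fun hl => hlj ?_
        exact Nat.pow_right_injective hQ2 (hl.trans hjm.symm)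
      · rw [Finset.sum_eq_zero fun j hj => if_neg fun he => hex ⟨j, hj, he⟩]
        split_ifs
        · exact Real.log_natCast_nonneg _
        · exact le_rfl
    calc cK K m ≤ ∑ Q ∈ (idle K m).filter Prime, if (p : 𝓞 K) ∈ Q then Real.log (Ideal.absNorm Q) else 0 :=
          Finset.sum_le_sum fun Q hQ => hone Q (Finset.mem_filter.mp hQ).2
      _ = ∑ Q ∈ ((idle K m).filter Prime).filter fun Q => (p : 𝓞 K) ∈ Q, Real.log (Ideal.absNorm Q) :=
          (Finset.sum_filter _ _).symm
      _ ≤ _ := sum_log_le hp _ fun Q hQ => by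
          rw [Finset.mem_filter, Finset.mem_filter] at hQ
          exact ⟨hQ.1.2, hQ.2⟩
  · have : cK K m = 0 := by
      refine Finset.sum_eq_zero fun P hP => Finset.sum_eq_zero fun k hk => if_neg fun he => h ?_
      exact ⟨P, (Finset.mem_filter.mp hP).2, k, (Finset.mem_Icc.mp hk).1, he⟩
    rw [this]
    have := ArithmeticFunction.vonMangoldt_nonneg (n := m)
    positivity

end VonMangoldt

end Hooley

/-! ### Logarithm and logarithmic derivative as Dirichlet series -/

namespace Hooley

open NumberField NumberField.Units NumberField.Units.dirichletUnitTheorem Module MeasureTheory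
open scoped nonZeroDivisors ENNReal

section ExpForm

lemma norm_LSeries_le {f g : ℕ → ℂ} {s : ℂ} {C : ℝ} (h : ∀ n, ‖f n‖ ≤ C * ‖g n‖)
    (hg : LSeriesSummable g s) :
    LSeriesSummable f s ∧ ‖LSeries f s‖ ≤ C * ∑' n, ‖LSeries.term g (s.re : ℂ) n‖ := by
  have e : ∀ n, ‖LSeries.term g (s.re : ℂ) n‖ = ‖LSeries.term g s n‖ := fun n => by
    rw [LSeries.norm_term_eq, LSeries.norm_term_eq, Complex.ofReal_re]
  have hb : ∀ n, ‖LSeries.term f s n‖ ≤ C * ‖LSeries.term g s n‖ := fun n => by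
    rw [LSeries.norm_term_eq, LSeries.norm_term_eq]
    split_ifs with hn
    · simp
    · rw [← mul_div_assoc]
      gcongr
      exact h n
  simp_rw [e]
  have hs : Summable fun n => C * ‖LSeries.term g s n‖ := hg.norm.mul_left C
  refine ⟨Summable.of_norm_bounded hs hb, ?_⟩
  rw [← tsum_mul_left]
  exact tsum_of_norm_bounded hs.hasSum hb

variable (K : Type*) [Field K] [NumberField K]

/-- Coefficients of `log ζ_K`. -/
noncomputable def eK (n : ℕ) : ℝ := cK K n / Real.log n

variable {K}

lemma eK_nonneg (n : ℕ) : 0 ≤ eK K n := div_nonneg (cK_nonneg n) (Real.log_natCast_nonneg n)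

lemma cK_zero : cK K 0 = 0 := by simp [cK]

lemma cK_one : cK K 1 = 0 := le_antisymm (by simpa using cK_le (K := K) 1) (cK_nonneg 1)

lemma log_mul_eK (n : ℕ) : Real.log n * eK K n = cK K n := by
  rcases Nat.lt_or_ge n 2 with h | h
  · interval_cases n
    · simp [cK_zero]
    · simp [cK_one]
  · have : 0 < Real.log n := Real.log_pos (by exact_mod_cast h)
    rw [eK]
    field_simp

lemma eK_le (n : ℕ) : eK K n ≤ nn K := by
  rcases Nat.lt_or_ge n 2 with h | h
  · have := (nn_pos (K := K)).le
    interval_cases n <;> simp [eK]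
  · have hl : 0 < Real.log n := Real.log_pos (by exact_mod_cast h)
    rw [eK, div_le_iff₀ hl]
    refine (cK_le n).trans ?_
    have := ArithmeticFunction.vonMangoldt_le_log (n := n)
    have h0 := (nn_pos (K := K)).le
    unfold nn at h0 ⊢
    gcongr

lemma one_summable {s : ℂ} (hs : 1 < s.re) : LSeriesSummable (fun _ => 1) s :=
  LSeriesSummable_of_le_const_mul_rpow (x := 1) hs ⟨1, fun n _ => by simp⟩

/-- The value `∑ n^{-σ}`, which bounds `log ζ_K / [K : ℚ]` on the line `Re s = σ`. -/
noncomputable def B0 (σ : ℝ) : ℝ := ∑' n, ‖LSeries.term (fun _ => 1) (σ : ℂ) n‖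

/-- The value `∑ Λ(n) n^{-σ}`, which bounds `ζ_K'/ζ_K` divided by `[K : ℚ]` on the line `Re s = σ`. -/
noncomputable def B1 (σ : ℝ) : ℝ := ∑' n, ‖LSeries.term (fun n => (ArithmeticFunction.vonMangoldt n : ℂ)) (σ : ℂ) n‖

lemma B0_nonneg (σ : ℝ) : 0 ≤ B0 σ := tsum_nonneg fun _ => norm_nonneg _
lemma B1_nonneg (σ : ℝ) : 0 ≤ B1 σ := tsum_nonneg fun _ => norm_nonneg _

lemma eK_series {s : ℂ} (hs : 1 < s.re) :
    LSeriesSummable (fun n => (eK K n : ℂ)) s ∧ ‖LSeries (fun n => (eK K n : ℂ)) s‖ ≤ nn K * B0 s.re :=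
  norm_LSeries_le (fun n => by
    rw [Complex.norm_real, Real.norm_of_nonneg (eK_nonneg n), norm_one, mul_one]
    exact eK_le n) (one_summable hs)

lemma cK_series {s : ℂ} (hs : 1 < s.re) :
    LSeriesSummable (fun n => (cK K n : ℂ)) s ∧ ‖LSeries (fun n => (cK K n : ℂ)) s‖ ≤ nn K * B1 s.re :=
  norm_LSeries_le (fun n => by
    rw [Complex.norm_real, Real.norm_of_nonneg (cK_nonneg n), Complex.norm_real,
      Real.norm_of_nonneg ArithmeticFunction.vonMangoldt_nonneg]
    exact cK_le n) (ArithmeticFunction.LSeriesSummable_vonMangoldt hs)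

lemma abscissa_lt {f : ℕ → ℂ} (h : ∀ y : ℝ, 1 < y → LSeriesSummable f y) {s : ℂ} (hs : 1 < s.re) :
    LSeries.abscissaOfAbsConv f < s.re := by
  have : LSeries.abscissaOfAbsConv f ≤ ((1:ℝ) : EReal) :=
    LSeries.abscissaOfAbsConv_le_of_forall_lt_LSeriesSummable h
  exact lt_of_le_of_lt this (by exact_mod_cast hs)

lemma eK_hasDeriv {s : ℂ} (hs : 1 < s.re) :
    HasDerivAt (LSeries fun n => (eK K n : ℂ)) (-LSeries (fun n => (cK K n : ℂ)) s) s := by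
  have h := LSeries_hasDerivAt (f := fun n => (eK K n : ℂ)) (abscissa_lt (fun y hy => (eK_series (by simpa using hy)).1) hs)
  have : LSeries.logMul (fun n => (eK K n : ℂ)) = fun n => (cK K n : ℂ) := by
    ext n
    rw [LSeries.logMul, ← log_mul_eK, ← Complex.natCast_log]
    push_cast
    rfl
  rwa [this] at h

lemma zeta_hasDeriv {s : ℂ} (hs : 1 < s.re) :
    HasDerivAt (LSeries (zetaCoeff K)) (-(LSeries (fun n => (cK K n : ℂ)) s * LSeries (zetaCoeff K) s)) s := by
  have h := LSeries_hasDerivAt (f := zetaCoeff K) (abscissa_lt (fun y hy => zeta_summable K (by simpa using hy)) hs)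
  have : LSeries (LSeries.logMul (zetaCoeff K)) s = LSeries (fun n => (cK K n : ℂ)) s * LSeries (zetaCoeff K) s := by
    rw [← LSeries_convolution' (cK_series hs).1 (zeta_summable K hs)]
    refine LSeries_congr (fun {n} hn => ?_) s
    rw [LSeries.convolution_def, LSeries.logMul, zetaCoeff_eq hn]
    have := log_card (K := K) hn
    have h2 := congrArg (fun x : ℝ => (x : ℂ)) this
    push_cast at h2
    rw [h2]
    beta_reduce
    refine Finset.sum_congr rfl fun p hp => ?_
    rw [zetaCoeff_eq]
    rintro h0
    rw [Nat.mem_divisorsAntidiagonal, h0, mul_zero] at hp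
    exact hn hp.1.symm
  rwa [this] at h

lemma zetaCoeff_one : zetaCoeff K 1 = 1 := by
  rw [zetaCoeff_eq one_ne_zero, show ideq K 1 = {⊤} by
    ext I
    rw [mem_ideq one_ne_zero, Ideal.absNorm_eq_one_iff, Finset.mem_singleton]]
  simp

/-- `ζ_K = exp (∑ e_n n^{-s})` for `Re s > 1`: both sides have the same logarithmic derivative, and both tend to
`1` as `s → +∞`. -/
theorem zeta_exp {s : ℂ} (hs : 1 < s.re) : LSeries (zetaCoeff K) s = Complex.exp (LSeries (fun n => (eK K n : ℂ)) s) := by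
  set D := LSeries (zetaCoeff K) with hD
  set G := LSeries (fun n => (eK K n : ℂ)) with hG
  have hd : ∀ z : ℂ, 1 < z.re → HasDerivAt (fun z => D z * Complex.exp (-G z)) 0 z := by
    intro z hz
    have h1 := (zeta_hasDeriv (K := K) hz).mul ((eK_hasDeriv (K := K) hz).neg.cexp)
    refine h1.congr_deriv ?_
    simp only [Pi.neg_apply]
    ring
  have hconst : ∀ z : ℂ, 1 < z.re → D z * Complex.exp (-G z) = D s * Complex.exp (-G s) := by
    intro z hz
    have hopen : IsOpen {z : ℂ | 1 < z.re} := isOpen_lt continuous_const Complex.continuous_re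
    exact hopen.is_const_of_deriv_eq_zero (convex_halfSpace_re_gt 1).isPreconnected
      (f := fun z => D z * Complex.exp (-G z))
      (fun w hw => (hd w hw).differentiableAt.differentiableWithinAt) (fun w hw => (hd w hw).deriv) hz hs
  have hlim : Tendsto (fun x : ℝ => D x * Complex.exp (-G x)) atTop (nhds (1 * Complex.exp (-0))) := by
    have t1 : Tendsto (fun x : ℝ => D x) atTop (nhds 1) := by
      have := LSeries.tendsto_atTop (f := zetaCoeff K)
        ((abscissa_lt (s := 2) (fun y hy => zeta_summable K (by simpa using hy)) (by norm_num)).trans (EReal.coe_lt_top _))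
      rwa [zetaCoeff_one] at this
    have t2 : Tendsto (fun x : ℝ => G x) atTop (nhds 0) := by
      have := LSeries.tendsto_atTop (f := fun n => (eK K n : ℂ))
        ((abscissa_lt (s := 2) (fun y hy => (eK_series (by simpa using hy)).1) (by norm_num)).trans (EReal.coe_lt_top _))
      have h1 : ((eK K 1 : ℝ) : ℂ) = 0 := by simp [eK]
      rwa [h1] at this
    exact t1.mul ((Complex.continuous_exp.tendsto _).comp t2.neg)
  have hlim2 : Tendsto (fun x : ℝ => D x * Complex.exp (-G x)) atTop (nhds (D s * Complex.exp (-G s))) := by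
    refine tendsto_const_nhds.congr' ?_
    filter_upwards [eventually_gt_atTop 1] with x hx
    exact (hconst x (by simpa using hx)).symm
  have := tendsto_nhds_unique hlim2 hlim
  rw [neg_zero, Complex.exp_zero, mul_one, Complex.exp_neg] at this
  field_simp at this
  exact this

end ExpForm

end Hooley

/-! ### Nonvanishing on the line `Re s = 1` -/

namespace Hooley

open NumberField NumberField.Units NumberField.Units.dirichletUnitTheorem Module MeasureTheory
open scoped nonZeroDivisors ENNReal

section Growth

variable {K : Type*} [Field K] [NumberField K]

/-- The inequality `3 + 4 cos θ + cos 2θ ≥ 0`, summed with the nonnegative coefficients of `log ζ_K`. -/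
lemma three_four_one {σ : ℝ} (hσ : 1 < σ) (t : ℝ) :
    1 ≤ ‖LSeries (zetaCoeff K) σ‖ ^ 3 * ‖LSeries (zetaCoeff K) (σ + t * Complex.I)‖ ^ 4 *
      ‖LSeries (zetaCoeff K) (σ + 2 * t * Complex.I)‖ := by
  have h0 : 1 < (σ : ℂ).re := by simpa using hσ
  have h1 : 1 < ((σ : ℂ) + t * Complex.I).re := by simpa using hσ
  have h2 : 1 < ((σ : ℂ) + 2 * t * Complex.I).re := by simpa using hσ
  rw [zeta_exp h0, zeta_exp h1, zeta_exp h2, Complex.norm_exp, Complex.norm_exp, Complex.norm_exp, ← Real.exp_nat_mul,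
    ← Real.exp_nat_mul, ← Real.exp_add, ← Real.exp_add]
  refine Real.one_le_exp ?_
  have s0 := (eK_series (K := K) h0).1.LSeriesHasSum
  have s1 := (eK_series (K := K) h1).1.LSeriesHasSum
  have s2 := (eK_series (K := K) h2).1.LSeriesHasSum
  have hs := Complex.hasSum_re (((s0.mul_left 3).add (s1.mul_left 4)).add s2)
  have hnn := hs.nonneg (fun n => ?_)
  · simp only [Complex.add_re, Complex.mul_re, Complex.re_ofNat, Complex.im_ofNat, zero_mul, sub_zero] at hnn
    push_cast
    exact hnn
  · rcases eq_or_ne n 0 with rfl | hn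
    · simp
    have hn' : (n : ℂ) ≠ 0 := by exact_mod_cast hn
    have hnp : (0:ℝ) < n := by exact_mod_cast Nat.pos_of_ne_zero hn
    rw [LSeries.term_of_ne_zero hn, LSeries.term_of_ne_zero hn, LSeries.term_of_ne_zero hn]
    set u : ℂ := (n : ℂ) ^ (-(t * Complex.I)) with hu
    have hun : ‖u‖ = 1 := by
      rw [hu, Complex.norm_natCast_cpow_of_pos (Nat.pos_of_ne_zero hn)]
      simp
    have e1 : (n : ℂ) ^ ((σ : ℂ) + t * Complex.I) = (n : ℂ) ^ (σ : ℂ) * u⁻¹ := by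
      rw [hu, Complex.cpow_add _ _ hn', Complex.cpow_neg, inv_inv]
    have e2 : (n : ℂ) ^ ((σ : ℂ) + 2 * t * Complex.I) = (n : ℂ) ^ (σ : ℂ) * (u ^ 2)⁻¹ := by
      have : u ^ 2 = (n : ℂ) ^ (-(2 * t * Complex.I)) := by
        rw [hu, ← Complex.cpow_nat_mul]
        congr 1
        push_cast
        ring
      rw [this, Complex.cpow_add _ _ hn', Complex.cpow_neg _ (2 * t * Complex.I), inv_inv]
    have e0 : (n : ℂ) ^ (σ : ℂ) = (((n:ℝ) ^ σ : ℝ) : ℂ) := by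
      rw [Complex.ofReal_cpow hnp.le, Complex.ofReal_natCast]
    rw [e1, e2, e0]
    have hp := Real.rpow_pos_of_pos hnp σ
    have hpc : (((n:ℝ) ^ σ : ℝ) : ℂ) ≠ 0 := by exact_mod_cast hp.ne'
    have hu0 : u ≠ 0 := by rw [← norm_pos_iff, hun]; norm_num
    have key : 3 * ((eK K n : ℂ) / (((n:ℝ) ^ σ : ℝ) : ℂ)) + 4 * ((eK K n : ℂ) / ((((n:ℝ) ^ σ : ℝ) : ℂ) * u⁻¹)) +
        (eK K n : ℂ) / ((((n:ℝ) ^ σ : ℝ) : ℂ) * (u ^ 2)⁻¹) = ((eK K n / (n:ℝ) ^ σ : ℝ) : ℂ) * (3 + 4 * u + u ^ 2) := by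
      push_cast
      field_simp
    rw [key, Complex.re_ofReal_mul]
    refine mul_nonneg (div_nonneg (eK_nonneg n) hp.le) ?_
    have hsq : u.re ^ 2 + u.im ^ 2 = 1 := by
      have := Complex.sq_norm u
      rw [hun, Complex.normSq_apply] at this
      linarith
    have : (3 + 4 * u + u ^ 2).re = 2 * (1 + u.re) ^ 2 := by
      simp [pow_two]
      nlinarith
    rw [this]
    positivity

/-- `ζ_K` does not vanish on `Re s = 1`: a zero at `1 + it` would make the product in `three_four_one` tend to
`0`, four zeros against three poles. -/
lemma F_one_line {F : ℂ → ℂ} (hF : Differentiable ℂ F)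
    (hFL : ∀ s : ℂ, 1 < s.re → F s = (s - 1) * LSeries (zetaCoeff K) s) {t : ℝ} (ht : t ≠ 0) :
    F (1 + t * Complex.I) ≠ 0 := by
  intro h0
  have ht0 : 0 < |t| := abs_pos.mpr ht
  set w : ℂ := 1 + t * Complex.I with hw
  have hdW : Differentiable ℂ (dslope F w) := by
    rw [← differentiableOn_univ]
    exact (Complex.differentiableOn_dslope Filter.univ_mem).mpr hF.differentiableOn
  set Q : ℝ → ℝ := fun σ => ‖F σ‖ ^ 3 * ‖dslope F w (σ + t * Complex.I)‖ ^ 4 * ‖F (σ + 2 * t * Complex.I)‖ with hQ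
  have hc : Continuous Q := by
    have a := hF.continuous
    have b := hdW.continuous
    fun_prop
  have hlim : Tendsto (fun σ : ℝ => (σ - 1) * Q σ) (nhdsWithin 1 (Set.Ioi 1)) (nhds ((1 - 1) * Q 1)) :=
    ((by fun_prop : Continuous fun σ : ℝ => (σ - 1) * Q σ).tendsto 1).mono_left nhdsWithin_le_nhds
  have hge : ∀ᶠ σ in nhdsWithin (1:ℝ) (Set.Ioi 1), |t| ^ 4 * |2 * t| ≤ (σ - 1) * Q σ := by
    filter_upwards [self_mem_nhdsWithin] with σ hσ
    have hσ : 1 < σ := hσ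
    have hσ0 : 0 < σ - 1 := by linarith
    have h3 := three_four_one (K := K) hσ t
    have f0 := hFL (σ : ℂ) (by simpa using hσ)
    have f1 := hFL ((σ : ℂ) + t * Complex.I) (by simpa using hσ)
    have f2 := hFL ((σ : ℂ) + 2 * t * Complex.I) (by simpa using hσ)
    have n0 : ‖(σ : ℂ) - 1‖ = σ - 1 := by
      rw [← Complex.ofReal_one, ← Complex.ofReal_sub, Complex.norm_real, Real.norm_of_nonneg hσ0.le]
    have n1 : |t| ≤ ‖(σ : ℂ) + t * Complex.I - 1‖ := by
      simpa using Complex.abs_im_le_norm ((σ : ℂ) + t * Complex.I - 1)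
    have n2 : |2 * t| ≤ ‖(σ : ℂ) + 2 * t * Complex.I - 1‖ := by
      simpa using Complex.abs_im_le_norm ((σ : ℂ) + 2 * t * Complex.I - 1)
    have hsl : ‖F ((σ : ℂ) + t * Complex.I)‖ = (σ - 1) * ‖dslope F w ((σ : ℂ) + t * Complex.I)‖ := by
      have := sub_smul_dslope F w ((σ : ℂ) + t * Complex.I)
      rw [h0, sub_zero] at this
      rw [← this, norm_smul]
      congr 1
      rw [← n0]
      congr 1
      rw [hw]; ring
    have m0 : (σ - 1) * ‖LSeries (zetaCoeff K) σ‖ = ‖F σ‖ := by rw [f0, norm_mul, n0]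
    have m1 : |t| * ‖LSeries (zetaCoeff K) (σ + t * Complex.I)‖ ≤ ‖F ((σ : ℂ) + t * Complex.I)‖ := by
      rw [f1, norm_mul]; gcongr
    have m2 : |2 * t| * ‖LSeries (zetaCoeff K) (σ + 2 * t * Complex.I)‖ ≤ ‖F ((σ : ℂ) + 2 * t * Complex.I)‖ := by
      rw [f2, norm_mul]; gcongr
    rw [hsl] at m1
    set a := ‖LSeries (zetaCoeff K) σ‖
    set b := ‖LSeries (zetaCoeff K) (σ + t * Complex.I)‖
    set c := ‖LSeries (zetaCoeff K) (σ + 2 * t * Complex.I)‖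
    have h4 : (σ - 1) ^ 3 * (|t| ^ 4 * |2 * t|) ≤ (σ - 1) ^ 3 * ((σ - 1) * Q σ) := by
      calc (σ - 1) ^ 3 * (|t| ^ 4 * |2 * t|) ≤ (σ - 1) ^ 3 * (|t| ^ 4 * |2 * t|) * (a ^ 3 * b ^ 4 * c) :=
            le_mul_of_one_le_right (by positivity) h3
        _ = ((σ - 1) * a) ^ 3 * (|t| * b) ^ 4 * (|2 * t| * c) := by ring
        _ ≤ ‖F σ‖ ^ 3 * ((σ - 1) * ‖dslope F w ((σ : ℂ) + t * Complex.I)‖) ^ 4 * ‖F ((σ : ℂ) + 2 * t * Complex.I)‖ := by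
            rw [m0]; gcongr
        _ = _ := by simp only [hQ]; ring
    exact le_of_mul_le_mul_left h4 (by positivity)
  have := ge_of_tendsto hlim hge
  rw [sub_self, zero_mul] at this
  have h5 : 0 < |t| ^ 4 * |2 * t| := by
    have : 0 < |2 * t| := abs_pos.mpr (by simpa using ht)
    positivity
  linarith

end Growth

end Hooley

/-! ### The logarithmic derivative under RH -/

namespace Hooley

open NumberField NumberField.Units NumberField.Units.dirichletUnitTheorem Module MeasureTheory
open scoped nonZeroDivisors ENNReal

section LogDeriv

open Metric

/-- On a disc without zeros `F` has a holomorphic logarithm whose real part is bounded above by `M`; the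
Borel-Carathéodory inequality bounds the logarithm, and Cauchy's estimate its derivative. -/
lemma log_deriv_bound {F : ℂ → ℂ} (hF : Differentiable ℂ F) {z₀ : ℂ} {R M δ : ℝ} (hM : 0 < M) (hδ : 0 < δ)
    (hR : 0 < R) (hne : ∀ s ∈ ball z₀ R, F s ≠ 0) (hb : ∀ s ∈ ball z₀ R, ‖F s‖ ≤ Real.exp M * ‖F z₀‖)
    {z : ℂ} (hz : ‖z - z₀‖ ≤ R - δ) : ‖deriv F z / F z‖ ≤ 8 * M * R / δ ^ 2 := by
  have hdF : Differentiable ℂ (deriv F) := hF.deriv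
  have hd : DifferentiableOn ℂ (fun s => deriv F s / F s) (ball z₀ R) :=
    hdF.differentiableOn.div hF.differentiableOn hne
  obtain ⟨h, h0, hh⟩ := hd.isExactOn_ball.with_val_at z₀ 0
  have hz0 : z₀ ∈ ball z₀ R := mem_ball_self hR
  have hexp : ∀ s ∈ ball z₀ R, F s = F z₀ * Complex.exp (h s) := by
    intro s hs
    have hG : ∀ w ∈ ball z₀ R, HasDerivAt (fun w => F w * Complex.exp (-h w)) 0 w := by
      intro w hw
      have := (hF w).hasDerivAt.mul ((hh w hw).neg.cexp)
      refine this.congr_deriv ?_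
      have := hne w hw
      field_simp
      ring
    have hc := isOpen_ball.is_const_of_deriv_eq_zero (convex_ball z₀ R).isPreconnected
      (fun w hw => (hG w hw).differentiableAt.differentiableWithinAt) (fun w hw => (hG w hw).deriv) hs hz0
    simp only [h0, neg_zero, Complex.exp_zero, mul_one] at hc
    rw [← hc, mul_assoc, ← Complex.exp_add, neg_add_cancel, Complex.exp_zero, mul_one]
  have hre : ∀ s ∈ ball z₀ R, (h s).re ≤ M := by
    intro s hs
    have h1 := hb s hs
    rw [hexp s hs, norm_mul, Complex.norm_exp, mul_comm] at h1
    exact Real.exp_le_exp.mp (le_of_mul_le_mul_right h1 (norm_pos_iff.mpr (hne z₀ hz0)))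
  have hbc : ∀ s ∈ ball z₀ R, ‖h s‖ ≤ 2 * M * ‖s - z₀‖ / (R - ‖s - z₀‖) := by
    intro s hs
    have key := Complex.borelCaratheodory_zero (f := fun w => h (z₀ + w)) (R := R) (z := s - z₀) hM ?_ ?_ hR ?_ ?_
    · simpa using key
    · intro w hw
      have hw' : z₀ + w ∈ ball z₀ R := by simpa [mem_ball, dist_eq_norm] using hw
      exact ((hh _ hw').differentiableAt.comp w (by fun_prop)).differentiableWithinAt
    · intro w hw
      exact hre _ (by simpa [mem_ball, dist_eq_norm] using hw)
    · simpa [mem_ball, dist_eq_norm] using hs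
    · simpa using h0
  have hsub : closedBall z (δ / 2) ⊆ closedBall z₀ (R - δ / 2) := by
    intro w hw
    rw [mem_closedBall, dist_eq_norm] at hw ⊢
    calc ‖w - z₀‖ = ‖(w - z) + (z - z₀)‖ := by ring_nf
      _ ≤ _ := (norm_add_le _ _).trans (by linarith)
  have hsub2 : closedBall z₀ (R - δ / 2) ⊆ ball z₀ R := closedBall_subset_ball (by linarith)
  have hzb : z ∈ ball z₀ R := hsub2 (hsub (mem_closedBall_self (by linarith)))
  have := Complex.norm_deriv_le_of_forall_mem_sphere_norm_le (c := z) (R := δ / 2) (C := 4 * M * R / δ) (f := h)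
    (by linarith) ?_ ?_
  · rw [(hh z hzb).deriv] at this
    refine this.trans (le_of_eq ?_)
    field_simp
    ring
  · refine DifferentiableOn.diffContOnCl fun w hw => ?_
    rw [closure_ball _ (by linarith : δ / 2 ≠ 0)] at hw
    exact (hh w (hsub2 (hsub hw))).differentiableAt.differentiableWithinAt
  · intro w hw
    have hw1 := hsub (sphere_subset_closedBall hw)
    refine (hbc w (hsub2 hw1)).trans ?_
    rw [mem_closedBall, dist_eq_norm] at hw1
    rw [div_le_div_iff₀ (by linarith) hδ]
    have a1 : 2 * M * ‖w - z₀‖ * δ ≤ 2 * M * R * δ := by gcongr; linarith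
    have a2 : 4 * M * R * (δ / 2) ≤ 4 * M * R * (R - ‖w - z₀‖) := by gcongr; linarith
    nlinarith

variable {K : Type*} [Field K] [NumberField K]

lemma one_le_nn : 1 ≤ nn K := by
  have : 0 < finrank ℚ K := finrank_pos
  exact_mod_cast this

lemma one_le_discr : 1 ≤ |(discr K : ℝ)| := by
  have := Int.one_le_abs (discr_ne_zero K)
  exact_mod_cast this

variable (K) in
/-- The quantity `[K : ℚ] + log |d_K|` governing the error terms. -/
noncomputable def sz : ℝ := nn K + Real.log |(discr K : ℝ)|

lemma log_discr_nonneg : 0 ≤ Real.log |(discr K : ℝ)| := Real.log_nonneg one_le_discr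

lemma nn_le_sz : nn K ≤ sz K := le_add_of_nonneg_right log_discr_nonneg

lemma one_le_sz : 1 ≤ sz K := one_le_nn.trans nn_le_sz

/-- Under RH, `-ζ_K'/ζ_K` up to its polar part is `O(sz(K) (1 + |t|) / (σ - 1/2)²)` to the right of the critical
line. The disc of radius `5/8` about `9/8 + it` touches the line `Re s = 1/2` and contains no zero of `F`. -/
theorem zeta_log_deriv : ∃ C : ℝ, 0 < C ∧ ∀ (K : Type) [Field K] [NumberField K], DedekindRH K →
    ∃ F : ℂ → ℂ, Differentiable ℂ F ∧
      (∀ s : ℂ, 1 / 2 < s.re → F s ≠ 0) ∧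
      (∀ s : ℂ, 1 < s.re → deriv F s / F s = 1 / (s - 1) - LSeries (fun n => (cK K n : ℂ)) s) ∧
      ∀ s : ℂ, 1 / 2 < s.re → s.re ≤ 9 / 8 →
        ‖deriv F s / F s‖ ≤ C * sz K * (1 + |s.im|) / (s.re - 1 / 2) ^ 2 := by
  obtain ⟨A, hA, hZ⟩ := zeta_F
  have b2 := B0_nonneg 2
  have b9 := B0_nonneg (9 / 8)
  refine ⟨5 * (B0 2 + 2 * A + B0 (9 / 8) + 9), by linarith, fun K _ _ hRH => ?_⟩
  obtain ⟨F, hF, hF1, hFL, hFne, hFb⟩ := hZ K hRH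
  have hne : ∀ s : ℂ, 1 / 2 < s.re → F s ≠ 0 := by
    intro s hs
    rcases lt_trichotomy s.re 1 with h | h | h
    · exact hFne s hs h
    · rcases eq_or_ne s.im 0 with h0 | h0
      · have : s = 1 := Complex.ext (by simpa using h) (by simpa using h0)
        rwa [this]
      · have : s = 1 + s.im * Complex.I := Complex.ext (by simp [h]) (by simp)
        rw [this]
        exact F_one_line hF hFL h0
    · rw [hFL s h, zeta_exp h]
      refine mul_ne_zero (sub_ne_zero.mpr fun h1 => ?_) (Complex.exp_ne_zero _)
      rw [h1] at h
      simp at h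
  refine ⟨F, hF, hne, fun s hs => ?_, fun s hs hs' => ?_⟩
  · have hd : HasDerivAt F (1 * LSeries (zetaCoeff K) s + (s - 1) *
        (-(LSeries (fun n => (cK K n : ℂ)) s * LSeries (zetaCoeff K) s))) s := by
      refine (((hasDerivAt_id s).sub_const 1).mul (zeta_hasDeriv hs)).congr_of_eventuallyEq ?_
      filter_upwards [(isOpen_lt continuous_const Complex.continuous_re).mem_nhds hs] with w hw
      exact hFL w hw
    have h1 := hne s (by linarith)
    rw [hd.deriv]
    rw [hFL s hs] at h1 ⊢
    have h2 := left_ne_zero_of_mul h1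
    have h3 := right_ne_zero_of_mul h1
    field_simp
    ring
  · set z₀ : ℂ := ⟨9 / 8, s.im⟩ with hz₀
    have hz0r : z₀.re = 9 / 8 := rfl
    have hn := one_le_nn (K := K)
    have hl := log_discr_nonneg (K := K)
    set M : ℝ := (B0 2 + 2 * A + B0 (9 / 8) + 9) * sz K * (1 + |s.im|) with hM
    have hsz := one_le_sz (K := K)
    have hMpos : 0 < M := by positivity
    have hlow : Real.exp (-(nn K * B0 (9 / 8)) - 8) ≤ ‖F z₀‖ := by
      have hr : 1 < z₀.re := by rw [hz0r]; norm_num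
      rw [hFL z₀ hr, zeta_exp hr, norm_mul, Complex.norm_exp, sub_eq_add_neg, Real.exp_add, mul_comm]
      have e1 := (eK_series (K := K) hr).2
      have e2 := (abs_le.mp ((Complex.abs_re_le_norm _).trans e1)).1
      rw [hz0r] at e2
      have e3 : 1 / 8 ≤ ‖z₀ - 1‖ := by
        have := Complex.abs_re_le_norm (z₀ - 1)
        rw [Complex.sub_re, hz0r, Complex.one_re] at this
        norm_num at this ⊢
        linarith
      have e4 : Real.exp (-8) ≤ 1 / 8 := by
        rw [Real.exp_neg, one_div]
        have := Real.add_one_le_exp (8:ℝ)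
        gcongr
        linarith
      exact mul_le_mul (e4.trans e3) (Real.exp_le_exp.mpr e2) (Real.exp_pos _).le (norm_nonneg _)
    have hup : ∀ w ∈ ball z₀ (5 / 8), 1 / 2 < w.re ∧ ‖F w‖ ≤ Real.exp M * ‖F z₀‖ := by
      intro w hw
      rw [mem_ball, dist_eq_norm] at hw
      have r1 := (Complex.abs_re_le_norm (w - z₀)).trans_lt hw
      have r2 := (Complex.abs_im_le_norm (w - z₀)).trans_lt hw
      rw [Complex.sub_re, hz0r, abs_lt] at r1
      have r3 : |w.im| ≤ |s.im| + 1 := by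
        have : w.im = (w - z₀).im + s.im := by simp [hz₀]
        rw [this]
        refine (abs_add_le _ _).trans (by linarith)
      refine ⟨by linarith, ?_⟩
      have r4 := hFb w (by linarith) (by linarith)
      have r5 : ‖LSeries (zetaCoeff K) 2‖ ≤ Real.exp (nn K * B0 2) := by
        have hr : 1 < (2:ℂ).re := by norm_num
        rw [zeta_exp hr, Complex.norm_exp]
        refine Real.exp_le_exp.mpr (((Complex.re_le_norm _).trans (eK_series (K := K) hr).2).trans (le_of_eq ?_))
        norm_num
      have r6 : |(discr K : ℝ)| = Real.exp (Real.log |(discr K : ℝ)|) :=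
        (Real.exp_log (discr_abs_pos K)).symm
      calc ‖F w‖ ≤ Real.exp (nn K * B0 2) * Real.exp (Real.log |(discr K : ℝ)|) *
            Real.exp (A * nn K * (1 + |w.im|)) := by
            rw [← r6]
            refine r4.trans ?_
            gcongr
        _ = Real.exp (nn K * B0 2 + Real.log |(discr K : ℝ)| + A * nn K * (1 + |w.im|)) := by
            rw [Real.exp_add, Real.exp_add]
        _ ≤ Real.exp (M + (-(nn K * B0 (9 / 8)) - 8)) := by
            refine Real.exp_le_exp.mpr ?_
            have q0 : 0 ≤ |s.im| := abs_nonneg _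
            have q1 : A * nn K * (1 + |w.im|) ≤ 2 * A * nn K * (1 + |s.im|) := by
              have : 0 < A * nn K := by positivity
              nlinarith
            have q2 : nn K * (B0 2 + 2 * A + B0 (9 / 8) + 9) * (1 + |s.im|) + Real.log |(discr K : ℝ)| ≤ M := by
              rw [hM, sz]
              have : Real.log |(discr K : ℝ)| * 1 ≤
                  Real.log |(discr K : ℝ)| * ((B0 2 + 2 * A + B0 (9 / 8) + 9) * (1 + |s.im|)) := by
                gcongr
                nlinarith
              nlinarith
            have q3 : nn K * (B0 2 + B0 (9 / 8) + 9) * 1 ≤ nn K * (B0 2 + B0 (9 / 8) + 9) * (1 + |s.im|) := by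
              gcongr
              linarith
            nlinarith
        _ = Real.exp M * Real.exp (-(nn K * B0 (9 / 8)) - 8) := Real.exp_add _ _
        _ ≤ _ := by gcongr
    have := log_deriv_bound hF (z₀ := z₀) (R := 5 / 8) (M := M) (δ := s.re - 1 / 2) (z := s) hMpos (by linarith)
      (by norm_num) (fun w hw => hne w (hup w hw).1) (fun w hw => (hup w hw).2) ?_
    · refine this.trans (le_of_eq ?_)
      rw [hM]
      ring
    · have : s - z₀ = ((s.re - 9 / 8 : ℝ) : ℂ) := by
        apply Complex.ext <;> simp [hz₀]
      rw [this, Complex.norm_real, Real.norm_of_nonpos (by linarith)]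
      linarith

end LogDeriv

end Hooley

/-! ### Mellin inversion and shifting the contour -/

namespace Hooley

open NumberField NumberField.Units NumberField.Units.dirichletUnitTheorem Module MeasureTheory
open scoped nonZeroDivisors ENNReal

section Perron

/-- The truncated power `(1 - x)_+ ^ m`, a smoothed cut-off at `x = 1`. -/
noncomputable def cut (m : ℕ) (x : ℝ) : ℂ := ((max (1 - x) 0 ^ m : ℝ) : ℂ)

/-- The Mellin transform `m! / (s (s + 1) ⋯ (s + m))` of the truncated power. -/
noncomputable def ker (m : ℕ) (s : ℂ) : ℂ := (m.factorial : ℂ) / ∏ j ∈ Finset.range (m + 1), (s + j)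

lemma cut_continuous (m : ℕ) : Continuous (cut m) := by
  unfold cut
  fun_prop

lemma cut_eq {m : ℕ} {x : ℝ} (hx : x ≤ 1) : cut m x = (1 - (x : ℂ)) ^ m := by
  rw [cut, max_eq_left (by linarith)]
  push_cast
  rfl

lemma cut_zero {m : ℕ} (hm : m ≠ 0) {x : ℝ} (hx : 1 ≤ x) : cut m x = 0 := by
  rw [cut, max_eq_right (by linarith), zero_pow hm, Complex.ofReal_zero]

lemma cut_mellin {m : ℕ} (hm : m ≠ 0) {s : ℂ} (hs : 0 < s.re) :
    MellinConvergent (cut m) s ∧ mellin (cut m) s = ker m s := by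
  have hb := Complex.betaIntegral_convergent (u := s) (v := m + 1) hs (by simp; positivity)
  have he := Complex.betaIntegral_eval_nat_add_one_right hs m
  rw [Complex.betaIntegral] at he
  rw [intervalIntegrable_iff_integrableOn_Ioc_of_le zero_le_one] at hb
  rw [intervalIntegral.integral_of_le zero_le_one] at he
  have hcong : ∀ x ∈ Set.Ioc (0:ℝ) 1, (x : ℂ) ^ (s - 1) * (1 - (x : ℂ)) ^ ((m : ℂ) + 1 - 1) =
      (x : ℂ) ^ (s - 1) • cut m x := by
    intro x hx
    rw [cut_eq hx.2, add_sub_cancel_right, Complex.cpow_natCast, smul_eq_mul]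
  have hz : ∀ x ∈ Set.Ioi (0:ℝ) \ Set.Ioc 0 1, (x : ℂ) ^ (s - 1) • cut m x = 0 := by
    intro x hx
    rw [cut_zero hm, smul_zero]
    by_contra h
    exact hx.2 ⟨hx.1, by linarith⟩
  constructor
  · rw [MellinConvergent]
    have h1 : IntegrableOn (fun x : ℝ => (x : ℂ) ^ (s - 1) • cut m x) (Set.Ioc 0 1) :=
      hb.congr_fun hcong measurableSet_Ioc
    exact h1.of_forall_diff_eq_zero measurableSet_Ioi hz
  · rw [mellin, ker, ← he, setIntegral_congr_fun measurableSet_Ioc hcong]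
    exact (setIntegral_eq_of_subset_of_forall_diff_eq_zero measurableSet_Ioi (fun x hx => hx.1) hz).symm ▸ rfl

lemma ker_succ (m : ℕ) (s : ℂ) : ker (m + 1) s = ker m s * ((m + 1) / (s + (m + 1))) := by
  rw [ker, ker, Finset.prod_range_succ, Nat.factorial_succ]
  push_cast
  rw [div_mul_div_comm, mul_comm ((m:ℂ) + 1)]

lemma norm_add_nat_ge {s : ℂ} (hs : 0 ≤ s.re) {j : ℝ} (hj : 0 ≤ j) : j ^ 2 + s.im ^ 2 ≤ ‖s + j‖ ^ 2 := by
  rw [Complex.sq_norm, Complex.normSq_apply]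
  simp
  nlinarith

lemma ker_two (s : ℂ) : ker 2 s = 2 / (s * (s + 1) * (s + 2)) := by
  rw [ker]
  simp [Finset.prod_range_succ]

lemma norm_ker_two {s : ℂ} (hs : 0 < s.re) : ‖ker 2 s‖ ≤ 2 / (‖s‖ * (1 + s.im ^ 2)) := by
  have h1 := norm_add_nat_ge hs.le (zero_le_one)
  have h2 := norm_add_nat_ge hs.le (zero_le_two)
  have h0 : 0 < ‖s‖ := norm_pos_iff.mpr fun h => by simp [h] at hs
  simp only [Complex.ofReal_one, Complex.ofReal_ofNat] at h1 h2
  rw [ker_two, norm_div, norm_mul, norm_mul, mul_assoc, Complex.norm_ofNat]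
  gcongr
  refine le_of_sq_le_sq ?_ (by positivity)
  rw [mul_pow, sq (1 + _)]
  gcongr
  · linarith
  · linarith

lemma norm_ker {m : ℕ} (hm : 2 ≤ m) {s : ℂ} (hs : 0 < s.re) : ‖ker m s‖ ≤ 2 / (‖s‖ * (1 + s.im ^ 2)) := by
  induction m, hm using Nat.le_induction with
  | base => exact norm_ker_two hs
  | succ m hm ih =>
    rw [ker_succ, norm_mul]
    refine (mul_le_of_le_one_right (norm_nonneg _) ?_).trans ih
    rw [norm_div]
    refine div_le_one_of_le₀ ?_ (norm_nonneg _)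
    have h2 := norm_add_nat_ge hs.le (by positivity : (0:ℝ) ≤ (m + 1 : ℝ))
    push_cast at h2
    refine le_of_sq_le_sq ?_ (norm_nonneg _)
    have : ‖((m : ℂ) + 1)‖ = m + 1 := by
      have := Complex.norm_natCast (m + 1)
      push_cast at this
      exact this
    rw [this]
    nlinarith [sq_nonneg s.im]

lemma ker_ne (m : ℕ) {s : ℂ} (hs : 0 < s.re) : ∏ j ∈ Finset.range (m + 1), (s + j) ≠ 0 := by
  refine Finset.prod_ne_zero_iff.mpr fun j _ h => ?_
  have := congrArg Complex.re h
  simp at this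
  have h2 : (0:ℝ) ≤ j := j.cast_nonneg
  linarith

lemma ker_continuous (m : ℕ) {σ : ℝ} (hσ : 0 < σ) : Continuous fun y : ℝ => ker m (σ + y * Complex.I) := by
  unfold ker
  refine continuous_const.div (by fun_prop) fun y => ?_
  exact ker_ne m (by simpa using hσ)

lemma ker_integrable {m : ℕ} (hm : 2 ≤ m) {σ : ℝ} (hσ : 0 < σ) :
    Integrable fun y : ℝ => ker m (σ + y * Complex.I) := by
  refine (integrable_inv_one_add_sq.const_mul (2 / σ)).mono' (ker_continuous m hσ).aestronglyMeasurable ?_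
  refine Filter.Eventually.of_forall fun y => ?_
  have h1 : (0:ℝ) < ((σ : ℂ) + y * Complex.I).re := by simpa using hσ
  refine (norm_ker hm h1).trans ?_
  have h2 : σ ≤ ‖(σ : ℂ) + y * Complex.I‖ := by
    have := Complex.re_le_norm ((σ : ℂ) + y * Complex.I)
    simpa using this
  have h3 : ((σ : ℂ) + y * Complex.I).im = y := by simp
  rw [h3, ← div_eq_mul_inv, div_div]
  gcongr

/-- Mellin inversion for the truncated power; the kernel `ker m` is absolutely integrable on vertical lines. -/
lemma perron {m : ℕ} (hm : 2 ≤ m) {σ : ℝ} (hσ : 0 < σ) {x : ℝ} (hx : 0 < x) :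
    ∫ y : ℝ, (x : ℂ) ^ (-(σ + y * Complex.I)) * ker m (σ + y * Complex.I) = 2 * Real.pi * cut m x := by
  have hre : ∀ y : ℝ, (0:ℝ) < ((σ : ℂ) + y * Complex.I).re := fun y => by simpa using hσ
  have hmell : ∀ y : ℝ, mellin (cut m) (σ + y * Complex.I) = ker m (σ + y * Complex.I) :=
    fun y => (cut_mellin (by omega) (hre y)).2
  have := mellinInv_mellin_eq σ (cut m) hx (cut_mellin (by omega) (by simpa using hσ)).1 ?_
    (cut_continuous m).continuousAt
  · rw [mellinInv] at this
    simp only [hmell, smul_eq_mul] at this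
    rw [← this]
    rw [Complex.real_smul]
    push_cast
    have : (2 * Real.pi : ℂ) ≠ 0 := by exact_mod_cast Real.two_pi_pos.ne'
    rw [← mul_assoc, mul_one_div_cancel this, one_mul]
  · rw [Complex.VerticalIntegrable]
    simp only [hmell]
    exact ker_integrable hm hσ

/-- Moving a line of integration inside a vertical strip, for a function that decays quadratically. -/
lemma shift_line {G : ℂ → ℂ} {a b B : ℝ} (hab : a ≤ b)
    (hG : ∀ s : ℂ, a ≤ s.re → s.re ≤ b → DifferentiableAt ℂ G s)
    (hB : ∀ s : ℂ, a ≤ s.re → s.re ≤ b → ‖G s‖ ≤ B * (1 + s.im ^ 2)⁻¹) :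
    (∀ σ ∈ Set.Icc a b, Integrable fun y : ℝ => G (σ + y * Complex.I)) ∧
    ∫ y : ℝ, G (a + y * Complex.I) = ∫ y : ℝ, G (b + y * Complex.I) := by
  have hinteg : ∀ σ ∈ Set.Icc a b, Integrable fun y : ℝ => G (σ + y * Complex.I) := by
    intro σ hσ
    refine (integrable_inv_one_add_sq.const_mul B).mono' ?_ (Filter.Eventually.of_forall fun y => ?_)
    · refine Continuous.aestronglyMeasurable (continuous_iff_continuousAt.mpr fun y => ?_)
      refine ContinuousAt.comp (f := fun y : ℝ => (σ : ℂ) + y * Complex.I) (g := G)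
        (hG _ (by simpa using hσ.1) (by simpa using hσ.2)).continuousAt (by fun_prop)
    · have := hB (σ + y * Complex.I) (by simpa using hσ.1) (by simpa using hσ.2)
      simpa using this
  refine ⟨hinteg, ?_⟩
  have hBa : ∀ x ∈ Set.Icc a b, ∀ y : ℝ, ‖G (x + y * Complex.I)‖ ≤ B * (1 + y ^ 2)⁻¹ := by
    intro x hx y
    have := hB (x + y * Complex.I) (by simpa using hx.1) (by simpa using hx.2)
    simpa using this
  have hrect : ∀ T : ℝ, (∫ x : ℝ in a..b, G (x + ((-T : ℝ) : ℂ) * Complex.I)) - (∫ x : ℝ in a..b, G (x + (T : ℂ) * Complex.I)) +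
      Complex.I • (∫ y : ℝ in (-T)..T, G (b + y * Complex.I)) -
      Complex.I • (∫ y : ℝ in (-T)..T, G (a + y * Complex.I)) = 0 := by
    intro T
    have := Complex.integral_boundary_rect_eq_zero_of_differentiableOn G (⟨a, -T⟩) (⟨b, T⟩) ?_
    · simpa using this
    · intro s hs
      have h1 : s.re ∈ Set.uIcc a b := hs.1
      rw [Set.uIcc_of_le hab] at h1
      exact (hG s h1.1 h1.2).differentiableWithinAt
  have hT : Tendsto (fun T : ℝ => B * (1 + T ^ 2)⁻¹ * |b - a|) atTop (nhds 0) := by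
    have h1 : Tendsto (fun T : ℝ => 1 + T ^ 2) atTop atTop :=
      tendsto_atTop_add_const_left _ _ (tendsto_pow_atTop (by norm_num))
    have := (h1.inv_tendsto_atTop.const_mul B).mul_const |b - a|
    simpa using this
  have hbnd : ∀ T S : ℝ, S ^ 2 = T ^ 2 → ‖∫ x : ℝ in a..b, G (x + (S : ℂ) * Complex.I)‖ ≤ B * (1 + T ^ 2)⁻¹ * |b - a| := by
    intro T S hS
    refine intervalIntegral.norm_integral_le_of_norm_le_const fun x hx => ?_
    rw [Set.uIoc_of_le hab] at hx
    rw [← hS]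
    exact hBa x ⟨hx.1.le, hx.2⟩ S
  have t1 : Tendsto (fun T : ℝ => ∫ x : ℝ in a..b, G (x + ((-T : ℝ) : ℂ) * Complex.I)) atTop (nhds 0) :=
    squeeze_zero_norm (fun T => hbnd T (-T) (by ring)) hT
  have t2 : Tendsto (fun T : ℝ => ∫ x : ℝ in a..b, G (x + (T : ℂ) * Complex.I)) atTop (nhds 0) :=
    squeeze_zero_norm (fun T => hbnd T T (by ring)) hT
  have t3 := intervalIntegral_tendsto_integral (hinteg b ⟨hab, le_rfl⟩) tendsto_neg_atTop_atBot tendsto_id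
  have t4 := intervalIntegral_tendsto_integral (hinteg a ⟨le_rfl, hab⟩) tendsto_neg_atTop_atBot tendsto_id
  have t5 := ((t1.sub t2).add (t3.const_smul Complex.I)).sub (t4.const_smul Complex.I)
  have t6 := tendsto_nhds_unique t5 (tendsto_const_nhds.congr fun T => (hrect T).symm)
  have t7 : Complex.I * ((∫ y : ℝ, G (b + y * Complex.I)) - ∫ y : ℝ, G (a + y * Complex.I)) = 0 := by
    rw [← t6]; simp only [smul_eq_mul]; ring
  rcases mul_eq_zero.mp t7 with h | h
  · exact absurd h Complex.I_ne_zero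
  · exact (sub_eq_zero.mp h).symm

end Perron

end Hooley

/-! ### The smoothed prime ideal theorem under RH -/

namespace Hooley

open NumberField NumberField.Units NumberField.Units.dirichletUnitTheorem Module MeasureTheory
open scoped nonZeroDivisors ENNReal

section PsiBound

variable {K : Type*} [Field K] [NumberField K]

/-- The smoothed sum of the coefficients as an integral of the Dirichlet series over the line `Re s = 9/8` in
the domain of absolute convergence. -/
lemma cK_sum_eq {x : ℝ} (hx : 0 < x) :
    2 * Real.pi * ∑' n : ℕ, (cK K n : ℂ) * cut 2 (n / x) =
      ∫ y : ℝ, (x : ℂ) ^ (((9 / 8 : ℝ) : ℂ) + y * Complex.I) * ker 2 (((9 / 8 : ℝ) : ℂ) + y * Complex.I) *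
        LSeries (fun n => (cK K n : ℂ)) (((9 / 8 : ℝ) : ℂ) + y * Complex.I) := by
  set σ : ℝ := 9 / 8 with hσ
  have hσ0 : 0 < σ := by rw [hσ]; norm_num
  set J : ℝ := ∫ y : ℝ, ‖ker 2 (σ + y * Complex.I)‖ with hJ
  have hx0 : (x : ℂ) ≠ 0 := by exact_mod_cast hx.ne'
  have hnx : ∀ y : ℝ, ‖(x : ℂ) ^ ((σ : ℂ) + y * Complex.I)‖ = x ^ σ := fun y => by
    rw [Complex.norm_cpow_eq_rpow_re_of_pos hx]; simp
  have hcx : Continuous fun y : ℝ => (x : ℂ) ^ ((σ : ℂ) + y * Complex.I) := by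
    simp only [Complex.cpow_def_of_ne_zero hx0]
    fun_prop
  set F : ℕ → ℝ → ℂ := fun n y => (x : ℂ) ^ ((σ : ℂ) + y * Complex.I) * ker 2 (σ + y * Complex.I) *
    LSeries.term (fun n => (cK K n : ℂ)) (σ + y * Complex.I) n with hF
  have hterm : ∀ n : ℕ, ∀ y : ℝ, ‖LSeries.term (fun n => (cK K n : ℂ)) (σ + y * Complex.I) n‖ =
      ‖LSeries.term (fun n => (cK K n : ℂ)) σ n‖ := by
    intro n y
    rw [LSeries.norm_term_eq, LSeries.norm_term_eq]
    simp
  have hFnorm : ∀ n y, ‖F n y‖ = x ^ σ * ‖LSeries.term (fun n => (cK K n : ℂ)) σ n‖ * ‖ker 2 (σ + y * Complex.I)‖ := by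
    intro n y
    rw [hF]
    simp only [norm_mul]
    rw [hnx, hterm]
    ring
  have hcn : ∀ n : ℕ, Continuous fun y : ℝ => LSeries.term (fun n => (cK K n : ℂ)) (σ + y * Complex.I) n := by
    intro n
    rcases eq_or_ne n 0 with rfl | hn
    · simp only [LSeries.term_zero]
      exact continuous_const
    have hn' : (n : ℂ) ≠ 0 := by exact_mod_cast hn
    simp only [LSeries.term_of_ne_zero hn, Complex.cpow_def_of_ne_zero hn']
    exact continuous_const.div (by fun_prop) fun _ => Complex.exp_ne_zero _
  have hkint := ker_integrable (m := 2) le_rfl hσ0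
  have hFint : ∀ n, Integrable (F n) := by
    intro n
    refine (hkint.norm.const_mul (x ^ σ * ‖LSeries.term (fun n => (cK K n : ℂ)) σ n‖)).mono'
      (((hcx.mul (ker_continuous 2 hσ0)).mul (hcn n)).aestronglyMeasurable) (Filter.Eventually.of_forall fun y => ?_)
    exact (hFnorm n y).le
  have hsum1 : LSeriesSummable (fun n => (cK K n : ℂ)) (σ : ℂ) := (cK_series (by simp [hσ]; norm_num)).1
  have hFsum : Summable fun n => ∫ y, ‖F n y‖ := by
    simp only [hFnorm, integral_const_mul]
    exact (hsum1.norm.mul_left _).mul_right _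
  have h1 := (hasSum_integral_of_summable_integral_norm hFint hFsum).tsum_eq
  have h2 : ∀ y, ∑' n, F n y = (x : ℂ) ^ ((σ : ℂ) + y * Complex.I) * ker 2 (σ + y * Complex.I) *
      LSeries (fun n => (cK K n : ℂ)) (σ + y * Complex.I) := fun y => by
    rw [hF]
    exact tsum_mul_left
  simp only [h2] at h1
  rw [← h1, ← tsum_mul_left]
  refine tsum_congr fun n => ?_
  rcases eq_or_ne n 0 with rfl | hn
  · simp [hF, cK_zero]
  have hn' : (n : ℂ) ≠ 0 := by exact_mod_cast hn
  have hnp : (0:ℝ) < n := by exact_mod_cast Nat.pos_of_ne_zero hn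
  have hp := perron (m := 2) le_rfl hσ0 (x := n / x) (by positivity)
  calc 2 * Real.pi * ((cK K n : ℂ) * cut 2 (n / x)) = (cK K n : ℂ) * (2 * Real.pi * cut 2 (n / x)) := by ring
    _ = ∫ y, F n y := by
        rw [← hp, ← integral_const_mul]
        refine integral_congr_ae (Filter.Eventually.of_forall fun y => ?_)
        simp only [hF]
        rw [LSeries.term_of_ne_zero hn]
        have : ((n / x : ℝ) : ℂ) ^ (-((σ : ℂ) + y * Complex.I)) =
            (x : ℂ) ^ ((σ : ℂ) + y * Complex.I) / (n : ℂ) ^ ((σ : ℂ) + y * Complex.I) := by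
          rw [div_eq_mul_inv, Complex.ofReal_mul, Complex.mul_cpow_ofReal_nonneg hnp.le (by positivity), Complex.cpow_neg,
            Complex.cpow_neg, Complex.ofReal_inv, Complex.inv_cpow _ _ (by rw [Complex.arg_ofReal_of_nonneg hx.le]; exact Real.pi_pos.ne), inv_inv]
          rw [Complex.ofReal_natCast]
          field_simp
        rw [this]
        ring

variable (K) in
/-- The quadratically smoothed counting function `∑_{n ≤ x} c_n (x - n)²`. -/
noncomputable def TK (x : ℝ) : ℝ := ∑ n ∈ Finset.range (⌊x⌋₊ + 1), cK K n * (x - n) ^ 2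

lemma TK_eq {x : ℝ} (hx : 0 < x) : (TK K x : ℂ) = x ^ 2 * ∑' n : ℕ, (cK K n : ℂ) * cut 2 (n / x) := by
  have hx0 : (x : ℂ) ≠ 0 := by exact_mod_cast hx.ne'
  rw [tsum_eq_sum (s := Finset.range (⌊x⌋₊ + 1)), TK, Finset.mul_sum]
  · push_cast
    refine Finset.sum_congr rfl fun n hn => ?_
    have h1 : (n : ℝ) ≤ x := by
      rw [Finset.mem_range] at hn
      exact (Nat.le_floor_iff hx.le).mp (by omega)
    rw [cut_eq (div_le_one_of_le₀ h1 hx.le)]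
    push_cast
    field_simp
  · intro n hn
    rw [Finset.mem_range, not_lt] at hn
    have h1 : x < n := (Nat.floor_lt hx.le).mp (by omega)
    rw [cut_zero two_ne_zero, mul_zero]
    rw [one_le_div hx]
    exact h1.le

/-- The line of integration is moved to `Re s = 1/2 + 1/log x`, where `x^s` has size `√x` and the bound for the
logarithmic derivative costs `log² x`. The pole at `s = 1` contributes `x³/3`. -/
theorem TK_bound : ∃ C : ℝ, 0 < C ∧ ∀ (K : Type) [Field K] [NumberField K], DedekindRH K →
    ∀ x : ℝ, 8 ≤ x → |TK K x - x ^ 3 / 3| ≤ C * sz K * x ^ 2 * √x * Real.log x ^ 2 := by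
  obtain ⟨C, hC, hZ⟩ := zeta_log_deriv
  refine ⟨8 * C * Real.exp 1 + 1, by positivity, fun K _ _ hRH x hx => ?_⟩
  obtain ⟨F, hF, hne, hL, hb⟩ := hZ K hRH
  have hxp : 0 < x := by linarith
  have hx0 : (x : ℂ) ≠ 0 := by exact_mod_cast hxp.ne'
  have hlog2 : 2 ≤ Real.log x := by
    have h8 : Real.log 8 = 3 * Real.log 2 := by
      rw [show (8:ℝ) = 2 ^ 3 by norm_num, Real.log_pow]; norm_num
    have := Real.log_two_gt_d9
    have := Real.log_le_log (by norm_num) hx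
    linarith
  set l := Real.log x with hl
  have hsz := one_le_sz (K := K)
  set a : ℝ := 1 / 2 + 1 / l with ha
  have hl1 : 0 < 1 / l := by positivity
  have hl2 : 1 / l ≤ 1 / 2 := by gcongr
  have hab : a ≤ 9 / 8 := by linarith
  set G : ℂ → ℂ := fun s => (x : ℂ) ^ s * ker 2 s * (deriv F s / F s) with hGdef
  have hGd : ∀ s : ℂ, a ≤ s.re → s.re ≤ 9 / 8 → DifferentiableAt ℂ G s := by
    intro s h1 h2
    have e1 : DifferentiableAt ℂ (fun s : ℂ => (x : ℂ) ^ s) s := by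
      simp only [Complex.cpow_def_of_ne_zero hx0]
      fun_prop
    have e2 : DifferentiableAt ℂ (ker 2) s := by
      unfold ker
      exact (differentiableAt_const _).div (by fun_prop) (ker_ne 2 (by linarith))
    exact (e1.mul e2).mul ((hF.deriv s).div (hF s) (hne s (by linarith)))
  have hGb : ∀ s : ℂ, a ≤ s.re → s.re ≤ 9 / 8 → ‖G s‖ ≤ x ^ s.re * (8 * C * sz K * l ^ 2) * (1 + s.im ^ 2)⁻¹ := by
    intro s h1 h2
    have h3 := hb s (by linarith) h2
    have h4 := norm_ker_two (s := s) (by linarith)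
    have h5 : ‖(x : ℂ) ^ s‖ = x ^ s.re := Complex.norm_cpow_eq_rpow_re_of_pos hxp s
    have h6 : 1 + |s.im| ≤ 4 * ‖s‖ := by
      have q1 := Complex.abs_im_le_norm s
      have q2 := Complex.re_le_norm s
      linarith [norm_nonneg s]
    have hspos : 0 < ‖s‖ := by linarith [abs_nonneg s.im]
    have h7 : 1 / (s.re - 1 / 2) ^ 2 ≤ l ^ 2 := by
      have : 1 / l ≤ s.re - 1 / 2 := by linarith
      calc 1 / (s.re - 1 / 2) ^ 2 ≤ 1 / (1 / l) ^ 2 := by gcongr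
        _ = l ^ 2 := by field_simp
    simp only [hGdef, norm_mul, h5]
    rw [mul_assoc, mul_assoc]
    refine mul_le_mul_of_nonneg_left ?_ (by positivity)
    calc ‖ker 2 s‖ * ‖deriv F s / F s‖ ≤ 2 / (‖s‖ * (1 + s.im ^ 2)) * (C * sz K * (1 + |s.im|) / (s.re - 1 / 2) ^ 2) := by
          gcongr
      _ = 2 / (‖s‖ * (1 + s.im ^ 2)) * (C * sz K * (1 + |s.im|)) * (1 / (s.re - 1 / 2) ^ 2) := by ring
      _ ≤ 2 / (‖s‖ * (1 + s.im ^ 2)) * (C * sz K * (4 * ‖s‖)) * l ^ 2 := by gcongr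
      _ = 8 * C * sz K * l ^ 2 * (1 + s.im ^ 2)⁻¹ := by
          field_simp
          ring
  have hsh := shift_line hab hGd (B := x ^ (9 / 8 : ℝ) * (8 * C * sz K * l ^ 2)) (fun s h1 h2 => by
    refine (hGb s h1 h2).trans ?_
    gcongr
    linarith)
  have hI9 := hsh.1 (9 / 8) ⟨hab, le_rfl⟩
  have hIa : ‖∫ y : ℝ, G (a + y * Complex.I)‖ ≤ Real.exp 1 * √x * (8 * C * sz K * l ^ 2) * Real.pi := by
    have e1 : x ^ a = Real.exp 1 * √x := by
      rw [ha, Real.rpow_add hxp, ← Real.sqrt_eq_rpow, mul_comm]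
      congr 1
      rw [Real.rpow_def_of_pos hxp, ← hl]
      congr 1
      field_simp
    rw [← e1, ← integral_univ_inv_one_add_sq, ← integral_const_mul]
    refine norm_integral_le_of_norm_le (integrable_inv_one_add_sq.const_mul _) (Filter.Eventually.of_forall fun y => ?_)
    have := hGb (a + y * Complex.I) (by simp) (by simpa using hab)
    simpa using this
  -- the polar term
  have hpole : ∫ y : ℝ, (x : ℂ) ^ (((9 / 8 : ℝ) : ℂ) + y * Complex.I) * ker 2 (((9 / 8 : ℝ) : ℂ) + y * Complex.I) *
      (1 / ((((9 / 8 : ℝ) : ℂ) + y * Complex.I) - 1)) = 2 * Real.pi * (x / 3 * (1 - 1 / x) ^ 3) ∧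
      Integrable fun y : ℝ => (x : ℂ) ^ (((9 / 8 : ℝ) : ℂ) + y * Complex.I) * ker 2 (((9 / 8 : ℝ) : ℂ) + y * Complex.I) *
      (1 / ((((9 / 8 : ℝ) : ℂ) + y * Complex.I) - 1)) := by
    have hq : ∀ y : ℝ, (x : ℂ) ^ (((9 / 8 : ℝ) : ℂ) + y * Complex.I) * ker 2 (((9 / 8 : ℝ) : ℂ) + y * Complex.I) *
      (1 / ((((9 / 8 : ℝ) : ℂ) + y * Complex.I) - 1)) = x / 3 * (((1 / x : ℝ) : ℂ) ^ (-(((1 / 8 : ℝ) : ℂ) + y * Complex.I)) *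
        ker 3 (((1 / 8 : ℝ) : ℂ) + y * Complex.I)) := by
      intro y
      set w : ℂ := ((1 / 8 : ℝ) : ℂ) + y * Complex.I with hw
      have hwre : w.re = 1 / 8 := by simp [hw]
      have hs : ((9 / 8 : ℝ) : ℂ) + y * Complex.I = w + 1 := by
        rw [hw]; push_cast; ring
      have h1 : ((1 / x : ℝ) : ℂ) ^ (-w) = (x : ℂ) ^ w := by
        rw [one_div, Complex.ofReal_inv, Complex.inv_cpow _ _ (by rw [Complex.arg_ofReal_of_nonneg hxp.le]; exact Real.pi_pos.ne),
          Complex.cpow_neg, inv_inv]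
      have n0 : ∀ r : ℝ, 0 ≤ r → w + r ≠ 0 := by
        intro r hr h
        have := congrArg Complex.re h
        simp [hwre] at this
        linarith
      have m0 := n0 0 le_rfl
      have m1 := n0 1 zero_le_one
      have m2 := n0 2 zero_le_two
      have m3 := n0 3 zero_le_three
      push_cast at m0 m1 m2 m3
      rw [add_zero] at m0
      have hk3 : ker 3 w = 6 / (w * (w + 1) * (w + 2) * (w + 3)) := by
        rw [ker]; simp [Finset.prod_range_succ, Nat.factorial]
      have e2 : w + 1 + 1 = w + 2 := by ring
      have e3 : w + 1 + 2 = w + 3 := by ring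
      rw [hs, h1, ker_two, hk3, Complex.cpow_add _ _ hx0, Complex.cpow_one, e2, e3, add_sub_cancel_right]
      field_simp
      ring
    simp only [hq]
    have hp := perron (m := 3) (by norm_num) (σ := 1 / 8) (by norm_num) (x := 1 / x) (by positivity)
    constructor
    · rw [integral_const_mul, hp, cut_eq (by rw [div_le_one hxp]; linarith)]
      push_cast
      ring
    · refine Integrable.const_mul ?_ _
      have hcx : Continuous fun y : ℝ => ((1 / x : ℝ) : ℂ) ^ (-(((1 / 8 : ℝ) : ℂ) + y * Complex.I)) := by
        have hx1 : ((1 / x : ℝ) : ℂ) ≠ 0 := by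
          rw [Complex.ofReal_ne_zero]; positivity
        simp only [Complex.cpow_def_of_ne_zero hx1]
        fun_prop
      refine ((ker_integrable (m := 3) (by norm_num) (σ := 1 / 8) (by norm_num)).norm.const_mul ((1 / x) ^ (-(1 / 8 : ℝ)))).mono'
        (hcx.mul (ker_continuous 3 (by norm_num))).aestronglyMeasurable (Filter.Eventually.of_forall fun y => ?_)
      rw [norm_mul, Complex.norm_cpow_eq_rpow_re_of_pos (by positivity)]
      simp
  have hmain := cK_sum_eq (K := K) hxp
  have hsplit : (2 * Real.pi : ℂ) * ∑' n : ℕ, (cK K n : ℂ) * cut 2 (n / x) =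
      2 * Real.pi * (x / 3 * (1 - 1 / x) ^ 3) - ∫ y : ℝ, G (a + y * Complex.I) := by
    rw [hmain, hsh.2, ← hpole.1, ← integral_sub hpole.2 hI9]
    refine integral_congr_ae (Filter.Eventually.of_forall fun y => ?_)
    have h1 : (1:ℝ) < (((9 / 8 : ℝ) : ℂ) + y * Complex.I).re := by simp; norm_num
    simp only [hGdef, hL _ h1]
    ring
  have hpi : (2 * Real.pi : ℂ) ≠ 0 := by exact_mod_cast Real.two_pi_pos.ne'
  have hT : (TK K x : ℂ) - ((x ^ 3 / 3 * (1 - 1 / x) ^ 3 : ℝ) : ℂ) = - (x ^ 2 / (2 * Real.pi) * ∫ y : ℝ, G (a + y * Complex.I)) := by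
    have h1 : (∑' n : ℕ, (cK K n : ℂ) * cut 2 (n / x)) =
      (2 * Real.pi * (x / 3 * (1 - 1 / x) ^ 3) - ∫ y : ℝ, G (a + y * Complex.I)) / (2 * Real.pi) := by
      rw [← hsplit]; field_simp
    rw [TK_eq hxp, h1]
    generalize (∫ y : ℝ, G (a + y * Complex.I)) = Jc
    push_cast
    have : (Real.pi : ℂ) ≠ 0 := by exact_mod_cast Real.pi_ne_zero
    field_simp
    ring
  have hT2 : |TK K x - x ^ 3 / 3 * (1 - 1 / x) ^ 3| ≤ x ^ 2 * (4 * C * Real.exp 1 * sz K * √x * l ^ 2) := by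
    rw [← Complex.ofReal_sub] at hT
    have h1 := congrArg norm hT
    rw [Complex.norm_real, Real.norm_eq_abs, norm_neg, norm_mul, norm_div, norm_pow, norm_mul, Complex.norm_real,
      Complex.norm_real, Complex.norm_ofNat, Real.norm_of_nonneg hxp.le, Real.norm_of_nonneg Real.pi_pos.le] at h1
    rw [h1]
    calc x ^ 2 / (2 * Real.pi) * ‖∫ y : ℝ, G (a + y * Complex.I)‖ ≤
        x ^ 2 / (2 * Real.pi) * (Real.exp 1 * √x * (8 * C * sz K * l ^ 2) * Real.pi) := by gcongr
      _ = _ := by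
        have := Real.pi_pos
        field_simp
        ring
  have hT3 : |x ^ 3 / 3 * (1 - 1 / x) ^ 3 - x ^ 3 / 3| ≤ x ^ 2 := by
    have : x ^ 3 / 3 * (1 - 1 / x) ^ 3 = (x - 1) ^ 3 / 3 := by field_simp
    rw [this, abs_le]
    constructor <;> nlinarith
  have hsq : 1 ≤ √x := by rw [Real.one_le_sqrt]; linarith
  have hfin : x ^ 2 ≤ sz K * x ^ 2 * √x * l ^ 2 := by
    have : 1 ≤ sz K * √x * l ^ 2 := by
      have : 1 ≤ l ^ 2 := by nlinarith
      have : 1 ≤ sz K * √x := by nlinarith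
      nlinarith
    nlinarith [sq_nonneg x]
  calc |TK K x - x ^ 3 / 3| = |(TK K x - x ^ 3 / 3 * (1 - 1 / x) ^ 3) + (x ^ 3 / 3 * (1 - 1 / x) ^ 3 - x ^ 3 / 3)| := by ring_nf
    _ ≤ _ := (abs_add_le _ _).trans (add_le_add hT2 hT3)
    _ ≤ x ^ 2 * (4 * C * Real.exp 1 * sz K * √x * l ^ 2) + sz K * x ^ 2 * √x * l ^ 2 := by gcongr
    _ ≤ _ := by
      have : 0 ≤ C * Real.exp 1 * (sz K * x ^ 2 * √x * l ^ 2) := by positivity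
      nlinarith

end PsiBound

end Hooley

/-! ### The prime ideal theorem under RH -/

namespace Hooley

open NumberField NumberField.Units NumberField.Units.dirichletUnitTheorem Module MeasureTheory
open scoped nonZeroDivisors ENNReal

section Unsmooth

variable {K : Type*} [Field K] [NumberField K]

variable (K) in
/-- The Chebyshev function `∑_{n ≤ x} c_n` of `K`. -/
noncomputable def SK (x : ℝ) : ℝ := ∑ n ∈ Finset.range (⌊x⌋₊ + 1), cK K n

lemma TK_eq_max {x : ℝ} (hx : 0 ≤ x) {N : ℕ} (hN : ⌊x⌋₊ + 1 ≤ N) :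
    TK K x = ∑ n ∈ Finset.range N, cK K n * max (x - n) 0 ^ 2 := by
  rw [TK, ← Finset.sum_subset (Finset.range_subset_range.mpr hN)]
  · refine Finset.sum_congr rfl fun n hn => ?_
    have h1 : (n : ℝ) ≤ x := by
      rw [Finset.mem_range] at hn
      exact (Nat.le_floor_iff hx).mp (by omega)
    rw [max_eq_left (by linarith)]
  · intro n _ hn
    rw [Finset.mem_range, not_lt] at hn
    have h1 : x < n := (Nat.floor_lt hx).mp (by omega)
    rw [max_eq_right (by linarith)]
    ring

lemma SK_eq_ite {x : ℝ} (hx : 0 ≤ x) {N : ℕ} (hN : ⌊x⌋₊ + 1 ≤ N) :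
    SK K x = ∑ n ∈ Finset.range N, cK K n * (if (n:ℝ) ≤ x then 1 else 0) := by
  rw [SK, ← Finset.sum_subset (Finset.range_subset_range.mpr hN)]
  · refine Finset.sum_congr rfl fun n hn => ?_
    have h1 : (n : ℝ) ≤ x := by
      rw [Finset.mem_range] at hn
      exact (Nat.le_floor_iff hx).mp (by omega)
    rw [if_pos h1, mul_one]
  · intro n _ hn
    rw [Finset.mem_range, not_lt] at hn
    have h1 : x < n := (Nat.floor_lt hx).mp (by omega)
    rw [if_neg (by linarith), mul_zero]

lemma SK_nonneg (x : ℝ) : 0 ≤ SK K x := Finset.sum_nonneg fun n _ => cK_nonneg n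

lemma SK_le_TK {x : ℝ} (hx : 0 ≤ x) : x ^ 2 * SK K x ≤ TK K (2 * x) := by
  have hN : ⌊x⌋₊ + 1 ≤ ⌊2 * x⌋₊ + 1 := by gcongr; linarith
  rw [SK_eq_ite hx hN, TK_eq_max (by linarith) le_rfl, Finset.mul_sum]
  refine Finset.sum_le_sum fun n _ => ?_
  rw [mul_left_comm]
  refine mul_le_mul_of_nonneg_left ?_ (cK_nonneg n)
  split_ifs with h
  · rw [mul_one]
    gcongr
    exact le_max_of_le_left (by linarith)
  · rw [mul_zero]; positivity

/-- The second difference with step `h` of `(x - n)_+²` equals `2 h²` for `n ≤ x`, vanishes for `n > x + 2h`,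
and lies in between otherwise; hence the second difference of `TK` brackets `SK`. -/
lemma second_diff {x h : ℝ} (hx : 0 ≤ x) (hh : 0 < h) :
    SK K x * (2 * h ^ 2) ≤ TK K (x + 2 * h) - 2 * TK K (x + h) + TK K x ∧
    TK K (x + 2 * h) - 2 * TK K (x + h) + TK K x ≤ SK K (x + 2 * h) * (2 * h ^ 2) := by
  have hN1 : ⌊x⌋₊ + 1 ≤ ⌊x + 2 * h⌋₊ + 1 := by gcongr; linarith
  have hN2 : ⌊x + h⌋₊ + 1 ≤ ⌊x + 2 * h⌋₊ + 1 := by gcongr; linarith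
  rw [SK_eq_ite hx hN1, SK_eq_ite (by linarith) le_rfl, TK_eq_max hx hN1, TK_eq_max (by linarith) hN2,
    TK_eq_max (by linarith) le_rfl, Finset.mul_sum, ← Finset.sum_sub_distrib, ← Finset.sum_add_distrib, Finset.sum_mul,
    Finset.sum_mul]
  have hterm : ∀ n : ℕ, (if (n:ℝ) ≤ x then 1 else 0) * (2 * h ^ 2) ≤
      max (x + 2 * h - n) 0 ^ 2 - 2 * max (x + h - n) 0 ^ 2 + max (x - n) 0 ^ 2 ∧
      max (x + 2 * h - n) 0 ^ 2 - 2 * max (x + h - n) 0 ^ 2 + max (x - n) 0 ^ 2 ≤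
      (if (n:ℝ) ≤ x + 2 * h then 1 else 0) * (2 * h ^ 2) := by
    intro n
    rcases le_or_gt (n:ℝ) x with h1 | h1
    · rw [if_pos h1, if_pos (by linarith), max_eq_left (by linarith), max_eq_left (by linarith), max_eq_left (by linarith)]
      constructor <;> nlinarith
    · rw [if_neg (by linarith), max_eq_right (by linarith : x - (n:ℝ) ≤ 0)]
      rcases le_or_gt (n:ℝ) (x + h) with h2 | h2
      · rw [if_pos (by linarith), max_eq_left (by linarith), max_eq_left (by linarith)]
        constructor
        · nlinarith
        · nlinarith [sq_nonneg (x - n)]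
      · rw [max_eq_right (by linarith : x + h - (n:ℝ) ≤ 0)]
        rcases le_or_gt (n:ℝ) (x + 2 * h) with h3 | h3
        · rw [if_pos h3, max_eq_left (by linarith)]
          constructor
          · nlinarith
          · nlinarith
        · rw [if_neg (by linarith), max_eq_right (by linarith)]
          constructor <;> norm_num
  constructor
  · refine Finset.sum_le_sum fun n _ => ?_
    have := mul_le_mul_of_nonneg_left (hterm n).1 (cK_nonneg (K := K) n)
    linarith
  · refine Finset.sum_le_sum fun n _ => ?_
    have := mul_le_mul_of_nonneg_left (hterm n).2 (cK_nonneg (K := K) n)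
    linarith

/-- The prime ideal theorem under RH, uniform in the field. Unsmoothing with the step `h = x^{9/10}` costs `h`
in the main term and `x^{5/2} log² x / h²` in the error; the first, cruder bound comes from `x² SK(x) ≤ TK(2x)`.
-/
theorem SK_bound : ∃ C : ℝ, 0 < C ∧ ∀ (K : Type) [Field K] [NumberField K], DedekindRH K →
    (∀ x : ℝ, 8 ≤ x → SK K x ≤ C * x + C * sz K * √x * Real.log x ^ 2) ∧
    ∀ x : ℝ, (4:ℝ) ^ 10 ≤ x → |SK K x - x| ≤ x ^ (9 / 10 : ℝ) + C * sz K * x ^ (7 / 10 : ℝ) * Real.log x ^ 2 := by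
  obtain ⟨C, hC, hT⟩ := TK_bound
  refine ⟨216 * C + 3, by positivity, fun K _ _ hRH => ?_⟩
  have hT := hT K hRH
  have hsz := one_le_sz (K := K)
  have hE : ∀ x : ℝ, 3 ≤ x → ∀ y : ℝ, 8 ≤ y → y ≤ 3 * x →
      |TK K y - y ^ 3 / 3| ≤ 72 * C * sz K * x ^ 2 * √x * Real.log x ^ 2 := by
    intro x hx y hy hyx
    refine (hT y hy).trans ?_
    have hl : Real.log y ≤ 2 * Real.log x := by
      rw [show (2:ℝ) * Real.log x = Real.log x + Real.log x by ring, ← Real.log_mul (by linarith) (by linarith)]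
      exact Real.log_le_log (by linarith) (by nlinarith)
    have hl0 : 0 ≤ Real.log y := Real.log_nonneg (by linarith)
    have hs : √y ≤ 2 * √x := by
      rw [Real.sqrt_le_left (by positivity), mul_pow, Real.sq_sqrt (by linarith)]
      linarith
    calc C * sz K * y ^ 2 * √y * Real.log y ^ 2 ≤ C * sz K * (3 * x) ^ 2 * (2 * √x) * (2 * Real.log x) ^ 2 := by
          gcongr
      _ = _ := by ring
  constructor
  · intro x hx
    have h1 := SK_le_TK (K := K) (x := x) (by linarith)
    have h2 := (abs_le.mp (hE x (by linarith) (2 * x) (by linarith) (by linarith))).2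
    have h3 : x ^ 2 * SK K x ≤ x ^ 2 * (3 * x + 72 * C * sz K * √x * Real.log x ^ 2) := by
      have : 0 ≤ x ^ 3 := by positivity
      nlinarith
    have h4 := le_of_mul_le_mul_left h3 (by positivity)
    have h5 : 0 ≤ C * x := by positivity
    have h6 : 0 ≤ C * (sz K * √x * Real.log x ^ 2) := by positivity
    have h7 : 0 ≤ sz K * √x * Real.log x ^ 2 := by positivity
    nlinarith
  · intro x hx
    have hx0 : 0 < x := lt_of_lt_of_le (by norm_num) hx
    set h : ℝ := x ^ (9 / 10 : ℝ) with hh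
    have hhpos : 0 < h := by positivity
    have h10 : h * x ^ (1 / 10 : ℝ) = x := by
      rw [hh, ← Real.rpow_add hx0]; norm_num
    have h4 : 4 ≤ x ^ (1 / 10 : ℝ) := by
      have : ((4:ℝ) ^ 10) ^ (1 / 10 : ℝ) = 4 := by
        rw [← Real.rpow_natCast, ← Real.rpow_mul (by norm_num)]; norm_num
      rw [← this]
      gcongr
    have hhx : 4 * h ≤ x := by nlinarith
    have hx8 : 16 ≤ x := le_trans (by norm_num) hx
    set E := 72 * C * sz K * x ^ 2 * √x * Real.log x ^ 2 with hEdef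
    have hEE : 4 * E = 144 * C * sz K * x ^ (7 / 10 : ℝ) * Real.log x ^ 2 * (2 * h ^ 2) := by
      have : x ^ 2 * √x = x ^ (7 / 10 : ℝ) * h ^ 2 := by
        rw [hh, ← Real.rpow_natCast, ← Real.rpow_natCast, ← Real.rpow_mul hx0.le, Real.sqrt_eq_rpow, ← Real.rpow_add hx0,
          ← Real.rpow_add hx0]
        norm_num
      rw [hEdef]
      calc _ = 288 * C * sz K * Real.log x ^ 2 * (x ^ 2 * √x) := by ring
        _ = _ := by rw [this]; ring
    have hlow : ∀ y : ℝ, 8 ≤ y → y + 2 * h ≤ 3 * x →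
        |TK K (y + 2 * h) - 2 * TK K (y + h) + TK K y - (y + h) * (2 * h ^ 2)| ≤ 4 * E := by
      intro y hy hyx
      have e1 := abs_le.mp (hE x (by linarith) (y + 2 * h) (by linarith) (by linarith))
      have e2 := abs_le.mp (hE x (by linarith) (y + h) (by linarith) (by linarith))
      have e3 := abs_le.mp (hE x (by linarith) y (by linarith) (by linarith))
      rw [← hEdef] at e1 e2 e3
      have e4 : (y + 2 * h) ^ 3 / 3 - 2 * ((y + h) ^ 3 / 3) + y ^ 3 / 3 = (y + h) * (2 * h ^ 2) := by ring
      rw [abs_le]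
      constructor <;> linarith
    have hpos : 0 < 2 * h ^ 2 := by positivity
    have hsmall : 144 * C * sz K * x ^ (7 / 10 : ℝ) * Real.log x ^ 2 ≤ (216 * C + 3) * sz K * x ^ (7 / 10 : ℝ) * Real.log x ^ 2 := by
      gcongr
      linarith
    rw [abs_le]
    constructor
    · have d1 := (second_diff (K := K) (x := x - 2 * h) (h := h) (by linarith) hhpos).2
      have d2 := (abs_le.mp (hlow (x - 2 * h) (by linarith) (by linarith))).1
      rw [sub_add_cancel, hEE] at *
      have d3 : (x - h - 144 * C * sz K * x ^ (7 / 10 : ℝ) * Real.log x ^ 2) * (2 * h ^ 2) ≤ SK K x * (2 * h ^ 2) := by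
        linarith
      have := le_of_mul_le_mul_right d3 hpos
      linarith
    · have d1 := (second_diff (K := K) (x := x) (h := h) (by linarith) hhpos).1
      have d2 := (abs_le.mp (hlow x (by linarith) (by linarith))).2
      rw [hEE] at d2
      have d3 : SK K x * (2 * h ^ 2) ≤ (x + h + 144 * C * sz K * x ^ (7 / 10 : ℝ) * Real.log x ^ 2) * (2 * h ^ 2) := by
        linarith
      have := le_of_mul_le_mul_right d3 hpos
      linarith

end Unsmooth

end Hooley

/-! ### Roots of `X ^ m - g` modulo primes -/

namespace Hooley

open NumberField NumberField.Units NumberField.Units.dirichletUnitTheorem Module MeasureTheory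
open scoped nonZeroDivisors ENNReal

section SplitAlg

variable {g : ℚ} {m : ℕ}

instance (g : ℚ) (m : ℕ) : IsGalois ℚ (splitField g m) := by
  have : Normal ℚ (splitField g m) := Polynomial.SplittingField.instNormal _
  exact ⟨⟩

lemma splits_split : ((X ^ m - C g).map (algebraMap ℚ (splitField g m))).Splits :=
  SplittingField.splits _

lemma exists_root_split (hm : 1 ≤ m) : ∃ α : splitField g m, α ^ m = algebraMap ℚ _ g := by
  obtain ⟨α, hα⟩ := (splits_split (g := g) (m := m)).exists_eval_eq_zero (by
    rw [Polynomial.map_sub, Polynomial.map_pow, map_X, map_C, degree_X_pow_sub_C (by omega)]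
    exact_mod_cast (by omega : m ≠ 0))
  refine ⟨α, ?_⟩
  simpa [sub_eq_zero] using hα

/-- A field in which `X^m - a`, `a ≠ 0`, splits into distinct linear factors contains a
primitive `m`-th root of unity. -/
lemma exists_prim_of_roots {L : Type*} [Field L] (hm : 1 ≤ m) {a : L} (ha : a ≠ 0)
    (S : Finset L) (hS : ∀ y ∈ S, y ^ m = a) (hc : m ≤ S.card) : ∃ ζ : L, IsPrimitiveRoot ζ m := by
  have : NeZero m := ⟨by omega⟩
  obtain ⟨y0, hy0⟩ : S.Nonempty := Finset.card_pos.mp (by omega)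
  have hy0' : y0 ≠ 0 := by
    rintro rfl
    exact ha ((hS _ hy0).symm.trans (zero_pow (by omega)))
  rw [← card_rootsOfUnity_eq_iff_exists_isPrimitiveRoot]
  refine le_antisymm (card_rootsOfUnity L m) ?_
  have hne : ∀ y ∈ S, y ≠ 0 := by
    rintro y hy rfl
    exact ha ((hS _ hy).symm.trans (zero_pow (by omega)))
  have hf : Function.Injective (fun y : S => (⟨Units.mk0 (y.1 / y0) (div_ne_zero (hne _ y.2) hy0'), by
      rw [mem_rootsOfUnity]
      ext
      simp [div_pow, hS _ y.2, hS _ hy0, ha]⟩ : rootsOfUnity m L)) := by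
    intro x y hxy
    simp only [Subtype.mk.injEq, Units.mk0_inj] at hxy
    exact Subtype.ext ((div_left_inj' hy0').mp hxy)
  have := Nat.card_le_card_of_injective _ hf
  rw [Nat.card_eq_fintype_card, Fintype.card_coe] at this
  exact hc.trans this

lemma exists_prim_split (hg : g ≠ 0) (hm : 1 ≤ m) : ∃ ζ : splitField g m, IsPrimitiveRoot ζ m := by
  have hsep : (X ^ m - C g : ℚ[X]).Separable :=
    separable_X_pow_sub_C g (by exact_mod_cast (by omega : m ≠ 0)) hg
  have hc := card_rootSet_eq_natDegree hsep (splits_split (g := g) (m := m))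
  rw [natDegree_X_pow_sub_C] at hc
  refine exists_prim_of_roots hm (a := algebraMap ℚ (splitField g m) g) (by simpa using hg)
    ((X ^ m - C g : ℚ[X]).rootSet (splitField g m)).toFinset (fun y hy => ?_) ?_
  · rw [Set.mem_toFinset, mem_rootSet] at hy
    simpa [sub_eq_zero] using hy.2
  · rw [Set.toFinset_card, hc]

/-- `num · den^{m-1}`, so that `den · g^{1/m}` is a root of `X^m - bI g m`. -/
def bI (g : ℚ) (m : ℕ) : ℤ := g.num * (g.den : ℤ) ^ (m - 1)

lemma bI_eq (hm : 1 ≤ m) {L : Type*} [Field L] [Algebra ℚ L] :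
    ((bI g m : ℤ) : L) = (g.den : L) ^ m * algebraMap ℚ L g := by
  obtain ⟨k, rfl⟩ : ∃ k, m = k + 1 := ⟨m - 1, by omega⟩
  have : CharZero L := algebraRat.charZero L
  have h : algebraMap ℚ L g = (g.num : L) / g.den := by
    conv_lhs => rw [← Rat.num_div_den g]
    simp
  have hd : (g.den : L) ≠ 0 := by exact_mod_cast g.den_ne_zero
  rw [h, bI, Nat.add_sub_cancel]
  push_cast
  field_simp
  ring

lemma exists_int {K : Type*} [Field K] [NumberField K] (hm : 1 ≤ m) {α : K} (hα : α ^ m = algebraMap ℚ _ g) :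
    ∃ β : 𝓞 K, (β : K) = g.den * α ∧ β ^ m = (bI g m : ℤ) := by
  have h1 : ((g.den : K) * α) ^ m = (bI g m : ℤ) := by
    rw [mul_pow, hα, bI_eq hm]
  have hinteg : IsIntegral ℤ ((g.den : K) * α) := by
    refine IsIntegral.of_pow (n := m) (by omega) ?_
    rw [h1]
    exact isIntegral_algebraMap (R := ℤ)
  obtain ⟨β, hβ⟩ : ∃ β : 𝓞 K, (β : K) = g.den * α := ⟨⟨_, hinteg⟩, rfl⟩
  refine ⟨β, hβ, ?_⟩
  apply RingOfIntegers.ext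
  push_cast
  rw [← hβ] at h1
  exact h1

/-- Roots of `X^m - b` are distinct modulo a prime not dividing `m b`. -/
lemma root_inj {R : Type*} [CommRing R] [IsDomain R] {P : Ideal R} [P.IsPrime] {x y b : R}
    (hxy : x ^ m = y ^ m) (hy : y ^ m = b) (hb : b ∉ P) (hm : (m : R) ∉ P) (h : x - y ∈ P) : x = y := by
  by_contra hne
  have h1 := (Commute.all x y).geom_sum₂_mul m
  rw [hxy, sub_self, mul_eq_zero, or_iff_left (sub_ne_zero.mpr hne)] at h1
  have h2 := congrArg (Ideal.Quotient.mk P) h1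
  rw [RingHom.map_geom_sum₂, (Ideal.Quotient.mk_eq_mk_iff_sub_mem x y).mpr h, geom_sum₂_self, map_zero,
    ← map_pow, ← map_natCast (Ideal.Quotient.mk P), ← map_mul, Ideal.Quotient.eq_zero_iff_mem] at h2
  rcases Ideal.IsPrime.mem_or_mem ‹_› h2 with h3 | h3
  · exact hm h3
  · rcases Nat.eq_zero_or_pos m with rfl | h4
    · exact hm (by simp)
    · refine hb (hy ▸ Ideal.pow_mem_of_mem _ (Ideal.IsPrime.mem_of_pow_mem ‹_› _ h3) _ h4)

lemma cast_mem_iff {K : Type*} [Field K] [NumberField K] {P : Ideal (𝓞 K)} (hP : P.IsPrime) {p : ℕ} (hp : p.Prime)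
    (hpP : (p : 𝓞 K) ∈ P) (a : ℤ) : (a : 𝓞 K) ∈ P ↔ (p : ℤ) ∣ a := by
  constructor
  · intro h
    by_contra hd
    have hc : IsCoprime (p : ℤ) a := by
      rw [Int.isCoprime_iff_gcd_eq_one]
      exact (Nat.Prime.coprime_iff_not_dvd hp).mpr (fun h => hd (by rwa [← Int.natCast_dvd] at h))
    obtain ⟨u, v, huv⟩ := hc
    refine hP.ne_top ((Ideal.eq_top_iff_one _).mpr ?_)
    have : (1 : 𝓞 K) = (u : 𝓞 K) * p + v * a := by exact_mod_cast huv.symm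
    rw [this]
    exact P.add_mem (P.mul_mem_left _ hpP) (P.mul_mem_left _ h)
  · rintro ⟨c, rfl⟩
    push_cast
    exact P.mul_mem_right _ hpP

lemma ratRed_ne_zero {p : ℕ} (hp : p.Prime) (ho : OrdZero g p) : ratRed g p ≠ 0 := by
  have := Fact.mk hp
  refine mul_ne_zero ?_ (inv_ne_zero ?_)
  · rw [Ne, ZMod.intCast_zmod_eq_zero_iff_dvd]; exact ho.1
  · rw [Ne, ZMod.natCast_eq_zero_iff]; exact ho.2

lemma bI_cast (hm : 1 ≤ m) {p : ℕ} (hp : p.Prime) (ho : OrdZero g p) :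
    ((bI g m : ℤ) : ZMod p) = ratRed g p * (g.den : ZMod p) ^ m := by
  have := Fact.mk hp
  have hd : (g.den : ZMod p) ≠ 0 := by
    rw [Ne, ZMod.natCast_eq_zero_iff]; exact ho.2
  obtain ⟨k, rfl⟩ : ∃ k, m = k + 1 := ⟨m - 1, by omega⟩
  rw [bI, ratRed, Nat.add_sub_cancel]
  push_cast
  field_simp
  ring

lemma bI_not_dvd {p : ℕ} (hp : p.Prime) (ho : OrdZero g p) : ¬ (p : ℤ) ∣ bI g m := by
  intro h
  have hpp := Nat.prime_iff_prime_int.mp hp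
  rcases hpp.dvd_or_dvd h with h | h
  · exact ho.1 h
  · exact ho.2 (by exact_mod_cast hpp.dvd_of_dvd_pow h)

/-- `m ∣ r_g(p)` iff `m ∣ p - 1` and `g` is an `m`-th power modulo `p`. -/
lemma dvd_resIndex_iff {p : ℕ} (hp : p.Prime) (ho : OrdZero g p) (hm : 1 ≤ m) :
    m ∣ resIndex g p ↔ m ∣ p - 1 ∧ ∃ c : ZMod p, c ^ m = ratRed g p := by
  have := Fact.mk hp
  have hr := ratRed_ne_zero hp ho
  have hd : orderOf (ratRed g p) ∣ p - 1 := ZMod.orderOf_dvd_card_sub_one hr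
  have hp1 : 0 < p - 1 := by have := hp.two_le; omega
  have hd0 : 0 < orderOf (ratRed g p) := Nat.pos_of_dvd_of_pos hd hp1
  unfold resIndex
  constructor
  · intro h
    have h1 : m * orderOf (ratRed g p) ∣ p - 1 := by
      obtain ⟨e, he⟩ := hd
      rw [he, Nat.mul_div_cancel_left _ hd0] at h
      rw [he, mul_comm]
      exact mul_dvd_mul_left _ h
    have hmp : m ∣ p - 1 := (dvd_mul_right _ _).trans h1
    refine ⟨hmp, ?_⟩
    obtain ⟨γ, hγ⟩ := IsCyclic.exists_generator (α := (ZMod p)ˣ)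
    obtain ⟨j, hj⟩ := (mem_powers_iff_mem_zpowers).mpr (hγ (Units.mk0 _ hr))
    have ho : orderOf γ = p - 1 := by
      rw [orderOf_eq_card_of_forall_mem_zpowers hγ, Nat.card_eq_fintype_card, ZMod.card_units p]
    obtain ⟨e, he⟩ := hmp
    have h2 : (Units.mk0 _ hr) ^ e = 1 := by
      ext
      rw [Units.val_pow_eq_pow_val, Units.val_mk0, Units.val_one]
      refine orderOf_dvd_iff_pow_eq_one.mp ?_
      rw [he] at h1
      exact Nat.dvd_of_mul_dvd_mul_left (by omega) h1
    simp only at hj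
    rw [← hj, ← pow_mul, ← orderOf_dvd_iff_pow_eq_one, ho, he] at h2
    have he0 : 0 < e := by
      rcases Nat.eq_zero_or_pos e with rfl | h
      · omega
      · exact h
    obtain ⟨l, rfl⟩ := Nat.dvd_of_mul_dvd_mul_right he0 h2
    refine ⟨((γ ^ l : (ZMod p)ˣ) : ZMod p), ?_⟩
    rw [← Units.val_pow_eq_pow_val, ← pow_mul, mul_comm l m, hj, Units.val_mk0]
  · rintro ⟨⟨e, he⟩, c, hc⟩
    have hc0 : c ≠ 0 := by rintro rfl; exact hr (by rw [← hc, zero_pow (by omega)])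
    have h1 : orderOf (ratRed g p) ∣ e := by
      rw [orderOf_dvd_iff_pow_eq_one, ← hc, ← pow_mul, ← he]
      exact ZMod.pow_card_sub_one_eq_one hc0
    obtain ⟨f, rfl⟩ := h1
    rw [he]
    refine ⟨f, ?_⟩
    rw [show m * (orderOf (ratRed g p) * f) = orderOf (ratRed g p) * (m * f) by ring,
      Nat.mul_div_cancel_left _ hd0]

end SplitAlg

end Hooley

/-! ### The splitting criterion -/

namespace Hooley

open NumberField NumberField.Units NumberField.Units.dirichletUnitTheorem Module MeasureTheory
open scoped nonZeroDivisors ENNReal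

section SplitPrimes

variable {g : ℚ} {m : ℕ}

/-- If `m ∣ r_g(p)`, every root of `X^m - b` is congruent to a rational integer modulo a prime
above `p`. -/
lemma root_congr {K : Type*} [Field K] [NumberField K] {p : ℕ} (hp : p.Prime) (ho : OrdZero g p) (hm : 1 ≤ m)
    (hd : m ∣ resIndex g p) {P : Ideal (𝓞 K)} (hP : P.IsPrime) (hpP : (p : 𝓞 K) ∈ P) {β : 𝓞 K}
    (hβ : β ^ m = (bI g m : ℤ)) : ∃ a : ℕ, β - a ∈ P := by
  have := Fact.mk hp
  obtain ⟨⟨e, he⟩, c, hc⟩ := (dvd_resIndex_iff hp ho hm).mp hd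
  obtain ⟨γ, hγ⟩ := IsCyclic.exists_generator (α := (ZMod p)ˣ)
  have hog : orderOf γ = p - 1 := by
    rw [orderOf_eq_card_of_forall_mem_zpowers hγ, Nat.card_eq_fintype_card, ZMod.card_units p]
  have he0 : e ≠ 0 := by rintro rfl; have := hp.two_le; omega
  have hprim : IsPrimitiveRoot (γ ^ e) m := by
    refine (IsPrimitiveRoot.orderOf γ).pow (by rw [hog]; have := hp.two_le; omega) ?_
    rw [hog, he, mul_comm]
  have hprim' : IsPrimitiveRoot ((γ ^ e : (ZMod p)ˣ) : ZMod p) m := IsPrimitiveRoot.coe_units_iff.mpr hprim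
  set ω : ZMod p := ((γ ^ e : (ZMod p)ˣ) : ZMod p)
  have hcp : CharP (𝓞 K ⧸ P) p := by
    refine (CharP.charP_iff_prime_eq_zero hp).mpr ?_
    rw [← map_natCast (Ideal.Quotient.mk P), Ideal.Quotient.eq_zero_iff_mem]
    exact hpP
  let φ : ZMod p →+* 𝓞 K ⧸ P := ZMod.castHom dvd_rfl _
  have hφ : Function.Injective φ := φ.injective
  have hω : IsPrimitiveRoot (φ ω) m := hprim'.map_of_injective hφ
  set c' : ZMod p := c * g.den
  have hc' : c' ^ m = ((bI g m : ℤ) : ZMod p) := by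
    rw [bI_cast hm hp ho, mul_pow, hc]
  have h1 : (Ideal.Quotient.mk P β) ^ m = (φ c') ^ m := by
    rw [← map_pow, hβ, map_intCast, ← map_pow, hc', map_intCast]
  have h2 := hω.pow_sub_pow_eq_prod_sub_mul (Ideal.Quotient.mk P β) (φ c') hm
  rw [h1, sub_self] at h2
  obtain ⟨ζ, hζ, hz⟩ := Finset.prod_eq_zero_iff.mp h2.symm
  rw [mem_nthRootsFinset hm] at hζ
  have : NeZero m := ⟨by omega⟩
  obtain ⟨i, _, rfl⟩ := hω.eq_pow_of_pow_eq_one hζ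
  refine ⟨(ω ^ i * c').val, ?_⟩
  rw [← Ideal.Quotient.eq_zero_iff_mem, map_sub, map_natCast]
  have h3 : (((ω ^ i * c').val : ℕ) : 𝓞 K ⧸ P) = φ (ω ^ i * c') := by
    rw [← map_natCast φ, ZMod.natCast_zmod_val]
  rw [h3, map_mul, map_pow]
  exact hz

/-- If `m ∣ r_g(p)` the decomposition group of a prime above `p` is trivial. -/
lemma stab_trivial (hg : g ≠ 0) {p : ℕ} (hp : p.Prime) (ho : OrdZero g p) (hm : 1 ≤ m)
    (hd : m ∣ resIndex g p) {P : Ideal (𝓞 (splitField g m))} (hP : P.IsPrime) (hpP : (p : 𝓞 (splitField g m)) ∈ P)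
    (σ : splitField g m ≃ₐ[ℚ] splitField g m) (hσ : σ • P = P) : σ = 1 := by
  have hpm : ¬ p ∣ m := by
    intro h
    have h1 := Nat.le_of_dvd (by have := hp.two_le; omega) ((dvd_resIndex_iff hp ho hm).mp hd).1
    have := Nat.le_of_dvd (by omega) h
    have := hp.two_le
    omega
  have key : ∀ β : 𝓞 (splitField g m), β ^ m = (bI g m : ℤ) → σ • β = β := by
    intro β hβ
    obtain ⟨a, ha⟩ := root_congr hp ho hm hd hP hpP hβ
    have h1 : σ • (β - (a : 𝓞 (splitField g m))) ∈ P := by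
      have := Ideal.smul_mem_pointwise_smul σ _ _ ha
      rwa [hσ] at this
    have ha' : σ • (a : 𝓞 (splitField g m)) = a := map_natCast (MulSemiringAction.toRingHom _ _ σ) a
    rw [smul_sub, ha'] at h1
    refine root_inj (m := m) (P := P) (b := (bI g m : ℤ)) ?_ hβ ?_ ?_ ?_
    · rw [← smul_pow', hβ]
      exact map_intCast (MulSemiringAction.toRingHom _ _ σ) _
    · rw [cast_mem_iff hP hp hpP]
      exact bI_not_dvd hp ho
    · have := cast_mem_iff hP hp hpP (m : ℤ)
      rw [Int.cast_natCast] at this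
      rw [this]
      exact_mod_cast hpm
    · have := P.sub_mem h1 ha
      rwa [sub_sub_sub_cancel_right] at this
  have hext := AlgHom.ext_of_adjoin_eq_top (SplittingField.adjoin_rootSet (X ^ m - C g))
    (φ₁ := (σ : splitField g m →ₐ[ℚ] splitField g m)) (φ₂ := AlgHom.id ℚ _) (fun α hα => ?_)
  · ext x
    exact DFunLike.congr_fun hext x
  · rw [mem_rootSet] at hα
    have hα' : α ^ m = algebraMap ℚ _ g := by simpa [sub_eq_zero] using hα.2
    obtain ⟨β, hβ, hβm⟩ := exists_int hm hα'
    have h1 := congrArg (algebraMap (𝓞 (splitField g m)) (splitField g m)) (key β hβm)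
    have h2 : algebraMap (𝓞 (splitField g m)) (splitField g m) (σ • β) = σ (β : splitField g m) := rfl
    have hden : ((g.den : ℕ) : splitField g m) ≠ 0 := by exact_mod_cast g.den_ne_zero
    have h3 : σ (β : splitField g m) = β := h1
    rw [hβ, map_mul, map_natCast] at h3
    exact mul_left_cancel₀ hden h3

lemma prime_above {K : Type*} [Field K] [NumberField K] {p : ℕ} (hp : p.Prime) :
    ∃ P : Ideal (𝓞 K), P.IsPrime ∧ (p : 𝓞 K) ∈ P := by
  have hne : Ideal.span {(p : 𝓞 K)} ≠ ⊤ := by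
    intro h
    have h1 : Ideal.absNorm (Ideal.span {(p : 𝓞 K)}) = p ^ finrank ℚ K := by
      rw [Ideal.absNorm_span_natCast, RingOfIntegers.rank]
    rw [h, Ideal.absNorm_top] at h1
    have := Nat.one_lt_pow (finrank_pos (R := ℚ) (M := K)).ne' hp.one_lt
    omega
  obtain ⟨P, hP, hle⟩ := Ideal.exists_le_maximal _ hne
  exact ⟨P, hP.isPrime, hle (Ideal.mem_span_singleton_self _)⟩

lemma cK_prime_mem {K : Type*} [Field K] [NumberField K] {p : ℕ} (hp : p.Prime) (S : Finset (Ideal (𝓞 K)))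
    (hS : ∀ P ∈ S, Prime P ∧ Ideal.absNorm P = p) : S.card * Real.log p ≤ cK K p := by
  have h1 : ∀ P : Ideal (𝓞 K), 0 ≤ ∑ k ∈ Finset.Icc 1 p, (if Ideal.absNorm P ^ k = p then Real.log (Ideal.absNorm P) else 0) :=
    fun P => Finset.sum_nonneg fun k _ => by split_ifs <;> [exact Real.log_natCast_nonneg _; exact le_rfl]
  have hsub : S ⊆ (idle K p).filter Prime := by
    intro P hP
    rw [Finset.mem_filter, mem_idle]
    exact ⟨⟨(hS P hP).1.ne_zero, (hS P hP).2.le⟩, (hS P hP).1⟩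
  refine le_trans ?_ (Finset.sum_le_sum_of_subset_of_nonneg hsub fun P _ _ => h1 P)
  rw [← nsmul_eq_mul]
  refine Finset.card_nsmul_le_sum _ _ _ fun P hP => ?_
  have h2 := (hS P hP).2
  calc Real.log p = if Ideal.absNorm P ^ 1 = p then Real.log (Ideal.absNorm P) else 0 := by
        rw [pow_one, if_pos h2, h2]
    _ ≤ _ := Finset.single_le_sum (f := fun k => if Ideal.absNorm P ^ k = p then Real.log (Ideal.absNorm P) else 0)
        (fun k _ => by split_ifs <;> [exact Real.log_natCast_nonneg _; exact le_rfl])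
        (Finset.mem_Icc.mpr ⟨le_rfl, hp.one_lt.le⟩)

lemma cK_prime_exists {K : Type*} [Field K] [NumberField K] {p : ℕ} (hp : p.Prime) (h : cK K p ≠ 0) :
    ∃ P : Ideal (𝓞 K), Prime P ∧ Ideal.absNorm P = p := by
  obtain ⟨P, hP, h1⟩ := Finset.exists_ne_zero_of_sum_ne_zero h
  obtain ⟨k, hk, h2⟩ := Finset.exists_ne_zero_of_sum_ne_zero h1
  have h3 : Ideal.absNorm P ^ k = p := by
    by_contra h4
    exact h2 (if_neg h4)
  refine ⟨P, (Finset.mem_filter.mp hP).2, ?_⟩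
  have hk1 : k = 1 := by
    rw [← h3] at hp
    exact hp.eq_one_of_pow
  rwa [hk1, pow_one] at h3

/-- Primes with `m ∣ r_g(p)` split completely in `ℚ(ζ_m, g^{1/m})`. -/
lemma cK_split (hg : g ≠ 0) {p : ℕ} (hp : p.Prime) (ho : OrdZero g p) (hm : 1 ≤ m)
    (hd : m ∣ resIndex g p) : cK (splitField g m) p = nn (splitField g m) * Real.log p := by
  refine le_antisymm ((cK_le p).trans ?_) ?_
  · rw [ArithmeticFunction.vonMangoldt_apply_prime hp]
  obtain ⟨P, hP, hpP⟩ := prime_above (K := splitField g m) hp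
  let S : Finset (Ideal (𝓞 (splitField g m))) :=
    Finset.univ.image fun σ : splitField g m ≃ₐ[ℚ] splitField g m => σ • P
  have hcard : S.card = finrank ℚ (splitField g m) := by
    rw [Finset.card_image_of_injective, Finset.card_univ, ← Nat.card_eq_fintype_card,
      IsGalois.card_aut_eq_finrank]
    intro σ τ h
    simp only at h
    have h2 : (τ⁻¹ * σ) • P = P := by rw [mul_smul, h, inv_smul_smul]
    have := stab_trivial hg hp ho hm hd hP hpP _ h2
    rwa [inv_mul_eq_one, eq_comm] at this
  have hS : ∀ Q ∈ S, Prime Q ∧ (p : 𝓞 (splitField g m)) ∈ Q := by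
    intro Q hQ
    obtain ⟨σ, -, rfl⟩ := Finset.mem_image.mp hQ
    have hpQ : (p : 𝓞 (splitField g m)) ∈ σ • P := by
      have := Ideal.smul_mem_pointwise_smul σ _ _ hpP
      rwa [show σ • (p : 𝓞 (splitField g m)) = p from map_natCast (MulSemiringAction.toRingHom _ _ σ) p] at this
    refine ⟨?_, hpQ⟩
    have hpr : (σ • P).IsPrime := Ideal.IsPrime.smul σ
    refine Ideal.prime_of_isPrime (fun h => ?_) hpr
    rw [h, Ideal.mem_bot] at hpQ
    exact hp.ne_zero (by exact_mod_cast hpQ)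
  have hpd : ∀ Q ∈ S, p ∣ Ideal.absNorm Q := by
    intro Q hQ
    obtain ⟨i, hi, hPi⟩ := (Nat.dvd_prime_pow hp).mp (norm_dvd (hS Q hQ).2)
    have h2 := two_le_absNorm (hS Q hQ).1
    have hi0 : i ≠ 0 := by rintro rfl; rw [pow_zero] at hPi; omega
    rw [hPi]
    exact dvd_pow_self _ hi0
  have hlog : ∀ Q ∈ S, Real.log p ≤ Real.log (Ideal.absNorm Q) := by
    intro Q hQ
    refine Real.log_le_log (by exact_mod_cast hp.pos) ?_
    exact_mod_cast Nat.le_of_dvd (by have := two_le_absNorm (hS Q hQ).1; omega) (hpd Q hQ)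
  have hsum := sum_log_le hp S hS
  have heq : ∀ Q ∈ S, Ideal.absNorm Q = p := by
    intro Q hQ
    have h3 : ∑ Q ∈ S, Real.log p = ∑ Q ∈ S, Real.log (Ideal.absNorm Q) := by
      refine le_antisymm (Finset.sum_le_sum hlog) (hsum.trans ?_)
      rw [Finset.sum_const, hcard, nsmul_eq_mul]
    have h4 := (Finset.sum_eq_sum_iff_of_le hlog).mp h3 Q hQ
    have h5 := Real.log_injOn_pos (Set.mem_Ioi.mpr (by exact_mod_cast hp.pos))
      (Set.mem_Ioi.mpr (by exact_mod_cast absNorm_pos (hS Q hQ).1.ne_zero)) h4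
    exact_mod_cast h5.symm
  have := cK_prime_mem hp S fun Q hQ => ⟨(hS Q hQ).1, heq Q hQ⟩
  rwa [hcard] at this

/-- A prime `p ∤ m` with a prime of norm `p` above it in `ℚ(ζ_m, g^{1/m})` has `m ∣ r_g(p)`. -/
lemma cK_nonsplit (hg : g ≠ 0) {p : ℕ} (hp : p.Prime) (ho : OrdZero g p) (hm : 1 ≤ m) (hpm : ¬ p ∣ m)
    (hd : ¬ m ∣ resIndex g p) : cK (splitField g m) p = 0 := by
  by_contra hne
  apply hd
  obtain ⟨P, hPr, hN⟩ := cK_prime_exists hp hne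
  have hP := isPrime_of_prime hPr
  have hpP : (p : 𝓞 (splitField g m)) ∈ P := by
    have := Ideal.absNorm_mem P
    rwa [hN] at this
  have := Fact.mk hp
  have hcp : CharP (𝓞 (splitField g m) ⧸ P) p := by
    refine (CharP.charP_iff_prime_eq_zero hp).mpr ?_
    rw [← map_natCast (Ideal.Quotient.mk P), Ideal.Quotient.eq_zero_iff_mem]
    exact hpP
  let φ : ZMod p →+* 𝓞 (splitField g m) ⧸ P := ZMod.castHom dvd_rfl _
  have hφ : Function.Injective φ := φ.injective
  have hcard : Nat.card (𝓞 (splitField g m) ⧸ P) = p := by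
    rw [← hN]
    rfl
  have hfin : Finite (𝓞 (splitField g m) ⧸ P) := Nat.finite_of_card_ne_zero (by rw [hcard]; exact hp.ne_zero)
  have hsurj : Function.Surjective φ := by
    have := (Nat.bijective_iff_injective_and_card φ).mpr ⟨hφ, by rw [hcard, Nat.card_zmod]⟩
    exact this.2
  have hmP : ((m : ℕ) : 𝓞 (splitField g m)) ∉ P := by
    have := cast_mem_iff hP hp hpP (m : ℤ)
    rw [Int.cast_natCast] at this
    rw [this]
    exact_mod_cast hpm
  rw [dvd_resIndex_iff hp ho hm]
  constructor
  · obtain ⟨ζ, hζ⟩ := exists_prim_split hg hm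
    have : NeZero m := ⟨by omega⟩
    obtain ⟨z, hz⟩ : ∃ z : 𝓞 (splitField g m), algebraMap _ (splitField g m) z = ζ := ⟨hζ.toInteger, rfl⟩
    have hzp : IsPrimitiveRoot z m := by
      rw [← hz] at hζ
      exact hζ.of_map_of_injective (RingOfIntegers.coe_injective)
    obtain ⟨y, hy⟩ := hsurj (Ideal.Quotient.mk P z)
    have hyp : IsPrimitiveRoot y m := by
      refine (IsPrimitiveRoot.iff hm).mpr ⟨?_, ?_⟩
      · apply hφ
        rw [map_pow, hy, ← map_pow, hzp.pow_eq_one, map_one, map_one]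
      · intro l hl hlm h1
        refine hzp.pow_ne_one_of_pos_of_lt hl.ne' hlm ?_
        refine root_inj (m := m) (P := P) (b := 1) ?_ (one_pow m) ?_ hmP ?_
        · rw [one_pow, ← pow_mul, mul_comm, pow_mul, hzp.pow_eq_one, one_pow]
        · exact fun h => hP.ne_top ((Ideal.eq_top_iff_one _).mpr h)
        · rw [← Ideal.Quotient.eq_zero_iff_mem, map_sub, map_pow, ← hy, ← map_pow, h1, map_one, map_one, sub_self]
    rw [hyp.eq_orderOf]
    exact ZMod.orderOf_dvd_card_sub_one (hyp.ne_zero (by omega))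
  · obtain ⟨α, hα⟩ := exists_root_split (g := g) hm
    obtain ⟨β, -, hβ⟩ := exists_int hm hα
    obtain ⟨y, hy⟩ := hsurj (Ideal.Quotient.mk P β)
    have hden : (g.den : ZMod p) ≠ 0 := by
      rw [Ne, ZMod.natCast_eq_zero_iff]; exact ho.2
    refine ⟨y / g.den, ?_⟩
    have h1 : y ^ m = ((bI g m : ℤ) : ZMod p) := by
      apply hφ
      rw [map_pow, hy, ← map_pow, hβ, map_intCast, map_intCast]
    rw [div_pow, h1, bI_cast hm hp ho, mul_div_cancel_right₀ _ (pow_ne_zero _ hden)]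

end SplitPrimes

end Hooley

/-! ### Comparison of Chebyshev functions -/

namespace Hooley

open NumberField NumberField.Units NumberField.Units.dirichletUnitTheorem Module MeasureTheory
open scoped nonZeroDivisors ENNReal

section Theta

variable {g : ℚ} {m : ℕ}

/-- The odd primes `p ≤ x` with `ord_p(g) = 0` and `m ∣ r_g(p)`. -/
noncomputable def Rset (g : ℚ) (m : ℕ) (x : ℝ) : Finset ℕ :=
  (Finset.range (⌊x⌋₊ + 1)).filter fun p => p.Prime ∧ (Odd p ∧ OrdZero g p ∧ m ∣ resIndex g p)

/-- `∑ log p` over the primes counted by `Rgt g m x`. -/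
noncomputable def thR (g : ℚ) (m : ℕ) (x : ℝ) : ℝ := ∑ p ∈ Rset g m x, Real.log p

lemma Rgt_eq (g : ℚ) (m : ℕ) (x : ℝ) : Rgt g m x = (Rset g m x).card := by
  unfold Rgt countPrimes Rset
  congr

/-- A prime with `m ∣ r_g(p)` splits completely in the splitting field, so it carries the full coefficient `[K :
ℚ] log p`. -/
lemma thR_le_SK (hg : g ≠ 0) (hm : 1 ≤ m) (x : ℝ) : nn (splitField g m) * thR g m x ≤ SK (splitField g m) x := by
  rw [thR, Finset.mul_sum, SK]
  refine (Finset.sum_le_sum fun p hp => ?_).trans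
    (Finset.sum_le_sum_of_subset_of_nonneg (Finset.filter_subset _ _) fun n _ _ => cK_nonneg n)
  have h := (Finset.mem_filter.mp hp).2
  exact (cK_split hg h.1 h.2.2.1 hm h.2.2.2).ge

/-- The finitely many primes excluded from the splitting criterion. -/
def badN (g : ℚ) (m : ℕ) : ℕ := 2 * m * (g.num.natAbs * g.den)

lemma badN_ne (hg : g ≠ 0) (hm : 1 ≤ m) : badN g m ≠ 0 := by
  have h1 : g.num.natAbs ≠ 0 := by simpa using hg
  have h2 := g.den_ne_zero
  unfold badN
  positivity

lemma sum_log_primeFactors {M : ℕ} (hM : M ≠ 0) : ∑ p ∈ M.primeFactors, Real.log p ≤ Real.log M := by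
  rw [← Real.log_prod (fun p hp => by
    have := (Nat.prime_of_mem_primeFactors hp).pos
    positivity)]
  have h1 : 0 < ∏ p ∈ M.primeFactors, p := Finset.prod_pos fun p hp => (Nat.prime_of_mem_primeFactors hp).pos
  rw [← Nat.cast_prod]
  refine Real.log_le_log (by exact_mod_cast h1) ?_
  exact_mod_cast Nat.le_of_dvd (Nat.pos_of_ne_zero hM) (Nat.prod_primeFactors_dvd M)

/-- Conversely, away from the divisors of `badN g m` a prime carries a nonzero coefficient only if it splits
completely (the field is Galois, so otherwise every residue degree exceeds `1`); the proper prime powers are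
bounded by `ψ - θ`. -/
lemma SK_le_thR (hg : g ≠ 0) (hm : 1 ≤ m) (x : ℝ) : SK (splitField g m) x ≤
    nn (splitField g m) * (thR g m x + (Chebyshev.psi x - Chebyshev.theta x) + Real.log (badN g m)) := by
  have hN := badN_ne hg hm
  set K := splitField g m
  have h0 : ∀ n ∈ Finset.range (⌊x⌋₊ + 1), cK K n ≤ nn K * (
      (if n.Prime ∧ (Odd n ∧ OrdZero g n ∧ m ∣ resIndex g n) then Real.log n else 0) +
      (if ¬ n.Prime then ArithmeticFunction.vonMangoldt n else 0) +
      (if n ∈ (badN g m).primeFactors then Real.log n else 0)) := by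
    intro n _
    have hL := Real.log_natCast_nonneg n
    have hv := ArithmeticFunction.vonMangoldt_nonneg (n := n)
    have hnn := (nn_pos (K := K)).le
    have hc := cK_le (K := K) n
    by_cases hp : n.Prime
    · rw [if_neg (not_not.mpr hp), add_zero]
      rw [ArithmeticFunction.vonMangoldt_apply_prime hp] at hc
      by_cases hb : n ∈ (badN g m).primeFactors
      · rw [if_pos hb]
        refine hc.trans (mul_le_mul_of_nonneg_left ?_ hnn)
        split_ifs <;> linarith
      · rw [if_neg hb, add_zero]
        have hb' : ¬ n ∣ badN g m := fun h => hb (Nat.mem_primeFactors.mpr ⟨hp, h, hN⟩)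
        have h2 : Odd n := by
          refine hp.odd_of_ne_two ?_
          rintro rfl
          exact hb' (by unfold badN; rw [mul_assoc]; exact dvd_mul_right _ _)
        have h3 : OrdZero g n := by
          refine ⟨fun h => hb' ?_, fun h => hb' ?_⟩
          · rw [Int.natCast_dvd] at h
            unfold badN
            exact Dvd.dvd.mul_left (Dvd.dvd.mul_right h _) _
          · unfold badN
            exact Dvd.dvd.mul_left (Dvd.dvd.mul_left h _) _
        have h4 : ¬ n ∣ m := fun h => hb' (by
          unfold badN
          exact Dvd.dvd.mul_right (Dvd.dvd.mul_left h _) _)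
        by_cases hd : m ∣ resIndex g n
        · rw [if_pos ⟨hp, h2, h3, hd⟩]
          exact hc
        · rw [if_neg fun h => hd h.2.2.2, mul_zero]
          exact (cK_nonsplit hg hp h3 hm h4 hd).le
    · rw [if_neg fun h => hp h.1, if_pos hp, if_neg fun h => hp (Nat.prime_of_mem_primeFactors h), zero_add, add_zero]
      exact hc
  refine (Finset.sum_le_sum h0).trans ?_
  rw [← Finset.mul_sum]
  refine mul_le_mul_of_nonneg_left ?_ nn_pos.le
  rw [Finset.sum_add_distrib, Finset.sum_add_distrib]
  refine add_le_add (add_le_add ?_ ?_) ?_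
  · rw [← Finset.sum_filter]; exact le_rfl
  · rw [Chebyshev.psi_sub_theta_eq_sum_not_prime, ← Finset.sum_filter]
    refine (Finset.sum_subset (fun n hn => ?_) fun n hn hn' => ?_).ge
    · rw [Finset.mem_filter, Finset.mem_Ioc] at hn
      rw [Finset.mem_filter, Finset.mem_range]
      exact ⟨by omega, hn.2⟩
    · rw [Finset.mem_filter, Finset.mem_range] at hn
      rw [Finset.mem_filter, Finset.mem_Ioc] at hn'
      have : n = 0 := by
        by_contra h
        exact hn' ⟨⟨Nat.pos_of_ne_zero h, by omega⟩, hn.2⟩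
      rw [this, ArithmeticFunction.map_zero]
  · rw [← Finset.sum_filter]
    refine (Finset.sum_le_sum_of_subset_of_nonneg (t := (badN g m).primeFactors) (fun n hn => (Finset.mem_filter.mp hn).2)
      fun n _ _ => Real.log_natCast_nonneg n).trans (sum_log_primeFactors hN)

end Theta

end Hooley

/-! ### The discriminant of the splitting field -/

namespace Hooley

open NumberField NumberField.Units NumberField.Units.dirichletUnitTheorem Module MeasureTheory
open scoped nonZeroDivisors ENNReal

section DiscrBound

/-- The discriminant of a number field is at most that of any basis of integral elements, which
Leibniz' formula for the determinant of the matrix of embeddings bounds. -/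
lemma discr_le_of_basis (K : Type) [Field K] [NumberField K] {ι : Type} [Fintype ι]
    (e : Basis ι ℚ K) (hi : ∀ i, IsIntegral ℤ (e i)) (H : ℝ)
    (hH : ∀ (σ : K →ₐ[ℚ] ℂ) i, ‖σ (e i)‖ ≤ H) :
    |(discr K : ℝ)| ≤ (((finrank ℚ K).factorial : ℝ) * H ^ (finrank ℚ K)) ^ 2 := by
  have hcard : finrank ℚ K = Fintype.card ι := finrank_eq_card_basis e
  -- the discriminant of `e` is a nonzero integral multiple of that of the field
  set b := integralBasis K
  set b' := b.reindex (b.indexEquiv e) with hb'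
  obtain ⟨r, hr⟩ : ∃ r : ℤ, Algebra.discr ℚ e = (r : ℚ) ^ 2 * (discr K : ℚ) := by
    have h1 : ∀ i j, IsIntegral ℤ (b'.toMatrix e i j) := by
      intro i j
      have := NumberField.integralBasis_repr_apply (K := K) ⟨e j, hi j⟩ ((b.indexEquiv e).symm i)
      rw [Basis.toMatrix_apply, hb', Basis.repr_reindex_apply]
      erw [this]
      exact isIntegral_algebraMap
    obtain ⟨r, hr⟩ := IsIntegrallyClosed.isIntegral_iff.1 (IsIntegral.det h1)
    refine ⟨r, ?_⟩
    rw [← b'.toMatrix_map_vecMul e, Algebra.discr_of_matrix_vecMul, coe_discr, ← hr, hb',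
      Basis.coe_reindex, Algebra.discr_reindex]
    rfl
  have hr0 : r ≠ 0 := by
    rintro rfl
    exact Algebra.discr_not_zero_of_basis ℚ e (by rw [hr]; simp)
  have h2 : |(discr K : ℝ)| ≤ |((Algebra.discr ℚ e : ℚ) : ℝ)| := by
    rw [hr]
    push_cast
    rw [abs_mul, abs_pow]
    have : (1:ℝ) ≤ |(r:ℝ)| := by exact_mod_cast Int.one_le_abs hr0
    exact le_mul_of_one_le_left (abs_nonneg _) (one_le_pow₀ this)
  refine h2.trans ?_
  have hc2 : Fintype.card ι = Fintype.card (K →ₐ[ℚ] ℂ) := by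
    rw [AlgHom.card, hcard]
  let f : ι ≃ (K →ₐ[ℚ] ℂ) := Fintype.equivOfCardEq hc2
  have h3 := Algebra.discr_eq_det_embeddingsMatrixReindex_pow_two ℚ ℂ e f
  have h4 : |((Algebra.discr ℚ e : ℚ) : ℝ)| =
      ‖(Algebra.embeddingsMatrixReindex ℚ ℂ e f).det‖ ^ 2 := by
    rw [← norm_pow, ← h3, ← Real.norm_eq_abs, ← Complex.norm_real]
    simp
  rw [h4]
  have h5 := Matrix.det_le (A := Algebra.embeddingsMatrixReindex ℚ ℂ e f)
    (abv := IsAbsoluteValue.toAbsoluteValue (norm : ℂ → ℝ)) (x := H) (by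
      intro i j
      exact hH _ _)
  refine pow_le_pow_left₀ (norm_nonneg _) ?_ 2
  rw [hcard]
  simpa using h5

variable {g : ℚ} {m : ℕ}

/-- The splitting field of `X^m - g` is spanned over `ℚ` by the products `ζ^i (d α^j)` with
`0 ≤ i, j < m`. -/
lemma span_split (hg : g ≠ 0) (hm : 1 ≤ m) {ζ α : splitField g m} (hζ : IsPrimitiveRoot ζ m)
    (hα : α ^ m = algebraMap ℚ _ g) (d : ℚ) (hd : d ≠ 0) :
    Submodule.span ℚ (Set.range (fun ij : Fin m × Fin m =>
      ζ ^ (ij.1:ℕ) * (algebraMap ℚ (splitField g m) d * α ^ (ij.2:ℕ)))) = ⊤ := by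
  set V := Submodule.span ℚ (Set.range (fun ij : Fin m × Fin m =>
      ζ ^ (ij.1:ℕ) * (algebraMap ℚ (splitField g m) d * α ^ (ij.2:ℕ)))) with hV
  have hα0 : α ≠ 0 := by
    rintro rfl
    rw [zero_pow (by omega)] at hα
    exact hg ((map_eq_zero _).mp hα.symm)
  -- all products of powers lie in the span
  have hmem : ∀ i j : ℕ, ζ ^ i * α ^ j ∈ V := by
    intro i j
    have e1 : ζ ^ i = ζ ^ (i % m) := by
      conv_lhs => rw [← Nat.mod_add_div i m, pow_add, pow_mul, hζ.pow_eq_one, one_pow, mul_one]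
    have e2 : α ^ j = algebraMap ℚ (splitField g m) (g ^ (j / m)) * α ^ (j % m) := by
      conv_lhs => rw [← Nat.mod_add_div j m, pow_add, pow_mul, hα, ← map_pow, mul_comm]
    have := V.smul_mem (g ^ (j / m) * d⁻¹) (Submodule.subset_span
      ⟨((⟨i % m, Nat.mod_lt _ hm⟩, ⟨j % m, Nat.mod_lt _ hm⟩) : Fin m × Fin m), rfl⟩ )
    convert! this using 1
    simp only [Algebra.smul_def, map_mul, map_inv₀]
    rw [e1, e2]
    have : algebraMap ℚ (splitField g m) d ≠ 0 := by simpa using hd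
    field_simp
  have hadj : Algebra.adjoin ℚ ({ζ, α} : Set (splitField g m)) = ⊤ := by
    have h0 : Algebra.adjoin ℚ ((X ^ m - C g).rootSet (splitField g m)) = ⊤ :=
      SplittingField.adjoin_rootSet (X ^ m - C g)
    rw [eq_top_iff]
    refine h0.symm.le.trans (Algebra.adjoin_le ?_)
    intro y hy
    have hy' : y ^ m = algebraMap ℚ _ g := by
      have := aeval_eq_zero_of_mem_rootSet hy
      simpa [sub_eq_zero] using this
    have : NeZero m := ⟨by omega⟩
    obtain ⟨i, -, hi⟩ := hζ.eq_pow_of_pow_eq_one (ξ := y / α) (by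
      rw [div_pow, hy', hα, div_self]
      simpa using hg)
    have : y = ζ ^ i * α := by rw [hi]; field_simp
    rw [SetLike.mem_coe, this]
    exact mul_mem (pow_mem (Algebra.subset_adjoin (by simp)) _) (Algebra.subset_adjoin (by simp))
  rw [eq_top_iff]
  intro y _
  have hy : y ∈ Algebra.adjoin ℚ ({ζ, α} : Set (splitField g m)) := by rw [hadj]; trivial
  rw [← Subalgebra.mem_toSubmodule, Algebra.adjoin_eq_span] at hy
  refine Submodule.span_le.mpr ?_ hy
  intro z hz
  obtain ⟨i, j, rfl⟩ : ∃ i j : ℕ, ζ ^ i * α ^ j = z := by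
    induction hz using Submonoid.closure_induction with
    | mem x hx =>
      rcases hx with rfl | rfl
      · exact ⟨1, 0, by simp⟩
      · exact ⟨0, 1, by simp⟩
    | one => exact ⟨0, 0, by simp⟩
    | mul x y _ _ hx hy =>
      obtain ⟨i, j, rfl⟩ := hx
      obtain ⟨i', j', rfl⟩ := hy
      exact ⟨i + i', j + j', by ring⟩
  exact hmem i j

/-- The height of the chosen integral generators of the splitting field of `X^m - g`. -/
noncomputable def hgt (g : ℚ) : ℝ := g.den * max 1 |(g:ℝ)|

lemma one_le_hgt (g : ℚ) : 1 ≤ hgt g := by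
  have h1 : (1:ℝ) ≤ g.den := by exact_mod_cast g.den_pos
  have h2 : (1:ℝ) ≤ max 1 |(g:ℝ)| := le_max_left _ _
  unfold hgt; nlinarith

lemma finrank_split_le (hg : g ≠ 0) (hm : 1 ≤ m) : finrank ℚ (splitField g m) ≤ m ^ 2 := by
  obtain ⟨ζ, hζ⟩ := exists_prim_split hg hm
  obtain ⟨α, hα⟩ := exists_root_split (g := g) hm
  have h := span_split hg hm hζ hα 1 one_ne_zero
  have h2 := finrank_range_le_card (R := ℚ) (fun ij : Fin m × Fin m =>
      ζ ^ (ij.1:ℕ) * (algebraMap ℚ (splitField g m) 1 * α ^ (ij.2:ℕ)))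
  rw [Set.finrank, h, finrank_top] at h2
  simpa [sq] using h2

/-- The integral elements `ζ^i · den · α^j` with `i, j < m` contain a basis of the field, and all their
conjugates are at most `hgt g`; expanding the determinant of the conjugates bounds its discriminant, a nonzero
integral multiple of that of the field. -/
lemma discr_split_le (hg : g ≠ 0) (hm : 1 ≤ m) :
    |(discr (splitField g m) : ℝ)| ≤ (((finrank ℚ (splitField g m)).factorial : ℝ) *
      hgt g ^ (finrank ℚ (splitField g m))) ^ 2 := by
  obtain ⟨ζ, hζ⟩ := exists_prim_split hg hm
  obtain ⟨α, hα⟩ := exists_root_split (g := g) hm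
  have hd : (g.den : ℚ) ≠ 0 := by exact_mod_cast g.den_ne_zero
  have h := span_split hg hm hζ hα g.den hd
  obtain ⟨b, hbt, hbs, hbl⟩ := exists_linearIndependent ℚ (Set.range (fun ij : Fin m × Fin m =>
      ζ ^ (ij.1:ℕ) * (algebraMap ℚ (splitField g m) g.den * α ^ (ij.2:ℕ))))
  have hfin : Fintype b := ((Set.finite_range _).subset hbt).fintype
  let e : Basis b ℚ (splitField g m) := Basis.mk hbl (by
    rw [Subtype.range_coe, hbs, h])
  have hζ1 : ζ ^ m = 1 := hζ.pow_eq_one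
  have hgd : (g.den : ℚ) * g = g.num := by
    rw [mul_comm]; exact Rat.mul_den_eq_num g
  refine discr_le_of_basis _ e ?_ _ ?_
  · intro i
    obtain ⟨ij, hij⟩ := hbt i.2
    have : e i = (i : splitField g m) := by simp [e]
    rw [this, ← hij]
    refine IsIntegral.mul (IsIntegral.pow (hζ.isIntegral hm) _) ?_
    refine IsIntegral.of_pow (n := m) hm ?_
    have : (algebraMap ℚ (splitField g m) g.den * α ^ (ij.2:ℕ)) ^ m =
        algebraMap ℤ (splitField g m) (g.num ^ (ij.2:ℕ) * g.den ^ (m - ij.2)) := by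
      have e1 : (α ^ (ij.2:ℕ)) ^ m = algebraMap ℚ _ (g ^ (ij.2:ℕ)) := by
        rw [← pow_mul, mul_comm, pow_mul, hα, map_pow]
      rw [mul_pow, e1, ← map_pow, ← map_mul, IsScalarTower.algebraMap_apply ℤ ℚ (splitField g m)]
      congr 1
      obtain ⟨c, hc⟩ : ∃ c : ℕ, m = ij.2 + c := ⟨m - ij.2, by have := ij.2.2; omega⟩
      have hc' : m - ij.2 = c := by omega
      rw [hc', eq_intCast]
      generalize (ij.2 : ℕ) = j at hc
      rw [hc]
      push_cast
      rw [← hgd]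
      ring
    rw [this]
    exact isIntegral_algebraMap
  · intro σ i
    obtain ⟨ij, hij⟩ := hbt i.2
    have : e i = (i : splitField g m) := by simp [e]
    rw [this, ← hij]
    have e1 : ‖σ ζ‖ = 1 := by
      refine (pow_eq_one_iff_of_nonneg (norm_nonneg _) (by omega : m ≠ 0)).mp ?_
      rw [← norm_pow, ← map_pow, hζ1]; simp
    have e2 : ‖σ α‖ ^ m = |(g:ℝ)| := by
      rw [← norm_pow, ← map_pow, hα, AlgHom.commutes, eq_ratCast, ← Real.norm_eq_abs,
        ← Complex.norm_real]
      simp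
    have e3 : ‖σ α‖ ^ (ij.2:ℕ) ≤ max 1 |(g:ℝ)| := by
      rcases le_total ‖σ α‖ 1 with h | h
      · exact (pow_le_one₀ (norm_nonneg _) h).trans (le_max_left _ _)
      · exact (pow_le_pow_right₀ h ij.2.2.le).trans (e2.le.trans (le_max_right _ _))
    rw [map_mul, map_mul, map_pow, map_pow, norm_mul, norm_mul, norm_pow, norm_pow, e1, one_pow,
      one_mul, AlgHom.commutes]
    unfold hgt
    have : ‖algebraMap ℚ ℂ (g.den:ℚ)‖ = (g.den:ℝ) := by simp
    rw [this]
    exact mul_le_mul_of_nonneg_left e3 (by positivity)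

/-- The size of the splitting field of `X^m - g` is `O([K : ℚ] (1 + log m))`. -/
lemma sz_split_le (hg : g ≠ 0) (hm : 1 ≤ m) :
    sz (splitField g m) ≤ nn (splitField g m) * (1 + 4 * Real.log m + 2 * Real.log (hgt g)) := by
  have h1 := discr_split_le hg hm
  have h2 := finrank_split_le hg hm
  have hn1 : 0 < finrank ℚ (splitField g m) := finrank_pos
  have hd := discr_abs_pos (splitField g m)
  have hH := one_le_hgt g
  unfold sz nn
  set n := finrank ℚ (splitField g m)
  have h3 := Real.log_le_log hd h1
  have hf : (0:ℝ) < (n.factorial : ℝ) := by positivity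
  rw [Real.log_pow, Real.log_mul hf.ne' (by positivity), Real.log_pow] at h3
  have h4 : Real.log n.factorial ≤ n * Real.log n := by
    rw [← Real.log_pow]
    exact Real.log_le_log hf (by exact_mod_cast Nat.factorial_le_pow n)
  have h5 : Real.log n ≤ 2 * Real.log m := by
    have : (n:ℝ) ≤ (m:ℝ) ^ 2 := by exact_mod_cast h2
    have := Real.log_le_log (by exact_mod_cast hn1) this
    rw [Real.log_pow] at this
    exact_mod_cast this
  have hn : (0:ℝ) ≤ n := by positivity
  have := mul_le_mul_of_nonneg_left h5 hn
  push_cast at h3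
  nlinarith

end DiscrBound
end Hooley

/-! ### A lower bound for the degree of the splitting field -/

namespace Hooley

open NumberField NumberField.Units NumberField.Units.dirichletUnitTheorem Module MeasureTheory
open scoped nonZeroDivisors ENNReal

section Degree

/-- An abelian extension of `B` that contains the `q`-th roots of unity, `q` an odd prime with
`Φ_q` irreducible over `B`,
contains no `q`-th root of an element of `B` that is not already a `q`-th power in `B`: otherwise
the field generated by such a root would be normal of degree `q` and contain `B(ζ_q)`, of degree
`q - 1`. -/
lemma no_root_of_abelian (B F : Type) [Field B] [CharZero B] [Field F] [Algebra B F]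
    [IsAbelianGalois B F]
    {q : ℕ} (hcyc : Irreducible (cyclotomic q B)) (hq : q.Prime) (hq2 : q ≠ 2) {z : F} (hz : IsPrimitiveRoot z q) {g : B}
    (hg0 : g ≠ 0) (hg : ∀ r : B, r ^ q ≠ g) (b : F) : b ^ q ≠ algebraMap B F g := by
  intro hb
  have : NeZero q := ⟨hq.ne_zero⟩
  have hcz : CharZero F := charZero_of_injective_algebraMap (algebraMap B F).injective
  have hirr := X_pow_sub_C_irreducible_of_prime hq hg
  have hmon : (X ^ q - C g).Monic := monic_X_pow_sub_C _ hq.ne_zero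
  have hmin : X ^ q - C g = minpoly B b :=
    minpoly.eq_of_irreducible_of_monic hirr (by simp [hb]) hmon
  have hbi : IsIntegral B b := ⟨_, hmon, by simp [hb]⟩
  have hfr : finrank B (IntermediateField.adjoin B {b}) = q := by
    rw [IntermediateField.adjoin.finrank hbi, ← hmin, natDegree_X_pow_sub_C]
  have hfd : FiniteDimensional B (IntermediateField.adjoin B {b}) :=
    IntermediateField.adjoin.finiteDimensional hbi
  have hab : IsAbelianGalois B (IntermediateField.adjoin B {b}) := inferInstance
  have hnorm : Normal B (IntermediateField.adjoin B {b}) := inferInstance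
  have hs1 := hnorm.splits (IntermediateField.AdjoinSimple.gen B b)
  rw [IntermediateField.minpoly_gen, ← hmin] at hs1
  have hs2 : ((X ^ q - C g).map (algebraMap B F)).Splits :=
    Splits.of_isScalarTower F hs1
  have hb0 : b ≠ 0 := by
    rintro rfl
    rw [zero_pow hq.ne_zero] at hb
    exact hg0 ((map_eq_zero _).mp hb.symm)
  have h1 : z * b ∈ IntermediateField.adjoin B {b} := by
    refine (IntermediateField.splits_iff_mem hs2).mp hs1 _ ?_
    rw [mem_rootSet_of_ne hmon.ne_zero]
    simp [mul_pow, hz.pow_eq_one, hb]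
  have hbm : b ∈ IntermediateField.adjoin B {b} := IntermediateField.mem_adjoin_simple_self B b
  have h2 : z ∈ IntermediateField.adjoin B {b} := by
    have := div_mem h1 hbm
    rwa [mul_div_cancel_right₀ _ hb0] at this
  have hz' : IsPrimitiveRoot (⟨z, h2⟩ : IntermediateField.adjoin B {b}) q :=
    IsPrimitiveRoot.of_map_of_injective (f := algebraMap (IntermediateField.adjoin B {b}) F)
      hz (algebraMap (IntermediateField.adjoin B {b}) F).injective
  have h3 := minpoly.degree_dvd (K := B) (x := (⟨z, h2⟩ : IntermediateField.adjoin B {b}))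
    (IsIntegral.of_finite _ _)
  rw [← hz'.minpoly_eq_cyclotomic_of_irreducible hcyc, natDegree_cyclotomic, Nat.totient_prime hq, hfr] at h3
  rcases (Nat.dvd_prime hq).mp h3 with h | h
  · omega
  · have := hq.pos; omega

/-- The exponents `q` for which `g` can be a `q`-th power are the divisors of some nonzero
valuation. -/
lemma exists_val {g : ℚ} (hg₁ : g ≠ -1) (hg₂ : g ≠ 0) (hg₃ : g ≠ 1) :
    ∃ v : ℕ, 0 < v ∧ ∀ q : ℕ, ∀ r : ℚ, r ^ q = g → q ∣ v := by
  obtain ⟨l, hl, hv⟩ : ∃ l : ℕ, l.Prime ∧ padicValRat l g ≠ 0 := by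
    by_contra! hcon
    have hco := g.reduced
    have hz : ∀ l : ℕ, l.Prime → ¬ l ∣ g.den ∧ ¬ l ∣ g.num.natAbs := by
      intro l hl
      have : Fact l.Prime := ⟨hl⟩
      have h := hcon l hl
      unfold padicValRat padicValInt at h
      have e : padicValNat l g.num.natAbs = padicValNat l g.den := by omega
      have hn : g.num.natAbs ≠ 0 := by simpa using hg₂
      have i1 := dvd_iff_padicValNat_ne_zero (p := l) hn
      have i2 := dvd_iff_padicValNat_ne_zero (p := l) g.den_ne_zero
      rw [e, ← i2] at i1
      by_cases hd : l ∣ g.den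
      · exact absurd (Nat.dvd_gcd (i1.mpr hd) hd) (by
          rw [hco.gcd_eq_one]; exact hl.one_lt.ne' ∘ Nat.dvd_one.mp)
      · exact ⟨hd, fun h => hd (i1.mp h)⟩
    have h1 : g.den = 1 := by
      by_contra h
      obtain ⟨l, hl, hd⟩ := Nat.exists_prime_and_dvd h
      exact (hz l hl).1 hd
    have h2 : g.num.natAbs = 1 := by
      by_contra h
      obtain ⟨l, hl, hd⟩ := Nat.exists_prime_and_dvd h
      exact (hz l hl).2 hd
    have h3 : g = g.num := by
      conv_lhs => rw [← Rat.num_div_den g, h1]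
      simp
    rcases Int.natAbs_eq g.num with h | h
    · rw [h2] at h; exact hg₃ (by rw [h3, h]; simp)
    · rw [h2] at h; exact hg₁ (by rw [h3, h]; simp)
  have : Fact l.Prime := ⟨hl⟩
  refine ⟨(padicValRat l g).natAbs, Int.natAbs_pos.mpr hv, ?_⟩
  rintro q r rfl
  rw [padicValRat.pow]
  simp [Int.natAbs_mul]

variable {g : ℚ} {m : ℕ}

/-- For squarefree `k ∣ m` the degree of `ℚ(ζ_m, g^{1/m})` is at least `k φ(k) / (2 v)`. -/
lemma finrank_split_ge (hg : g ≠ 0) (hm : 1 ≤ m) {v : ℕ} (hv0 : 0 < v)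
    (hv : ∀ q : ℕ, ∀ r : ℚ, r ^ q = g → q ∣ v) {k : ℕ} (hk : Squarefree k) (hkm : k ∣ m) :
    k * k.totient ≤ 2 * v * finrank ℚ (splitField g m) := by
  have hk0 : 0 < k := Nat.pos_of_dvd_of_pos hkm hm
  have : NeZero k := ⟨hk0.ne'⟩
  obtain ⟨ζ, hζ⟩ := exists_prim_split hg hm
  obtain ⟨α, hα⟩ := exists_root_split (g := g) hm
  have hζk : IsPrimitiveRoot (ζ ^ (m / k)) k :=
    hζ.pow hm (Nat.div_mul_cancel hkm).symm
  set F := IntermediateField.adjoin ℚ {ζ ^ (m / k)} with hF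
  have hcyc : IsCyclotomicExtension {k} ℚ F :=
    hζk.intermediateField_adjoin_isCyclotomicExtension ℚ
  have hab : IsAbelianGalois ℚ F := IsCyclotomicExtension.isAbelianGalois {k} ℚ F
  have hfF : finrank ℚ F = k.totient :=
    IsCyclotomicExtension.finrank F (cyclotomic.irreducible_rat hk0)
  have htow := Module.finrank_mul_finrank ℚ F (splitField g m)
  have hpos : 0 < finrank F (splitField g m) := finrank_pos
  have hdvd : k ∣ 2 * v * finrank F (splitField g m) := by
    rw [← Nat.prod_primeFactors_of_squarefree hk]
    refine Finset.prod_primes_dvd _ (fun q hq => (Nat.prime_of_mem_primeFactors hq).prime) ?_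
    intro q hq
    have hqp := Nat.prime_of_mem_primeFactors hq
    have hqk := Nat.dvd_of_mem_primeFactors hq
    by_cases hq2 : q = 2
    · subst hq2; exact (dvd_mul_right 2 v).mul_right _
    by_cases hr : ∃ r : ℚ, r ^ q = g
    · obtain ⟨r, hr⟩ := hr
      exact ((hv q r hr).mul_left 2).mul_right _
    · push Not at hr
      have hzF : ζ ^ (m / k) ∈ F := IntermediateField.mem_adjoin_simple_self ℚ _
      have hz0 : IsPrimitiveRoot (⟨_, hzF⟩ : F) k :=
        IsPrimitiveRoot.of_map_of_injective (f := algebraMap F (splitField g m))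
          hζk (algebraMap F (splitField g m)).injective
      have hz1 : IsPrimitiveRoot ((⟨_, hzF⟩ : F) ^ (k / q)) q :=
        hz0.pow hk0 (Nat.div_mul_cancel hqk).symm
      have hno := no_root_of_abelian ℚ F (cyclotomic.irreducible_rat hqp.pos) hqp hq2 hz1 hg hr
      have hirr := X_pow_sub_C_irreducible_of_prime hqp hno
      have hqm : m / q * q = m := Nat.div_mul_cancel (hqk.trans hkm)
      have hroot : aeval (α ^ (m / q)) (X ^ q - C (algebraMap ℚ F g)) = 0 := by
        simp only [map_sub, map_pow, aeval_X, aeval_C]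
        rw [← pow_mul, hqm, hα, ← IsScalarTower.algebraMap_apply, sub_self]
      have hmin := minpoly.eq_of_irreducible_of_monic hirr hroot
        (monic_X_pow_sub_C _ hqp.ne_zero)
      have := minpoly.degree_dvd (K := F) (x := α ^ (m / q)) (IsIntegral.of_finite _ _)
      rw [← hmin, natDegree_X_pow_sub_C] at this
      exact this.mul_left _
  have hle := Nat.le_of_dvd (by positivity) hdvd
  rw [← htow, hfF]
  calc k * k.totient ≤ (2 * v * finrank F (splitField g m)) * k.totient := Nat.mul_le_mul_right _ hle
    _ = _ := by ring

end Degree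
end Hooley

/-! ### Coefficients and tails of the density series -/

namespace Hooley

open NumberField NumberField.Units NumberField.Units.dirichletUnitTheorem Module MeasureTheory
open scoped nonZeroDivisors ENNReal

section Tail

lemma prod_sub_one_mul_ge (S : Finset ℕ) (hS : ∀ p ∈ S, 2 ≤ p) :
    ∏ p ∈ S, p ≤ (S.card + 1) * ∏ p ∈ S, (p - 1) := by
  induction S using Finset.induction_on_max with
  | empty => simp
  | insert a S hlt ih =>
    have ha : a ∉ S := fun h => (hlt a h).false
    have ih' := ih (fun p hp => hS p (Finset.mem_insert_of_mem hp))
    have hcard : S.card ≤ a - 2 := by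
      have hsub : S ⊆ Finset.Ico 2 a := fun p hp =>
        Finset.mem_Ico.mpr ⟨hS p (Finset.mem_insert_of_mem hp), hlt p hp⟩
      simpa using Finset.card_le_card hsub
    have ha2 := hS a (Finset.mem_insert_self _ _)
    rw [Finset.prod_insert ha, Finset.prod_insert ha, Finset.card_insert_of_notMem ha]
    obtain ⟨b, rfl⟩ : ∃ b, a = b + 2 := ⟨a - 2, by omega⟩
    have e : b + 2 - 1 = b + 1 := by omega
    rw [e]
    have : (b + 2) * (S.card + 1) ≤ (S.card + 1 + 1) * (b + 1) := by
      have : S.card ≤ b := by omega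
      nlinarith
    calc (b + 2) * ∏ p ∈ S, p ≤ (b + 2) * ((S.card + 1) * ∏ p ∈ S, (p - 1)) :=
          Nat.mul_le_mul_left _ ih'
      _ = ((b + 2) * (S.card + 1)) * ∏ p ∈ S, (p - 1) := by ring
      _ ≤ ((S.card + 1 + 1) * (b + 1)) * ∏ p ∈ S, (p - 1) := Nat.mul_le_mul_right _ this
      _ = _ := by ring

/-- The elementary bound `k/φ(k) ≤ 1 + ω(k)`, with `ω(k) ≤ 2 log k`. -/
lemma le_totient_mul {k : ℕ} (hk : 0 < k) : (k : ℝ) ≤ k.totient * (1 + 2 * Real.log k) := by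
  have h1 := Nat.totient_mul_prod_primeFactors k
  have h2 := prod_sub_one_mul_ge k.primeFactors
    (fun p hp => (Nat.prime_of_mem_primeFactors hp).two_le)
  have hpos : 0 < ∏ p ∈ k.primeFactors, (p - 1) := Finset.prod_pos fun p hp => by
    have := (Nat.prime_of_mem_primeFactors hp).two_le; omega
  have h3 : k ≤ k.totient * (k.primeFactors.card + 1) := by
    refine Nat.le_of_mul_le_mul_right ?_ hpos
    calc k * ∏ p ∈ k.primeFactors, (p - 1) = k.totient * ∏ p ∈ k.primeFactors, p := h1.symm
      _ ≤ k.totient * ((k.primeFactors.card + 1) * ∏ p ∈ k.primeFactors, (p - 1)) :=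
        Nat.mul_le_mul_left _ h2
      _ = _ := by ring
  have h4 : 2 ^ k.primeFactors.card ≤ k :=
    (Finset.pow_card_le_prod _ _ _ fun p hp => (Nat.prime_of_mem_primeFactors hp).two_le).trans
      (Nat.le_of_dvd hk (Nat.prod_primeFactors_dvd k))
  have h5 : (k.primeFactors.card : ℝ) * Real.log 2 ≤ Real.log k := by
    rw [← Real.log_pow]
    exact Real.log_le_log (by positivity) (by exact_mod_cast h4)
  have h6 : (k.primeFactors.card : ℝ) ≤ 2 * Real.log k := by
    have := Real.log_two_gt_d9
    have : (0:ℝ) ≤ k.primeFactors.card := by positivity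
    nlinarith
  calc (k:ℝ) ≤ k.totient * (k.primeFactors.card + 1) := by exact_mod_cast h3
    _ ≤ _ := by
      refine mul_le_mul_of_nonneg_left ?_ (by positivity)
      linarith

lemma tail_step {k : ℕ} (hk : 1 ≤ k) : (1 + Real.log ((k + 1 : ℕ) : ℝ)) / ((k + 1 : ℕ) : ℝ) ^ 2 ≤
    (Real.log k + 3) / k - (Real.log ((k + 1 : ℕ) : ℝ) + 3) / ((k + 1 : ℕ) : ℝ) := by
  have hk0 : (1:ℝ) ≤ k := by exact_mod_cast hk
  push_cast
  have h1 : Real.log ((k:ℝ) + 1) ≤ Real.log k + 1 / k := by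
    have : ((k:ℝ) + 1) = k * (1 + 1 / k) := by field_simp
    rw [this, Real.log_mul (by positivity) (by positivity)]
    have := Real.log_le_sub_one_of_pos (show (0:ℝ) < 1 + 1 / k by positivity)
    linarith
  have hL : 0 ≤ Real.log ((k:ℝ) + 1) := Real.log_nonneg (by linarith)
  set L := Real.log ((k:ℝ) + 1)
  have h2 : (L - 1 / k + 3) / k ≤ (Real.log k + 3) / k := by
    gcongr; linarith
  refine le_trans ?_ (sub_le_sub_right h2 _)
  rw [← sub_nonneg]
  have : (L - 1 / (k:ℝ) + 3) / k - (L + 3) / (k + 1) - (1 + L) / (k + 1) ^ 2 =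
      ((L + 1) * k + (k + 1) * (k - 1)) / (k ^ 2 * (k + 1) ^ 2) := by
    field_simp
    ring
  rw [this]
  have : 0 ≤ (k:ℝ) - 1 := by linarith
  positivity

/-- The terms are compared with the telescoping differences of `(log N + 3)/N`. -/
lemma tail_sum {N : ℕ} (hN : 1 ≤ N) (T : Finset ℕ) (hT : ∀ k ∈ T, N < k) :
    ∑ k ∈ T, (1 + Real.log k) / (k:ℝ) ^ 2 ≤ (Real.log N + 3) / N := by
  have hnn : ∀ k : ℕ, 0 ≤ (1 + Real.log k) / (k:ℝ) ^ 2 := fun k => by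
    have := Real.log_natCast_nonneg k
    positivity
  have key : ∀ M, ∑ i ∈ Finset.range M, (1 + Real.log ((N + i + 1 : ℕ):ℝ)) / ((N + i + 1 : ℕ):ℝ) ^ 2
      ≤ (Real.log N + 3) / N - (Real.log ((N + M : ℕ):ℝ) + 3) / ((N + M : ℕ):ℝ) := by
    intro M
    induction M with
    | zero => simp
    | succ M ih =>
      rw [Finset.sum_range_succ]
      have := tail_step (k := N + M) (by omega)
      rw [← add_assoc]
      linarith
  obtain ⟨M, hM⟩ : ∃ M, ∀ k ∈ T, k ≤ M := ⟨T.sup id, fun k hk => Finset.le_sup (f := id) hk⟩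
  have hsub : T ⊆ (Finset.range M).image (fun i => N + i + 1) := by
    intro k hk
    have := hT k hk
    have := hM k hk
    exact Finset.mem_image.mpr ⟨k - N - 1, Finset.mem_range.mpr (by omega), by omega⟩
  calc _ ≤ ∑ k ∈ (Finset.range M).image (fun i => N + i + 1), (1 + Real.log k) / (k:ℝ) ^ 2 :=
        Finset.sum_le_sum_of_subset_of_nonneg hsub fun _ _ _ => hnn _
    _ = ∑ i ∈ Finset.range M, (1 + Real.log ((N + i + 1 : ℕ):ℝ)) / ((N + i + 1 : ℕ):ℝ) ^ 2 :=
        Finset.sum_image (by intro a _ b _ h; simpa using h)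
    _ ≤ _ := (key M).trans (by
        have := Real.log_natCast_nonneg (N + M)
        have : 0 ≤ (Real.log ((N + M : ℕ):ℝ) + 3) / ((N + M : ℕ):ℝ) := by positivity
        linarith)

/-- A series whose terms are `O((1 + log k) / k^2)` converges absolutely, and removing terms of
index greater than `N` changes it by `O(log N / N)`. -/
lemma tail_bound {w : ℕ → ℝ} {c : ℝ} (hc : 0 ≤ c)
    (hw : ∀ k, |w k| ≤ c * ((1 + Real.log k) / (k:ℝ) ^ 2)) :
    Summable w ∧ ∀ N : ℕ, 1 ≤ N → ∀ D : Finset ℕ, (∀ k, k ≤ N → k ∉ D → w k = 0) →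
      |∑' k, w k - ∑ k ∈ D, w k| ≤ c * ((Real.log N + 3) / N) := by
  have hfin : ∀ N : ℕ, 1 ≤ N → ∀ T : Finset ℕ, (∀ k ∈ T, N < k) →
      ∑ k ∈ T, |w k| ≤ c * ((Real.log N + 3) / N) := by
    intro N hN T hT
    calc ∑ k ∈ T, |w k| ≤ ∑ k ∈ T, c * ((1 + Real.log k) / (k:ℝ) ^ 2) :=
          Finset.sum_le_sum fun k _ => hw k
      _ ≤ _ := by
        rw [← Finset.mul_sum]
        exact mul_le_mul_of_nonneg_left (tail_sum hN T hT) hc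
  have hs : Summable w := by
    refine Summable.of_norm ?_
    refine summable_of_sum_le (c := |w 0| + |w 1| + c * ((Real.log (1:ℕ) + 3) / (1:ℕ)))
      (fun _ => norm_nonneg _) fun T => ?_
    have h1 : ∑ k ∈ T, ‖w k‖ ≤ ∑ k ∈ ({0, 1} : Finset ℕ) ∪ T.filter (1 < ·), ‖w k‖ := by
      refine Finset.sum_le_sum_of_subset_of_nonneg ?_ fun _ _ _ => norm_nonneg _
      intro k hk
      simp only [Finset.mem_union, Finset.mem_insert, Finset.mem_singleton, Finset.mem_filter]
      by_cases h : 1 < k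
      · exact Or.inr ⟨hk, h⟩
      · left; omega
    refine h1.trans ?_
    rw [Finset.sum_union (by
      rw [Finset.disjoint_left]; intro k hk hk'
      simp only [Finset.mem_insert, Finset.mem_singleton, Finset.mem_filter] at hk hk'
      omega)]
    have h2 := hfin 1 le_rfl (T.filter (1 < ·)) (by simp)
    have h3 : ∑ k ∈ ({0, 1} : Finset ℕ), ‖w k‖ = |w 0| + |w 1| := by
      rw [Finset.sum_pair (by norm_num)]; rfl
    rw [h3]
    exact add_le_add le_rfl h2
  refine ⟨hs, fun N hN D hD => ?_⟩
  have hlim : Tendsto (fun S : Finset ℕ => |∑ k ∈ S, w k - ∑ k ∈ D, w k|) atTop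
      (nhds |∑' k, w k - ∑ k ∈ D, w k|) := (hs.hasSum.sub_const _).abs
  refine le_of_tendsto hlim ?_
  filter_upwards [eventually_ge_atTop D] with S hS
  rw [← Finset.sum_sdiff hS, add_sub_cancel_right]
  have h1 : ∑ k ∈ S \ D, w k = ∑ k ∈ (S \ D).filter (N < ·), w k := by
    refine (Finset.sum_filter_of_ne ?_).symm
    intro k hk hne
    by_contra hcon
    exact hne (hD k (by omega) (Finset.mem_sdiff.mp hk).2)
  rw [h1]
  exact (Finset.abs_sum_le_sum_abs _ _).trans (hfin N hN _ (by simp))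

variable {g : ℚ} {t : ℕ}

/-- The coefficients of the density series are `O((1 + log k) / k^2)`. -/
lemma coeff_bound (hg₁ : g ≠ -1) (hg₂ : g ≠ 0) (hg₃ : g ≠ 1) (ht : 1 ≤ t) :
    ∃ c : ℝ, 0 < c ∧ ∀ k : ℕ, Squarefree k →
      1 / nn (splitField g (k * t)) ≤ c * ((1 + Real.log k) / (k:ℝ) ^ 2) := by
  obtain ⟨v, hv0, hv⟩ := exists_val hg₁ hg₂ hg₃
  have hv0' : (0:ℝ) < v := by exact_mod_cast hv0
  refine ⟨4 * v, by positivity, fun k hk => ?_⟩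
  have hk0 : 0 < k := Nat.pos_of_ne_zero hk.ne_zero
  have hkt : 1 ≤ k * t := Nat.mul_pos hk0 ht
  have h1 := finrank_split_ge hg₂ hkt hv0 hv hk (dvd_mul_right k t)
  have h2 := le_totient_mul hk0
  have hkr : (0:ℝ) < k := by exact_mod_cast hk0
  have hn : 0 < nn (splitField g (k * t)) := nn_pos
  have h1' : (k:ℝ) * k.totient ≤ 2 * v * nn (splitField g (k * t)) := by exact_mod_cast h1
  have hL := Real.log_natCast_nonneg k
  rw [← mul_div_assoc, div_le_div_iff₀ hn (by positivity), one_mul]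
  have h3 : (k:ℝ) ^ 2 ≤ 2 * v * nn (splitField g (k * t)) * (1 + 2 * Real.log k) := by
    calc (k:ℝ) ^ 2 = k * k := by ring
      _ ≤ k * (k.totient * (1 + 2 * Real.log k)) := mul_le_mul_of_nonneg_left h2 hkr.le
      _ = (k * k.totient) * (1 + 2 * Real.log k) := by ring
      _ ≤ _ := mul_le_mul_of_nonneg_right h1' (by positivity)
  have : 0 ≤ v * nn (splitField g (k * t)) := by positivity
  nlinarith

end Tail
end Hooley

/-! ### Selberg's weights -/

namespace Hooley

open NumberField NumberField.Units NumberField.Units.dirichletUnitTheorem Module MeasureTheory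
open scoped nonZeroDivisors ENNReal

section Selberg

/-- The squarefree integers in `[1, R]`. -/
def sqf (R : ℕ) : Finset ℕ := (Finset.Icc 1 R).filter Squarefree

lemma mem_sqf {R d : ℕ} : d ∈ sqf R ↔ (1 ≤ d ∧ d ≤ R) ∧ Squarefree d := by
  simp [sqf]

/-- The normalising sum `∑ 1/φ(l)` of Selberg's sieve. -/
noncomputable def selS (R : ℕ) : ℝ := ∑ l ∈ sqf R, 1 / (l.totient : ℝ)

/-- Selberg's weights. -/
noncomputable def lam (R d : ℕ) : ℝ :=
  d * (ArithmeticFunction.moebius d : ℝ) / selS R *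
    ∑ l ∈ (sqf R).filter (d ∣ ·), 1 / (l.totient : ℝ)

variable {R : ℕ}

lemma selS_pos (hR : 1 ≤ R) : 0 < selS R := by
  refine Finset.sum_pos (fun l hl => ?_) ⟨1, mem_sqf.mpr ⟨⟨le_rfl, hR⟩, squarefree_one⟩⟩
  have : 0 < l.totient := Nat.totient_pos.mpr (mem_sqf.mp hl).1.1
  positivity

/-- `∑_{n ≤ R} 1/n` factors through the squarefree part of `n`, so half of `log R` is a lower
bound for the normalising sum. -/
lemma selS_ge (hR : 1 ≤ R) : Real.log R ≤ 2 * selS R := by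
  have h1 : Real.log R ≤ ∑ n ∈ Finset.Icc 1 R, ((n:ℝ))⁻¹ := by
    have := log_add_one_le_harmonic R
    have h2 : Real.log R ≤ Real.log ((R + 1 : ℕ):ℝ) :=
      Real.log_le_log (by exact_mod_cast hR) (by exact_mod_cast Nat.le_succ R)
    refine h2.trans (this.trans (le_of_eq ?_))
    rw [harmonic_eq_sum_Icc]
    push_cast
    rfl
  have hsq : ∑ b ∈ Finset.Icc 1 R, ((b:ℝ) ^ 2)⁻¹ ≤ 2 := by
    have : ∀ M : ℕ, 1 ≤ M → ∑ b ∈ Finset.Icc 1 M, ((b:ℝ) ^ 2)⁻¹ ≤ 2 - 1 / M := by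
      intro M hM
      induction M, hM using Nat.le_induction with
      | base => norm_num
      | succ M hM ih =>
        rw [Finset.sum_Icc_succ_top (by omega)]
        have hM' : (1:ℝ) ≤ M := by exact_mod_cast hM
        push_cast
        have : ((M:ℝ) + 1) ^ 2 ≥ M * (M + 1) := by nlinarith
        have h3 : (((M:ℝ) + 1) ^ 2)⁻¹ ≤ (M * (M + 1) : ℝ)⁻¹ := by gcongr
        have h4 : ((M:ℝ) * (M + 1) : ℝ)⁻¹ = 1 / M - 1 / (M + 1) := by field_simp; ring
        linarith
    have h5 := this R hR
    have : (0:ℝ) ≤ 1 / R := by positivity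
    linarith
  have h6 : ∑ n ∈ Finset.Icc 1 R, ((n:ℝ))⁻¹ ≤
      ∑ ab ∈ sqf R ×ˢ Finset.Icc 1 R, ((ab.1:ℝ))⁻¹ * ((ab.2:ℝ) ^ 2)⁻¹ := by
    have hex : ∀ n : ℕ, ∃ ab : ℕ × ℕ, ab.2 ^ 2 * ab.1 = n ∧ Squarefree ab.1 := fun n => by
      obtain ⟨a, b, h, hs⟩ := Nat.sq_mul_squarefree n
      exact ⟨(a, b), h, hs⟩
    choose f hf hfs using hex
    have hinj : Set.InjOn f (Finset.Icc 1 R : Finset ℕ) := fun a _ b _ h => by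
      rw [← hf a, ← hf b, h]
    have : ∑ n ∈ Finset.Icc 1 R, ((n:ℝ))⁻¹ =
        ∑ ab ∈ (Finset.Icc 1 R).image f, ((ab.1:ℝ))⁻¹ * ((ab.2:ℝ) ^ 2)⁻¹ := by
      rw [Finset.sum_image hinj]
      refine Finset.sum_congr rfl fun n _ => ?_
      conv_lhs => rw [← hf n]
      push_cast
      rw [mul_inv, mul_comm]
    rw [this]
    refine Finset.sum_le_sum_of_subset_of_nonneg ?_ fun _ _ _ => by positivity
    intro ab hab
    obtain ⟨n, hn, rfl⟩ := Finset.mem_image.mp hab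
    have hn' := Finset.mem_Icc.mp hn
    have e := hf n
    have h1 : 0 < (f n).1 := Nat.pos_of_ne_zero fun h => by rw [h] at e; omega
    have h2 : 0 < (f n).2 := Nat.pos_of_ne_zero fun h => by rw [h] at e; simp at e; omega
    have h3 : (f n).1 ≤ n := by
      calc (f n).1 = 1 * (f n).1 := (one_mul _).symm
        _ ≤ (f n).2 ^ 2 * (f n).1 := Nat.mul_le_mul_right _ (Nat.one_le_pow _ _ h2)
        _ = n := e
    have h4 : (f n).2 ≤ n := by
      calc (f n).2 ≤ (f n).2 ^ 2 := Nat.le_self_pow two_ne_zero _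
        _ = (f n).2 ^ 2 * 1 := (mul_one _).symm
        _ ≤ (f n).2 ^ 2 * (f n).1 := Nat.mul_le_mul_left _ h1
        _ = n := e
    exact Finset.mem_product.mpr ⟨mem_sqf.mpr ⟨⟨h1, by omega⟩, hfs n⟩,
      Finset.mem_Icc.mpr ⟨h2, by omega⟩⟩
  rw [Finset.sum_product] at h6
  dsimp only at h6
  rw [← Finset.sum_mul_sum] at h6
  have h7 : ∑ a ∈ sqf R, ((a:ℝ))⁻¹ ≤ selS R := by
    refine Finset.sum_le_sum fun a ha => ?_
    rw [one_div]
    have : 0 < a.totient := Nat.totient_pos.mpr (mem_sqf.mp ha).1.1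
    exact inv_anti₀ (by exact_mod_cast this) (by exact_mod_cast Nat.totient_le a)
  have h8 : 0 ≤ ∑ a ∈ sqf R, ((a:ℝ))⁻¹ := Finset.sum_nonneg fun _ _ => by positivity
  calc Real.log R ≤ _ := h1.trans h6
    _ ≤ (∑ a ∈ sqf R, ((a:ℝ))⁻¹) * 2 := mul_le_mul_of_nonneg_left hsq h8
    _ ≤ _ := by linarith

lemma lam_one (hR : 1 ≤ R) : lam R 1 = 1 := by
  have h := (selS_pos hR).ne'
  unfold lam
  have : (sqf R).filter (1 ∣ ·) = sqf R := Finset.filter_true_of_mem fun _ _ => one_dvd _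
  rw [this]
  simp only [ArithmeticFunction.moebius_apply_one]
  change _ * selS R = 1
  field_simp
  simp

/-- Selberg's weights are bounded, up to a logarithm, since the sum over the multiples of `d` is at most
`1/φ(d)` times the whole sum. -/
lemma lam_bound (hR : 1 ≤ R) {d : ℕ} (hd : d ∈ sqf R) : |lam R d| ≤ 1 + 2 * Real.log R := by
  have hS := selS_pos hR
  obtain ⟨⟨hd1, hdR⟩, hds⟩ := mem_sqf.mp hd
  have hφ : (0:ℝ) < d.totient := by exact_mod_cast Nat.totient_pos.mpr hd1
  have hsum : ∑ l ∈ (sqf R).filter (d ∣ ·), 1 / (l.totient : ℝ) ≤ 1 / d.totient * selS R := by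
    have hsub : (sqf R).filter (d ∣ ·) ⊆ (((sqf R).filter (fun e => d.Coprime e))).image (d * ·) := by
      intro l hl
      obtain ⟨hl, e, rfl⟩ := Finset.mem_filter.mp hl
      obtain ⟨⟨h1, h2⟩, h3⟩ := mem_sqf.mp hl
      have he0 : 0 < e := Nat.pos_of_ne_zero (by rintro rfl; simp at h1)
      refine Finset.mem_image.mpr ⟨e, Finset.mem_filter.mpr ⟨mem_sqf.mpr ⟨⟨he0, ?_⟩, ?_⟩, ?_⟩, rfl⟩
      · exact (Nat.le_mul_of_pos_left e hd1).trans h2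
      · exact h3.squarefree_of_dvd (dvd_mul_left _ _)
      · exact (Nat.squarefree_mul_iff.mp h3).1
    calc _ ≤ ∑ l ∈ (((sqf R).filter (fun e => d.Coprime e))).image (d * ·), 1 / (l.totient : ℝ) :=
          Finset.sum_le_sum_of_subset_of_nonneg hsub fun _ _ _ => by positivity
      _ = ∑ e ∈ (sqf R).filter (fun e => d.Coprime e), 1 / ((d * e).totient : ℝ) :=
          Finset.sum_image (by intro a _ b _ h; exact Nat.eq_of_mul_eq_mul_left hd1 h)
      _ = ∑ e ∈ (sqf R).filter (fun e => d.Coprime e), 1 / d.totient * (1 / (e.totient : ℝ)) := by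
          refine Finset.sum_congr rfl fun e he => ?_
          rw [Nat.totient_mul (Finset.mem_filter.mp he).2]
          push_cast
          rw [one_div_mul_one_div]
      _ ≤ ∑ e ∈ sqf R, 1 / d.totient * (1 / (e.totient : ℝ)) :=
          Finset.sum_le_sum_of_subset_of_nonneg (Finset.filter_subset _ _) fun _ _ _ => by positivity
      _ = _ := by rw [← Finset.mul_sum]; rfl
  have hnn : 0 ≤ ∑ l ∈ (sqf R).filter (d ∣ ·), 1 / (l.totient : ℝ) :=
    Finset.sum_nonneg fun _ _ => by positivity
  have hμ : |(ArithmeticFunction.moebius d : ℝ)| ≤ 1 := by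
    exact_mod_cast ArithmeticFunction.abs_moebius_le_one
  have hlog : Real.log d ≤ Real.log R :=
    Real.log_le_log (by exact_mod_cast hd1) (by exact_mod_cast hdR)
  have htot := le_totient_mul hd1
  unfold lam
  rw [abs_mul, abs_div, abs_mul, Nat.abs_cast, abs_of_pos hS, abs_of_nonneg hnn]
  calc _ ≤ (d * 1 / selS R) * (1 / d.totient * selS R) := by gcongr
    _ = d / d.totient := by field_simp
    _ ≤ 1 + 2 * Real.log d := by rw [div_le_iff₀ hφ]; linarith
    _ ≤ _ := by linarith

/-- `∑_{l ∣ d ∣ m} μ(d)` vanishes unless `m = l`. -/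
lemma moebius_interval {l m : ℕ} (hl : l ∈ sqf R) (hm : m ∈ sqf R) :
    ∑ d ∈ (sqf R).filter (fun d => l ∣ d ∧ d ∣ m), (ArithmeticFunction.moebius d : ℝ) =
      if m = l then (ArithmeticFunction.moebius l : ℝ) else 0 := by
  obtain ⟨⟨hl1, hlR⟩, hls⟩ := mem_sqf.mp hl
  obtain ⟨⟨hm1, hmR⟩, hms⟩ := mem_sqf.mp hm
  by_cases hlm : l ∣ m
  · obtain ⟨e, rfl⟩ := hlm
    have he0 : e ≠ 0 := by rintro rfl; simp at hm1
    have hset : (sqf R).filter (fun d => l ∣ d ∧ d ∣ l * e) = e.divisors.image (l * ·) := by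
      ext d
      simp only [Finset.mem_filter, Finset.mem_image, Nat.mem_divisors]
      constructor
      · rintro ⟨hd, ⟨f, rfl⟩, hdm⟩
        exact ⟨f, ⟨Nat.dvd_of_mul_dvd_mul_left hl1 hdm, he0⟩, rfl⟩
      · rintro ⟨f, ⟨hf, -⟩, rfl⟩
        have hdvd : l * f ∣ l * e := Nat.mul_dvd_mul_left l hf
        have hle := Nat.le_of_dvd hm1 hdvd
        have hpos := Nat.pos_of_dvd_of_pos hdvd hm1
        exact ⟨mem_sqf.mpr ⟨⟨hpos, by omega⟩, hms.squarefree_of_dvd hdvd⟩, dvd_mul_right _ _, hdvd⟩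
    have hcop : l.Coprime e := (Nat.squarefree_mul_iff.mp hms).1
    rw [hset, Finset.sum_image (by intro a _ b _ h; exact Nat.eq_of_mul_eq_mul_left hl1 h)]
    have : ∀ f ∈ e.divisors, (ArithmeticFunction.moebius (l * f) : ℝ) =
        (ArithmeticFunction.moebius l : ℝ) * (ArithmeticFunction.moebius f : ℝ) := by
      intro f hf
      rw [ArithmeticFunction.isMultiplicative_moebius.map_mul_of_coprime
        (hcop.coprime_dvd_right (Nat.dvd_of_mem_divisors hf))]
      push_cast; rfl
    rw [Finset.sum_congr rfl this, ← Finset.mul_sum]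
    have h2 : ∑ f ∈ e.divisors, (ArithmeticFunction.moebius f : ℝ) = if e = 1 then 1 else 0 := by
      have := congrArg (fun F : ArithmeticFunction ℤ => F e) ArithmeticFunction.moebius_mul_coe_zeta
      simp only [ArithmeticFunction.coe_mul_zeta_apply, ArithmeticFunction.one_apply] at this
      have h3 := congrArg (fun z : ℤ => (z : ℝ)) this
      push_cast at h3
      exact h3
    rw [h2]
    have : l * e = l ↔ e = 1 := by
      constructor
      · intro h; exact Nat.eq_of_mul_eq_mul_left hl1 (by rw [h, mul_one])
      · rintro rfl; exact mul_one l
    simp [this]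
  · have : (sqf R).filter (fun d => l ∣ d ∧ d ∣ m) = ∅ :=
      Finset.filter_eq_empty_iff.mpr fun d _ h => hlm (h.1.trans h.2)
    rw [this, if_neg (by rintro rfl; exact hlm dvd_rfl)]
    simp

/-- The diagonalising variables of Selberg's quadratic form; the inversion is Möbius inversion over multiples.
-/
lemma lam_dual (hR : 1 ≤ R) {l : ℕ} (hl : l ∈ sqf R) :
    ∑ d ∈ (sqf R).filter (l ∣ ·), lam R d / d =
      (ArithmeticFunction.moebius l : ℝ) / (selS R * l.totient) := by
  have hS := selS_pos hR
  have h1 : ∀ d ∈ (sqf R).filter (l ∣ ·), lam R d / d =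
      ∑ m ∈ sqf R, if d ∣ m then (ArithmeticFunction.moebius d : ℝ) / selS R * (1 / m.totient) else 0 := by
    intro d hd
    have hd0 : (d:ℝ) ≠ 0 := by
      have := (mem_sqf.mp (Finset.mem_filter.mp hd).1).1.1
      positivity
    rw [← Finset.sum_filter, ← Finset.mul_sum]
    unfold lam
    field_simp
  rw [Finset.sum_congr rfl h1, Finset.sum_comm]
  have h2 : ∀ m ∈ sqf R, (∑ d ∈ (sqf R).filter (l ∣ ·), if d ∣ m then
      (ArithmeticFunction.moebius d : ℝ) / selS R * (1 / m.totient) else 0) =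
      if m = l then (ArithmeticFunction.moebius l : ℝ) / (selS R * l.totient) else 0 := by
    intro m hm
    have := moebius_interval hl hm
    rw [← Finset.sum_filter, Finset.filter_filter, ← Finset.sum_mul, ← Finset.sum_div, this]
    split_ifs with h
    · subst h; field_simp
    · simp
  rw [Finset.sum_congr rfl h2, Finset.sum_ite_eq' (sqf R) l, if_pos hl]

/-- Selberg's weights diagonalise the quadratic form, whose value is `1 / selS R`. -/
lemma lam_form (hR : 1 ≤ R) :
    ∑ d₁ ∈ sqf R, ∑ d₂ ∈ sqf R, lam R d₁ * lam R d₂ / (Nat.lcm d₁ d₂ : ℝ) = 1 / selS R := by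
  have hS := selS_pos hR
  have h1 : ∀ d₁ ∈ sqf R, ∀ d₂ ∈ sqf R, lam R d₁ * lam R d₂ / (Nat.lcm d₁ d₂ : ℝ) =
      ∑ l ∈ sqf R, (l.totient : ℝ) * ((if l ∣ d₁ then lam R d₁ / d₁ else 0) *
        (if l ∣ d₂ then lam R d₂ / d₂ else 0)) := by
    intro d₁ h₁ d₂ h₂
    obtain ⟨⟨a1, a2⟩, a3⟩ := mem_sqf.mp h₁
    obtain ⟨⟨b1, b2⟩, b3⟩ := mem_sqf.mp h₂
    have hg : (Nat.gcd d₁ d₂ : ℝ) = ∑ l ∈ sqf R, if l ∣ d₁ ∧ l ∣ d₂ then (l.totient : ℝ) else 0 := by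
      rw [← Finset.sum_filter]
      have hset : (sqf R).filter (fun l => l ∣ d₁ ∧ l ∣ d₂) = (Nat.gcd d₁ d₂).divisors := by
        ext l
        simp only [Finset.mem_filter, Nat.mem_divisors, Nat.dvd_gcd_iff]
        constructor
        · rintro ⟨-, h⟩
          exact ⟨h, (Nat.gcd_pos_of_pos_left _ a1).ne'⟩
        · rintro ⟨h, -⟩
          have := Nat.le_of_dvd a1 h.1
          exact ⟨mem_sqf.mpr ⟨⟨Nat.pos_of_dvd_of_pos h.1 a1, by omega⟩,
            a3.squarefree_of_dvd h.1⟩, h⟩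
      rw [hset]
      exact_mod_cast (Nat.sum_totient _).symm
    have hgl : (Nat.gcd d₁ d₂ : ℝ) * (Nat.lcm d₁ d₂ : ℝ) = d₁ * d₂ := by
      exact_mod_cast Nat.gcd_mul_lcm d₁ d₂
    have hd1 : (d₁:ℝ) ≠ 0 := by positivity
    have hd2 : (d₂:ℝ) ≠ 0 := by positivity
    have hlcm : (Nat.lcm d₁ d₂ : ℝ) ≠ 0 := by
      intro h; rw [h, mul_zero] at hgl
      exact (mul_ne_zero hd1 hd2) hgl.symm
    have e1 : lam R d₁ * lam R d₂ / (Nat.lcm d₁ d₂ : ℝ) =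
        (Nat.gcd d₁ d₂ : ℝ) * (lam R d₁ / d₁ * (lam R d₂ / d₂)) := by
      have : (Nat.gcd d₁ d₂ : ℝ) = d₁ * d₂ / (Nat.lcm d₁ d₂ : ℝ) := by
        rw [← hgl]; field_simp
      rw [this]; field_simp
    rw [e1, hg, Finset.sum_mul]
    refine Finset.sum_congr rfl fun l _ => ?_
    by_cases c1 : l ∣ d₁ <;> by_cases c2 : l ∣ d₂ <;> simp [c1, c2]
  rw [Finset.sum_congr rfl fun d₁ h₁ => Finset.sum_congr rfl fun d₂ h₂ => h1 d₁ h₁ d₂ h₂]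
  have h2 : ∀ l ∈ sqf R, ∑ d₁ ∈ sqf R, ∑ d₂ ∈ sqf R,
      (l.totient : ℝ) * ((if l ∣ d₁ then lam R d₁ / d₁ else 0) *
        (if l ∣ d₂ then lam R d₂ / d₂ else 0)) = 1 / selS R ^ 2 * (1 / l.totient) := by
    intro l hl
    have hφ : (0:ℝ) < l.totient := by
      exact_mod_cast Nat.totient_pos.mpr (mem_sqf.mp hl).1.1
    have hμ : (ArithmeticFunction.moebius l : ℝ) ^ 2 = 1 := by
      exact_mod_cast ArithmeticFunction.moebius_sq_eq_one_of_squarefree (mem_sqf.mp hl).2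
    have hd := lam_dual hR hl
    rw [Finset.sum_filter] at hd
    simp_rw [← Finset.mul_sum]
    rw [← Finset.sum_mul, hd]
    field_simp
    linarith
  calc _ = ∑ l ∈ sqf R, ∑ d₁ ∈ sqf R, ∑ d₂ ∈ sqf R,
      (l.totient : ℝ) * ((if l ∣ d₁ then lam R d₁ / d₁ else 0) *
        (if l ∣ d₂ then lam R d₂ / d₂ else 0)) := by
        rw [Finset.sum_comm]
        rw [Finset.sum_congr rfl fun d₂ _ => Finset.sum_comm]
        rw [Finset.sum_comm]
        exact Finset.sum_congr rfl fun l _ => Finset.sum_comm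
    _ = ∑ l ∈ sqf R, 1 / selS R ^ 2 * (1 / (l.totient : ℝ)) := Finset.sum_congr rfl h2
    _ = 1 / selS R ^ 2 * selS R := by rw [← Finset.mul_sum]; rfl
    _ = _ := by field_simp

end Selberg
end Hooley

/-! ### An upper bound for primes congruent to 1 modulo `q` -/

namespace Hooley

open NumberField NumberField.Units NumberField.Units.dirichletUnitTheorem Module MeasureTheory
open scoped nonZeroDivisors ENNReal

section BrunTitchmarsh

lemma count_dvd {q d : ℕ} (hd : 0 < d) (hco : d.Coprime q) (N : ℕ) :
    |(((Finset.range N).filter (fun n => d ∣ 1 + q * n)).card : ℝ) - N / d| ≤ 1 := by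
  have : NeZero d := ⟨ne_of_gt hd⟩
  -- the unique solution modulo `d`
  set v : ℕ := (-((q : ZMod d)⁻¹)).val with hv
  have hiff : ∀ n : ℕ, d ∣ 1 + q * n ↔ n ≡ v [MOD d] := by
    intro n
    have hu : (q : ZMod d) * (q : ZMod d)⁻¹ = 1 := ZMod.coe_mul_inv_eq_one q hco.symm
    rw [← ZMod.natCast_eq_zero_iff, ← ZMod.natCast_eq_natCast_iff, hv, ZMod.natCast_zmod_val]
    push_cast
    constructor
    · intro h
      linear_combination (q : ZMod d)⁻¹ * h - (n : ZMod d) * hu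
    · intro h
      rw [h]
      linear_combination -hu
  have hc : ((Finset.range N).filter (fun n => d ∣ 1 + q * n)).card =
      N.count (· ≡ v [MOD d]) := by
    rw [Nat.count_eq_card_filter_range]
    congr 1
    exact Finset.filter_congr fun n _ => hiff n
  rw [hc, Nat.count_modEq_card N hd v]
  have h1 := Nat.div_add_mod N d
  have h2 : ((N % d : ℕ) : ℝ) < d := by exact_mod_cast Nat.mod_lt N hd
  have h3 : (N : ℝ) = d * ((N / d : ℕ) : ℝ) + ((N % d : ℕ) : ℝ) := by exact_mod_cast h1.symm
  have hd' : (0:ℝ) < d := by exact_mod_cast hd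
  have h4 : (N : ℝ) / d = ((N / d : ℕ) : ℝ) + ((N % d : ℕ) : ℝ) / d := by
    rw [h3]; field_simp
  have h5 : ((N % d : ℕ) : ℝ) / d < 1 := by rw [div_lt_one hd']; exact h2
  have h6 : 0 ≤ ((N % d : ℕ) : ℝ) / d := by positivity
  rw [h4]
  push_cast
  rw [abs_le]
  split_ifs <;> constructor <;> push_cast <;> linarith

/-- Selberg's upper bound for the number of primes `1 + q n`, `n < N`. -/
lemma selberg_bound {q R : ℕ} (hq : q.Prime) (hR : 1 ≤ R) (hRq : R < q) (N : ℕ) :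
    (((Finset.range N).filter (fun n => (1 + q * n).Prime)).card : ℝ) ≤
      N / selS R + R ^ 2 * (1 + 2 * Real.log R) ^ 2 := by
  have hco : ∀ d ∈ sqf R, d.Coprime q := by
    intro d hd
    obtain ⟨⟨h1, h2⟩, -⟩ := mem_sqf.mp hd
    exact (Nat.coprime_of_lt_prime (by omega) (by omega) hq).symm
  have h1 : (((Finset.range N).filter (fun n => (1 + q * n).Prime)).card : ℝ) ≤
      ∑ n ∈ Finset.range N, (∑ d ∈ sqf R, if d ∣ 1 + q * n then lam R d else 0) ^ 2 := by
    rw [Finset.card_filter]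
    push_cast
    refine Finset.sum_le_sum fun n _ => ?_
    split_ifs with hp
    · have hn : 1 ≤ n := by
        rcases Nat.eq_zero_or_pos n with rfl | h
        · exact absurd hp (by norm_num)
        · exact h
      have hbig : R < 1 + q * n := by nlinarith
      have : ∑ d ∈ sqf R, (if d ∣ 1 + q * n then lam R d else 0) = 1 := by
        rw [Finset.sum_eq_single 1]
        · simp [lam_one hR]
        · intro d hd hd1
          rw [if_neg]
          intro hdvd
          rcases (Nat.dvd_prime hp).mp hdvd with h | h
          · exact hd1 h
          · have := (mem_sqf.mp hd).1.2; omega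
        · intro h
          exact absurd (mem_sqf.mpr ⟨⟨le_rfl, hR⟩, squarefree_one⟩) h
      rw [this]; norm_num
    · positivity
  refine h1.trans ?_
  have h2 : ∑ n ∈ Finset.range N, (∑ d ∈ sqf R, if d ∣ 1 + q * n then lam R d else 0) ^ 2 =
      ∑ d₁ ∈ sqf R, ∑ d₂ ∈ sqf R, lam R d₁ * lam R d₂ *
        (((Finset.range N).filter (fun n => Nat.lcm d₁ d₂ ∣ 1 + q * n)).card : ℝ) := by
    simp_rw [sq, Finset.sum_mul_sum, Finset.card_filter]
    rw [Finset.sum_comm]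
    refine Finset.sum_congr rfl fun d₁ _ => ?_
    rw [Finset.sum_comm]
    refine Finset.sum_congr rfl fun d₂ _ => ?_
    push_cast
    rw [Finset.mul_sum]
    refine Finset.sum_congr rfl fun n _ => ?_
    by_cases c1 : d₁ ∣ 1 + q * n <;> by_cases c2 : d₂ ∣ 1 + q * n <;>
      simp [Nat.lcm_dvd_iff, c1, c2]
  have h3 : ∀ d₁ ∈ sqf R, ∀ d₂ ∈ sqf R, lam R d₁ * lam R d₂ *
        (((Finset.range N).filter (fun n => Nat.lcm d₁ d₂ ∣ 1 + q * n)).card : ℝ) ≤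
      N * (lam R d₁ * lam R d₂ / (Nat.lcm d₁ d₂ : ℝ)) + (1 + 2 * Real.log R) ^ 2 := by
    intro d₁ hd₁ d₂ hd₂
    have hpos : 0 < Nat.lcm d₁ d₂ := Nat.lcm_pos (mem_sqf.mp hd₁).1.1 (mem_sqf.mp hd₂).1.1
    have hcop : (Nat.lcm d₁ d₂).Coprime q :=
      Nat.Coprime.coprime_dvd_left (Nat.lcm_dvd_mul d₁ d₂) ((hco d₁ hd₁).mul_left (hco d₂ hd₂))
    have hc := count_dvd hpos hcop N
    set A : ℝ := (((Finset.range N).filter (fun n => Nat.lcm d₁ d₂ ∣ 1 + q * n)).card : ℝ)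
    have hL : 0 ≤ 1 + 2 * Real.log R := by
      have := Real.log_natCast_nonneg R; linarith
    have hb : |lam R d₁ * lam R d₂ * (A - N / (Nat.lcm d₁ d₂ : ℝ))| ≤ (1 + 2 * Real.log R) ^ 2 := by
      rw [abs_mul, abs_mul, sq]
      calc _ ≤ ((1 + 2 * Real.log R) * (1 + 2 * Real.log R)) * 1 := by
            gcongr
            · exact lam_bound hR hd₁
            · exact lam_bound hR hd₂
        _ = _ := mul_one _
    have := (le_abs_self _).trans hb
    have e : lam R d₁ * lam R d₂ * (A - N / (Nat.lcm d₁ d₂ : ℝ)) = lam R d₁ * lam R d₂ * A -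
        N * (lam R d₁ * lam R d₂ / (Nat.lcm d₁ d₂ : ℝ)) := by ring
    linarith
  rw [h2]
  have hcard : ((sqf R).card : ℝ) ≤ R := by
    have : (sqf R).card ≤ (Finset.Icc 1 R).card := Finset.card_filter_le _ _
    rw [Nat.card_Icc] at this
    exact_mod_cast this
  calc _ ≤ ∑ d₁ ∈ sqf R, ∑ d₂ ∈ sqf R, (N * (lam R d₁ * lam R d₂ / (Nat.lcm d₁ d₂ : ℝ)) +
        (1 + 2 * Real.log R) ^ 2) :=
        Finset.sum_le_sum fun d₁ h₁ => Finset.sum_le_sum fun d₂ h₂ => h3 d₁ h₁ d₂ h₂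
    _ = N / selS R + (sqf R).card * ((sqf R).card * (1 + 2 * Real.log R) ^ 2) := by
        simp_rw [Finset.sum_add_distrib, ← Finset.mul_sum]
        rw [lam_form hR]
        simp only [Finset.sum_const, nsmul_eq_mul]
        ring
    _ ≤ N / selS R + R * (R * (1 + 2 * Real.log R) ^ 2) := by gcongr
    _ = _ := by ring

/-- The number of primes up to `X` that are congruent to `1` modulo `q`. -/
noncomputable def piq (q X : ℕ) : ℕ :=
  ((Finset.range (X + 1)).filter (fun p => p.Prime ∧ q ∣ p - 1)).card

lemma piq_le {q : ℕ} (hq : 0 < q) (X : ℕ) :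
    piq q X ≤ ((Finset.range (X / q + 1)).filter (fun n => (1 + q * n).Prime)).card := by
  have hsub : (Finset.range (X + 1)).filter (fun p => p.Prime ∧ q ∣ p - 1) ⊆
      ((Finset.range (X / q + 1)).filter (fun n => (1 + q * n).Prime)).image (fun n => 1 + q * n) := by
    intro p hp
    obtain ⟨h1, h2, e, h3⟩ := Finset.mem_filter.mp hp
    have hp1 := h2.one_lt
    have e1 : 1 + q * e = p := by omega
    refine Finset.mem_image.mpr ⟨e, Finset.mem_filter.mpr ⟨Finset.mem_range.mpr ?_, by rwa [e1]⟩, e1⟩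
    have : e ≤ X / q := by
      rw [Nat.le_div_iff_mul_le hq]
      have := Finset.mem_range.mp h1
      nlinarith
    omega
  exact (Finset.card_le_card hsub).trans Finset.card_image_le

/-- Trivial bound for primes `≡ 1 mod q`. -/
lemma piq_trivial {q : ℕ} (hq : 0 < q) (X : ℕ) : (piq q X : ℝ) ≤ X / q := by
  have h := piq_le hq X
  have h2 : ((Finset.range (X / q + 1)).filter (fun n => (1 + q * n).Prime)).card ≤ X / q := by
    have hsub : (Finset.range (X / q + 1)).filter (fun n => (1 + q * n).Prime) ⊆
        (Finset.range (X / q + 1)).erase 0 := by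
      intro n hn
      obtain ⟨h1, h2⟩ := Finset.mem_filter.mp hn
      refine Finset.mem_erase.mpr ⟨?_, h1⟩
      rintro rfl
      exact absurd h2 (by norm_num)
    have := Finset.card_le_card hsub
    rwa [Finset.card_erase_of_mem (by simp), Finset.card_range, Nat.add_sub_cancel] at this
  calc (piq q X : ℝ) ≤ ((X / q : ℕ) : ℝ) := by exact_mod_cast h.trans h2
    _ ≤ _ := Nat.cast_div_le

/-- The upper-bound sieve of level `R < q` for the primes in the progression `1 mod q`: no factor `q/φ(q)` is
lost because all sieving moduli are coprime to `q`. -/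
lemma piq_selberg {q R : ℕ} (hq : q.Prime) (hR : 2 ≤ R) (hRq : R < q) (X : ℕ) :
    (piq q X : ℝ) ≤ 2 * (X / q + 1) / Real.log R + R ^ 2 * (1 + 2 * Real.log R) ^ 2 := by
  have hlog : 0 < Real.log R := Real.log_pos (by exact_mod_cast hR)
  have hS := selS_ge (R := R) (by omega)
  have h1 : (piq q X : ℝ) ≤ _ := (Nat.cast_le.mpr (piq_le hq.pos X)).trans
    (selberg_bound hq (by omega) hRq (X / q + 1))
  refine h1.trans (add_le_add ?_ le_rfl)
  have h2 : ((X / q + 1 : ℕ) : ℝ) ≤ X / q + 1 := by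
    push_cast
    exact add_le_add Nat.cast_div_le le_rfl
  calc ((X / q + 1 : ℕ) : ℝ) / selS R ≤ (X / q + 1) / (Real.log R / 2) := by
        gcongr
        linarith
    _ = _ := by field_simp

/-- Chebyshev's bound over a dyadic block of primes. -/
lemma sum_inv_block {A : ℝ} (hA : 1 < A) (T : Finset ℕ)
    (hT : ∀ q ∈ T, q.Prime ∧ A < q ∧ (q:ℝ) ≤ 2 * A) :
    ∑ q ∈ T, (1:ℝ) / q ≤ 4 / Real.log A := by
  have hl : 0 < Real.log A := Real.log_pos hA
  have h1 : ∑ q ∈ T, Real.log q ≤ Chebyshev.theta (2 * A) := by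
    rw [Chebyshev.theta_eq_sum_Icc]
    refine Finset.sum_le_sum_of_subset_of_nonneg ?_ fun _ _ _ => Real.log_natCast_nonneg _
    intro q hq
    obtain ⟨h1, h2, h3⟩ := hT q hq
    refine Finset.mem_filter.mpr ⟨Finset.mem_Icc.mpr ⟨Nat.zero_le _, Nat.le_floor h3⟩, h1⟩
  have h2 := Chebyshev.theta_le_log4_mul_x (x := 2 * A) (by linarith)
  have h3 : ∑ q ∈ T, (1:ℝ) / q ≤ ∑ q ∈ T, 1 / (A * Real.log A) * Real.log q := by
    refine Finset.sum_le_sum fun q hq => ?_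
    obtain ⟨h1, h2, h3⟩ := hT q hq
    have : Real.log A ≤ Real.log q := Real.log_le_log (by linarith) h2.le
    rw [div_mul_eq_mul_div, one_mul, div_le_div_iff₀ (by linarith) (by positivity), one_mul]
    nlinarith
  rw [← Finset.mul_sum] at h3
  have h4 : Real.log 4 ≤ 2 := by
    have : Real.log 4 = 2 * Real.log 2 := by
      rw [show (4:ℝ) = 2 ^ 2 by norm_num, Real.log_pow]; norm_num
    have := Real.log_two_lt_d9
    linarith
  calc _ ≤ 1 / (A * Real.log A) * (Real.log 4 * (2 * A)) := by
        refine h3.trans (mul_le_mul_of_nonneg_left (h1.trans h2) (by positivity))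
    _ ≤ 1 / (A * Real.log A) * (2 * (2 * A)) := by gcongr
    _ = _ := by field_simp; norm_num

/-- Each dyadic block contributes at most `4/log A` to `∑ 1/q`, by Chebyshev's bound. -/
lemma sum_inv_blocks {A : ℝ} (hA : 1 < A) (J : ℕ) (T : Finset ℕ)
    (hT : ∀ q ∈ T, q.Prime ∧ A < q ∧ (q:ℝ) ≤ 2 ^ J * A) :
    ∑ q ∈ T, (1:ℝ) / q ≤ J * (4 / Real.log A) := by
  have hl : 0 < Real.log A := Real.log_pos hA
  induction J generalizing T with
  | zero =>
    have : T = ∅ := Finset.eq_empty_of_forall_notMem fun q hq => by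
      obtain ⟨-, h2, h3⟩ := hT q hq
      simp at h3; linarith
    simp [this]
  | succ J ih =>
    rw [← Finset.sum_filter_add_sum_filter_not T (fun q : ℕ => (q:ℝ) ≤ 2 ^ J * A)]
    have h1 := ih (T.filter (fun q : ℕ => (q:ℝ) ≤ 2 ^ J * A)) fun q hq => by
      obtain ⟨a, b⟩ := Finset.mem_filter.mp hq
      exact ⟨(hT q a).1, (hT q a).2.1, b⟩
    have hge : A ≤ 2 ^ J * A := le_mul_of_one_le_left (by linarith) (one_le_pow₀ (by norm_num))
    have h2 := sum_inv_block (A := 2 ^ J * A) (by linarith)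
      (T.filter (fun q : ℕ => ¬ (q:ℝ) ≤ 2 ^ J * A)) fun q hq => by
      obtain ⟨a, b⟩ := Finset.mem_filter.mp hq
      refine ⟨(hT q a).1, not_le.mp b, ?_⟩
      have := (hT q a).2.2
      rw [pow_succ] at this; linarith
    have h3 : 4 / Real.log (2 ^ J * A) ≤ 4 / Real.log A := by
      have := Real.log_le_log (by linarith) hge
      gcongr
    push_cast
    linarith

end BrunTitchmarsh
end Hooley

/-! ### Upper bounds for the primes with `kt ∣ r_g(p)` -/

namespace Hooley

open NumberField NumberField.Units NumberField.Units.dirichletUnitTheorem Module MeasureTheory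
open scoped nonZeroDivisors ENNReal

/-- Powers of `log x` are eventually dominated by any power of `x`. -/
lemma log_pow_le (a : ℕ) (B : ℝ) {ε : ℝ} (hε : 0 < ε) :
    ∀ᶠ x : ℝ in atTop, B * Real.log x ^ a ≤ x ^ ε := by
  have h := (isLittleO_log_rpow_rpow_atTop (a : ℝ) hε).def (c := 1 / (|B| + 1)) (by positivity)
  filter_upwards [h, eventually_ge_atTop 1] with x hx h1
  have hl := Real.log_nonneg h1
  rw [Real.rpow_natCast, Real.norm_of_nonneg (by positivity), Real.norm_of_nonneg (by positivity)] at hx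
  have h2 : (|B| + 1) * Real.log x ^ a ≤ x ^ ε := by
    calc (|B| + 1) * Real.log x ^ a ≤ (|B| + 1) * (1 / (|B| + 1) * x ^ ε) := by gcongr
      _ = x ^ ε := by field_simp
  refine le_trans ?_ h2
  have : B ≤ |B| + 1 := by linarith [le_abs_self B]
  exact mul_le_mul_of_nonneg_right this (by positivity)

/-- `Li x = x / log x + O(x / log² x)`. -/
lemma Li_asymp : ∃ C : ℝ, 0 < C ∧ ∀ᶠ x : ℝ in atTop,
    |Li x - x / Real.log x| ≤ C * (x / Real.log x ^ 2) := by
  obtain ⟨C, hC, hb⟩ := Chebyshev.integral_one_div_log_sq_isBigO.exists_pos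
  rw [Asymptotics.isBigOWith_iff] at hb
  refine ⟨C + 1, by positivity, ?_⟩
  filter_upwards [hb, eventually_ge_atTop 2, log_pow_le 2 (2 / Real.log 2) one_pos] with x hx h2 hlog
  have hl : 0 < Real.log x := Real.log_pos (by linarith)
  have hl2 : 0 < Real.log 2 := Real.log_pos (by norm_num)
  have hcont : ∀ n : ℕ, IntervalIntegrable (fun t => 1 / Real.log t ^ n) volume 2 x := by
    intro n
    refine ContinuousOn.intervalIntegrable fun t ht => ?_
    rw [Set.uIcc_of_le h2] at ht
    have h3 : Real.log t ≠ 0 := (Real.log_pos (by linarith [ht.1])).ne'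
    refine ContinuousAt.continuousWithinAt ?_
    exact continuousAt_const.div ((Real.continuousAt_log (by linarith [ht.1])).pow n) (pow_ne_zero _ h3)
  have hI : ∫ t in (2:ℝ)..x, (1 / Real.log t ^ 1 - 1 / Real.log t ^ 2) =
      x / Real.log x - 2 / Real.log 2 := by
    refine intervalIntegral.integral_eq_sub_of_hasDerivAt (f := fun t => t / Real.log t) ?_
      ((hcont 1).sub (hcont 2))
    intro t ht
    rw [Set.uIcc_of_le h2] at ht
    have h3 : Real.log t ≠ 0 := (Real.log_pos (by linarith [ht.1])).ne'
    have h4 : t ≠ 0 := by linarith [ht.1]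
    refine ((hasDerivAt_id' t).div (Real.hasDerivAt_log h4) h3).congr_deriv ?_
    field_simp
  rw [intervalIntegral.integral_sub (hcont 1) (hcont 2)] at hI
  simp only [pow_one] at hI
  have hLi : Li x - x / Real.log x = (∫ t in (2:ℝ)..x, 1 / Real.log t ^ 2) - 2 / Real.log 2 := by
    unfold Li; linarith
  rw [hLi]
  rw [Real.norm_eq_abs, Real.norm_of_nonneg (by positivity)] at hx
  have h5 : 2 / Real.log 2 ≤ x / Real.log x ^ 2 := by
    rw [le_div_iff₀ (by positivity)]
    simpa using hlog
  have h6 : 0 ≤ 2 / Real.log 2 := by positivity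
  rw [abs_le] at hx ⊢
  constructor <;> linarith [hx.1, hx.2]

section Count

variable {g : ℚ} {t m : ℕ}

lemma thR_le_card (g : ℚ) (m : ℕ) {x : ℝ} (hx : 1 ≤ x) :
    thR g m x ≤ (Rset g m x).card * Real.log x := by
  unfold thR
  rw [← nsmul_eq_mul]
  refine Finset.sum_le_card_nsmul _ _ _ fun p hp => ?_
  have h := Finset.mem_filter.mp hp
  have h1 : p ≤ ⌊x⌋₊ := by have := Finset.mem_range.mp h.1; omega
  exact Real.log_le_log (by exact_mod_cast h.2.1.pos) ((Nat.le_floor_iff (by linarith)).mp h1)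

/-- The primes above `y` are counted with weight `log p / log y ≥ 1`. -/
lemma card_le_thR (g : ℚ) (m : ℕ) {x y : ℝ} (hy : 1 < y) :
    ((Rset g m x).card : ℝ) ≤ (Rset g m y).card + thR g m x / Real.log y := by
  have hl := Real.log_pos hy
  have h1 : Rset g m x ⊆ Rset g m y ∪ (Rset g m x).filter (fun p : ℕ => y < (p:ℝ)) := by
    intro p hp
    rw [Finset.mem_union, Finset.mem_filter]
    by_cases h : y < (p:ℝ)
    · exact Or.inr ⟨hp, h⟩
    · left
      have h' := Finset.mem_filter.mp hp
      refine Finset.mem_filter.mpr ⟨?_, h'.2⟩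
      rw [Finset.mem_range, Nat.lt_succ_iff]
      exact Nat.le_floor (not_lt.mp h)
  have h2 : (((Rset g m x).filter (fun p : ℕ => y < (p:ℝ))).card : ℝ) * Real.log y ≤ thR g m x := by
    unfold thR
    rw [← nsmul_eq_mul]
    refine (Finset.card_nsmul_le_sum _ _ _ fun p hp => ?_).trans
      (Finset.sum_le_sum_of_subset_of_nonneg (Finset.filter_subset _ _) fun p _ _ => Real.log_natCast_nonneg p)
    exact Real.log_le_log (by linarith) (Finset.mem_filter.mp hp).2.le
  have h3 : ((Rset g m x).card : ℝ) ≤ (Rset g m y).card + ((Rset g m x).filter (fun p : ℕ => y < (p:ℝ))).card := by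
    exact_mod_cast (Finset.card_le_card h1).trans (Finset.card_union_le _ _)
  have h4 := (le_div_iff₀ hl).mpr h2
  linarith

lemma card_Rset_le (g : ℚ) (m : ℕ) {y : ℝ} (hy : 0 ≤ y) : ((Rset g m y).card : ℝ) ≤ y := by
  have h1 : Rset g m y ⊆ Finset.Icc 1 ⌊y⌋₊ := by
    intro p hp
    have h := Finset.mem_filter.mp hp
    rw [Finset.mem_Icc]
    exact ⟨h.2.1.one_lt.le, by have := Finset.mem_range.mp h.1; omega⟩
  have h2 := Finset.card_le_card h1
  rw [Nat.card_Icc] at h2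
  refine le_trans ?_ (Nat.floor_le hy)
  exact_mod_cast (by omega : (Rset g m y).card ≤ ⌊y⌋₊)

/-- The sizes of the discriminants and of the exceptional primes, as functions of `k`. -/
lemma size_bound (hg : g ≠ 0) (ht : 1 ≤ t) : ∃ C : ℝ, 0 < C ∧ ∀ k : ℕ, 1 ≤ k →
    sz (splitField g (k * t)) ≤ nn (splitField g (k * t)) * (C * (1 + Real.log k)) ∧
    Real.log (badN g (k * t)) ≤ C * (1 + Real.log k) := by
  have hgh := Real.log_nonneg (one_le_hgt g)
  have htl := Real.log_natCast_nonneg t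
  set b : ℕ := 2 * t * (g.num.natAbs * g.den) with hb
  have hb0 : b ≠ 0 := badN_ne hg ht
  have hbl := Real.log_natCast_nonneg b
  refine ⟨4 + 4 * Real.log t + 2 * Real.log (hgt g) + Real.log b, by positivity, fun k hk => ?_⟩
  have hkl := Real.log_natCast_nonneg k
  have hk0 : (k:ℝ) ≠ 0 := by positivity
  constructor
  · refine (sz_split_le hg (Nat.mul_pos hk ht)).trans ?_
    refine mul_le_mul_of_nonneg_left ?_ (nn_pos (K := splitField g (k * t))).le
    push_cast
    rw [Real.log_mul hk0 (by positivity)]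
    nlinarith [mul_nonneg htl hkl, mul_nonneg hgh hkl, mul_nonneg hbl hkl]
  · have : badN g (k * t) = k * b := by rw [hb]; unfold badN; ring
    rw [this]
    push_cast
    rw [Real.log_mul hk0 (by exact_mod_cast hb0)]
    nlinarith [mul_nonneg htl hkl, mul_nonneg hgh hkl, mul_nonneg hbl hkl]

/-- A uniform upper bound for the number of primes `p ≤ x` with `kt ∣ r_g(p)`. -/
lemma card_upper (hg : g ≠ 0) (ht : 1 ≤ t)
    (hGRH : ∀ k : ℕ, 1 ≤ k → DedekindRH (splitField g (k * t))) :
    ∃ C : ℝ, 0 < C ∧ ∀ x : ℝ, 8 ≤ x → ∀ k : ℕ, 1 ≤ k →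
      ((Rset g (k * t) x).card : ℝ) ≤
        C * (x / Real.log x) * (1 / nn (splitField g (k * t))) +
          C * (√x * Real.log x) * (1 + Real.log k) := by
  obtain ⟨C, hC, hS⟩ := SK_bound
  obtain ⟨C', hC', hsz⟩ := size_bound hg ht
  refine ⟨2 * C + 2 * C * C' + 1, by positivity, fun x hx k hk => ?_⟩
  have hS := (hS _ (hGRH k hk)).1 x hx
  have hsz := (hsz k hk).1
  have hn : 0 < nn (splitField g (k * t)) := nn_pos
  have hth := thR_le_SK hg (Nat.mul_pos hk ht) x
  set n := nn (splitField g (k * t)) with hndef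
  have hx0 : 0 < x := by linarith
  have hl1 : 1 ≤ Real.log x := by
    rw [Real.le_log_iff_exp_le hx0]; linarith [Real.exp_one_lt_d9]
  have hsx : 1 < √x := by rw [Real.lt_sqrt (by norm_num)]; linarith
  have hkl := Real.log_natCast_nonneg k
  have h1 := card_le_thR g (k * t) (x := x) hsx
  have h2 := card_Rset_le g (k * t) (Real.sqrt_nonneg x)
  rw [Real.log_sqrt hx0.le] at h1
  have h3 : thR g (k * t) x ≤ C * x * (1 / n) + C * (C' * (1 + Real.log k)) * √x * Real.log x ^ 2 := by
    have : n * thR g (k * t) x ≤ n * (C * x * (1 / n) + C * (C' * (1 + Real.log k)) * √x * Real.log x ^ 2) := by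
      calc n * thR g (k * t) x ≤ C * x + C * sz (splitField g (k * t)) * √x * Real.log x ^ 2 := hth.trans hS
        _ ≤ C * x + C * (n * (C' * (1 + Real.log k))) * √x * Real.log x ^ 2 := by gcongr
        _ = _ := by field_simp
    exact le_of_mul_le_mul_left this hn
  have h4 : thR g (k * t) x / (Real.log x / 2) ≤
      2 * C * (x / Real.log x) * (1 / n) + 2 * C * C' * (√x * Real.log x) * (1 + Real.log k) := by
    rw [div_le_iff₀ (by positivity)]
    refine h3.trans (le_of_eq ?_)
    field_simp
  have h5 : √x ≤ (√x * Real.log x) * (1 + Real.log k) := by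
    have h6 : √x * 1 ≤ √x * Real.log x := by gcongr
    nlinarith [mul_nonneg (by positivity : 0 ≤ √x * Real.log x) hkl]
  have h7 : 0 ≤ (x / Real.log x) * (1 / n) := by positivity
  have h8 : 0 ≤ (√x * Real.log x) * (1 + Real.log k) := by positivity
  nlinarith [mul_nonneg (by positivity : 0 ≤ 2 * C * C') h7, mul_nonneg hC.le h8]

end Count

end Hooley

/-! ### The asymptotic count of the primes with `kt ∣ r_g(p)` -/

namespace Hooley

open NumberField NumberField.Units NumberField.Units.dirichletUnitTheorem Module MeasureTheory
open scoped nonZeroDivisors ENNReal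

section Count2

variable {g : ℚ} {t : ℕ}

/-- The prime ideal theorem under GRH, in the form needed for the primes with `kt ∣ r_g(p)`. -/
lemma thR_asymp (hg : g ≠ 0) (ht : 1 ≤ t)
    (hGRH : ∀ k : ℕ, 1 ≤ k → DedekindRH (splitField g (k * t))) :
    ∃ C : ℝ, 0 < C ∧ ∀ᶠ x : ℝ in atTop, ∀ k : ℕ, 1 ≤ k →
      |thR g (k * t) x - x * (1 / nn (splitField g (k * t)))| ≤ C * (1 + Real.log k) * x ^ (23 / 25 : ℝ) := by
  obtain ⟨C, hC, hS⟩ := SK_bound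
  obtain ⟨C', hC', hsz⟩ := size_bound hg ht
  refine ⟨2 + C * C' + C', by positivity, ?_⟩
  filter_upwards [eventually_ge_atTop ((4:ℝ) ^ 10), log_pow_le 2 1 (ε := 1 / 10) (by norm_num),
    log_pow_le 1 2 (ε := 1 / 10) (by norm_num)] with x hx hL2 hL1 k hk
  have hS := (hS _ (hGRH k hk)).2 x hx
  obtain ⟨hsz, hbad⟩ := hsz k hk
  have hn : 0 < nn (splitField g (k * t)) := nn_pos
  have hn1 : 1 ≤ nn (splitField g (k * t)) := one_le_nn
  have hth := thR_le_SK hg (Nat.mul_pos hk ht) x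
  have hth' := SK_le_thR hg (Nat.mul_pos hk ht) x
  have hx1 : 1 ≤ x := le_trans (by norm_num) hx
  have hx0 : 0 < x := by linarith
  have hpsi := Chebyshev.psi_sub_theta_le hx1
  set n := nn (splitField g (k * t)) with hndef
  set P := x ^ (23 / 25 : ℝ) with hP
  have hP1 : 1 ≤ P := Real.one_le_rpow hx1 (by norm_num)
  have hkl := Real.log_natCast_nonneg k
  have e1 : x ^ (9 / 10 : ℝ) ≤ P := Real.rpow_le_rpow_of_exponent_le hx1 (by norm_num)
  have e2 : x ^ (7 / 10 : ℝ) * Real.log x ^ 2 ≤ P := by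
    calc x ^ (7 / 10 : ℝ) * Real.log x ^ 2 ≤ x ^ (7 / 10 : ℝ) * x ^ (1 / 10 : ℝ) := by
          refine mul_le_mul_of_nonneg_left (by linarith) (by positivity)
      _ = x ^ (8 / 10 : ℝ) := by rw [← Real.rpow_add hx0]; norm_num
      _ ≤ P := Real.rpow_le_rpow_of_exponent_le hx1 (by norm_num)
  have e3 : 2 * √x * Real.log x ≤ P := by
    calc 2 * √x * Real.log x = x ^ (1 / 2 : ℝ) * (2 * Real.log x ^ 1) := by
          rw [Real.sqrt_eq_rpow]; ring
      _ ≤ x ^ (1 / 2 : ℝ) * x ^ (1 / 10 : ℝ) := mul_le_mul_of_nonneg_left hL1 (by positivity)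
      _ = x ^ (6 / 10 : ℝ) := by rw [← Real.rpow_add hx0]; norm_num
      _ ≤ P := Real.rpow_le_rpow_of_exponent_le hx1 (by norm_num)
  have hS' : |SK (splitField g (k * t)) x - x| ≤ n * (P + C * (C' * (1 + Real.log k)) * P) := by
    refine hS.trans ?_
    calc x ^ (9 / 10 : ℝ) + C * sz (splitField g (k * t)) * x ^ (7 / 10 : ℝ) * Real.log x ^ 2
        = x ^ (9 / 10 : ℝ) + C * sz (splitField g (k * t)) * (x ^ (7 / 10 : ℝ) * Real.log x ^ 2) := by ring
      _ ≤ n * P + C * (n * (C' * (1 + Real.log k))) * P := by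
          refine add_le_add (by nlinarith) ?_
          refine mul_le_mul (mul_le_mul_of_nonneg_left hsz hC.le) e2 (by positivity) (by positivity)
      _ = _ := by ring
  have hxn : x = n * (x * (1 / n)) := by field_simp
  obtain ⟨l1, l2⟩ := abs_le.mp hS'
  have up : thR g (k * t) x ≤ x * (1 / n) + (P + C * (C' * (1 + Real.log k)) * P) := by
    refine le_of_mul_le_mul_left ?_ hn
    rw [mul_add, ← hxn]; linarith
  have lo : x * (1 / n) - (P + C * (C' * (1 + Real.log k)) * P) ≤
      thR g (k * t) x + (Chebyshev.psi x - Chebyshev.theta x) + Real.log (badN g (k * t)) := by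
    refine le_of_mul_le_mul_left ?_ hn
    rw [mul_sub, ← hxn]; linarith
  have hb2 : C' * (1 + Real.log k) ≤ C' * (1 + Real.log k) * P :=
    le_mul_of_one_le_right (by positivity) hP1
  have hk2 : 0 ≤ Real.log k * P := by positivity
  have hk3 : 0 ≤ C' * (1 + Real.log k) * P := by positivity
  rw [abs_le]
  constructor <;> nlinarith

set_option maxHeartbeats 800000 in
/-- The asymptotic count of the primes with `kt ∣ r_g(p)`, uniformly in `k`. -/
lemma card_asymp (hg : g ≠ 0) (ht : 1 ≤ t)
    (hGRH : ∀ k : ℕ, 1 ≤ k → DedekindRH (splitField g (k * t))) :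
    ∃ C : ℝ, 0 < C ∧ ∀ᶠ x : ℝ in atTop, ∀ k : ℕ, 1 ≤ k →
      |((Rset g (k * t) x).card : ℝ) - 1 / nn (splitField g (k * t)) * Li x| ≤
        C * (x * Real.log (Real.log x) / Real.log x ^ 2) * (1 / nn (splitField g (k * t))) +
          C * (1 + Real.log k) * x ^ (24 / 25 : ℝ) := by
  obtain ⟨C₁, hC₁, h₁⟩ := thR_asymp hg ht hGRH
  obtain ⟨C₂, hC₂, h₂⟩ := card_upper hg ht hGRH
  obtain ⟨C₃, hC₃, h₃⟩ := Li_asymp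
  refine ⟨5 * C₁ + 4 + 2 * C₂ + C₃, by positivity, ?_⟩
  filter_upwards [h₁, h₃, log_pow_le 1 1 (ε := 1 / 10) (by norm_num), log_pow_le 4 1 (ε := 1 / 2) (by norm_num),
    Real.tendsto_log_atTop.eventually_ge_atTop 100,
    (Real.tendsto_log_atTop.comp Real.tendsto_log_atTop).eventually_ge_atTop 1,
    (Real.tendsto_log_atTop.eventually (log_pow_le 1 4 one_pos)), eventually_ge_atTop 64]
    with x hth hLi hL1 hL4 hL100 hM1 hML hx8 k hk
  have hth := hth k hk
  simp only [Function.comp_apply] at hM1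
  rw [pow_one, Real.rpow_one] at hML
  set L := Real.log x with hL
  set M := Real.log L with hM
  have hn : 0 < nn (splitField g (k * t)) := nn_pos
  set u := 1 / nn (splitField g (k * t)) with hu
  have hu0 : 0 < u := by positivity
  have hkl := Real.log_natCast_nonneg k
  set E := (1 + Real.log k) * x ^ (23 / 25 : ℝ) with hE
  have hx0 : 0 < x := by linarith
  have hE0 : 0 ≤ E := by positivity
  have hEle : E ≤ (1 + Real.log k) * x ^ (24 / 25 : ℝ) := by
    refine mul_le_mul_of_nonneg_left ?_ (by positivity)
    exact Real.rpow_le_rpow_of_exponent_le (by linarith) (by norm_num)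
  have hL0 : 0 < L := by linarith
  -- The primes up to `y = x / log² x` are counted trivially.
  set y := x / L ^ 2 with hy
  have hsq : √x * √x = x := Real.mul_self_sqrt hx0.le
  have hyx : √x ≤ y := by
    rw [hy, le_div_iff₀ (by positivity)]
    have h5 : L ^ 2 ≤ L ^ 4 := pow_le_pow_right₀ (by linarith) (by norm_num)
    have h6 : L ^ 4 ≤ √x := by rw [Real.sqrt_eq_rpow]; linarith
    calc √x * L ^ 2 ≤ √x * √x := mul_le_mul_of_nonneg_left (by linarith) (by positivity)
      _ = x := hsq
  have hsx8 : 8 ≤ √x := by rw [Real.le_sqrt (by norm_num) hx0.le]; linarith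
  have hy8 : 8 ≤ y := hsx8.trans hyx
  have hyx' : y ≤ x := by
    rw [hy, div_le_iff₀ (by positivity)]
    have : 1 ≤ L ^ 2 := one_le_pow₀ (by linarith)
    nlinarith
  have hly : Real.log y = L - 2 * M := by
    rw [hy, Real.log_div hx0.ne' (by positivity), Real.log_pow]; norm_num; rfl
  have hly2 : L / 2 ≤ Real.log y := by linarith
  have hRy := h₂ y hy8 k hk
  have hup := card_le_thR g (k * t) (x := x) (y := y) (by linarith)
  have hlow := thR_le_card g (k * t) (x := x) (by linarith)
  obtain ⟨t1, t2⟩ := abs_le.mp hth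
  have hC1E : C₁ * (1 + Real.log k) * x ^ (23 / 25 : ℝ) = C₁ * E := by rw [hE]; ring
  rw [hC1E] at t1 t2
  -- the contribution of the primes up to `y`
  have a1 : y / Real.log y ≤ 2 * (x * M / L ^ 2) := by
    rw [div_le_iff₀ (by linarith)]
    have : y * 1 ≤ y * (M * (2 * Real.log y)) := by
      refine mul_le_mul_of_nonneg_left ?_ (by linarith)
      nlinarith
    calc y ≤ y * (M * (2 * Real.log y)) := by linarith
      _ = 2 * (x * M / L ^ 2) * Real.log y := by rw [hy]; ring
  have a2 : √y * Real.log y ≤ x ^ (23 / 25 : ℝ) := by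
    calc √y * Real.log y ≤ √x * L := by
          refine mul_le_mul (Real.sqrt_le_sqrt hyx') (Real.log_le_log (by linarith) hyx') (by linarith) (by positivity)
      _ ≤ x ^ (1 / 2 : ℝ) * x ^ (1 / 10 : ℝ) := by
          rw [Real.sqrt_eq_rpow]; exact mul_le_mul_of_nonneg_left (by linarith) (by positivity)
      _ = x ^ (6 / 10 : ℝ) := by rw [← Real.rpow_add hx0]; norm_num
      _ ≤ _ := Real.rpow_le_rpow_of_exponent_le (by linarith) (by norm_num)
  have a3 : ((Rset g (k * t) y).card : ℝ) ≤ C₂ * (2 * (x * M / L ^ 2)) * u + C₂ * E := by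
    refine hRy.trans (add_le_add ?_ ?_)
    · exact mul_le_mul_of_nonneg_right (mul_le_mul_of_nonneg_left a1 hC₂.le) hu0.le
    · rw [mul_assoc, hE, mul_comm (1 + Real.log (k:ℝ))]
      exact mul_le_mul_of_nonneg_left (mul_le_mul_of_nonneg_right a2 (by positivity)) hC₂.le
  -- replacing `1 / log y` by `1 / log x`
  have b1 : 1 / Real.log y - 1 / L ≤ 4 * M / L ^ 2 := by
    have hly0 : 0 < Real.log y := by linarith
    have : 1 / Real.log y - 1 / L = 2 * M / (L * Real.log y) := by
      rw [div_sub_div _ _ hly0.ne' hL0.ne', hly]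
      rw [hly] at hly0
      field_simp
      ring
    rw [this, div_le_div_iff₀ (by positivity) (by positivity)]
    nlinarith [mul_le_mul_of_nonneg_left hly2 (by positivity : 0 ≤ 4 * M * L)]
  have b2 : 4 * M / L ^ 2 ≤ 1 := by
    rw [div_le_one (by positivity)]; nlinarith
  have b3 : 1 / L ≤ 1 := by rw [div_le_one hL0]; linarith
  have hth0 : thR g (k * t) x ≤ x * u + C₁ * E := by linarith
  have b4 : thR g (k * t) x / Real.log y ≤ x / L * u + 4 * (x * M / L ^ 2) * u + 2 * (C₁ * E) := by
    have h1 : 1 / Real.log y ≤ 1 / L + 4 * M / L ^ 2 := by linarith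
    have h0 : 0 ≤ C₁ * E := by positivity
    calc thR g (k * t) x / Real.log y ≤ (x * u + C₁ * E) / Real.log y :=
          div_le_div_of_nonneg_right hth0 (by linarith)
      _ = (x * u + C₁ * E) * (1 / Real.log y) := by ring
      _ ≤ (x * u + C₁ * E) * (1 / L + 4 * M / L ^ 2) := mul_le_mul_of_nonneg_left h1 (by positivity)
      _ = x / L * u + 4 * (x * M / L ^ 2) * u + (C₁ * E) * (1 / L + 4 * M / L ^ 2) := by ring
      _ ≤ _ := by
          have := mul_le_mul_of_nonneg_left (add_le_add b3 b2) h0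
          linarith only [this]
  have b5 : x / L * u - C₁ * E ≤ (Rset g (k * t) x).card := by
    have h0 : 0 ≤ C₁ * E := by positivity
    have h1 : (x * u - C₁ * E) / L ≤ (Rset g (k * t) x).card := by
      rw [div_le_iff₀ hL0]; linarith
    have h2 : (x * u - C₁ * E) / L = x / L * u - (C₁ * E) * (1 / L) := by ring
    have := mul_le_mul_of_nonneg_left b3 h0
    linarith only [this, h1, h2]
  have c1 : x / L ^ 2 ≤ x * M / L ^ 2 := by
    refine div_le_div_of_nonneg_right ?_ (by positivity)
    nlinarith
  have c2 : |u * Li x - x / L * u| ≤ C₃ * (x * M / L ^ 2) * u := by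
    calc |u * Li x - x / L * u| = |Li x - x / L| * u := by
          rw [← abs_of_pos hu0, ← abs_mul, abs_of_pos hu0]; ring_nf
      _ ≤ C₃ * (x / L ^ 2) * u := mul_le_mul_of_nonneg_right hLi hu0.le
      _ ≤ _ := mul_le_mul_of_nonneg_right (mul_le_mul_of_nonneg_left c1 hC₃.le) hu0.le
  obtain ⟨d1, d2⟩ := abs_le.mp c2
  have hX0 : 0 ≤ (x * M / L ^ 2) * u := by positivity
  set X := (x * M / L ^ 2) * u with hX
  have f1 : (5 * C₁ + 4 + 2 * C₂ + C₃) * (x * M / L ^ 2) * u = (5 * C₁ + 4 + 2 * C₂ + C₃) * X := by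
    rw [hX]; ring
  have f2 : (5 * C₁ + 4 + 2 * C₂ + C₃) * E ≤
      (5 * C₁ + 4 + 2 * C₂ + C₃) * (1 + Real.log k) * x ^ (24 / 25 : ℝ) := by
    rw [mul_assoc]
    exact mul_le_mul_of_nonneg_left hEle (by positivity)
  have f3 : C₂ * (2 * (x * M / L ^ 2)) * u = 2 * C₂ * X := by rw [hX]; ring
  have f4 : 4 * (x * M / L ^ 2) * u = 4 * X := by rw [hX]; ring
  have f5 : C₃ * (x * M / L ^ 2) * u = C₃ * X := by rw [hX]; ring
  rw [f3] at a3
  rw [f4] at b4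
  rw [f5] at d1 d2
  rw [f1]
  have g1 := mul_nonneg hC₁.le hX0
  have g2 := mul_nonneg hC₂.le hX0
  have g3 := mul_nonneg hC₃.le hX0
  have g4 := mul_nonneg hC₁.le hE0
  have g5 := mul_nonneg hC₂.le hE0
  have g6 := mul_nonneg hC₃.le hE0
  rw [abs_le]
  constructor
  · linarith only [g1, g2, g3, g4, g5, g6, d1, d2, b5, f2, hX0, hE0]
  · linarith only [g1, g2, g3, g4, g5, g6, d1, d2, a3, b4, f2, hX0, hE0, hup]

end Count2

end Hooley

/-! ### Inclusion and exclusion, and the error of the sieve -/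

namespace Hooley

open NumberField NumberField.Units NumberField.Units.dirichletUnitTheorem Module MeasureTheory
open scoped nonZeroDivisors ENNReal

section Sieve

variable {g : ℚ} {t : ℕ}

/-- The primes `p ≤ X` modulo which `g` has order at most `D`. -/
noncomputable def smallOrd (g : ℚ) (D X : ℕ) : Finset ℕ :=
  (Finset.range (X + 1)).filter fun p => p.Prime ∧ OrdZero g p ∧ orderOf (ratRed g p) ≤ D

lemma num_pow_ne (hg₁ : g ≠ -1) (hg₃ : g ≠ 1) {d : ℕ} (hd : d ≠ 0) :
    g.num ^ d - (g.den : ℤ) ^ d ≠ 0 := by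
  intro h
  have h1 : (g.num : ℚ) ^ d = (g.den : ℚ) ^ d := by exact_mod_cast sub_eq_zero.mp h
  have h2 : g ^ d = 1 := by
    rw [← Rat.num_div_den g, div_pow, h1]
    exact div_self (pow_ne_zero _ (by exact_mod_cast g.den_ne_zero))
  rcases pow_eq_one_iff_cases.mp h2 with h | h | h
  · exact hd h
  · exact hg₃ h
  · exact hg₁ h.1

lemma orderOf_pos_of_ordZero {p : ℕ} (hp : p.Prime) (ho : OrdZero g p) : 0 < orderOf (ratRed g p) := by
  have := Fact.mk hp
  rw [orderOf_pos_iff]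
  exact isOfFinOrder_iff_pow_eq_one.mpr ⟨p - 1, by have := hp.two_le; omega,
    ZMod.pow_card_sub_one_eq_one (ratRed_ne_zero hp ho)⟩

lemma resIndex_mul {p : ℕ} (hp : p.Prime) (ho : OrdZero g p) :
    resIndex g p * orderOf (ratRed g p) = p - 1 := by
  have := Fact.mk hp
  exact Nat.div_mul_cancel (orderOf_dvd_of_pow_eq_one (ZMod.pow_card_sub_one_eq_one (ratRed_ne_zero hp ho)))

/-- Such primes divide `∏_{d ≤ D} (num^d - den^d)`, so there are `O(D²)` of them. -/
lemma smallOrd_card (hg₁ : g ≠ -1) (hg₃ : g ≠ 1) :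
    ∃ C : ℝ, 0 < C ∧ ∀ D X : ℕ, ((smallOrd g D X).card : ℝ) ≤ C * (D:ℝ) ^ 2 := by
  set H : ℕ := max g.num.natAbs g.den with hH
  have hl2 : 0 < Real.log 2 := Real.log_pos (by norm_num)
  have hHl := Real.log_natCast_nonneg H
  refine ⟨(Real.log 2 + Real.log H) / Real.log 2, by positivity, fun D X => ?_⟩
  set a : ℕ → ℕ := fun d => (g.num ^ d - (g.den : ℤ) ^ d).natAbs with ha
  set M := ∏ d ∈ Finset.Icc 1 D, a d with hM
  have ha0 : ∀ d ∈ Finset.Icc 1 D, a d ≠ 0 := fun d hd =>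
    Int.natAbs_ne_zero.mpr (num_pow_ne hg₁ hg₃ (by have := (Finset.mem_Icc.mp hd).1; omega))
  have hM0 : M ≠ 0 := Finset.prod_ne_zero_iff.mpr ha0
  have hsub : smallOrd g D X ⊆ M.primeFactors := by
    intro p hp
    obtain ⟨-, hpp, ho, hord⟩ := Finset.mem_filter.mp hp
    have hF := Fact.mk hpp
    refine Nat.mem_primeFactors.mpr ⟨hpp, ?_, hM0⟩
    refine Dvd.dvd.trans ?_ (Finset.dvd_prod_of_mem a
      (Finset.mem_Icc.mpr ⟨orderOf_pos_of_ordZero hpp ho, hord⟩))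
    have h1 := pow_orderOf_eq_one (ratRed g p)
    set d := orderOf (ratRed g p)
    have hden : ((g.den : ℕ) : ZMod p) ≠ 0 := by
      rw [Ne, ZMod.natCast_eq_zero_iff]; exact ho.2
    rw [ratRed, mul_pow, inv_pow] at h1
    have h2 : ((g.num : ZMod p)) ^ d = ((g.den : ℕ) : ZMod p) ^ d := by
      field_simp at h1
      exact h1
    rw [ha, ← Int.natCast_dvd, ← ZMod.intCast_zmod_eq_zero_iff_dvd]
    push_cast
    rw [h2, sub_self]
  have h1 : ((smallOrd g D X).card : ℝ) * Real.log 2 ≤ Real.log M := by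
    refine le_trans ?_ (sum_log_primeFactors hM0)
    calc ((smallOrd g D X).card : ℝ) * Real.log 2 ≤ (M.primeFactors.card : ℝ) * Real.log 2 := by
          have := Finset.card_le_card hsub
          gcongr
      _ = M.primeFactors.card • Real.log 2 := by rw [nsmul_eq_mul]
      _ ≤ _ := Finset.card_nsmul_le_sum _ _ _ fun p hp =>
          Real.log_le_log (by norm_num) (by exact_mod_cast (Nat.prime_of_mem_primeFactors hp).two_le)
  have h2 : Real.log M ≤ (Real.log 2 + Real.log H) * (D:ℝ) ^ 2 := by
    rw [hM]
    push_cast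
    rw [Real.log_prod (fun d hd => by exact_mod_cast ha0 d hd)]
    calc ∑ d ∈ Finset.Icc 1 D, Real.log (a d) ≤ (Finset.Icc 1 D).card • ((Real.log 2 + Real.log H) * D) := by
          refine Finset.sum_le_card_nsmul _ _ _ fun d hd => ?_
          obtain ⟨d1, d2⟩ := Finset.mem_Icc.mp hd
          have h3 : a d ≤ 2 * H ^ d := by
            calc a d ≤ (g.num ^ d).natAbs + ((g.den : ℤ) ^ d).natAbs := Int.natAbs_sub_le _ _
              _ = g.num.natAbs ^ d + g.den ^ d := by rw [Int.natAbs_pow, Int.natAbs_pow, Int.natAbs_natCast]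
              _ ≤ H ^ d + H ^ d := add_le_add (Nat.pow_le_pow_left (le_max_left _ _) _)
                  (Nat.pow_le_pow_left (le_max_right _ _) _)
              _ = _ := by ring
          have hHpos : (0:ℝ) < H := by
            exact_mod_cast (lt_of_lt_of_le g.den_pos (le_max_right _ _) : 0 < H)
          calc Real.log (a d) ≤ Real.log (2 * H ^ d : ℝ) :=
                Real.log_le_log (by exact_mod_cast Nat.pos_of_ne_zero (ha0 d hd)) (by exact_mod_cast h3)
            _ = Real.log 2 + d * Real.log H := by
                rw [Real.log_mul (by norm_num) (by positivity), Real.log_pow]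
            _ ≤ (Real.log 2 + Real.log H) * D := by
                have e1 : (1:ℝ) ≤ D := by exact_mod_cast d1.trans d2
                have e2 : (d:ℝ) ≤ D := by exact_mod_cast d2
                nlinarith
      _ = _ := by
          rw [Nat.card_Icc, nsmul_eq_mul, Nat.add_sub_cancel]; ring
  rw [div_mul_eq_mul_div, le_div_iff₀ hl2]
  exact h1.trans h2

/-- Inclusion–exclusion over the divisors of `P`. -/
lemma sieve_identity (ht : 1 ≤ t) {P : ℕ} (hP : P ≠ 0) (x : ℝ) :
    (((Rset g t x).filter (fun p => Nat.Coprime P (resIndex g p / t))).card : ℝ) =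
      ∑ k ∈ P.divisors, (ArithmeticFunction.moebius k : ℝ) * (Rset g (k * t) x).card := by
  have h1 : ∀ k : ℕ, ((Rset g (k * t) x).card : ℝ) =
      ∑ p ∈ Rset g t x, if k ∣ resIndex g p / t then (1:ℝ) else 0 := by
    intro k
    rw [← Finset.sum_filter, Finset.sum_const, nsmul_eq_mul, mul_one]
    congr 2
    ext p
    simp only [Rset, Finset.mem_filter]
    constructor
    · rintro ⟨a, b, c, d, e⟩
      have hte : t ∣ resIndex g p := (Dvd.intro_left k rfl).trans e
      exact ⟨⟨a, b, c, d, hte⟩, (Nat.dvd_div_iff_mul_dvd hte).mpr (by rwa [mul_comm])⟩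
    · rintro ⟨⟨a, b, c, d, e⟩, f⟩
      exact ⟨a, b, c, d, by rw [mul_comm]; exact (Nat.dvd_div_iff_mul_dvd e).mp f⟩
  simp_rw [h1, Finset.mul_sum]
  rw [Finset.sum_comm, Finset.card_filter]
  push_cast
  refine Finset.sum_congr rfl fun p _ => ?_
  have h2 : ∑ k ∈ P.divisors, (ArithmeticFunction.moebius k : ℝ) * (if k ∣ resIndex g p / t then (1:ℝ) else 0) =
      ((∑ k ∈ (Nat.gcd P (resIndex g p / t)).divisors, ArithmeticFunction.moebius k : ℤ) : ℝ) := by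
    push_cast
    simp_rw [mul_ite, mul_one, mul_zero]
    rw [← Finset.sum_filter]
    refine Finset.sum_congr ?_ fun _ _ => rfl
    ext k
    rw [Finset.mem_filter, Nat.mem_divisors, Nat.mem_divisors, Nat.dvd_gcd_iff]
    have : Nat.gcd P (resIndex g p / t) ≠ 0 := Nat.gcd_ne_zero_left hP
    tauto
  rw [h2, ← ArithmeticFunction.coe_mul_zeta_apply, ArithmeticFunction.moebius_mul_coe_zeta,
    ArithmeticFunction.one_apply]
  unfold Nat.Coprime
  split_ifs <;> simp

lemma Ngt_eq (g : ℚ) (ht : 1 ≤ t) (x : ℝ) :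
    Ngt g t x = ((Rset g t x).filter (fun p => resIndex g p = t)).card := by
  unfold Ngt countPrimes Rset
  rw [Finset.filter_filter]
  congr 1
  ext p
  simp only [Finset.mem_filter]
  constructor
  · rintro ⟨r, a, b, c, d⟩
    exact ⟨r, ⟨a, b, c, d ▸ dvd_rfl⟩, d⟩
  · rintro ⟨r, ⟨a, b, c, d⟩, e⟩
    exact ⟨r, a, b, c, e⟩

/-- The error made by sieving only by the primes `q ≤ ξ`. If `r_g(p)/t` is prime to all of them but not `1`, let
`q` be a prime factor: for `q ≤ Z` the prime is counted in `Rset g (q t)`, for `Z < q ≤ W` only `p ≡ 1 mod q` is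
used, and for `q > W` the order of `g` modulo `p` is at most `(p - 1)/q ≤ D`. -/
lemma sieve_error (ht : 1 ≤ t) {x : ℝ} (hx : 0 ≤ x) {ξ Z W D : ℕ}
    (hWD : x < ((W + 1 : ℕ) : ℝ) * ((D + 1 : ℕ) : ℝ)) :
    |(Ngt g t x : ℝ) - ((Rset g t x).filter
        (fun p => Nat.Coprime (primorial ξ) (resIndex g p / t))).card| ≤
      ∑ q ∈ (Finset.Ioc ξ Z).filter Nat.Prime, ((Rset g (q * t) x).card : ℝ) +
      ∑ q ∈ (Finset.Ioc Z W).filter Nat.Prime, (piq q ⌊x⌋₊ : ℝ) + (smallOrd g D ⌊x⌋₊).card := by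
  set A := (Rset g t x).filter (fun p => resIndex g p = t) with hA
  set B := (Rset g t x).filter (fun p => Nat.Coprime (primorial ξ) (resIndex g p / t)) with hB
  have hAB : A ⊆ B := by
    intro p hp
    obtain ⟨h1, h2⟩ := Finset.mem_filter.mp hp
    refine Finset.mem_filter.mpr ⟨h1, ?_⟩
    rw [h2, Nat.div_self ht]
    exact Nat.coprime_one_right _
  have hsub : B ⊆ A ∪ (((Finset.Ioc ξ Z).filter Nat.Prime).biUnion (fun q => Rset g (q * t) x) ∪
      ((Finset.Ioc Z W).filter Nat.Prime).biUnion
        (fun q => (Finset.range (⌊x⌋₊ + 1)).filter (fun p => p.Prime ∧ q ∣ p - 1)) ∪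
      smallOrd g D ⌊x⌋₊) := by
    intro p hp
    obtain ⟨h1, h2⟩ := Finset.mem_filter.mp hp
    obtain ⟨hr, hpp, hodd, ho, htr⟩ := Finset.mem_filter.mp h1
    by_cases hrt : resIndex g p = t
    · exact Finset.mem_union_left _ (Finset.mem_filter.mpr ⟨h1, hrt⟩)
    refine Finset.mem_union_right _ ?_
    have hmul := resIndex_mul hpp ho
    have hne1 : resIndex g p / t ≠ 1 := by
      intro h
      exact hrt (by rw [← Nat.div_mul_cancel htr, h, one_mul])
    set q := (resIndex g p / t).minFac with hq
    have hqp : q.Prime := Nat.minFac_prime hne1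
    have hqd : q ∣ resIndex g p / t := Nat.minFac_dvd _
    have hqt : q * t ∣ resIndex g p := by
      rw [mul_comm]; exact (Nat.dvd_div_iff_mul_dvd htr).mp hqd
    have hξ : ξ < q := by
      by_contra hle
      have h3 : q ∣ primorial ξ := by
        unfold primorial
        exact Finset.dvd_prod_of_mem (fun p => p)
          (Finset.mem_filter.mpr ⟨Finset.mem_range.mpr (by omega), hqp⟩)
      have h4 : q ∣ 1 := by
        have := Nat.dvd_gcd h3 hqd
        rwa [h2] at this
      exact hqp.one_lt.ne' (Nat.dvd_one.mp h4)
    by_cases hZ : q ≤ Z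
    · refine Finset.mem_union_left _ (Finset.mem_union_left _ (Finset.mem_biUnion.mpr ⟨q, ?_, ?_⟩))
      · exact Finset.mem_filter.mpr ⟨Finset.mem_Ioc.mpr ⟨hξ, hZ⟩, hqp⟩
      · exact Finset.mem_filter.mpr ⟨hr, hpp, hodd, ho, hqt⟩
    by_cases hW : q ≤ W
    · refine Finset.mem_union_left _ (Finset.mem_union_right _ (Finset.mem_biUnion.mpr ⟨q, ?_, ?_⟩))
      · exact Finset.mem_filter.mpr ⟨Finset.mem_Ioc.mpr ⟨by omega, hW⟩, hqp⟩
      · refine Finset.mem_filter.mpr ⟨hr, hpp, ?_⟩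
        rw [← hmul]
        exact ((Dvd.intro t rfl).trans hqt).trans (Dvd.intro _ rfl)
    · refine Finset.mem_union_right _ (Finset.mem_filter.mpr ⟨hr, hpp, ho, ?_⟩)
      by_contra hD
      have hr0 : 0 < resIndex g p := by
        rcases Nat.eq_zero_or_pos (resIndex g p) with h | h
        · rw [h, zero_mul] at hmul
          have := hpp.two_le
          omega
        · exact h
      have h5 : W + 1 ≤ resIndex g p :=
        le_trans (by nlinarith : W + 1 ≤ q * t) (Nat.le_of_dvd hr0 hqt)
      have h6 : (W + 1) * (D + 1) ≤ p := by
        have := Nat.mul_le_mul h5 (by omega : D + 1 ≤ orderOf (ratRed g p))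
        omega
      have h7 : p ≤ ⌊x⌋₊ := by have := Finset.mem_range.mp hr; omega
      have h8 := (Nat.le_floor_iff hx).mp (h6.trans h7)
      push_cast at h8 hWD
      linarith
  have h3 : A.card ≤ B.card := Finset.card_le_card hAB
  have h4 : B.card ≤ A.card + ((∑ q ∈ (Finset.Ioc ξ Z).filter Nat.Prime, (Rset g (q * t) x).card) +
      (∑ q ∈ (Finset.Ioc Z W).filter Nat.Prime, piq q ⌊x⌋₊) + (smallOrd g D ⌊x⌋₊).card) := by
    refine (Finset.card_le_card hsub).trans ((Finset.card_union_le _ _).trans (Nat.add_le_add_left ?_ _))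
    refine (Finset.card_union_le _ _).trans (Nat.add_le_add_right ?_ _)
    exact (Finset.card_union_le _ _).trans (add_le_add Finset.card_biUnion_le Finset.card_biUnion_le)
  have h3' : (A.card : ℝ) ≤ B.card := by exact_mod_cast h3
  have h4' : (B.card : ℝ) ≤ A.card + (∑ q ∈ (Finset.Ioc ξ Z).filter Nat.Prime, ((Rset g (q * t) x).card : ℝ) +
      ∑ q ∈ (Finset.Ioc Z W).filter Nat.Prime, (piq q ⌊x⌋₊ : ℝ) + (smallOrd g D ⌊x⌋₊).card) := by
    exact_mod_cast h4
  rw [Ngt_eq g ht, ← hA, abs_le]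
  constructor <;> linarith

end Sieve

end Hooley

/-! ### The middle ranges of `q` -/

namespace Hooley

open NumberField NumberField.Units NumberField.Units.dirichletUnitTheorem Module MeasureTheory
open scoped nonZeroDivisors ENNReal

section Assembly

variable {g : ℚ} {t : ℕ}

lemma xi_bound {L : ℝ} (hL : 200 ≤ L) (hM : 1 ≤ Real.log L) :
    1 ≤ ⌊L / 100⌋₊ ∧ (Real.log ⌊L / 100⌋₊ + 3) / (⌊L / 100⌋₊ : ℝ) ≤ 800 * (Real.log L / L) := by
  have h1 : (⌊L / 100⌋₊ : ℝ) ≤ L / 100 := Nat.floor_le (by linarith)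
  have h2 : L / 100 < ⌊L / 100⌋₊ + 1 := Nat.lt_floor_add_one _
  have h3 : L / 200 ≤ (⌊L / 100⌋₊ : ℝ) := by linarith
  have h4 : 1 ≤ ⌊L / 100⌋₊ := Nat.le_floor (by push_cast; linarith)
  refine ⟨h4, ?_⟩
  have h5 : Real.log ⌊L / 100⌋₊ ≤ Real.log L :=
    Real.log_le_log (by exact_mod_cast h4) (by linarith)
  calc (Real.log ⌊L / 100⌋₊ + 3) / (⌊L / 100⌋₊ : ℝ) ≤ (4 * Real.log L) / (L / 200) :=
        div_le_div₀ (by linarith) (by linarith) (by linarith) h3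
    _ = 800 * (Real.log L / L) := by field_simp; norm_num

/-- The primes `q` with `(log x) / 100 < q ≤ √x / log⁵ x`. -/
lemma middle_small (hg₁ : g ≠ -1) (hg₂ : g ≠ 0) (hg₃ : g ≠ 1) (ht : 1 ≤ t)
    (hGRH : ∀ k : ℕ, 1 ≤ k → DedekindRH (splitField g (k * t))) :
    ∃ C : ℝ, 0 < C ∧ ∀ᶠ x : ℝ in atTop,
      ∑ q ∈ (Finset.Ioc ⌊Real.log x / 100⌋₊ ⌊√x / Real.log x ^ 5⌋₊).filter Nat.Prime,
        ((Rset g (q * t) x).card : ℝ) ≤ C * (x * Real.log (Real.log x) / Real.log x ^ 2) := by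
  obtain ⟨C, hC, hR⟩ := card_upper hg₂ ht hGRH
  obtain ⟨c, hc, hco⟩ := coeff_bound hg₁ hg₂ hg₃ ht
  refine ⟨C * (c * 800) + 2 * C, by positivity, ?_⟩
  filter_upwards [Real.tendsto_log_atTop.eventually_ge_atTop 200,
    (Real.tendsto_log_atTop.comp Real.tendsto_log_atTop).eventually_ge_atTop 1,
    eventually_ge_atTop 8] with x hL hM hx
  simp only [Function.comp_apply] at hM
  have hR := hR x hx
  have hx0 : 0 < x := by linarith
  set L := Real.log x with hLdef
  set M := Real.log L with hMdef
  obtain ⟨hξ, htail⟩ := xi_bound hL hM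
  set ξ := ⌊L / 100⌋₊
  set Z := ⌊√x / L ^ 5⌋₊ with hZ
  set T := (Finset.Ioc ξ Z).filter Nat.Prime with hT
  have hL0 : 0 < L := by linarith
  have hZle : (Z:ℝ) ≤ √x / L ^ 5 := Nat.floor_le (by positivity)
  have hcard : (T.card : ℝ) ≤ √x / L ^ 5 := by
    refine le_trans ?_ hZle
    have : T.card ≤ (Finset.Ioc ξ Z).card := Finset.card_filter_le _ _
    rw [Nat.card_Ioc] at this
    exact_mod_cast this.trans (Nat.sub_le _ _)
  have hterm : ∀ q ∈ T, ((Rset g (q * t) x).card : ℝ) ≤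
      C * (x / L) * (c * ((1 + Real.log q) / (q:ℝ) ^ 2)) + C * (√x * L) * (2 * L) := by
    intro q hq
    obtain ⟨h1, h2⟩ := Finset.mem_filter.mp hq
    have h3 := (Finset.mem_Ioc.mp h1).2
    refine (hR q h2.one_lt.le).trans (add_le_add ?_ ?_)
    · exact mul_le_mul_of_nonneg_left (hco q h2.squarefree) (by positivity)
    · refine mul_le_mul_of_nonneg_left ?_ (by positivity)
      have h4 : (q:ℝ) ≤ x := by
        calc (q:ℝ) ≤ Z := by exact_mod_cast h3
          _ ≤ √x / L ^ 5 := hZle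
          _ ≤ √x := div_le_self (by positivity) (one_le_pow₀ (by linarith))
          _ ≤ x := by rw [Real.sqrt_le_left hx0.le]; nlinarith
      have h5 : Real.log q ≤ L := Real.log_le_log (by exact_mod_cast h2.pos) h4
      linarith
  have hsum : ∑ q ∈ T, (1 + Real.log q) / (q:ℝ) ^ 2 ≤ 800 * (M / L) :=
    (tail_sum hξ T fun q hq => (Finset.mem_Ioc.mp (Finset.mem_filter.mp hq).1).1).trans htail
  calc ∑ q ∈ T, ((Rset g (q * t) x).card : ℝ)
      ≤ ∑ q ∈ T, (C * (x / L) * (c * ((1 + Real.log q) / (q:ℝ) ^ 2)) + C * (√x * L) * (2 * L)) :=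
        Finset.sum_le_sum hterm
    _ = C * (x / L) * c * ∑ q ∈ T, (1 + Real.log q) / (q:ℝ) ^ 2 + T.card * (C * (√x * L) * (2 * L)) := by
        rw [Finset.sum_add_distrib, Finset.mul_sum, Finset.sum_const, nsmul_eq_mul]
        congr 1
        exact Finset.sum_congr rfl fun _ _ => by ring
    _ ≤ C * (x / L) * c * (800 * (M / L)) + √x / L ^ 5 * (C * (√x * L) * (2 * L)) := by
        refine add_le_add (mul_le_mul_of_nonneg_left hsum (by positivity))
          (mul_le_mul_of_nonneg_right hcard (by positivity))
    _ = C * (c * 800) * (x * M / L ^ 2) + 2 * C * ((√x * √x) / L ^ 3) := by field_simp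
    _ ≤ C * (c * 800) * (x * M / L ^ 2) + 2 * C * (x * M / L ^ 2) := by
        rw [Real.mul_self_sqrt hx0.le]
        refine add_le_add le_rfl (mul_le_mul_of_nonneg_left ?_ (by positivity))
        refine div_le_div₀ (by positivity) (by nlinarith) (by positivity) ?_
        exact pow_le_pow_right₀ (by linarith) (by norm_num)
    _ = _ := by ring

/-- The primes `q` with `√x / log⁵ x < q ≤ √x log x`. The sieve has level `R = x^{1/12}`, and the ends of the
range have ratio `log⁶ x`, so that `O(log log x)` dyadic blocks cover it. -/
lemma middle_large : ∃ C : ℝ, 0 < C ∧ ∀ᶠ x : ℝ in atTop,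
      ∑ q ∈ (Finset.Ioc ⌊√x / Real.log x ^ 5⌋₊ ⌊√x * Real.log x⌋₊).filter Nat.Prime,
        (piq q ⌊x⌋₊ : ℝ) ≤ C * (x * Real.log (Real.log x) / Real.log x ^ 2) := by
  refine ⟨48 * 160 + 1 + 1, by positivity, ?_⟩
  filter_upwards [Real.tendsto_log_atTop.eventually_ge_atTop 200,
    (Real.tendsto_log_atTop.comp Real.tendsto_log_atTop).eventually_ge_atTop 1,
    eventually_ge_atTop ((4:ℝ) ^ 12), log_pow_le 5 1 (ε := 1 / 4) (by norm_num),
    log_pow_le 5 9 (ε := 1 / 3) (by norm_num),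
    log_pow_le 2 48 (ε := 1 / 2) (by norm_num)] with x hL hM hx hL5 hL59 hL2
  simp only [Function.comp_apply] at hM
  have hx1 : 1 ≤ x := le_trans (by norm_num) hx
  have hx0 : 0 < x := by linarith
  set L := Real.log x with hLdef
  set M := Real.log L with hMdef
  set Z := ⌊√x / L ^ 5⌋₊ with hZ
  set W := ⌊√x * L⌋₊ with hW
  set T := (Finset.Ioc Z W).filter Nat.Prime with hT
  have hL0 : 0 < L := by linarith
  have hA : x ^ (1 / 4 : ℝ) ≤ √x / L ^ 5 := by
    rw [le_div_iff₀ (by positivity), Real.sqrt_eq_rpow]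
    calc x ^ (1 / 4 : ℝ) * L ^ 5 ≤ x ^ (1 / 4 : ℝ) * x ^ (1 / 4 : ℝ) :=
          mul_le_mul_of_nonneg_left (by linarith) (by positivity)
      _ = x ^ (1 / 2 : ℝ) := by rw [← Real.rpow_add hx0]; norm_num
  set A := √x / L ^ 5 with hAdef
  have hq4 : (4:ℝ) ≤ x ^ (1 / 12 : ℝ) := by
    calc (4:ℝ) = ((4:ℝ) ^ 12) ^ (1 / 12 : ℝ) := by
          rw [← Real.rpow_natCast, ← Real.rpow_mul (by norm_num)]; norm_num
      _ ≤ _ := Real.rpow_le_rpow (by positivity) hx (by norm_num)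
  set R := ⌊x ^ (1 / 12 : ℝ)⌋₊ with hR
  have hRle : (R:ℝ) ≤ x ^ (1 / 12 : ℝ) := Nat.floor_le (by positivity)
  have hRge : x ^ (1 / 12 : ℝ) < R + 1 := Nat.lt_floor_add_one _
  have hR2 : 2 ≤ R := Nat.le_floor (by push_cast; linarith)
  have hR0 : (0:ℝ) < R := by positivity
  have hlogR : L / 24 ≤ Real.log R := by
    have h1 : Real.log (x ^ (1 / 12 : ℝ) / 2) ≤ Real.log R :=
      Real.log_le_log (by positivity) (by linarith)
    rw [Real.log_div (by positivity) (by norm_num), Real.log_rpow hx0, ← hLdef] at h1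
    linarith [Real.log_two_lt_d9]
  have hlogR' : Real.log R ≤ L / 12 := by
    have h1 := Real.log_le_log hR0 hRle
    rw [Real.log_rpow hx0, ← hLdef] at h1
    linarith
  have hA14 : x ^ (1 / 12 : ℝ) ≤ x ^ (1 / 4 : ℝ) := Real.rpow_le_rpow_of_exponent_le hx1 (by norm_num)
  have hA1 : 1 < A := by linarith
  have hlogA : L / 4 ≤ Real.log A := by
    have h1 := Real.log_le_log (by positivity) hA
    rw [Real.log_rpow hx0, ← hLdef] at h1
    linarith
  have hWle : (W:ℝ) ≤ √x * L := Nat.floor_le (by positivity)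
  have hcard : (T.card : ℝ) ≤ √x * L := by
    refine le_trans ?_ hWle
    have : T.card ≤ (Finset.Ioc Z W).card := Finset.card_filter_le _ _
    rw [Nat.card_Ioc] at this
    exact_mod_cast this.trans (Nat.sub_le _ _)
  have hmem : ∀ q ∈ T, q.Prime ∧ A < q ∧ (q:ℝ) ≤ √x * L := by
    intro q hq
    obtain ⟨h1, h2⟩ := Finset.mem_filter.mp hq
    obtain ⟨h3, h4⟩ := Finset.mem_Ioc.mp h1
    exact ⟨h2, Nat.lt_of_floor_lt h3, le_trans (by exact_mod_cast h4) hWle⟩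
  have hterm : ∀ q ∈ T, (piq q ⌊x⌋₊ : ℝ) ≤ 48 * (x / L) * (1 / q) + (48 / L + 9 * x ^ (1 / 6 : ℝ) * L ^ 2) := by
    intro q hq
    obtain ⟨h1, h2, -⟩ := hmem q hq
    have hRq : R < q := by
      have : (R:ℝ) < q := by linarith
      exact_mod_cast this
    refine (piq_selberg h1 hR2 hRq ⌊x⌋₊).trans ?_
    have hq0 : (0:ℝ) < q := by exact_mod_cast h1.pos
    have h3 : (⌊x⌋₊ : ℝ) / q ≤ x / q := div_le_div_of_nonneg_right (Nat.floor_le hx0.le) hq0.le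
    have h4 : 2 * ((⌊x⌋₊ : ℝ) / q + 1) / Real.log R ≤ 2 * (x / q + 1) / (L / 24) :=
      div_le_div₀ (by positivity) (by linarith) (by positivity) hlogR
    have h5 : (R:ℝ) ^ 2 ≤ x ^ (1 / 6 : ℝ) := by
      calc (R:ℝ) ^ 2 ≤ (x ^ (1 / 12 : ℝ)) ^ 2 := pow_le_pow_left₀ hR0.le hRle 2
        _ = x ^ (1 / 6 : ℝ) := by
          rw [← Real.rpow_natCast, ← Real.rpow_mul hx0.le]; norm_num
    have h6 : (1 + 2 * Real.log R) ^ 2 ≤ 9 * L ^ 2 := by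
      have : (1 + 2 * Real.log R) ^ 2 ≤ (3 * L) ^ 2 :=
        pow_le_pow_left₀ (by linarith) (by linarith) 2
      linarith
    have h7 : (R:ℝ) ^ 2 * (1 + 2 * Real.log R) ^ 2 ≤ x ^ (1 / 6 : ℝ) * (9 * L ^ 2) :=
      mul_le_mul h5 h6 (by positivity) (by positivity)
    have h8 : 2 * (x / q + 1) / (L / 24) = 48 * (x / L) * (1 / q) + 48 / L := by
      field_simp; ring
    linarith
  have hl2 : 0.69 < Real.log 2 := by linarith [Real.log_two_gt_d9]
  set J := ⌈6 * M / Real.log 2⌉₊ with hJ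
  have hJle : (J:ℝ) ≤ 10 * M := by
    have h1 : (J:ℝ) < 6 * M / Real.log 2 + 1 := Nat.ceil_lt_add_one (by positivity)
    have h2 : 6 * M / Real.log 2 ≤ 9 * M := by
      rw [div_le_iff₀ (by linarith)]; nlinarith
    linarith
  have hJge : L ^ 6 ≤ (2:ℝ) ^ J := by
    rw [← Real.log_le_log_iff (by positivity) (by positivity), Real.log_pow, Real.log_pow]
    have h1 : 6 * M / Real.log 2 ≤ J := Nat.le_ceil _
    rw [div_le_iff₀ (by linarith)] at h1
    push_cast
    exact h1
  have hinv : ∑ q ∈ T, (1:ℝ) / q ≤ 160 * (M / L) := by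
    refine (sum_inv_blocks hA1 J T fun q hq => ?_).trans ?_
    · obtain ⟨h1, h2, h3⟩ := hmem q hq
      refine ⟨h1, h2, h3.trans ?_⟩
      calc √x * L = L ^ 6 * A := by rw [hAdef]; field_simp
        _ ≤ 2 ^ J * A := mul_le_mul_of_nonneg_right hJge (by linarith)
    · calc (J:ℝ) * (4 / Real.log A) ≤ (10 * M) * (4 / (L / 4)) := by
            refine mul_le_mul hJle ?_ (div_nonneg (by norm_num) (by linarith)) (by positivity)
            exact div_le_div_of_nonneg_left (by norm_num) (by positivity) hlogA
        _ = 160 * (M / L) := by field_simp; norm_num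
  have hQ : x / L ^ 2 ≤ x * M / L ^ 2 := by
    refine div_le_div_of_nonneg_right ?_ (by positivity)
    nlinarith
  have k1 : √x * L * (48 / L) ≤ x / L ^ 2 := by
    rw [le_div_iff₀ (by positivity)]
    calc √x * L * (48 / L) * L ^ 2 = √x * (48 * L ^ 2) := by field_simp
      _ ≤ √x * √x := by
          refine mul_le_mul_of_nonneg_left ?_ (by positivity)
          rw [Real.sqrt_eq_rpow]; exact hL2
      _ = x := Real.mul_self_sqrt hx0.le
  have k2 : √x * L * (9 * x ^ (1 / 6 : ℝ) * L ^ 2) ≤ x / L ^ 2 := by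
    rw [le_div_iff₀ (by positivity)]
    calc √x * L * (9 * x ^ (1 / 6 : ℝ) * L ^ 2) * L ^ 2
        = x ^ (1 / 2 : ℝ) * x ^ (1 / 6 : ℝ) * (9 * L ^ 5) := by rw [Real.sqrt_eq_rpow]; ring
      _ ≤ x ^ (1 / 2 : ℝ) * x ^ (1 / 6 : ℝ) * x ^ (1 / 3 : ℝ) :=
          mul_le_mul_of_nonneg_left hL59 (by positivity)
      _ = x := by
          rw [← Real.rpow_add hx0, ← Real.rpow_add hx0]; norm_num
  calc ∑ q ∈ T, (piq q ⌊x⌋₊ : ℝ)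
      ≤ ∑ q ∈ T, (48 * (x / L) * (1 / q) + (48 / L + 9 * x ^ (1 / 6 : ℝ) * L ^ 2)) :=
        Finset.sum_le_sum hterm
    _ = 48 * (x / L) * ∑ q ∈ T, (1:ℝ) / q + T.card * (48 / L + 9 * x ^ (1 / 6 : ℝ) * L ^ 2) := by
        rw [Finset.sum_add_distrib, Finset.mul_sum, Finset.sum_const, nsmul_eq_mul]
    _ ≤ 48 * (x / L) * (160 * (M / L)) + √x * L * (48 / L + 9 * x ^ (1 / 6 : ℝ) * L ^ 2) :=
        add_le_add (mul_le_mul_of_nonneg_left hinv (by positivity))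
          (mul_le_mul_of_nonneg_right hcard (by positivity))
    _ = 48 * 160 * (x * M / L ^ 2) + (√x * L * (48 / L) + √x * L * (9 * x ^ (1 / 6 : ℝ) * L ^ 2)) := by
        field_simp
    _ ≤ _ := by linarith only [k1, k2, hQ]

end Assembly

end Hooley

/-! ### Conclusion -/

namespace Hooley

open NumberField NumberField.Units NumberField.Units.dirichletUnitTheorem Module MeasureTheory
open scoped nonZeroDivisors ENNReal

section Final

variable {g : ℚ} {t : ℕ}

lemma dvd_primorial {k ξ : ℕ} (hk : Squarefree k) (hle : k ≤ ξ) : k ∣ primorial ξ := by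
  rw [← Nat.prod_primeFactors_of_squarefree hk]
  unfold primorial
  refine Finset.prod_dvd_prod_of_subset _ _ _ fun p hp => ?_
  obtain ⟨h1, h2, h3⟩ := Nat.mem_primeFactors.mp hp
  have := Nat.le_of_dvd (Nat.pos_of_ne_zero h3) h2
  exact Finset.mem_filter.mpr ⟨Finset.mem_range.mpr (by omega), h1⟩

/-- For `k` not squarefree, in particular for `k = 0`, the left side vanishes. -/
lemma abs_moebius_div_le (hg₁ : g ≠ -1) (hg₂ : g ≠ 0) (hg₃ : g ≠ 1) (ht : 1 ≤ t) :
    ∃ c : ℝ, 0 < c ∧ ∀ k : ℕ, |(ArithmeticFunction.moebius k : ℝ) / nn (splitField g (k * t))| ≤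
      c * ((1 + Real.log k) / (k:ℝ) ^ 2) := by
  obtain ⟨c, hc, hco⟩ := coeff_bound hg₁ hg₂ hg₃ ht
  refine ⟨c, hc, fun k => ?_⟩
  by_cases hk : Squarefree k
  · have hn : 0 < nn (splitField g (k * t)) := nn_pos
    rw [abs_div, abs_of_pos hn]
    refine le_trans (div_le_div_of_nonneg_right ?_ hn.le) (hco k hk)
    exact_mod_cast ArithmeticFunction.abs_moebius_le_one
  · rw [ArithmeticFunction.moebius_eq_zero_of_not_squarefree hk]
    have := Real.log_natCast_nonneg k
    simp only [Int.cast_zero, zero_div, abs_zero]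
    positivity

/-- The number of primes with `t ∣ r_g(p)` and `r_g(p)/t` free of prime factors `≤ (log x)/100`. Since
`primorial ξ ≤ 4^ξ ≤ x^{1/50}` for `ξ ≤ (log x)/100`, the errors `x^{24/25}` of all the squarefree divisors add
up to `O(x / log² x)`, and the tail of the density series beyond `ξ` is `O(log ξ / ξ)`. -/
lemma sieved_asymp (hg₁ : g ≠ -1) (hg₂ : g ≠ 0) (hg₃ : g ≠ 1) (ht : 1 ≤ t)
    (hGRH : ∀ k : ℕ, 1 ≤ k → DedekindRH (splitField g (k * t))) :
    ∃ C : ℝ, 0 < C ∧ ∀ᶠ x : ℝ in atTop,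
      |(((Rset g t x).filter (fun p => Nat.Coprime (primorial ⌊Real.log x / 100⌋₊) (resIndex g p / t))).card : ℝ) -
        (∑' k : ℕ, (ArithmeticFunction.moebius k : ℝ) / nn (splitField g (k * t))) * Li x| ≤
        C * (x * Real.log (Real.log x) / Real.log x ^ 2) := by
  obtain ⟨C, hC, hR⟩ := card_asymp hg₂ ht hGRH
  obtain ⟨C₃, hC₃, hLi⟩ := Li_asymp
  obtain ⟨c, hc, hw⟩ := abs_moebius_div_le hg₁ hg₂ hg₃ ht
  set w : ℕ → ℝ := fun k => (ArithmeticFunction.moebius k : ℝ) / nn (splitField g (k * t)) with hwdef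
  obtain ⟨hsum, htail⟩ := tail_bound hc.le hw
  set B := ∑' k, |w k| with hB
  have hB0 : 0 ≤ B := tsum_nonneg fun _ => abs_nonneg _
  refine ⟨C * B + 2 * C + c * 800 * (1 + C₃), by positivity, ?_⟩
  filter_upwards [Real.tendsto_log_atTop.eventually_ge_atTop 200,
    (Real.tendsto_log_atTop.comp Real.tendsto_log_atTop).eventually_ge_atTop 1,
    hR, hLi, log_pow_le 3 1 (ε := 1 / 50) (by norm_num), eventually_ge_atTop 1] with x hL hM hR hLi hL3 hx1
  simp only [Function.comp_apply] at hM
  have hx0 : 0 < x := by linarith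
  set L := Real.log x with hLdef
  set M := Real.log L with hMdef
  obtain ⟨hξ, hξt⟩ := xi_bound hL hM
  have hL0 : 0 < L := by linarith
  have hξle : ((⌊L / 100⌋₊ : ℕ) : ℝ) ≤ L / 100 := Nat.floor_le (by positivity)
  set ξ := ⌊L / 100⌋₊
  set P := primorial ξ with hP
  have hP0 : P ≠ 0 := (primorial_pos ξ).ne'
  have hlogP : Real.log P ≤ L / 50 := by
    have h1 : (P:ℝ) ≤ 4 ^ ξ := by exact_mod_cast primorial_le_four_pow ξ
    have h2 := Real.log_le_log (by exact_mod_cast primorial_pos ξ) h1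
    rw [Real.log_pow] at h2
    have h3 : Real.log 4 ≤ 2 := by
      rw [show (4:ℝ) = 2 ^ 2 by norm_num, Real.log_pow]
      push_cast
      linarith [Real.log_two_lt_d9]
    have h4 : (ξ:ℝ) * Real.log 4 ≤ (L / 100) * 2 :=
      mul_le_mul hξle h3 (Real.log_nonneg (by norm_num)) (by positivity)
    linarith
  have hPle : (P:ℝ) ≤ x ^ (1 / 50 : ℝ) := by
    rw [← Real.log_le_log_iff (by exact_mod_cast primorial_pos ξ) (by positivity), Real.log_rpow hx0]
    linarith
  set Q := x * M / L ^ 2 with hQ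
  have hQ0 : 0 ≤ Q := by positivity
  have hQ1 : x / L ^ 2 ≤ Q := by
    refine div_le_div_of_nonneg_right ?_ (by positivity)
    nlinarith
  rw [sieve_identity ht hP0]
  have hsplit : ∑ k ∈ P.divisors, (ArithmeticFunction.moebius k : ℝ) * ((Rset g (k * t) x).card : ℝ) -
      (∑' k, w k) * Li x =
      ∑ k ∈ P.divisors, (ArithmeticFunction.moebius k : ℝ) *
        (((Rset g (k * t) x).card : ℝ) - 1 / nn (splitField g (k * t)) * Li x) -
      (∑' k, w k - ∑ k ∈ P.divisors, w k) * Li x := by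
    rw [sub_mul, Finset.sum_mul]
    simp_rw [mul_sub]
    rw [Finset.sum_sub_distrib]
    have : ∑ k ∈ P.divisors, (ArithmeticFunction.moebius k : ℝ) * (1 / nn (splitField g (k * t)) * Li x) =
        ∑ k ∈ P.divisors, w k * Li x := Finset.sum_congr rfl fun k _ => by rw [hwdef]; ring
    rw [this]
    ring
  have h1 : |∑ k ∈ P.divisors, (ArithmeticFunction.moebius k : ℝ) *
        (((Rset g (k * t) x).card : ℝ) - 1 / nn (splitField g (k * t)) * Li x)| ≤ (C * B + 2 * C) * Q := by
    have hterm : ∀ k ∈ P.divisors, |(ArithmeticFunction.moebius k : ℝ) *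
        (((Rset g (k * t) x).card : ℝ) - 1 / nn (splitField g (k * t)) * Li x)| ≤
        C * Q * |w k| + C * (2 * L) * x ^ (24 / 25 : ℝ) := by
      intro k hk
      have hkP := Nat.dvd_of_mem_divisors hk
      have hk0 : 1 ≤ k := Nat.pos_of_mem_divisors hk
      have hn : 0 < nn (splitField g (k * t)) := nn_pos
      have hμ : |(ArithmeticFunction.moebius k : ℝ)| ≤ 1 := by
        exact_mod_cast ArithmeticFunction.abs_moebius_le_one
      have hlk : Real.log k ≤ L := by
        have : Real.log k ≤ Real.log P := Real.log_le_log (by exact_mod_cast hk0)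
          (by exact_mod_cast Nat.le_of_dvd (primorial_pos ξ) hkP)
        linarith
      rw [abs_mul]
      calc |(ArithmeticFunction.moebius k : ℝ)| * |((Rset g (k * t) x).card : ℝ) - 1 / nn (splitField g (k * t)) * Li x|
          ≤ |(ArithmeticFunction.moebius k : ℝ)| * (C * Q * (1 / nn (splitField g (k * t))) +
              C * (1 + Real.log k) * x ^ (24 / 25 : ℝ)) :=
            mul_le_mul_of_nonneg_left (hR k hk0) (abs_nonneg _)
        _ = C * Q * |w k| + |(ArithmeticFunction.moebius k : ℝ)| * (C * (1 + Real.log k) * x ^ (24 / 25 : ℝ)) := by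
            rw [hwdef]
            simp only
            rw [abs_div, abs_of_pos hn]
            ring
        _ ≤ C * Q * |w k| + 1 * (C * (2 * L) * x ^ (24 / 25 : ℝ)) := by
            have := Real.log_natCast_nonneg k
            refine add_le_add le_rfl (mul_le_mul hμ ?_ (by positivity) (by norm_num))
            refine mul_le_mul_of_nonneg_right (mul_le_mul_of_nonneg_left (by linarith) hC.le) (by positivity)
        _ = _ := by ring
    have hcard : (P.divisors.card : ℝ) ≤ x ^ (1 / 50 : ℝ) :=
      le_trans (by exact_mod_cast Nat.card_divisors_le_self P) hPle
    calc _ ≤ ∑ k ∈ P.divisors, |(ArithmeticFunction.moebius k : ℝ) *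
          (((Rset g (k * t) x).card : ℝ) - 1 / nn (splitField g (k * t)) * Li x)| :=
          Finset.abs_sum_le_sum_abs _ _
      _ ≤ ∑ k ∈ P.divisors, (C * Q * |w k| + C * (2 * L) * x ^ (24 / 25 : ℝ)) := Finset.sum_le_sum hterm
      _ = C * Q * ∑ k ∈ P.divisors, |w k| + P.divisors.card * (C * (2 * L) * x ^ (24 / 25 : ℝ)) := by
          rw [Finset.sum_add_distrib, Finset.mul_sum, Finset.sum_const, nsmul_eq_mul]
      _ ≤ C * Q * B + x ^ (1 / 50 : ℝ) * (C * (2 * L) * x ^ (24 / 25 : ℝ)) := by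
          refine add_le_add (mul_le_mul_of_nonneg_left ?_ (by positivity))
            (mul_le_mul_of_nonneg_right hcard (by positivity))
          exact hsum.abs.sum_le_tsum _ fun _ _ => abs_nonneg _
      _ = C * B * Q + 2 * C * (x ^ (49 / 50 : ℝ) * L) := by
          have : x ^ (49 / 50 : ℝ) = x ^ (1 / 50 : ℝ) * x ^ (24 / 25 : ℝ) := by
            rw [← Real.rpow_add hx0]; norm_num
          rw [this]; ring
      _ ≤ C * B * Q + 2 * C * Q := by
          refine add_le_add le_rfl (mul_le_mul_of_nonneg_left (le_trans ?_ hQ1) (by positivity))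
          rw [le_div_iff₀ (by positivity)]
          calc x ^ (49 / 50 : ℝ) * L * L ^ 2 = x ^ (49 / 50 : ℝ) * (1 * L ^ 3) := by ring
            _ ≤ x ^ (49 / 50 : ℝ) * x ^ (1 / 50 : ℝ) := mul_le_mul_of_nonneg_left hL3 (by positivity)
            _ = x := by rw [← Real.rpow_add hx0]; norm_num
      _ = _ := by ring
  have h2 : |(∑' k, w k - ∑ k ∈ P.divisors, w k) * Li x| ≤ c * 800 * (1 + C₃) * Q := by
    have ht := htail ξ hξ P.divisors (by
      intro k hk hkd
      by_cases hsq : Squarefree k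
      · exact absurd (Nat.mem_divisors.mpr ⟨dvd_primorial hsq hk, hP0⟩) hkd
      · rw [ArithmeticFunction.moebius_eq_zero_of_not_squarefree hsq, Int.cast_zero, zero_div])
    have hLi' : |Li x| ≤ (1 + C₃) * (x / L) := by
      have h3 : |Li x| ≤ |Li x - x / L| + |x / L| := by
        have := abs_add_le (Li x - x / L) (x / L)
        rwa [sub_add_cancel] at this
      rw [abs_of_pos (by positivity : 0 < x / L)] at h3
      have h4 : x / L ^ 2 ≤ x / L :=
        div_le_div_of_nonneg_left hx0.le hL0 (by nlinarith)
      nlinarith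
    rw [abs_mul]
    calc _ ≤ (c * (800 * (M / L))) * ((1 + C₃) * (x / L)) :=
          mul_le_mul (ht.trans (mul_le_mul_of_nonneg_left hξt hc.le)) hLi' (abs_nonneg _) (by positivity)
      _ = _ := by rw [hQ]; field_simp
  change |∑ k ∈ P.divisors, (ArithmeticFunction.moebius k : ℝ) * ((Rset g (k * t) x).card : ℝ) -
      (∑' k, w k) * Li x| ≤ _
  rw [hsplit]
  refine (abs_sub _ _).trans ?_
  linarith only [h1, h2]

/-- The four ranges of the smallest prime factor of `r_g(p)/t` put together. -/
lemma main_bound (hg₁ : g ≠ -1) (hg₂ : g ≠ 0) (hg₃ : g ≠ 1) (ht : 1 ≤ t)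
    (hGRH : ∀ k : ℕ, 1 ≤ k → DedekindRH (splitField g (k * t))) :
    ∃ C : ℝ, ∀ᶠ x : ℝ in atTop, |(Ngt g t x : ℝ) -
        (∑' k : ℕ, (ArithmeticFunction.moebius k : ℝ) / nn (splitField g (k * t))) * Li x| ≤
      C * (x * Real.log (Real.log x) / Real.log x ^ 2) := by
  obtain ⟨C₁, hC₁, h₁⟩ := sieved_asymp hg₁ hg₂ hg₃ ht hGRH
  obtain ⟨C₂, hC₂, h₂⟩ := middle_small hg₁ hg₂ hg₃ ht hGRH
  obtain ⟨C₃, hC₃, h₃⟩ := middle_large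
  obtain ⟨C₄, hC₄, h₄⟩ := smallOrd_card (g := g) hg₁ hg₃
  refine ⟨C₁ + C₂ + C₃ + C₄, ?_⟩
  filter_upwards [h₁, h₂, h₃, Real.tendsto_log_atTop.eventually_ge_atTop 200,
    (Real.tendsto_log_atTop.comp Real.tendsto_log_atTop).eventually_ge_atTop 1,
    eventually_ge_atTop 1] with x h₁ h₂ h₃ hL hM hx1
  simp only [Function.comp_apply] at hM
  have hx0 : 0 < x := by linarith
  set L := Real.log x with hLdef
  set M := Real.log L with hMdef
  have hL0 : 0 < L := by linarith
  have hsq : √x * √x = x := Real.mul_self_sqrt hx0.le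
  have hWD : x < ((⌊√x * L⌋₊ + 1 : ℕ) : ℝ) * ((⌊√x / L⌋₊ + 1 : ℕ) : ℝ) := by
    have a1 : √x * L < ((⌊√x * L⌋₊ + 1 : ℕ) : ℝ) := by exact_mod_cast Nat.lt_floor_add_one (√x * L)
    have a2 : √x / L < ((⌊√x / L⌋₊ + 1 : ℕ) : ℝ) := by exact_mod_cast Nat.lt_floor_add_one (√x / L)
    calc x = (√x * L) * (√x / L) := by
          rw [mul_div_assoc', mul_right_comm, hsq, mul_div_assoc, div_self hL0.ne', mul_one]
      _ < _ := mul_lt_mul'' a1 a2 (by positivity) (by positivity)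
  have herr := sieve_error (g := g) ht hx0.le (ξ := ⌊L / 100⌋₊) (Z := ⌊√x / L ^ 5⌋₊) hWD
  have h4 : ((smallOrd g ⌊√x / L⌋₊ ⌊x⌋₊).card : ℝ) ≤ C₄ * (x * M / L ^ 2) := by
    refine (h₄ _ _).trans (mul_le_mul_of_nonneg_left ?_ hC₄.le)
    calc ((⌊√x / L⌋₊ : ℕ) : ℝ) ^ 2 ≤ (√x / L) ^ 2 :=
          pow_le_pow_left₀ (by positivity) (Nat.floor_le (by positivity)) 2
      _ = x / L ^ 2 := by rw [div_pow, Real.sq_sqrt hx0.le]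
      _ ≤ x * M / L ^ 2 := div_le_div_of_nonneg_right (by nlinarith) (by positivity)
  refine (abs_sub_le _ _ _).trans ((add_le_add herr h₁).trans ?_)
  linarith only [h₂, h₃, h4]

end Final

end Hooley

/-- under GRH, `N_{g,t}(x) = A(g,t) Li(x) + O(x log log x / log² x)`,
where `A(g,t) = Σ_{k ≥ 1} μ(k)/[ℚ(ζ_{kt}, g^{1/kt}) : ℚ]` converges absolutely. -/
theorem stmt1 (g : ℚ) (hg₁ : g ≠ -1) (hg₂ : g ≠ 0) (hg₃ : g ≠ 1) (t : ℕ) (ht : 1 ≤ t)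
    (hGRH : ∀ k : ℕ, 1 ≤ k → DedekindRH (splitField g (k * t))) :
    Summable (fun k : ℕ => (ArithmeticFunction.moebius k : ℝ) /
        (Module.finrank ℚ (splitField g (k * t)) : ℝ)) ∧
    (fun x : ℝ => (Ngt g t x : ℝ) -
        (∑' k : ℕ, (ArithmeticFunction.moebius k : ℝ) /
          (Module.finrank ℚ (splitField g (k * t)) : ℝ)) * Li x) =O[atTop]
      fun x : ℝ => x * Real.log (Real.log x) / (Real.log x) ^ 2 := by
  constructor
  · obtain ⟨c, hc, hw⟩ := Hooley.abs_moebius_div_le hg₁ hg₂ hg₃ ht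
    exact (Hooley.tail_bound hc.le hw).1
  · obtain ⟨C, hC⟩ := Hooley.main_bound hg₁ hg₂ hg₃ ht hGRH
    refine Asymptotics.IsBigO.of_bound |C| ?_
    filter_upwards [hC] with x hx
    rw [Real.norm_eq_abs, Real.norm_eq_abs]
    refine hx.trans ((le_abs_self _).trans (le_of_eq ?_))
    rw [abs_mul]
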